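/- Fix 0 < μ < 1/10. There exist ε₀ > 0 and C > 0 such that for every ε ∈ (0,ε₀) and every global C^∞ solution u of the Cauchy problem, the integral defining m(σ,ω) converges for every (σ,ω) ∈ ℝ×S¹ and |m(σ,ω) − ε²((∂_σF₁(σ,ω))² − (∂_σF₂(σ,ω))²)| ≤ Cε^{5/2−2μ} uniformly in (σ,ω) ∈ ℝ×S¹. -/

import Mathlib

/-!
Write `□` for the d'Alembertian and `X = ½(∂_r + ∂ₜ)(r^{1/2}u)` for the counterpart of
`V = ½(∂_r - ∂ₜ)(r^{1/2}u)` with the other sign.  In the exterior region `r ≥ t/2` the function `X`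
decays fast and `∂ₜu` is close to `-V/√r`.  Along an outgoing ray `r = t + σ` the function `V₁` obeys
`∂ₜV₁ = ½(∂ₜu₂)²(X₁ - V₁) + …`, where the omitted terms are integrable in `t`, and `V₂` obeys the
equation with the indices exchanged.  This has two consequences.

* *A priori bound* (`global_bound`).  The cubic term damps `V₁` and `V₂`.  While
  `|∂ₜu| ≤ Mε/√(1+t)`, the energies of up to three translations or rotations of the plane, and of one
  scaling field, applied to `u` grow at most like a small power of `t` (`EB_propagate`).  Sobolev
  inequalities, weighted ones away from the light cone, then control everything in the equation for
  `V` but the damping.  Hence `V`, and with it `∂ₜu`, is bounded with a constant that does not depend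
  on `M` (`V_bound`, `improved`), and a continuity argument gives the bound for all times.
* *Conservation law* (`rr_deriv`, `m_shift`).  Since `∂ₜ(V₁² - V₂²) = 2ρ`, the time `t_{0,σ}` in the
  definition of `m` may be replaced by any later one.  The density `ρ` contains no term `V₁²V₂²/t`,
  and is integrable with small tails (`rr_le`, `rr_tail`).

The estimate (`m_est`) evaluates `m` at a suitable time.  For `σ ≥ -ε⁻²` this is `2ε⁻²`.  Until then
the nonlinearity has moved `u` away from `εφ` only little, where `φ` is the solution of the free wave
equation with data `(f, g)`: the source is cubic, so the energies of the difference have size `ε⁶` up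
to a small power of `t` (`Good.diff`).  For `φ` itself, the damping is absent and the limit of `V`
along the ray is approached at a rate, so that `V` is close to `ε∂_σF` at this time (`Good.mid`).  For
`σ < -ε⁻²` the time is `t_{0,σ}`, the ray starts at `r = t/2`, and every term is small, because of the
decay inside the light cone (`far_le`).

The free solution is given by Poisson's formula.  Its limit along the rays in the direction `ω` is
identified with the Friedlander radiation field through the integrals of `φ` over the lines orthogonal
to `ω` (`free_rad`).  These integrals solve the wave equation in one space dimension, while the
asymptotics express them by a half-order integral of the limit, which is then inverted.
-/

open Real MeasureTheory Filter Topology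

noncomputable section

/-- Partial derivative in `t`. -/
def pt (u : ℝ → ℝ → ℝ → ℝ) : ℝ → ℝ → ℝ → ℝ :=
  fun t x1 x2 => deriv (fun s => u s x1 x2) t

/-- Partial derivative in `x₁`. -/
def p1 (u : ℝ → ℝ → ℝ → ℝ) : ℝ → ℝ → ℝ → ℝ :=
  fun t x1 x2 => deriv (fun y => u t y x2) x1

/-- Partial derivative in `x₂`. -/
def p2 (u : ℝ → ℝ → ℝ → ℝ) : ℝ → ℝ → ℝ → ℝ :=
  fun t x1 x2 => deriv (fun y => u t x1 y) x2

/-- The d'Alembertian `□ = ∂ₜ² − ∂₁² − ∂₂²`. -/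
def dAlembert (u : ℝ → ℝ → ℝ → ℝ) : ℝ → ℝ → ℝ → ℝ :=
  fun t x1 x2 => pt (pt u) t x1 x2 - p1 (p1 u) t x1 x2 - p2 (p2 u) t x1 x2

/-- `u : ℝ×ℝ² → ℝ` (curried) is C^∞. -/
def Smooth3 (u : ℝ → ℝ → ℝ → ℝ) : Prop :=
  ContDiff ℝ (⊤ : ℕ∞) (fun p : ℝ × ℝ × ℝ => u p.1 p.2.1 p.2.2)

/-- Compactly supported C^∞ function on ℝ². -/
def SmoothCompact2 (f : ℝ → ℝ → ℝ) : Prop :=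
  ContDiff ℝ (⊤ : ℕ∞) (fun p : ℝ × ℝ => f p.1 p.2) ∧
    HasCompactSupport (fun p : ℝ × ℝ => f p.1 p.2)

/-- Global C^∞ solution of the Cauchy problem
`□u₁ = −(∂ₜu₂)²∂ₜu₁`, `□u₂ = −(∂ₜu₁)²∂ₜu₂` with data `(εf_j, εg_j)`. -/
structure IsSolution (ε : ℝ) (f1 f2 g1 g2 : ℝ → ℝ → ℝ)
    (u1 u2 : ℝ → ℝ → ℝ → ℝ) : Prop where
  smooth1 : Smooth3 u1
  smooth2 : Smooth3 u2
  pde1 : ∀ t x1 x2 : ℝ, 0 < t →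
    dAlembert u1 t x1 x2 = -(pt u2 t x1 x2) ^ 2 * pt u1 t x1 x2
  pde2 : ∀ t x1 x2 : ℝ, 0 < t →
    dAlembert u2 t x1 x2 = -(pt u1 t x1 x2) ^ 2 * pt u2 t x1 x2
  init1 : ∀ x1 x2 : ℝ, u1 0 x1 x2 = ε * f1 x1 x2
  init2 : ∀ x1 x2 : ℝ, u2 0 x1 x2 = ε * f2 x1 x2
  initd1 : ∀ x1 x2 : ℝ, pt u1 0 x1 x2 = ε * g1 x1 x2
  initd2 : ∀ x1 x2 : ℝ, pt u2 0 x1 x2 = ε * g2 x1 x2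

/-- `‖u(t)‖_E²  = ½∫ ((∂ₜu)² + (∂₁u)² + (∂₂u)²) dx`. -/
def energySq (u : ℝ → ℝ → ℝ → ℝ) (t : ℝ) : ℝ :=
  (1 / 2) * ∫ x : ℝ × ℝ,
    ((pt u t x.1 x.2) ^ 2 + (p1 u t x.1 x.2) ^ 2 + (p2 u t x.1 x.2) ^ 2)

/-- The energy norm `‖u(t)‖_E`. -/
def energyNorm (u : ℝ → ℝ → ℝ → ℝ) (t : ℝ) : ℝ :=
  Real.sqrt (energySq u t)

/-- `|x|` in coordinates. -/
def radius (x1 x2 : ℝ) : ℝ := Real.sqrt (x1 ^ 2 + x2 ^ 2)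

/-- The Japanese bracket `⟨z⟩ = (1+z²)^{1/2}`. -/
def jb (z : ℝ) : ℝ := Real.sqrt (1 + z ^ 2)

/-- `U(t,x) = D(|x|^{1/2}u(t,x))` where `D = ½(∂_r − ∂ₜ)`. -/
def Uop (u : ℝ → ℝ → ℝ → ℝ) : ℝ → ℝ → ℝ → ℝ :=
  fun t x1 x2 =>
    (1 / 2) * ((x1 / radius x1 x2) *
        p1 (fun s y1 y2 => radius y1 y2 ^ ((1 : ℝ) / 2) * u s y1 y2) t x1 x2
      + (x2 / radius x1 x2) *
        p2 (fun s y1 y2 => radius y1 y2 ^ ((1 : ℝ) / 2) * u s y1 y2) t x1 x2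
      - pt (fun s y1 y2 => radius y1 y2 ^ ((1 : ℝ) / 2) * u s y1 y2) t x1 x2)

/-- `V(t;σ,ω) = U(t,(t+σ)ω)`. -/
def Vop (u : ℝ → ℝ → ℝ → ℝ) (t σ ω1 ω2 : ℝ) : ℝ :=
  Uop u t ((t + σ) * ω1) ((t + σ) * ω2)

/-- The rotation vector field `Ω = x₁∂₂ − x₂∂₁`. -/
def rot (u : ℝ → ℝ → ℝ → ℝ) : ℝ → ℝ → ℝ → ℝ :=
  fun t x1 x2 => x1 * p2 u t x1 x2 - x2 * p1 u t x1 x2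

/-- `H` for component `a` (the other component being `b`):
`H_a = ½(|x|^{1/2}(∂ₜu_b)²(∂ₜu_a) + t⁻¹U_b²U_a) − (8|x|^{3/2})⁻¹(4Ω²+1)u_a`. -/
def Hfun (ua ub : ℝ → ℝ → ℝ → ℝ) (t x1 x2 : ℝ) : ℝ :=
  (1 / 2) * (radius x1 x2 ^ ((1 : ℝ) / 2) * (pt ub t x1 x2) ^ 2 * pt ua t x1 x2
      + (1 / t) * (Uop ub t x1 x2) ^ 2 * Uop ua t x1 x2)
    - (1 / (8 * radius x1 x2 ^ ((3 : ℝ) / 2))) *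
        (4 * rot (rot ua) t x1 x2 + ua t x1 x2)

/-- `K_a(t;σ,ω) = H_a(t,(t+σ)ω)`. -/
def Kfun (ua ub : ℝ → ℝ → ℝ → ℝ) (t σ ω1 ω2 : ℝ) : ℝ :=
  Hfun ua ub t ((t + σ) * ω1) ((t + σ) * ω2)

/-- `ρ = V₁K₁ − V₂K₂`. -/
def rhoFun (u1 u2 : ℝ → ℝ → ℝ → ℝ) (t σ ω1 ω2 : ℝ) : ℝ :=
  Vop u1 t σ ω1 ω2 * Kfun u1 u2 t σ ω1 ω2 -
    Vop u2 t σ ω1 ω2 * Kfun u2 u1 t σ ω1 ω2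

/-- The Radon transform: line integral of `φ` over `{y : y·ω = s}`. -/
def Rline (φ : ℝ → ℝ → ℝ) (s ω1 ω2 : ℝ) : ℝ :=
  ∫ τ : ℝ, φ (s * ω1 - τ * ω2) (s * ω2 + τ * ω1)

/-- `R₂[φ](σ,ω) = (2√2π)⁻¹ ∫_σ^∞ R[φ](s,ω)(s−σ)^{−1/2} ds`. -/
def R2 (φ : ℝ → ℝ → ℝ) (σ ω1 ω2 : ℝ) : ℝ :=
  (1 / (2 * Real.sqrt 2 * Real.pi)) *
    ∫ s in Set.Ioi σ, Rline φ s ω1 ω2 / Real.sqrt (s - σ)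

/-- The Friedlander radiation field `F₀[φ,ψ] = −∂_σR₂[φ] + R₂[ψ]`. -/
def F0 (φ ψ : ℝ → ℝ → ℝ) (σ ω1 ω2 : ℝ) : ℝ :=
  -deriv (fun σ' => R2 φ σ' ω1 ω2) σ + R2 ψ σ ω1 ω2

/-- `∂_σF₀[φ,ψ]`. -/
def dF0 (φ ψ : ℝ → ℝ → ℝ) (σ ω1 ω2 : ℝ) : ℝ :=
  deriv (fun σ' => F0 φ ψ σ' ω1 ω2) σ

/-- The vector fields `Γ = (S, L₁, L₂, Ω, ∂ₜ, ∂₁, ∂₂)`. -/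
def Gam (i : Fin 7) (u : ℝ → ℝ → ℝ → ℝ) : ℝ → ℝ → ℝ → ℝ :=
  match i with
  | 0 => fun t x1 x2 => t * pt u t x1 x2 + x1 * p1 u t x1 x2 + x2 * p2 u t x1 x2
  | 1 => fun t x1 x2 => t * p1 u t x1 x2 + x1 * pt u t x1 x2
  | 2 => fun t x1 x2 => t * p2 u t x1 x2 + x2 * pt u t x1 x2
  | 3 => rot u
  | 4 => pt u
  | 5 => p1 u
  | 6 => p2 u

/-- `Γ^α = Γ₀^{α₀}⋯Γ₆^{α₆}`. -/
def GamMulti (α : Fin 7 → ℕ) (u : ℝ → ℝ → ℝ → ℝ) : ℝ → ℝ → ℝ → ℝ :=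
  (Gam 0)^[α 0] ((Gam 1)^[α 1] ((Gam 2)^[α 2] ((Gam 3)^[α 3]
    ((Gam 4)^[α 4] ((Gam 5)^[α 5] ((Gam 6)^[α 6] u))))))

/-- Pointwise norm `|φ(t,x)|_s = Σ_{|α|≤s}|Γ^αφ(t,x)|`, for a (finite) family of
components, `|Γ^αφ|` being the Euclidean norm of the vector of components. -/
def ptwiseNorm (s : ℕ) (us : List (ℝ → ℝ → ℝ → ℝ)) (t x1 x2 : ℝ) : ℝ :=
  ∑ α : Fin 7 → Fin (s + 1),
    if (∑ i, (α i : ℕ)) ≤ s then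
      Real.sqrt ((us.map fun u => (GamMulti (fun i => (α i : ℕ)) u t x1 x2) ^ 2).sum)
    else 0

/-- `‖φ(t)‖_s = Σ_{|α|≤s}‖Γ^αφ(t,·)‖_{L²(ℝ²)}`. -/
def sobNorm (s : ℕ) (us : List (ℝ → ℝ → ℝ → ℝ)) (t : ℝ) : ℝ :=
  ∑ α : Fin 7 → Fin (s + 1),
    if (∑ i, (α i : ℕ)) ≤ s then
      Real.sqrt (∫ x : ℝ × ℝ,
        (us.map fun u => (GamMulti (fun i => (α i : ℕ)) u t x.1 x.2) ^ 2).sum)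
    else 0

/-- The components of `∂u = (∂ₜu₁,∂₁u₁,∂₂u₁,∂ₜu₂,∂₁u₂,∂₂u₂)`. -/
def dList (u1 u2 : ℝ → ℝ → ℝ → ℝ) : List (ℝ → ℝ → ℝ → ℝ) :=
  [pt u1, p1 u1, p2 u1, pt u2, p1 u2, p2 u2]

/-- Smooth solution of the free wave equation with data `(φ0,φ1)`. -/
def IsFreeSolution (φ0 φ1 : ℝ → ℝ → ℝ) (φ : ℝ → ℝ → ℝ → ℝ) : Prop :=
  Smooth3 φ ∧ (∀ t x1 x2 : ℝ, 0 < t → dAlembert φ t x1 x2 = 0) ∧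
    (∀ x1 x2 : ℝ, φ 0 x1 x2 = φ0 x1 x2) ∧
    (∀ x1 x2 : ℝ, pt φ 0 x1 x2 = φ1 x1 x2)

/-- Mixed space-time partial `∂^α = ∂ₜ^{α₀}∂₁^{α₁}∂₂^{α₂}`. -/
def dmix (α : Fin 3 → ℕ) (u : ℝ → ℝ → ℝ → ℝ) : ℝ → ℝ → ℝ → ℝ :=
  pt^[α 0] (p1^[α 1] (p2^[α 2] u))

/-! ### Calculus of smooth functions on space-time -/

/-- Real functions of `(t, x₁, x₂)`, curried. -/
abbrev Fn := ℝ → ℝ → ℝ → ℝ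

/-- The uncurried form of a space-time function. -/
def unc (u : Fn) : ℝ × ℝ × ℝ → ℝ := fun p => u p.1 p.2.1 p.2.2

lemma unc_contDiff {u : Fn} (hu : Smooth3 u) : ContDiff ℝ (⊤ : ℕ∞) (unc u) := hu

lemma Smooth3.diff {u : Fn} (hu : Smooth3 u) : Differentiable ℝ (unc u) :=
  (unc_contDiff hu).differentiable (by simp)

/-- The chain rule along a curve in space-time, with the differential still unevaluated. -/
lemma Smooth3.hcurve0 {u : Fn} (hu : Smooth3 u) {a b c : ℝ → ℝ} {a' b' c' s : ℝ}
    (ha : HasDerivAt a a' s) (hb : HasDerivAt b b' s) (hc : HasDerivAt c c' s) :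
    HasDerivAt (fun s => u (a s) (b s) (c s))
      (fderiv ℝ (unc u) (a s, b s, c s) (a', b', c')) s := by
  have h1 : HasDerivAt (fun s => (a s, b s, c s)) (a', b', c') s :=
    ha.prodMk (hb.prodMk hc)
  exact (hu.diff (a s, b s, c s)).hasFDerivAt.comp_hasDerivAt s h1

lemma pt_eq {u : Fn} (hu : Smooth3 u) (t x y : ℝ) :
    pt u t x y = fderiv ℝ (unc u) (t, x, y) (1, 0, 0) :=
  (hu.hcurve0 (hasDerivAt_id t) (hasDerivAt_const t x) (hasDerivAt_const t y)).deriv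

lemma p1_eq {u : Fn} (hu : Smooth3 u) (t x y : ℝ) :
    p1 u t x y = fderiv ℝ (unc u) (t, x, y) (0, 1, 0) :=
  (hu.hcurve0 (hasDerivAt_const x t) (hasDerivAt_id x) (hasDerivAt_const x y)).deriv

lemma p2_eq {u : Fn} (hu : Smooth3 u) (t x y : ℝ) :
    p2 u t x y = fderiv ℝ (unc u) (t, x, y) (0, 0, 1) :=
  (hu.hcurve0 (hasDerivAt_const y t) (hasDerivAt_const y x) (hasDerivAt_id y)).deriv

lemma Smooth3.hpt {u : Fn} (hu : Smooth3 u) (t x y : ℝ) :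
    HasDerivAt (fun s => u s x y) (pt u t x y) t := by
  rw [pt_eq hu]
  exact hu.hcurve0 (hasDerivAt_id t) (hasDerivAt_const t x) (hasDerivAt_const t y)

lemma Smooth3.hp1 {u : Fn} (hu : Smooth3 u) (t x y : ℝ) :
    HasDerivAt (fun s => u t s y) (p1 u t x y) x := by
  rw [p1_eq hu]
  exact hu.hcurve0 (hasDerivAt_const x t) (hasDerivAt_id x) (hasDerivAt_const x y)

lemma Smooth3.hp2 {u : Fn} (hu : Smooth3 u) (t x y : ℝ) :
    HasDerivAt (fun s => u t x s) (p2 u t x y) y := by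
  rw [p2_eq hu]
  exact hu.hcurve0 (hasDerivAt_const y t) (hasDerivAt_const y x) (hasDerivAt_id y)

lemma Smooth3.hcurve {u : Fn} (hu : Smooth3 u) {a b c : ℝ → ℝ} {a' b' c' s : ℝ}
    (ha : HasDerivAt a a' s) (hb : HasDerivAt b b' s) (hc : HasDerivAt c c' s) :
    HasDerivAt (fun s => u (a s) (b s) (c s))
      (a' * pt u (a s) (b s) (c s) + b' * p1 u (a s) (b s) (c s)
        + c' * p2 u (a s) (b s) (c s)) s := by
  have h := hu.hcurve0 ha hb hc
  have e : ((a', b', c') : ℝ × ℝ × ℝ)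
      = a' • ((1, 0, 0) : ℝ × ℝ × ℝ) + b' • ((0, 1, 0) : ℝ × ℝ × ℝ)
        + c' • ((0, 0, 1) : ℝ × ℝ × ℝ) := by simp
  rw [e] at h
  simpa only [map_add, map_smul, smul_eq_mul, ← pt_eq hu, ← p1_eq hu, ← p2_eq hu] using h

lemma Smooth3.dir {u : Fn} (hu : Smooth3 u) (v : ℝ × ℝ × ℝ) :
    Smooth3 (fun t x y => fderiv ℝ (unc u) (t, x, y) v) := by
  have h : ContDiff ℝ (⊤ : ℕ∞) (fderiv ℝ (unc u)) :=
    (unc_contDiff hu).fderiv_right (by simp)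
  exact h.clm_apply contDiff_const

lemma Smooth3.dt {u : Fn} (hu : Smooth3 u) : Smooth3 (pt u) := by
  have e : pt u = fun t x y => fderiv ℝ (unc u) (t, x, y) (1, 0, 0) := by
    funext t x y; exact pt_eq hu t x y
  rw [e]; exact hu.dir _

lemma Smooth3.d1 {u : Fn} (hu : Smooth3 u) : Smooth3 (p1 u) := by
  have e : p1 u = fun t x y => fderiv ℝ (unc u) (t, x, y) (0, 1, 0) := by
    funext t x y; exact p1_eq hu t x y
  rw [e]; exact hu.dir _

lemma Smooth3.d2 {u : Fn} (hu : Smooth3 u) : Smooth3 (p2 u) := by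
  have e : p2 u = fun t x y => fderiv ℝ (unc u) (t, x, y) (0, 0, 1) := by
    funext t x y; exact p2_eq hu t x y
  rw [e]; exact hu.dir _

lemma Smooth3.add {u v : Fn} (hu : Smooth3 u) (hv : Smooth3 v) : Smooth3 (u + v) :=
  ContDiff.add hu hv
lemma Smooth3.sub {u v : Fn} (hu : Smooth3 u) (hv : Smooth3 v) : Smooth3 (u - v) :=
  ContDiff.sub hu hv
lemma Smooth3.neg {u : Fn} (hu : Smooth3 u) : Smooth3 (-u) := ContDiff.neg hu
lemma Smooth3.mul {u v : Fn} (hu : Smooth3 u) (hv : Smooth3 v) : Smooth3 (u * v) :=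
  ContDiff.mul hu hv

/-- The constant space-time function. -/
def kc (c : ℝ) : Fn := fun _ _ _ => c
/-- The coordinate function `t`. -/
def cT : Fn := fun t _ _ => t
/-- The coordinate function `x₁`. -/
def c1 : Fn := fun _ x _ => x
/-- The coordinate function `x₂`. -/
def c2 : Fn := fun _ _ y => y

lemma smooth_kc (c : ℝ) : Smooth3 (kc c) := contDiff_const
lemma smooth_cT : Smooth3 cT := contDiff_fst
lemma smooth_c1 : Smooth3 c1 := contDiff_fst.comp contDiff_snd
lemma smooth_c2 : Smooth3 c2 := contDiff_snd.comp contDiff_snd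

lemma Smooth3.cont {u : Fn} (hu : Smooth3 u) : Continuous (unc u) := (unc_contDiff hu).continuous

lemma Smooth3.cont_slice {u : Fn} (hu : Smooth3 u) (t : ℝ) :
    Continuous (fun x : ℝ × ℝ => u t x.1 x.2) :=
  hu.cont.comp (continuous_const.prodMk continuous_id)

/-- Composition of a smooth space-time function with continuous maps. -/
lemma Smooth3.cont_comp {u : Fn} (hu : Smooth3 u) {X : Type*} [TopologicalSpace X]
    {a b c : X → ℝ} (ha : Continuous a) (hb : Continuous b) (hc : Continuous c) :
    Continuous (fun x => u (a x) (b x) (c x)) :=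
  hu.cont.comp (ha.prodMk (hb.prodMk hc))

section rules
variable {u v : Fn}

lemma pt_add (hu : Smooth3 u) (hv : Smooth3 v) : pt (u + v) = pt u + pt v := by
  funext t x y; exact ((hu.hpt t x y).add (hv.hpt t x y)).deriv
lemma p1_add (hu : Smooth3 u) (hv : Smooth3 v) : p1 (u + v) = p1 u + p1 v := by
  funext t x y; exact ((hu.hp1 t x y).add (hv.hp1 t x y)).deriv
lemma p2_add (hu : Smooth3 u) (hv : Smooth3 v) : p2 (u + v) = p2 u + p2 v := by
  funext t x y; exact ((hu.hp2 t x y).add (hv.hp2 t x y)).deriv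
lemma pt_sub (hu : Smooth3 u) (hv : Smooth3 v) : pt (u - v) = pt u - pt v := by
  funext t x y; exact ((hu.hpt t x y).sub (hv.hpt t x y)).deriv
lemma p1_sub (hu : Smooth3 u) (hv : Smooth3 v) : p1 (u - v) = p1 u - p1 v := by
  funext t x y; exact ((hu.hp1 t x y).sub (hv.hp1 t x y)).deriv
lemma p2_sub (hu : Smooth3 u) (hv : Smooth3 v) : p2 (u - v) = p2 u - p2 v := by
  funext t x y; exact ((hu.hp2 t x y).sub (hv.hp2 t x y)).deriv
lemma pt_neg (hu : Smooth3 u) : pt (-u) = -pt u := by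
  funext t x y; exact (hu.hpt t x y).neg.deriv
lemma p1_neg (hu : Smooth3 u) : p1 (-u) = -p1 u := by
  funext t x y; exact (hu.hp1 t x y).neg.deriv
lemma p2_neg (hu : Smooth3 u) : p2 (-u) = -p2 u := by
  funext t x y; exact (hu.hp2 t x y).neg.deriv
lemma pt_mul (hu : Smooth3 u) (hv : Smooth3 v) : pt (u * v) = pt u * v + u * pt v := by
  funext t x y; exact ((hu.hpt t x y).mul (hv.hpt t x y)).deriv
lemma p1_mul (hu : Smooth3 u) (hv : Smooth3 v) : p1 (u * v) = p1 u * v + u * p1 v := by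
  funext t x y; exact ((hu.hp1 t x y).mul (hv.hp1 t x y)).deriv
lemma p2_mul (hu : Smooth3 u) (hv : Smooth3 v) : p2 (u * v) = p2 u * v + u * p2 v := by
  funext t x y; exact ((hu.hp2 t x y).mul (hv.hp2 t x y)).deriv
end rules

@[simp] lemma pt_kc (c : ℝ) : pt (kc c) = kc 0 := by
  funext t x y; exact (hasDerivAt_const t c).deriv
@[simp] lemma p1_kc (c : ℝ) : p1 (kc c) = kc 0 := by
  funext t x y; exact (hasDerivAt_const x c).deriv
@[simp] lemma p2_kc (c : ℝ) : p2 (kc c) = kc 0 := by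
  funext t x y; exact (hasDerivAt_const y c).deriv
@[simp] lemma pt_cT : pt cT = kc 1 := by funext t x y; exact (hasDerivAt_id t).deriv
@[simp] lemma p1_cT : p1 cT = kc 0 := by funext t x y; exact (hasDerivAt_const x t).deriv
@[simp] lemma p2_cT : p2 cT = kc 0 := by funext t x y; exact (hasDerivAt_const y t).deriv
@[simp] lemma pt_c1 : pt c1 = kc 0 := by funext t x y; exact (hasDerivAt_const t x).deriv
@[simp] lemma p1_c1 : p1 c1 = kc 1 := by funext t x y; exact (hasDerivAt_id x).deriv
@[simp] lemma p2_c1 : p2 c1 = kc 0 := by funext t x y; exact (hasDerivAt_const y x).deriv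
@[simp] lemma pt_c2 : pt c2 = kc 0 := by funext t x y; exact (hasDerivAt_const t y).deriv
@[simp] lemma p1_c2 : p1 c2 = kc 0 := by funext t x y; exact (hasDerivAt_const x y).deriv
@[simp] lemma p2_c2 : p2 c2 = kc 1 := by funext t x y; exact (hasDerivAt_id y).deriv

@[simp] lemma kc_apply (c t x y : ℝ) : kc c t x y = c := rfl
@[simp] lemma cT_apply (t x y : ℝ) : cT t x y = t := rfl
@[simp] lemma c1_apply (t x y : ℝ) : c1 t x y = x := rfl
@[simp] lemma c2_apply (t x y : ℝ) : c2 t x y = y := rfl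

/-- Directional derivatives of a smooth function commute. -/
lemma dir_comm {u : Fn} (hu : Smooth3 u) (v w : ℝ × ℝ × ℝ) (p : ℝ × ℝ × ℝ) :
    fderiv ℝ (fun q => fderiv ℝ (unc u) q v) p w
      = fderiv ℝ (fun q => fderiv ℝ (unc u) q w) p v := by
  have hs : IsSymmSndFDerivAt ℝ (unc u) p :=
    (unc_contDiff hu).contDiffAt.isSymmSndFDerivAt (by
      simp only [minSmoothness_of_isRCLikeNormedField]; exact WithTop.coe_le_coe.2 le_top)
  have hd : DifferentiableAt ℝ (fderiv ℝ (unc u)) p :=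
    (((unc_contDiff hu).fderiv_right (m := (⊤ : ℕ∞)) (by simp)).differentiable (by simp)) p
  have key : ∀ v w, fderiv ℝ (fun q => fderiv ℝ (unc u) q v) p w
      = fderiv ℝ (fderiv ℝ (unc u)) p w v := by
    intro v w
    rw [fderiv_clm_apply hd (differentiableAt_const v)]
    simp
  rw [key, key]; exact hs w v

lemma unc_pt {u : Fn} (hu : Smooth3 u) : unc (pt u) = fun q => fderiv ℝ (unc u) q (1, 0, 0) := by
  funext q; exact pt_eq hu _ _ _
lemma unc_p1 {u : Fn} (hu : Smooth3 u) : unc (p1 u) = fun q => fderiv ℝ (unc u) q (0, 1, 0) := by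
  funext q; exact p1_eq hu _ _ _
lemma unc_p2 {u : Fn} (hu : Smooth3 u) : unc (p2 u) = fun q => fderiv ℝ (unc u) q (0, 0, 1) := by
  funext q; exact p2_eq hu _ _ _

lemma p1_pt {u : Fn} (hu : Smooth3 u) : p1 (pt u) = pt (p1 u) := by
  funext t x y
  rw [p1_eq hu.dt, pt_eq hu.d1, unc_pt hu, unc_p1 hu]; exact dir_comm hu _ _ _
lemma p2_pt {u : Fn} (hu : Smooth3 u) : p2 (pt u) = pt (p2 u) := by
  funext t x y
  rw [p2_eq hu.dt, pt_eq hu.d2, unc_pt hu, unc_p2 hu]; exact dir_comm hu _ _ _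
lemma p2_p1 {u : Fn} (hu : Smooth3 u) : p2 (p1 u) = p1 (p2 u) := by
  funext t x y
  rw [p2_eq hu.d1, p1_eq hu.d2, unc_p1 hu, unc_p2 hu]; exact dir_comm hu _ _ _

lemma dAl_eq (u : Fn) : dAlembert u = pt (pt u) - p1 (p1 u) - p2 (p2 u) := rfl

lemma Smooth3.dAl {u : Fn} (hu : Smooth3 u) : Smooth3 (dAlembert u) :=
  (hu.dt.dt.sub hu.d1.d1).sub hu.d2.d2

/-- The Killing fields `(a - c x₂)∂₁ + (b + c x₁)∂₂` of the plane: translations and rotations. -/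
def Zf (a b c : ℝ) (u : Fn) : Fn := (kc a - kc c * c2) * p1 u + (kc b + kc c * c1) * p2 u

/-- The scaling field `S = t∂ₜ + x₁∂₁ + x₂∂₂`. -/
def Sf (u : Fn) : Fn := cT * pt u + c1 * p1 u + c2 * p2 u

lemma p1_eq_Zf (u : Fn) : p1 u = Zf 1 0 0 u := by funext t x y; simp [Zf]
lemma p2_eq_Zf (u : Fn) : p2 u = Zf 0 1 0 u := by funext t x y; simp [Zf]
lemma rot_eq_Zf (u : Fn) : rot u = Zf 0 0 1 u := by funext t x y; simp [Zf, rot]; ring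

section Zrules
variable (a b c : ℝ) {u v : Fn}

lemma smooth_za : Smooth3 (kc a - kc c * c2) := (smooth_kc _).sub ((smooth_kc _).mul smooth_c2)
lemma smooth_zb : Smooth3 (kc b + kc c * c1) := (smooth_kc _).add ((smooth_kc _).mul smooth_c1)

lemma Smooth3.dZ (hu : Smooth3 u) : Smooth3 (Zf a b c u) :=
  ((smooth_za _ _).mul hu.d1).add ((smooth_zb _ _).mul hu.d2)

lemma Smooth3.dO (hu : Smooth3 u) : Smooth3 (rot u) := by rw [rot_eq_Zf]; exact hu.dZ _ _ _

lemma Smooth3.dS (hu : Smooth3 u) : Smooth3 (Sf u) :=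
  ((smooth_cT.mul hu.dt).add (smooth_c1.mul hu.d1)).add (smooth_c2.mul hu.d2)

lemma Zf_add (hu : Smooth3 u) (hv : Smooth3 v) : Zf a b c (u + v) = Zf a b c u + Zf a b c v := by
  simp only [Zf, p1_add hu hv, p2_add hu hv]; ring
lemma Zf_sub (hu : Smooth3 u) (hv : Smooth3 v) : Zf a b c (u - v) = Zf a b c u - Zf a b c v := by
  simp only [Zf, p1_sub hu hv, p2_sub hu hv]; ring
lemma Zf_mul (hu : Smooth3 u) (hv : Smooth3 v) :
    Zf a b c (u * v) = Zf a b c u * v + u * Zf a b c v := by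
  simp only [Zf, p1_mul hu hv, p2_mul hu hv]; ring
lemma kc_zero : kc 0 = 0 := rfl
lemma kc_one : kc 1 = 1 := rfl
lemma Zf_kc (k : ℝ) : Zf a b c (kc k) = 0 := by
  simp only [Zf, p1_kc, p2_kc, kc_zero]; ring

lemma Zf_pt (hu : Smooth3 u) : Zf a b c (pt u) = pt (Zf a b c u) := by
  have e1 := p1_pt hu
  have e2 := p2_pt hu
  simp only [Zf]
  rw [pt_add ((smooth_za _ _).mul hu.d1) ((smooth_zb _ _).mul hu.d2),
    pt_mul (smooth_za _ _) hu.d1, pt_mul (smooth_zb _ _) hu.d2,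
    pt_sub (smooth_kc _) ((smooth_kc _).mul smooth_c2),
    pt_add (smooth_kc _) ((smooth_kc _).mul smooth_c1),
    pt_mul (smooth_kc _) smooth_c2, pt_mul (smooth_kc _) smooth_c1, e1, e2]
  simp [kc_zero]

lemma p1_za : p1 (kc a - kc c * c2) = 0 := by
  rw [p1_sub (smooth_kc _) ((smooth_kc _).mul smooth_c2), p1_mul (smooth_kc _) smooth_c2]
  simp [kc_zero]
lemma p2_za : p2 (kc a - kc c * c2) = - kc c := by
  rw [p2_sub (smooth_kc _) ((smooth_kc _).mul smooth_c2), p2_mul (smooth_kc _) smooth_c2]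
  simp [kc_zero, kc_one]
lemma p1_zb : p1 (kc b + kc c * c1) = kc c := by
  rw [p1_add (smooth_kc _) ((smooth_kc _).mul smooth_c1), p1_mul (smooth_kc _) smooth_c1]
  simp [kc_zero, kc_one]
lemma p2_zb : p2 (kc b + kc c * c1) = 0 := by
  rw [p2_add (smooth_kc _) ((smooth_kc _).mul smooth_c1), p2_mul (smooth_kc _) smooth_c1]
  simp [kc_zero]

lemma p1_Zf (hu : Smooth3 u) : p1 (Zf a b c u) = Zf a b c (p1 u) + kc c * p2 u := by
  simp only [Zf]
  rw [p1_add ((smooth_za _ _).mul hu.d1) ((smooth_zb _ _).mul hu.d2),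
    p1_mul (smooth_za _ _) hu.d1, p1_mul (smooth_zb _ _) hu.d2, p1_za, p1_zb, p2_p1 hu]
  ring
lemma p2_Zf (hu : Smooth3 u) : p2 (Zf a b c u) = Zf a b c (p2 u) - kc c * p1 u := by
  simp only [Zf]
  rw [p2_add ((smooth_za _ _).mul hu.d1) ((smooth_zb _ _).mul hu.d2),
    p2_mul (smooth_za _ _) hu.d1, p2_mul (smooth_zb _ _) hu.d2, p2_za, p2_zb, p2_p1 hu]
  ring

lemma p1_kmul (k : ℝ) (hu : Smooth3 u) : p1 (kc k * u) = kc k * p1 u := by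
  rw [p1_mul (smooth_kc _) hu]; simp [kc_zero]
lemma p2_kmul (k : ℝ) (hu : Smooth3 u) : p2 (kc k * u) = kc k * p2 u := by
  rw [p2_mul (smooth_kc _) hu]; simp [kc_zero]
lemma pt_kmul (k : ℝ) (hu : Smooth3 u) : pt (kc k * u) = kc k * pt u := by
  rw [pt_mul (smooth_kc _) hu]; simp [kc_zero]
lemma Zf_kmul (k : ℝ) (hu : Smooth3 u) : Zf a b c (kc k * u) = kc k * Zf a b c u := by
  rw [Zf_mul a b c (smooth_kc _) hu, Zf_kc]; ring

lemma dAl_Zf (hu : Smooth3 u) : dAlembert (Zf a b c u) = Zf a b c (dAlembert u) := by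
  rw [dAl_eq, dAl_eq, Zf_sub _ _ _ (hu.dt.dt.sub hu.d1.d1) hu.d2.d2,
    Zf_sub _ _ _ hu.dt.dt hu.d1.d1, Zf_pt _ _ _ hu.dt, Zf_pt _ _ _ hu,
    p1_Zf _ _ _ hu, p2_Zf _ _ _ hu,
    p1_add (hu.d1.dZ _ _ _) ((smooth_kc _).mul hu.d2),
    p2_sub (hu.d2.dZ _ _ _) ((smooth_kc _).mul hu.d1),
    p1_Zf _ _ _ hu.d1, p2_Zf _ _ _ hu.d2, p1_kmul _ hu.d2, p2_kmul _ hu.d1, p2_p1 hu]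
  ring

lemma dAl_add (hu : Smooth3 u) (hv : Smooth3 v) :
    dAlembert (u + v) = dAlembert u + dAlembert v := by
  simp only [dAl_eq, pt_add hu hv, p1_add hu hv, p2_add hu hv, pt_add hu.dt hv.dt,
    p1_add hu.d1 hv.d1, p2_add hu.d2 hv.d2]; ring
lemma dAl_sub (hu : Smooth3 u) (hv : Smooth3 v) :
    dAlembert (u - v) = dAlembert u - dAlembert v := by
  simp only [dAl_eq, pt_sub hu hv, p1_sub hu hv, p2_sub hu hv, pt_sub hu.dt hv.dt,
    p1_sub hu.d1 hv.d1, p2_sub hu.d2 hv.d2]; ring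
lemma dAl_kmul (k : ℝ) (hu : Smooth3 u) : dAlembert (kc k * u) = kc k * dAlembert u := by
  simp only [dAl_eq, pt_kmul k hu, p1_kmul k hu, p2_kmul k hu, pt_kmul k hu.dt,
    p1_kmul k hu.d1, p2_kmul k hu.d2]; ring

lemma pt_Sf (hu : Smooth3 u) : pt (Sf u) = Sf (pt u) + pt u := by
  simp only [Sf]
  rw [pt_add ((smooth_cT.mul hu.dt).add (smooth_c1.mul hu.d1)) (smooth_c2.mul hu.d2),
    pt_add (smooth_cT.mul hu.dt) (smooth_c1.mul hu.d1), pt_mul smooth_cT hu.dt,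
    pt_mul smooth_c1 hu.d1, pt_mul smooth_c2 hu.d2, p1_pt hu, p2_pt hu]
  simp [kc_zero, kc_one]; ring
lemma p1_Sf (hu : Smooth3 u) : p1 (Sf u) = Sf (p1 u) + p1 u := by
  simp only [Sf]
  rw [p1_add ((smooth_cT.mul hu.dt).add (smooth_c1.mul hu.d1)) (smooth_c2.mul hu.d2),
    p1_add (smooth_cT.mul hu.dt) (smooth_c1.mul hu.d1), p1_mul smooth_cT hu.dt,
    p1_mul smooth_c1 hu.d1, p1_mul smooth_c2 hu.d2, p1_pt hu, p2_p1 hu]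
  simp [kc_zero, kc_one]; ring
lemma p2_Sf (hu : Smooth3 u) : p2 (Sf u) = Sf (p2 u) + p2 u := by
  simp only [Sf]
  rw [p2_add ((smooth_cT.mul hu.dt).add (smooth_c1.mul hu.d1)) (smooth_c2.mul hu.d2),
    p2_add (smooth_cT.mul hu.dt) (smooth_c1.mul hu.d1), p2_mul smooth_cT hu.dt,
    p2_mul smooth_c1 hu.d1, p2_mul smooth_c2 hu.d2, p2_pt hu, p2_p1 hu]
  simp [kc_zero, kc_one]; ring
lemma Sf_sub (hu : Smooth3 u) (hv : Smooth3 v) : Sf (u - v) = Sf u - Sf v := by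
  simp only [Sf, pt_sub hu hv, p1_sub hu hv, p2_sub hu hv]; ring
lemma Sf_mul (hu : Smooth3 u) (hv : Smooth3 v) : Sf (u * v) = Sf u * v + u * Sf v := by
  simp only [Sf, pt_mul hu hv, p1_mul hu hv, p2_mul hu hv]; ring

lemma dAl_Sf (hu : Smooth3 u) :
    dAlembert (Sf u) = Sf (dAlembert u) + kc 2 * dAlembert u := by
  have e2 : kc 2 = 1 + 1 := by funext t x y; simp; norm_num
  rw [dAl_eq, dAl_eq, Sf_sub (hu.dt.dt.sub hu.d1.d1) hu.d2.d2,
    Sf_sub hu.dt.dt hu.d1.d1, pt_Sf hu, p1_Sf hu, p2_Sf hu,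
    pt_add hu.dt.dS hu.dt, p1_add hu.d1.dS hu.d1, p2_add hu.d2.dS hu.d2,
    pt_Sf hu.dt, p1_Sf hu.d1, p2_Sf hu.d2, e2]
  ring
end Zrules

/-! ### Functions supported in a forward and backward light cone -/

/-- Smooth, and vanishing for `|x| > |t| + R`. -/
structure Nice (R : ℝ) (u : Fn) : Prop where
  smooth : Smooth3 u
  supp : ∀ t x y : ℝ, (|t| + R) ^ 2 < x ^ 2 + y ^ 2 → u t x y = 0

/-- The exterior of the cone is open, so a function vanishing there has vanishing differential. -/
lemma Nice.fderiv_zero {R : ℝ} {u : Fn} (hu : Nice R u) {t x y : ℝ}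
    (h : (|t| + R) ^ 2 < x ^ 2 + y ^ 2) : fderiv ℝ (unc u) (t, x, y) = 0 := by
  have ho : IsOpen {p : ℝ × ℝ × ℝ | (|p.1| + R) ^ 2 < p.2.1 ^ 2 + p.2.2 ^ 2} :=
    isOpen_lt (by fun_prop) (by fun_prop)
  have : unc u =ᶠ[𝓝 (t, x, y)] fun _ => 0 := by
    filter_upwards [ho.mem_nhds h] with p hp
    exact hu.supp _ _ _ hp
  rw [this.fderiv_eq]; simp

section nice
variable {R : ℝ} {u v : Fn}
lemma Nice.dt (hu : Nice R u) : Nice R (pt u) :=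
  ⟨hu.smooth.dt, fun t x y h => by rw [pt_eq hu.smooth, hu.fderiv_zero h]; rfl⟩
lemma Nice.d1 (hu : Nice R u) : Nice R (p1 u) :=
  ⟨hu.smooth.d1, fun t x y h => by rw [p1_eq hu.smooth, hu.fderiv_zero h]; rfl⟩
lemma Nice.d2 (hu : Nice R u) : Nice R (p2 u) :=
  ⟨hu.smooth.d2, fun t x y h => by rw [p2_eq hu.smooth, hu.fderiv_zero h]; rfl⟩
lemma Nice.add (hu : Nice R u) (hv : Nice R v) : Nice R (u + v) :=
  ⟨hu.smooth.add hv.smooth, fun t x y h => by simp [hu.supp t x y h, hv.supp t x y h]⟩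
lemma Nice.sub (hu : Nice R u) (hv : Nice R v) : Nice R (u - v) :=
  ⟨hu.smooth.sub hv.smooth, fun t x y h => by simp [hu.supp t x y h, hv.supp t x y h]⟩
lemma Nice.neg (hu : Nice R u) : Nice R (-u) :=
  ⟨hu.smooth.neg, fun t x y h => by simp [hu.supp t x y h]⟩
lemma Nice.mul_left (hu : Smooth3 u) (hv : Nice R v) : Nice R (u * v) :=
  ⟨hu.mul hv.smooth, fun t x y h => by simp [hv.supp t x y h]⟩
lemma Nice.mul_right (hu : Nice R u) (hv : Smooth3 v) : Nice R (u * v) :=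
  ⟨hu.smooth.mul hv, fun t x y h => by simp [hu.supp t x y h]⟩
lemma Nice.mul (hu : Nice R u) (hv : Nice R v) : Nice R (u * v) := hu.mul_right hv.smooth
lemma Nice.dZ (hu : Nice R u) (a b c : ℝ) : Nice R (Zf a b c u) :=
  (Nice.mul_left (smooth_za _ _) hu.d1).add (Nice.mul_left (smooth_zb _ _) hu.d2)
lemma Nice.dZk (hu : Nice R u) (a b c : ℝ) (k : ℕ) : Nice R ((Zf a b c)^[k] u) := by
  induction k with
  | zero => exact hu
  | succ k ih => rw [Function.iterate_succ_apply']; exact ih.dZ a b c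
lemma Nice.dO (hu : Nice R u) : Nice R (rot u) := by rw [rot_eq_Zf]; exact hu.dZ _ _ _
lemma Nice.dS (hu : Nice R u) : Nice R (Sf u) :=
  ((Nice.mul_left smooth_cT hu.dt).add (Nice.mul_left smooth_c1 hu.d1)).add
    (Nice.mul_left smooth_c2 hu.d2)
lemma Nice.dAl (hu : Nice R u) : Nice R (dAlembert u) := (hu.dt.dt.sub hu.d1.d1).sub hu.d2.d2
lemma Nice.kmul (hu : Nice R u) (k : ℝ) : Nice R (kc k * u) := Nice.mul_left (smooth_kc k) hu
lemma Nice.mono {R' : ℝ} (hu : Nice R u) (h0 : 0 ≤ R) (h : R ≤ R') : Nice R' u :=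
  ⟨hu.smooth, fun t x y hh => hu.supp t x y (lt_of_le_of_lt (by
    have := abs_nonneg t
    gcongr) hh)⟩
end nice

/-- The commutation rules for iterates of a Killing field. -/
lemma Zfk_pt (a b c : ℝ) {u : Fn} (hu : Smooth3 u) (k : ℕ) :
    Smooth3 ((Zf a b c)^[k] u) ∧ (Zf a b c)^[k] (pt u) = pt ((Zf a b c)^[k] u) ∧
      dAlembert ((Zf a b c)^[k] u) = (Zf a b c)^[k] (dAlembert u) := by
  induction k with
  | zero => exact ⟨hu, rfl, rfl⟩
  | succ k ih =>
    obtain ⟨h1, h2, h3⟩ := ih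
    simp only [Function.iterate_succ_apply']
    exact ⟨h1.dZ a b c, by rw [h2, Zf_pt a b c h1], by rw [dAl_Zf a b c h1, h3]⟩

/-! ### Integrals over time slices -/

/-- The integral of `u(t,·)` over the plane. -/
def In (u : Fn) (t : ℝ) : ℝ := ∫ x : ℝ × ℝ, u t x.1 x.2

lemma Nice.cpt {R : ℝ} {u : Fn} (hu : Nice R u) (t : ℝ) :
    HasCompactSupport (fun x : ℝ × ℝ => u t x.1 x.2) := by
  refine HasCompactSupport.of_support_subset_isCompact
    (isCompact_closedBall (0 : ℝ × ℝ) (|(|t| + R)|)) ?_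
  intro x hx
  by_contra hn
  apply hx
  apply hu.supp
  rw [mem_closedBall_zero_iff, Prod.norm_def, sup_le_iff, not_and_or, not_le, not_le] at hn
  rcases hn with h | h
  · have := sq_lt_sq.2 (h.trans_eq (by simp : ‖x.1‖ = |x.1|))
    nlinarith [sq_nonneg x.2]
  · have := sq_lt_sq.2 (h.trans_eq (by simp : ‖x.2‖ = |x.2|))
    nlinarith [sq_nonneg x.1]

lemma Nice.int {R : ℝ} {u : Fn} (hu : Nice R u) (t : ℝ) :
    Integrable (fun x : ℝ × ℝ => u t x.1 x.2) :=
  (hu.smooth.cont_slice t).integrable_of_hasCompactSupport (hu.cpt t)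

section In
variable {R : ℝ} {u v : Fn}
lemma In_add (hu : Nice R u) (hv : Nice R v) (t : ℝ) : In (u + v) t = In u t + In v t :=
  integral_add (hu.int t) (hv.int t)
lemma In_sub (hu : Nice R u) (hv : Nice R v) (t : ℝ) : In (u - v) t = In u t - In v t :=
  integral_sub (hu.int t) (hv.int t)
lemma In_neg (u : Fn) (t : ℝ) : In (-u) t = -In u t := integral_neg _
lemma In_kmul (k : ℝ) (u : Fn) (t : ℝ) : In (kc k * u) t = k * In u t := integral_const_mul _ _
lemma In_mono (hu : Nice R u) (hv : Nice R v) {t : ℝ} (h : ∀ x y, u t x y ≤ v t x y) :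
    In u t ≤ In v t := integral_mono (hu.int t) (hv.int t) (fun x => h _ _)
lemma In_nonneg {t : ℝ} (h : ∀ x y, 0 ≤ u t x y) : 0 ≤ In u t := integral_nonneg fun _ => h _ _
lemma In_sq_nonneg (t : ℝ) : 0 ≤ In (u * u) t := In_nonneg fun _ _ => mul_self_nonneg _
lemma In_congr {t : ℝ} (h : ∀ x y, u t x y = v t x y) : In u t = In v t := by
  simp only [In, h]

/-- Cauchy–Schwarz on a time slice. -/
lemma In_cs (hu : Nice R u) (hv : Nice R v) (t : ℝ) :
    (In (u * v) t) ^ 2 ≤ In (u * u) t * In (v * v) t := by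
  have key : ∀ s : ℝ, 0 ≤ In (v * v) t * (s * s) + (-2 * In (u * v) t) * s + In (u * u) t := by
    intro s
    have h0 : 0 ≤ In ((u - kc s * v) * (u - kc s * v)) t := In_sq_nonneg t
    have e : (u - kc s * v) * (u - kc s * v)
        = u * u + kc (-2 * s) * (u * v) + kc (s * s) * (v * v) := by
      funext t x y; simp; ring
    rw [e, In_add ((hu.mul hu).add ((hu.mul hv).kmul _)) ((hv.mul hv).kmul _),
      In_add (hu.mul hu) ((hu.mul hv).kmul _), In_kmul, In_kmul] at h0
    linarith
  have := discrim_le_zero key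
  rw [discrim] at this
  nlinarith

lemma In_cs_sqrt (hu : Nice R u) (hv : Nice R v) (t : ℝ) :
    |In (u * v) t| ≤ √(In (u * u) t) * √(In (v * v) t) := by
  rw [← Real.sqrt_mul (In_sq_nonneg t)]
  exact Real.abs_le_sqrt (In_cs hu hv t)

end In

section In2
variable {R : ℝ} {u v : Fn}

lemma Nice.int1 (hu : Nice R u) (t y : ℝ) : Integrable (fun x : ℝ => u t x y) := by
  refine Continuous.integrable_of_hasCompactSupport
    (hu.smooth.cont_comp continuous_const continuous_id continuous_const) ?_
  refine HasCompactSupport.of_support_subset_isCompact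
    (isCompact_closedBall (0 : ℝ) (|(|t| + R)|)) ?_
  intro x hx
  by_contra hn
  apply hx
  apply hu.supp
  rw [mem_closedBall_zero_iff, not_le, Real.norm_eq_abs] at hn
  have := sq_lt_sq.2 hn
  nlinarith [sq_nonneg y]

lemma Nice.int2 (hu : Nice R u) (t x : ℝ) : Integrable (fun y : ℝ => u t x y) := by
  refine Continuous.integrable_of_hasCompactSupport
    (hu.smooth.cont_comp continuous_const continuous_const continuous_id) ?_
  refine HasCompactSupport.of_support_subset_isCompact
    (isCompact_closedBall (0 : ℝ) (|(|t| + R)|)) ?_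
  intro y hx
  by_contra hn
  apply hx
  apply hu.supp
  rw [mem_closedBall_zero_iff, not_le, Real.norm_eq_abs] at hn
  have := sq_lt_sq.2 hn
  nlinarith [sq_nonneg x]

lemma In_p1 (hu : Nice R u) (t : ℝ) : In (p1 u) t = 0 := by
  unfold In
  have h := hu.d1.int t
  rw [Measure.volume_eq_prod] at h ⊢
  rw [integral_prod_symm _ h]
  have : ∀ y, ∫ x, p1 u t x y = 0 := fun y =>
    integral_eq_zero_of_hasDerivAt_of_integrable (fun x => hu.smooth.hp1 t x y)
      (hu.d1.int1 t y) (hu.int1 t y)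
  simp [this]

lemma In_p2 (hu : Nice R u) (t : ℝ) : In (p2 u) t = 0 := by
  unfold In
  have h := hu.d2.int t
  rw [Measure.volume_eq_prod] at h ⊢
  rw [integral_prod _ h]
  have : ∀ x, ∫ y, p2 u t x y = 0 := fun x =>
    integral_eq_zero_of_hasDerivAt_of_integrable (fun y => hu.smooth.hp2 t x y)
      (hu.d2.int2 t x) (hu.int2 t x)
  simp [this]

lemma In_Zf (hu : Nice R u) (a b c t : ℝ) : In (Zf a b c u) t = 0 := by
  have h1 : Nice R ((kc a - kc c * c2) * u) := Nice.mul_left (smooth_za _ _) hu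
  have h2 : Nice R ((kc b + kc c * c1) * u) := Nice.mul_left (smooth_zb _ _) hu
  have e : Zf a b c u = p1 ((kc a - kc c * c2) * u) + p2 ((kc b + kc c * c1) * u) := by
    rw [p1_mul (smooth_za _ _) hu.smooth, p2_mul (smooth_zb _ _) hu.smooth, p1_za, p2_zb, Zf]
    ring
  rw [e, In_add h1.d1 h2.d2, In_p1 h1, In_p2 h2, add_zero]

/-- Integration by parts for a Killing field. -/
lemma In_Zf_parts (hu : Nice R u) (hv : Nice R v) (a b c t : ℝ) :
    In (Zf a b c u * v) t = - In (u * Zf a b c v) t := by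
  have h := In_Zf (hu.mul hv) a b c t
  rw [Zf_mul a b c hu.smooth hv.smooth, In_add ((hu.dZ a b c).mul hv) (hu.mul (hv.dZ a b c))] at h
  linarith

lemma Nice.cont_In (hu : Nice R u) (t : ℝ) : HasDerivAt (In u) (In (pt u) t) t := by
  have hK : IsCompact (Metric.closedBall t 1 ×ˢ (Metric.closedBall (0:ℝ) (|t| + 1 + |R|) ×ˢ
      Metric.closedBall (0:ℝ) (|t| + 1 + |R|))) :=
    (isCompact_closedBall t 1).prod ((isCompact_closedBall _ _).prod (isCompact_closedBall _ _))
  obtain ⟨C, hC⟩ := hK.exists_bound_of_continuousOn hu.dt.smooth.cont.continuousOn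
  let Kx : Set (ℝ × ℝ) := Metric.closedBall (0:ℝ) (|t| + 1 + |R|) ×ˢ
      Metric.closedBall (0:ℝ) (|t| + 1 + |R|)
  have hKx : IsCompact Kx := (isCompact_closedBall _ _).prod (isCompact_closedBall _ _)
  have hout : ∀ s ∈ Metric.ball t 1, ∀ x : ℝ × ℝ, x ∉ Kx → pt u s x.1 x.2 = 0 := by
    intro s hs x hx
    apply hu.dt.supp
    have hs' : |s| ≤ |t| + 1 := by
      rw [Metric.mem_ball, Real.dist_eq] at hs
      have := abs_sub_abs_le_abs_sub s t
      linarith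
    have hs2 : (|s| + R) ^ 2 ≤ (|t| + 1 + |R|) ^ 2 := by
      apply sq_le_sq.2
      have h1 := abs_nonneg s
      have h2 := abs_nonneg R
      rw [abs_of_nonneg (by positivity : 0 ≤ |t| + 1 + |R|)]
      calc |(|s| + R)| ≤ |(|s|)| + |R| := abs_add_le _ _
        _ ≤ _ := by rw [abs_abs]; linarith
    simp only [Kx, Set.mem_prod, mem_closedBall_zero_iff, not_and_or, not_le, Real.norm_eq_abs]
      at hx
    rcases hx with h | h
    · have := sq_lt_sq.2 ((abs_of_nonneg (by positivity : 0 ≤ |t| + 1 + |R|)).trans_lt h)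
      nlinarith [sq_nonneg x.2]
    · have := sq_lt_sq.2 ((abs_of_nonneg (by positivity : 0 ≤ |t| + 1 + |R|)).trans_lt h)
      nlinarith [sq_nonneg x.1]
  have := hasDerivAt_integral_of_dominated_loc_of_deriv_le (μ := (volume : Measure (ℝ × ℝ)))
    (F := fun s x => u s x.1 x.2) (F' := fun s x => pt u s x.1 x.2) (x₀ := t)
    (s := Metric.ball t 1) (bound := Kx.indicator fun _ => C)
    (Metric.ball_mem_nhds t one_pos)
    (Eventually.of_forall fun s => (hu.smooth.cont_slice s).aestronglyMeasurable)
    (hu.int t) (hu.dt.smooth.cont_slice t).aestronglyMeasurable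
    (Eventually.of_forall fun x s hs => by
      by_cases hx : x ∈ Kx
      · rw [Set.indicator_of_mem hx]
        exact hC (s, x) ⟨Metric.ball_subset_closedBall hs, hx⟩
      · rw [hout s hs x hx, Set.indicator_of_notMem hx]; simp)
    ((integrable_indicator_iff hKx.measurableSet).2
      (integrableOn_const (hs := hKx.measure_lt_top.ne)))
    (Eventually.of_forall fun x s _ => hu.smooth.hpt s x.1 x.2)
  exact this.2
end In2

/-! ### The energy -/

/-- The energy density `(∂ₜv)² + (∂₁v)² + (∂₂v)²`. -/
def ed (v : Fn) : Fn := pt v * pt v + p1 v * p1 v + p2 v * p2 v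

/-- The energy of `v` at time `t` (without the factor `1/2`). -/
def En (v : Fn) (t : ℝ) : ℝ := In (ed v) t

section energy
variable {R : ℝ} {u v : Fn}

lemma Nice.ed (hu : Nice R u) : Nice R (ed u) :=
  ((hu.dt.mul hu.dt).add (hu.d1.mul hu.d1)).add (hu.d2.mul hu.d2)

lemma En_eq (hu : Nice R u) (t : ℝ) :
    En u t = In (pt u * pt u) t + In (p1 u * p1 u) t + In (p2 u * p2 u) t := by
  rw [En, ed, In_add ((hu.dt.mul hu.dt).add (hu.d1.mul hu.d1)) (hu.d2.mul hu.d2),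
    In_add (hu.dt.mul hu.dt) (hu.d1.mul hu.d1)]

lemma En_nonneg (u : Fn) (t : ℝ) : 0 ≤ En u t :=
  In_nonneg fun x y => by
    simp only [ed, Pi.add_apply, Pi.mul_apply]
    nlinarith [sq_nonneg (pt u t x y), sq_nonneg (p1 u t x y), sq_nonneg (p2 u t x y)]

lemma pt_le_En (hu : Nice R u) (t : ℝ) : In (pt u * pt u) t ≤ En u t := by
  have := En_eq hu t
  have h1 := In_sq_nonneg (u := p1 u) t
  have h2 := In_sq_nonneg (u := p2 u) t
  linarith
lemma p1_le_En (hu : Nice R u) (t : ℝ) : In (p1 u * p1 u) t ≤ En u t := by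
  have := En_eq hu t
  have h1 := In_sq_nonneg (u := pt u) t
  have h2 := In_sq_nonneg (u := p2 u) t
  linarith
lemma p2_le_En (hu : Nice R u) (t : ℝ) : In (p2 u * p2 u) t ≤ En u t := by
  have := En_eq hu t
  have h1 := In_sq_nonneg (u := pt u) t
  have h2 := In_sq_nonneg (u := p1 u) t
  linarith

/-- The energy identity. -/
lemma En_deriv (hu : Nice R u) (t : ℝ) :
    HasDerivAt (En u) (2 * In (pt u * dAlembert u) t) t := by
  have h := hu.ed.cont_In t
  have hs := hu.smooth
  have e : pt (ed u) = kc 2 * (pt u * dAlembert u) + p1 (kc 2 * (pt u * p1 u))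
      + p2 (kc 2 * (pt u * p2 u)) := by
    have e2 : kc 2 = 1 + 1 := by funext t x y; simp; norm_num
    rw [ed, pt_add ((hs.dt.mul hs.dt).add (hs.d1.mul hs.d1)) (hs.d2.mul hs.d2),
      pt_add (hs.dt.mul hs.dt) (hs.d1.mul hs.d1), pt_mul hs.dt hs.dt, pt_mul hs.d1 hs.d1,
      pt_mul hs.d2 hs.d2, p1_kmul _ (hs.dt.mul hs.d1), p2_kmul _ (hs.dt.mul hs.d2),
      p1_mul hs.dt hs.d1, p2_mul hs.dt hs.d2, p1_pt hs, p2_pt hs, dAl_eq, e2]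
    ring
  have n1 : Nice R (kc 2 * (pt u * dAlembert u)) := (hu.dt.mul hu.dAl).kmul _
  have n2 : Nice R (kc 2 * (pt u * p1 u)) := (hu.dt.mul hu.d1).kmul _
  have n3 : Nice R (kc 2 * (pt u * p2 u)) := (hu.dt.mul hu.d2).kmul _
  rw [e, In_add (n1.add n2.d1) n3.d2, In_add n1 n2.d1, In_p1 n2, In_p2 n3, In_kmul] at h
  simp only [add_zero] at h
  exact h

lemma In_add_sq_le (hu : Nice R u) (hv : Nice R v) (t : ℝ) :
    In ((u + v) * (u + v)) t ≤ 2 * In (u * u) t + 2 * In (v * v) t := by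
  rw [← In_kmul, ← In_kmul, ← In_add ((hu.mul hu).kmul _) ((hv.mul hv).kmul _)]
  refine In_mono ((hu.add hv).mul (hu.add hv)) (((hu.mul hu).kmul _).add ((hv.mul hv).kmul _)) ?_
  intro x y
  simp only [Pi.add_apply, Pi.mul_apply, kc_apply]
  nlinarith [sq_nonneg (u t x y - v t x y)]

lemma In_sub_sq_le (hu : Nice R u) (hv : Nice R v) (t : ℝ) :
    In ((u - v) * (u - v)) t ≤ 2 * In (u * u) t + 2 * In (v * v) t := by
  rw [← In_kmul, ← In_kmul, ← In_add ((hu.mul hu).kmul _) ((hv.mul hv).kmul _)]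
  refine In_mono ((hu.sub hv).mul (hu.sub hv)) (((hu.mul hu).kmul _).add ((hv.mul hv).kmul _)) ?_
  intro x y
  simp only [Pi.add_apply, Pi.sub_apply, Pi.mul_apply, kc_apply]
  nlinarith [sq_nonneg (u t x y + v t x y)]

lemma In_young (hu : Nice R u) (hv : Nice R v) {m : ℝ} (hm : 0 < m) (t : ℝ) :
    2 * In (u * v) t ≤ m * In (u * u) t + m⁻¹ * In (v * v) t := by
  rw [← In_kmul, ← In_kmul, ← In_kmul, ← In_add ((hu.mul hu).kmul _) ((hv.mul hv).kmul _)]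
  refine In_mono ((hu.mul hv).kmul _) (((hu.mul hu).kmul _).add ((hv.mul hv).kmul _)) ?_
  intro x y
  simp only [Pi.add_apply, Pi.mul_apply, kc_apply]
  have : 0 ≤ m * (u t x y - m⁻¹ * v t x y) ^ 2 := by positivity
  have h2 : m * (u t x y - m⁻¹ * v t x y) ^ 2 = m * (u t x y * u t x y)
    - 2 * (u t x y * v t x y) + m⁻¹ * (v t x y * v t x y) := by
    field_simp; ring
  linarith
end energy

/-! ### Cubic Moser estimates on a time slice -/

section moser
variable {R : ℝ} {s p r : Fn}

lemma Zfk_add (a b c : ℝ) {u v : Fn} (hu : Smooth3 u) (hv : Smooth3 v) (k : ℕ) :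
    (Zf a b c)^[k] (u + v) = (Zf a b c)^[k] u + (Zf a b c)^[k] v := by
  induction k with
  | zero => rfl
  | succ k ih =>
    simp only [Function.iterate_succ_apply']
    rw [ih, Zf_add a b c (Zfk_pt a b c hu k).1 (Zfk_pt a b c hv k).1]

lemma Zfk_kmul (a b c m : ℝ) {u : Fn} (hu : Smooth3 u) (k : ℕ) :
    (Zf a b c)^[k] (kc m * u) = kc m * (Zf a b c)^[k] u := by
  induction k with
  | zero => rfl
  | succ k ih =>
    simp only [Function.iterate_succ_apply']
    rw [ih, Zf_kmul a b c m (Zfk_pt a b c hu k).1]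

lemma neg_eq_kmul (u : Fn) : -u = kc (-1) * u := by funext t x y; simp

lemma Zfk_sub (a b c : ℝ) {u v : Fn} (hu : Smooth3 u) (hv : Smooth3 v) (k : ℕ) :
    (Zf a b c)^[k] (u - v) = (Zf a b c)^[k] u - (Zf a b c)^[k] v := by
  rw [sub_eq_add_neg, sub_eq_add_neg, neg_eq_kmul v, Zfk_add a b c hu ((smooth_kc _).mul hv),
    Zfk_kmul a b c _ hv, ← neg_eq_kmul]

/-- A bounded factor can be taken out of a square integral. -/
lemma In_bdd (hs : Nice R s) (hp : Nice R p) {t m : ℝ} (hm : ∀ x y, |s t x y| ≤ m) :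
    In ((s * p) * (s * p)) t ≤ m ^ 2 * In (p * p) t := by
  rw [← In_kmul]
  refine In_mono ((hs.mul hp).mul (hs.mul hp)) ((hp.mul hp).kmul _) ?_
  intro x y
  simp only [Pi.mul_apply, kc_apply]
  have h1 : s t x y ^ 2 ≤ m ^ 2 := sq_le_sq' (neg_le_of_abs_le (hm x y)) (le_of_abs_le (hm x y))
  nlinarith [sq_nonneg (p t x y), mul_le_mul_of_nonneg_right h1 (sq_nonneg (p t x y))]

lemma le_of_sq_le_mul {A B : ℝ} (hA : 0 ≤ A) (hB : 0 ≤ B) (h : A ^ 2 ≤ B * A) : A ≤ B := by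
  rcases hA.eq_or_lt with h0 | h0
  · rw [← h0]; exact hB
  · nlinarith

/-- `∫ |Zs|⁴ ≤ 9 m² ∫ |Z²s|²` if `|s| ≤ m`. -/
lemma moser_four (a b c : ℝ) (hs : Nice R s) {t m : ℝ} (hm : ∀ x y, |s t x y| ≤ m) :
    In ((Zf a b c s * Zf a b c s) * (Zf a b c s * Zf a b c s)) t
      ≤ 9 * m ^ 2 * In (Zf a b c (Zf a b c s) * Zf a b c (Zf a b c s)) t := by
  set q := Zf a b c s with hq
  set q2 := Zf a b c q with hq2
  have nq : Nice R q := hs.dZ a b c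
  have nq2 : Nice R q2 := nq.dZ a b c
  have e : Zf a b c (q * q * q) = kc 3 * (q * q * q2) := by
    rw [Zf_mul _ _ _ (nq.mul nq).smooth nq.smooth, Zf_mul _ _ _ nq.smooth nq.smooth, ← hq2]
    funext t x y; simp; ring
  have h1 := In_Zf_parts hs ((nq.mul nq).mul nq) a b c t
  rw [e, ← hq] at h1
  have h2 : In (s * (kc 3 * (q * q * q2))) t = 3 * In ((s * q2) * (q * q)) t := by
    rw [← In_kmul]; congr 1; funext t x y; simp; ring
  have h3 : In (q * (q * q * q)) t = In (q * q * (q * q)) t := by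
    congr 1; ring
  have h4 := In_cs (hs.mul nq2) (nq.mul nq) t
  have h5 := In_bdd hs nq2 hm
  have h6 : 0 ≤ In (q * q * (q * q)) t := In_sq_nonneg t
  have h7 : 0 ≤ In (q2 * q2) t := In_sq_nonneg t
  refine le_of_sq_le_mul h6 (by positivity) ?_
  have h8 : In (q * q * (q * q)) t = -3 * In ((s * q2) * (q * q)) t := by
    rw [← h3, h1, h2]; ring
  have h9 := mul_le_mul_of_nonneg_right h5 h6
  calc In (q * q * (q * q)) t ^ 2 = 9 * In ((s * q2) * (q * q)) t ^ 2 := by rw [h8]; ring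
    _ ≤ _ := by linarith

/-- `∫ |Zs|⁶` and `∫ |Zs Z²s|²` in terms of `∫ |Z³s|²`, if `|s| ≤ m`. -/
lemma moser_six (a b c : ℝ) (hs : Nice R s) {t m : ℝ} (hm : ∀ x y, |s t x y| ≤ m)
    {q q2 q3 : Fn} (hq : q = Zf a b c s) (hq2 : q2 = Zf a b c q) (hq3 : q3 = Zf a b c q2) :
    In ((q * q * q) * (q * q * q)) t ≤ 25 * m ^ 2 * In ((q * q2) * (q * q2)) t ∧
      In ((q * q2) * (q * q2)) t ≤ 25 / 9 * m ^ 2 * In (q3 * q3) t := by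
  have nq : Nice R q := hq ▸ hs.dZ a b c
  have nq2 : Nice R q2 := hq2 ▸ nq.dZ a b c
  have nq3 : Nice R q3 := hq3 ▸ nq2.dZ a b c
  have nqq := nq.mul nq
  have e3 : Zf a b c (q * q * q) = kc 3 * (q * q * q2) := by
    rw [Zf_mul _ _ _ nqq.smooth nq.smooth, Zf_mul _ _ _ nq.smooth nq.smooth, ← hq2]
    funext t x y; simp; ring
  have e5 : Zf a b c (q * q * q * (q * q)) = kc 5 * (q * q * q * (q * q2)) := by
    rw [Zf_mul _ _ _ (nqq.mul nq).smooth nqq.smooth, e3, Zf_mul _ _ _ nq.smooth nq.smooth, ← hq2]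
    funext t x y; simp; ring
  have hA0 : 0 ≤ In ((q * q * q) * (q * q * q)) t := In_sq_nonneg t
  have hD0 : 0 ≤ In ((q * q2) * (q * q2)) t := In_sq_nonneg t
  have hN0 : 0 ≤ In (q3 * q3) t := In_sq_nonneg t
  have hA : In ((q * q * q) * (q * q * q)) t ≤ 25 * m ^ 2 * In ((q * q2) * (q * q2)) t := by
    have h1 := In_Zf_parts hs ((nqq.mul nq).mul nqq) a b c t
    rw [e5, ← hq] at h1
    have h2 : In (s * (kc 5 * (q * q * q * (q * q2)))) t
        = 5 * In ((s * (q * q2)) * (q * q * q)) t := by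
      rw [← In_kmul]; congr 1; ring
    have h3 : In (q * (q * q * q * (q * q))) t = In ((q * q * q) * (q * q * q)) t := by
      congr 1; ring
    have h4 := In_cs (hs.mul (nq.mul nq2)) (nqq.mul nq) t
    have h5 := In_bdd hs (nq.mul nq2) hm
    refine le_of_sq_le_mul hA0 (by positivity) ?_
    have h9 := mul_le_mul_of_nonneg_right h5 hA0
    have h8 : In ((q * q * q) * (q * q * q)) t = -5 * In ((s * (q * q2)) * (q * q * q)) t := by
      rw [← h3, h1, h2]; ring
    calc In ((q * q * q) * (q * q * q)) t ^ 2
        = 25 * In ((s * (q * q2)) * (q * q * q)) t ^ 2 := by rw [h8]; ring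
      _ ≤ _ := by linarith
  refine ⟨hA, ?_⟩
  have h1 := In_Zf_parts (nqq.mul nq) nq2 a b c t
  rw [e3, ← hq3] at h1
  have h2 : In (kc 3 * (q * q * q2) * q2) t = 3 * In ((q * q2) * (q * q2)) t := by
    rw [← In_kmul]; congr 1; ring
  have h4 := In_cs (nqq.mul nq) nq3 t
  refine le_of_sq_le_mul hD0 (by positivity) ?_
  have h9 := mul_le_mul_of_nonneg_right hA hN0
  have h8 : In (q * q * q * q3) t = -3 * In ((q * q2) * (q * q2)) t := by linarith
  rw [h8] at h4
  nlinarith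

lemma moser_cube (a b c : ℝ) (hs : Nice R s) {t m : ℝ} (hm : ∀ x y, |s t x y| ≤ m)
    {k : ℕ} (hk : k ≤ 3) :
    In ((Zf a b c)^[k] (s * s * s) * (Zf a b c)^[k] (s * s * s)) t
      ≤ 10227 * m ^ 4 * In ((Zf a b c)^[k] s * (Zf a b c)^[k] s) t := by
  obtain ⟨q, hq⟩ : ∃ q, q = Zf a b c s := ⟨_, rfl⟩
  obtain ⟨q2, hq2⟩ : ∃ q2, q2 = Zf a b c q := ⟨_, rfl⟩
  obtain ⟨q3, hq3⟩ : ∃ q3, q3 = Zf a b c q2 := ⟨_, rfl⟩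
  have nq : Nice R q := hq ▸ hs.dZ a b c
  have nq2 : Nice R q2 := hq2 ▸ nq.dZ a b c
  have nq3 : Nice R q3 := hq3 ▸ nq2.dZ a b c
  have hss := hs.mul hs
  have hs2 : ∀ x y, |(s * s) t x y| ≤ m ^ 2 := by
    intro x y
    simp only [Pi.mul_apply, abs_mul]
    nlinarith [hm x y, abs_nonneg (s t x y)]
  have e1 : Zf a b c (s * s * s) = kc 3 * (s * s * q) := by
    rw [Zf_mul _ _ _ hss.smooth hs.smooth, Zf_mul _ _ _ hs.smooth hs.smooth, ← hq]
    funext t x y; simp; ring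
  have e2 : Zf a b c (kc 3 * (s * s * q)) = kc 6 * (s * (q * q)) + kc 3 * (s * s * q2) := by
    rw [Zf_kmul _ _ _ _ (hss.mul nq).smooth, Zf_mul _ _ _ hss.smooth nq.smooth,
      Zf_mul _ _ _ hs.smooth hs.smooth, ← hq, ← hq2]
    funext t x y; simp; ring
  have e3 : Zf a b c (kc 6 * (s * (q * q)) + kc 3 * (s * s * q2))
      = kc 6 * (q * q * q) + (kc 18 * (s * (q * q2)) + kc 3 * (s * s * q3)) := by
    rw [Zf_add _ _ _ ((hs.mul (nq.mul nq)).kmul _).smooth ((hss.mul nq2).kmul _).smooth,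
      Zf_kmul _ _ _ _ (hs.mul (nq.mul nq)).smooth, Zf_kmul _ _ _ _ (hss.mul nq2).smooth,
      Zf_mul _ _ _ hs.smooth (nq.mul nq).smooth, Zf_mul _ _ _ hss.smooth nq2.smooth,
      Zf_mul _ _ _ hs.smooth hs.smooth, Zf_mul _ _ _ nq.smooth nq.smooth, ← hq, ← hq2, ← hq3]
    funext t x y; simp; ring
  have ks : ∀ (l : ℝ) (v : Fn), In ((kc l * v) * (kc l * v)) t = l ^ 2 * In (v * v) t := by
    intro l v
    rw [← In_kmul]; congr 1; funext t x y; simp; ring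
  have hm4 : m ^ 4 = (m ^ 2) ^ 2 := by ring
  interval_cases k
  · simp only [Function.iterate_zero, id]
    have h := In_bdd hss hs hs2
    have h0 : 0 ≤ m ^ 4 * In (s * s) t := mul_nonneg (by positivity) (In_sq_nonneg t)
    rw [← hm4] at h
    linarith
  · simp only [Function.iterate_one]
    rw [e1, ← hq, ks]
    have h := In_bdd hss nq hs2
    have h0 : 0 ≤ m ^ 4 * In (q * q) t := mul_nonneg (by positivity) (In_sq_nonneg t)
    rw [← hm4] at h
    linarith
  · simp only [Function.iterate_succ, Function.comp, Function.iterate_zero, id]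
    rw [e1, ← hq, ← hq2, e2]
    have h := In_bdd hss nq2 hs2
    have h1 := In_bdd hs (nq.mul nq) hm
    have h2 := moser_four a b c hs hm
    rw [← hq, ← hq2] at h2
    have h3 := In_add_sq_le ((hs.mul (nq.mul nq)).kmul 6) ((hss.mul nq2).kmul 3) t
    rw [ks, ks] at h3
    have h0 : 0 ≤ m ^ 4 * In (q2 * q2) t := mul_nonneg (by positivity) (In_sq_nonneg t)
    rw [← hm4] at h
    have h4 := mul_le_mul_of_nonneg_left h2 (sq_nonneg m)
    linarith
  · simp only [Function.iterate_succ, Function.comp, Function.iterate_zero, id]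
    rw [e1, ← hq, ← hq2, e2, e3, ← hq3]
    obtain ⟨hA, hD⟩ := moser_six a b c hs hm hq hq2 hq3
    have h := In_bdd hss nq3 hs2
    have h1 := In_bdd hs (nq.mul nq2) hm
    have hx := (hs.mul (nq.mul nq2)).kmul 18
    have hy := (hss.mul nq3).kmul 3
    have h3 := In_add_sq_le (((nq.mul nq).mul nq).kmul 6) (hx.add hy) t
    have h5 := In_add_sq_le hx hy t
    rw [ks] at h3
    rw [ks, ks] at h5
    have h0 : 0 ≤ m ^ 4 * In (q3 * q3) t := mul_nonneg (by positivity) (In_sq_nonneg t)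
    rw [← hm4] at h
    have h6 := mul_le_mul_of_nonneg_left hD (sq_nonneg m)
    linarith

/-- The Moser estimate for `p r²`, by polarisation of the cube. -/
lemma moser_prod (a b c : ℝ) (hp : Nice R p) (hr : Nice R r) {t m : ℝ}
    (hpm : ∀ x y, |p t x y| ≤ m) (hrm : ∀ x y, |r t x y| ≤ m) {k : ℕ} (hk : k ≤ 3) :
    In ((Zf a b c)^[k] (r * r * p) * (Zf a b c)^[k] (r * r * p)) t
      ≤ 100000 * m ^ 4 * (In ((Zf a b c)^[k] p * (Zf a b c)^[k] p) t
        + In ((Zf a b c)^[k] r * (Zf a b c)^[k] r) t) := by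
  have n1 := hp.add hr
  have n2 := hp.sub hr
  have c1 := (n1.mul n1).mul n1
  have c2 := (n2.mul n2).mul n2
  have c3 := (hp.mul hp).mul hp
  have e : r * r * p = kc (1 / 6) * ((p + r) * (p + r) * (p + r) + (p - r) * (p - r) * (p - r)
      + kc (-2) * (p * p * p)) := by
    funext t x y; simp; ring
  have b1 := moser_cube a b c n1 (m := 2 * m) (t := t) (fun x y => by
    simp only [Pi.add_apply]
    exact (abs_add_le _ _).trans (by linarith [hpm x y, hrm x y])) hk
  have b2 := moser_cube a b c n2 (m := 2 * m) (t := t) (fun x y => by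
    simp only [Pi.sub_apply]
    exact (abs_sub _ _).trans (by linarith [hpm x y, hrm x y])) hk
  have b3 := moser_cube a b c hp hpm hk
  have ks : ∀ (l : ℝ) (v : Fn), In ((kc l * v) * (kc l * v)) t = l ^ 2 * In (v * v) t := by
    intro l v
    rw [← In_kmul]; congr 1; funext t x y; simp; ring
  rw [Zfk_add a b c hp.smooth hr.smooth] at b1
  rw [Zfk_sub a b c hp.smooth hr.smooth] at b2
  rw [e, Zfk_kmul a b c _ ((c1.add c2).add (c3.kmul _)).smooth, ks,
    Zfk_add a b c (c1.add c2).smooth (c3.kmul _).smooth, Zfk_add a b c c1.smooth c2.smooth,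
    Zfk_kmul a b c _ c3.smooth]
  have d1 := In_add_sq_le ((c1.dZk a b c k).add (c2.dZk a b c k)) ((c3.dZk a b c k).kmul (-2)) t
  have d2 := In_add_sq_le (c1.dZk a b c k) (c2.dZk a b c k) t
  rw [ks] at d1
  have d3 := In_add_sq_le (hp.dZk a b c k) (hr.dZk a b c k) t
  have d4 := In_sub_sq_le (hp.dZk a b c k) (hr.dZk a b c k) t
  have hm : 0 ≤ m ^ 4 := by positivity
  have d3' := mul_le_mul_of_nonneg_left d3 hm
  have d4' := mul_le_mul_of_nonneg_left d4 hm
  have hP : 0 ≤ m ^ 4 * In ((Zf a b c)^[k] p * (Zf a b c)^[k] p) t :=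
    mul_nonneg hm (In_sq_nonneg t)
  have hR : 0 ≤ m ^ 4 * In ((Zf a b c)^[k] r * (Zf a b c)^[k] r) t :=
    mul_nonneg hm (In_sq_nonneg t)
  have e16 : (2 * m) ^ 4 = 16 * m ^ 4 := by ring
  rw [e16] at b1 b2
  linarith
end moser

/-! ### Energy estimates for the nonlinear system -/

/-- Gronwall's inequality with the rate `κ/(1+t)` and a forcing term `b(1+t)^(2κ-1)`. -/
lemma gron {f f' : ℝ → ℝ} {T κ b : ℝ} (hκ : 0 < κ) (hf : ∀ t, HasDerivAt f (f' t) t)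
    (h : ∀ t, 0 < t → t < T → f' t ≤ κ / (1 + t) * f t + b * (1 + t) ^ (2 * κ - 1))
    {t : ℝ} (h0 : 0 ≤ t) (hT : t ≤ T) (hb : 0 ≤ b) :
    f t ≤ (f 0 + b / κ * (1 + t) ^ κ) * (1 + t) ^ κ := by
  let g : ℝ → ℝ := fun t => f t * (1 + t) ^ (-κ) - b / κ * (1 + t) ^ κ
  have hg : ∀ t, 0 ≤ t → HasDerivAt g (f' t * (1 + t) ^ (-κ)
      + f t * (-κ * (1 + t) ^ (-κ - 1)) - b / κ * (κ * (1 + t) ^ (κ - 1))) t := by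
    intro t ht
    have h1 : HasDerivAt (fun t : ℝ => 1 + t) 1 t := by
      simpa using (hasDerivAt_id t).const_add 1
    have h2 := h1.rpow_const (p := -κ) (Or.inl (by positivity))
    have h3 := h1.rpow_const (p := κ) (Or.inl (by positivity))
    have := ((hf t).mul h2).sub (h3.const_mul (b / κ))
    exact this.congr_deriv (by simp only [one_mul])
  have hanti : AntitoneOn g (Set.Icc 0 T) := by
    apply antitoneOn_of_deriv_nonpos (convex_Icc 0 T)
    · intro t ht; exact (hg t ht.1).continuousAt.continuousWithinAt
    · intro t ht
      rw [interior_Icc] at ht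
      exact (hg t ht.1.le).differentiableAt.differentiableWithinAt
    · intro t ht
      rw [interior_Icc] at ht
      rw [(hg t ht.1.le).deriv]
      have hp : 0 < 1 + t := by linarith [ht.1]
      have e1 : (1 + t) ^ (-κ - 1) = (1 + t) ^ (-κ) / (1 + t) := by
        rw [rpow_sub hp, rpow_one]
      have e2 : (1 + t) ^ (κ - 1) = (1 + t) ^ (2 * κ - 1) * (1 + t) ^ (-κ) := by
        rw [← rpow_add hp]; congr 1; ring
      have h4 := mul_le_mul_of_nonneg_right (h t ht.1 ht.2) (rpow_nonneg hp.le (-κ))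
      rw [e1, e2]
      have e3 : b / κ * (κ * ((1 + t) ^ (2 * κ - 1) * (1 + t) ^ (-κ)))
          = b * (1 + t) ^ (2 * κ - 1) * (1 + t) ^ (-κ) := by
        field_simp
      have e4 : f t * (-κ * ((1 + t) ^ (-κ) / (1 + t)))
          = - (κ / (1 + t) * f t * (1 + t) ^ (-κ)) := by
        ring
      rw [e3, e4]
      linarith
  have hle := hanti ⟨le_rfl, h0.trans hT⟩ ⟨h0, hT⟩ h0
  have hp : 0 < 1 + t := by linarith
  have hx : 0 < (1 + t) ^ κ := rpow_pos_of_pos hp κ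
  simp only [g, add_zero, one_rpow, rpow_neg hp.le, mul_one] at hle
  have hbk : 0 ≤ b / κ := div_nonneg hb hκ.le
  have h5 : f t * ((1 + t) ^ κ)⁻¹ ≤ f 0 + b / κ * (1 + t) ^ κ := by linarith
  rwa [mul_inv_le_iff₀ hx] at h5

/-- A smooth solution of the system, with support in a light cone; the equations hold for
positive times only. -/
structure Sol (R : ℝ) (u1 u2 : Fn) : Prop where
  n1 : Nice R u1
  n2 : Nice R u2
  e1 : ∀ t, 0 < t → dAlembert u1 t = (-(pt u2 * pt u2 * pt u1)) t
  e2 : ∀ t, 0 < t → dAlembert u2 t = (-(pt u1 * pt u1 * pt u2)) t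

lemma Sol.symm {R : ℝ} {u1 u2 : Fn} (h : Sol R u1 u2) : Sol R u2 u1 := ⟨h.n2, h.n1, h.e2, h.e1⟩

lemma Zf_slice (a b c : ℝ) {u v : Fn} {t : ℝ} (h : u t = v t) : Zf a b c u t = Zf a b c v t := by
  funext x y; simp [Zf, p1, p2, h]

lemma Zfk_slice (a b c : ℝ) {u v : Fn} {t : ℝ} (h : u t = v t) (k : ℕ) :
    (Zf a b c)^[k] u t = (Zf a b c)^[k] v t := by
  induction k with
  | zero => exact h
  | succ k ih => simp only [Function.iterate_succ_apply']; exact Zf_slice a b c ih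

lemma pt_pos {u v : Fn} (h : ∀ t, 0 < t → u t = v t) {t : ℝ} (ht : 0 < t) : pt u t = pt v t := by
  funext x y
  apply Filter.EventuallyEq.deriv_eq
  filter_upwards [lt_mem_nhds ht] with s hs
  rw [h s hs]

lemma Sf_pos {u v : Fn} (h : ∀ t, 0 < t → u t = v t) {t : ℝ} (ht : 0 < t) : Sf u t = Sf v t := by
  have h1 := pt_pos h ht
  funext x y; simp [Sf, p1, p2, h1, h t ht]

lemma In_slice {u v : Fn} {t : ℝ} (h : u t = v t) : In u t = In v t := by simp only [In, h]

section sys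
variable {R : ℝ} {u1 u2 : Fn}

/-- The growth constant in the energy estimates. -/
def KE : ℝ := 300000

/-- One component of the energy inequality: `2∫ ∂ₜZᵏu₁ □Zᵏu₁` is bounded by the energy. -/
lemma Zk_half (h : Sol R u1 u2) (a b c : ℝ) {k : ℕ} (hk : k ≤ 3) {t m : ℝ} (ht : 0 < t)
    (hm0 : 0 < m) (hm1 : ∀ x y, |pt u1 t x y| ≤ m) (hm2 : ∀ x y, |pt u2 t x y| ≤ m) :
    In ((Zf a b c)^[k] (dAlembert u1) * (Zf a b c)^[k] (dAlembert u1)) t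
      ≤ 100000 * m ^ 4 * (En ((Zf a b c)^[k] u1) t + En ((Zf a b c)^[k] u2) t) := by
  have h1 := moser_prod a b c h.n1.dt h.n2.dt hm1 hm2 hk
  have e : (Zf a b c)^[k] (dAlembert u1) t = (-((Zf a b c)^[k] (pt u2 * pt u2 * pt u1))) t := by
    rw [Zfk_slice a b c (h.e1 t ht), neg_eq_kmul, neg_eq_kmul,
      Zfk_kmul a b c _ ((h.n2.dt.mul h.n2.dt).mul h.n1.dt).smooth]
  have e' : In ((Zf a b c)^[k] (dAlembert u1) * (Zf a b c)^[k] (dAlembert u1)) t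
      = In ((Zf a b c)^[k] (pt u2 * pt u2 * pt u1) * (Zf a b c)^[k] (pt u2 * pt u2 * pt u1)) t := by
    apply In_slice
    rw [Pi.mul_apply, e]
    funext x y; simp
  rw [e']
  refine h1.trans ?_
  rw [(Zfk_pt a b c h.n1.smooth k).2.1, (Zfk_pt a b c h.n2.smooth k).2.1]
  have := pt_le_En (h.n1.dZk a b c k) t
  have := pt_le_En (h.n2.dZk a b c k) t
  gcongr

lemma Zk_energy (h : Sol R u1 u2) (a b c : ℝ) {k : ℕ} (hk : k ≤ 3) {η κ T : ℝ} (hη : 0 < η)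
    (hκ : 0 < κ) (hηκ : KE * η ^ 2 ≤ κ)
    (hm : ∀ t, 0 ≤ t → t ≤ T → ∀ x y, |pt u1 t x y| ≤ η / √(1 + t) ∧ |pt u2 t x y| ≤ η / √(1 + t))
    {t : ℝ} (h0 : 0 ≤ t) (hT : t ≤ T) :
    En ((Zf a b c)^[k] u1) t + En ((Zf a b c)^[k] u2) t
      ≤ (En ((Zf a b c)^[k] u1) 0 + En ((Zf a b c)^[k] u2) 0) * (1 + t) ^ κ := by
  have n1 := h.n1.dZk a b c k
  have n2 := h.n2.dZk a b c k
  have hd : ∀ t, HasDerivAt (fun t => En ((Zf a b c)^[k] u1) t + En ((Zf a b c)^[k] u2) t)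
      (2 * In (pt ((Zf a b c)^[k] u1) * dAlembert ((Zf a b c)^[k] u1)) t
        + 2 * In (pt ((Zf a b c)^[k] u2) * dAlembert ((Zf a b c)^[k] u2)) t) t := fun t =>
    (En_deriv n1 t).add (En_deriv n2 t)
  have := gron (b := 0) hκ hd (T := T) ?_ h0 hT le_rfl
  · simpa using this
  · intro s hs hsT
    have hs1 : 0 < 1 + s := by linarith
    have hsq : 0 < √(1 + s) := sqrt_pos.2 hs1
    have hm0 : 0 < η / √(1 + s) := by positivity
    have hm2 : (η / √(1 + s)) ^ 2 = η ^ 2 / (1 + s) := by rw [div_pow, sq_sqrt hs1.le]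
    have b1 := Zk_half h a b c hk hs hm0 (fun x y => (hm s hs.le hsT.le x y).1)
      (fun x y => (hm s hs.le hsT.le x y).2)
    have b2 := Zk_half h.symm a b c hk hs hm0 (fun x y => (hm s hs.le hsT.le x y).2)
      (fun x y => (hm s hs.le hsT.le x y).1)
    rw [(Zfk_pt a b c h.n1.smooth k).2.2, (Zfk_pt a b c h.n2.smooth k).2.2]
    have y1 := In_young n1.dt (h.n1.dAl.dZk a b c k) (m := (η / √(1 + s)) ^ 2) (by positivity) s
    have y2 := In_young n2.dt (h.n2.dAl.dZk a b c k) (m := (η / √(1 + s)) ^ 2) (by positivity) s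
    have l1 := pt_le_En n1 s
    have l2 := pt_le_En n2 s
    have p1 := En_nonneg ((Zf a b c)^[k] u1) s
    have p2 := En_nonneg ((Zf a b c)^[k] u2) s
    set E1 := En ((Zf a b c)^[k] u1) s
    set E2 := En ((Zf a b c)^[k] u2) s
    have e4 : (η / √(1 + s)) ^ 4 = ((η / √(1 + s)) ^ 2) ^ 2 := by ring
    rw [e4] at b1 b2
    set M := (η / √(1 + s)) ^ 2
    have hM : 0 < M := by positivity
    have c1 := mul_le_mul_of_nonneg_left b1 (inv_nonneg.2 hM.le)
    have c2 := mul_le_mul_of_nonneg_left b2 (inv_nonneg.2 hM.le)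
    have e5 : ∀ X : ℝ, M⁻¹ * (100000 * M ^ 2 * X) = 100000 * M * X := by intro X; field_simp
    rw [e5] at c1 c2
    have l1' := mul_le_mul_of_nonneg_left l1 hM.le
    have l2' := mul_le_mul_of_nonneg_left l2 hM.le
    have hKM : KE * M ≤ κ / (1 + s) := by
      rw [hm2, mul_div_assoc']; gcongr
    have hfin := mul_le_mul_of_nonneg_right hKM (add_nonneg p1 p2)
    have q1 : 0 ≤ M * E1 := by positivity
    have q2 : 0 ≤ M * E2 := by positivity
    simp only [KE] at hfin
    linarith

/-- Forcing of `Su₁`. -/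
lemma S_half (h : Sol R u1 u2) {t m : ℝ} (ht : 0 < t)
    (hm1 : ∀ x y, |pt u1 t x y| ≤ m) (hm2 : ∀ x y, |pt u2 t x y| ≤ m) :
    In (dAlembert (Sf u1) * dAlembert (Sf u1)) t
      ≤ 18 * m ^ 4 * (En (Sf u1) t + En (Sf u2) t + En u1 t + En u2 t) := by
  have s1 := h.n1.smooth
  have s2 := h.n2.smooth
  have e : dAlembert (Sf u1) t = (-(Sf (pt u2 * pt u2 * pt u1)) - kc 2 * (pt u2 * pt u2 * pt u1)) t := by
    have hS : Sf (dAlembert u1) t = (-Sf (pt u2 * pt u2 * pt u1)) t := by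
      rw [Sf_pos h.e1 ht]
      have : -(pt u2 * pt u2 * pt u1) = kc (-1) * (pt u2 * pt u2 * pt u1) := neg_eq_kmul _
      rw [this, Sf_mul (smooth_kc _) ((s2.dt.mul s2.dt).mul s1.dt)]
      funext x y; simp [Sf]
    rw [dAl_Sf s1]
    funext x y
    simp [hS, h.e1 t ht]; ring
  have eS : Sf (pt u2 * pt u2 * pt u1) = kc 2 * (pt u2 * pt u1) * (pt (Sf u2) - pt u2)
      + pt u2 * pt u2 * (pt (Sf u1) - pt u1) := by
    rw [Sf_mul (s2.dt.mul s2.dt) s1.dt, Sf_mul s2.dt s2.dt, pt_Sf s1, pt_Sf s2]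
    funext t x y; simp; ring
  have n1 := h.n1.dt
  have n2 := h.n2.dt
  have n3 := h.n1.dS.dt
  have n4 := h.n2.dS.dt
  have hle : In (dAlembert (Sf u1) * dAlembert (Sf u1)) t
      ≤ In (kc (18 * m ^ 4) * (pt (Sf u1) * pt (Sf u1) + pt (Sf u2) * pt (Sf u2)
        + pt u1 * pt u1 + pt u2 * pt u2)) t := by
    refine In_mono (h.n1.dS.dAl.mul h.n1.dS.dAl) (((((n3.mul n3).add (n4.mul n4)).add
      (n1.mul n1)).add (n2.mul n2)).kmul _) ?_
    intro x y
    simp only [Pi.mul_apply, e, eS, Pi.sub_apply, Pi.neg_apply, Pi.add_apply, kc_apply]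
    have hp := hm1 x y
    have hq := hm2 x y
    set p := pt u1 t x y
    set q := pt u2 t x y
    set P := pt (Sf u1) t x y
    set Q := pt (Sf u2) t x y
    have hm : 0 ≤ m := (abs_nonneg _).trans hp
    have h1 : |q * p| ≤ m ^ 2 := by
      rw [abs_mul]; nlinarith [abs_nonneg p, abs_nonneg q]
    have h2 : |q * q| ≤ m ^ 2 := by
      rw [abs_mul]; nlinarith [abs_nonneg p, abs_nonneg q]
    have hb : |-(2 * (q * p) * (Q - q) + q * q * (P - p)) - 2 * (q * q * p)|
        ≤ m ^ 2 * (2 * |Q| + 2 * |q| + |P| + |p|) := by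
      have e : -(2 * (q * p) * (Q - q) + q * q * (P - p)) - 2 * (q * q * p)
        = (q * p) * (-2 * Q) + (q * q) * (-P) + (q * q) * p := by ring
      rw [e]
      refine (abs_add_three _ _ _).trans ?_
      rw [abs_mul (q * p), abs_mul (q * q) (-P), abs_mul (q * q) p, abs_mul (-2) Q, abs_neg P]
      have : |(-2 : ℝ)| = 2 := by norm_num
      rw [this]
      nlinarith [mul_le_mul_of_nonneg_right h1 (abs_nonneg Q),
        mul_le_mul_of_nonneg_right h2 (abs_nonneg P), mul_le_mul_of_nonneg_right h2 (abs_nonneg p),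
        abs_nonneg p, abs_nonneg q, sq_nonneg m, mul_nonneg (sq_nonneg m) (abs_nonneg q)]
    have hb2 := mul_self_le_mul_self (abs_nonneg _) hb
    rw [abs_mul_abs_self] at hb2
    refine hb2.trans ?_
    have e2 : m ^ 2 * (2 * |Q| + 2 * |q| + |P| + |p|) * (m ^ 2 * (2 * |Q| + 2 * |q| + |P| + |p|))
      = m ^ 4 * (2 * |Q| + 2 * |q| + |P| + |p|) ^ 2 := by ring
    have e3 : 18 * m ^ 4 * (P * P + Q * Q + p * p + q * q)
      = m ^ 4 * (18 * (|P| ^ 2 + |Q| ^ 2 + |p| ^ 2 + |q| ^ 2)) := by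
      simp only [sq_abs]; ring
    rw [e2, e3]
    apply mul_le_mul_of_nonneg_left _ (by positivity)
    nlinarith [sq_nonneg (|Q| - |q|), sq_nonneg (|Q| - 2 * |P|), sq_nonneg (|Q| - 2 * |p|),
      sq_nonneg (|q| - 2 * |P|), sq_nonneg (|q| - 2 * |p|), sq_nonneg (|p| - |P|), sq_nonneg P,
      sq_nonneg |p|, sq_nonneg |P|, sq_nonneg |q|, sq_nonneg |Q|]
  refine hle.trans ?_
  rw [In_kmul, In_add (((n3.mul n3).add (n4.mul n4)).add (n1.mul n1)) (n2.mul n2),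
    In_add ((n3.mul n3).add (n4.mul n4)) (n1.mul n1), In_add (n3.mul n3) (n4.mul n4)]
  have := pt_le_En h.n1 t
  have := pt_le_En h.n2 t
  have := pt_le_En h.n1.dS t
  have := pt_le_En h.n2.dS t
  gcongr

lemma S_energy (h : Sol R u1 u2) {η κ T : ℝ} (hη : 0 < η)
    (hκ : 0 < κ) (hηκ : KE * η ^ 2 ≤ κ)
    (hm : ∀ t, 0 ≤ t → t ≤ T → ∀ x y, |pt u1 t x y| ≤ η / √(1 + t) ∧ |pt u2 t x y| ≤ η / √(1 + t))
    {t : ℝ} (h0 : 0 ≤ t) (hT : t ≤ T) :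
    En (Sf u1) t + En (Sf u2) t + En u1 t + En u2 t
      ≤ (En (Sf u1) 0 + En (Sf u2) 0 + En u1 0 + En u2 0) * (1 + t) ^ κ := by
  have n1 := h.n1.dS
  have n2 := h.n2.dS
  have hd : ∀ t, HasDerivAt (fun t => En (Sf u1) t + En (Sf u2) t + En u1 t + En u2 t)
      (2 * In (pt (Sf u1) * dAlembert (Sf u1)) t + 2 * In (pt (Sf u2) * dAlembert (Sf u2)) t
        + 2 * In (pt u1 * dAlembert u1) t + 2 * In (pt u2 * dAlembert u2) t) t := fun t =>
    (((En_deriv n1 t).add (En_deriv n2 t)).add (En_deriv h.n1 t)).add (En_deriv h.n2 t)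
  have := gron (b := 0) hκ hd (T := T) ?_ h0 hT le_rfl
  · simpa using this
  · intro s hs hsT
    have hs1 : 0 < 1 + s := by linarith
    have hsq : 0 < √(1 + s) := sqrt_pos.2 hs1
    have hm0 : 0 < η / √(1 + s) := by positivity
    have hm2 : (η / √(1 + s)) ^ 2 = η ^ 2 / (1 + s) := by rw [div_pow, sq_sqrt hs1.le]
    have b1 := S_half h hs (fun x y => (hm s hs.le hsT.le x y).1)
      (fun x y => (hm s hs.le hsT.le x y).2)
    have b2 := S_half h.symm hs (fun x y => (hm s hs.le hsT.le x y).2)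
      (fun x y => (hm s hs.le hsT.le x y).1)
    have b3 := Zk_half h 0 0 0 (Nat.zero_le 3) hs hm0 (fun x y => (hm s hs.le hsT.le x y).1)
      (fun x y => (hm s hs.le hsT.le x y).2)
    have b4 := Zk_half h.symm 0 0 0 (Nat.zero_le 3) hs hm0 (fun x y => (hm s hs.le hsT.le x y).2)
      (fun x y => (hm s hs.le hsT.le x y).1)
    simp only [Function.iterate_zero, id] at b3 b4
    have y1 := In_young n1.dt n1.dAl (m := (η / √(1 + s)) ^ 2) (by positivity) s
    have y2 := In_young n2.dt n2.dAl (m := (η / √(1 + s)) ^ 2) (by positivity) s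
    have y3 := In_young h.n1.dt h.n1.dAl (m := (η / √(1 + s)) ^ 2) (by positivity) s
    have y4 := In_young h.n2.dt h.n2.dAl (m := (η / √(1 + s)) ^ 2) (by positivity) s
    have l1 := pt_le_En n1 s
    have l2 := pt_le_En n2 s
    have l3 := pt_le_En h.n1 s
    have l4 := pt_le_En h.n2 s
    have q1 := En_nonneg (Sf u1) s
    have q2 := En_nonneg (Sf u2) s
    have q3 := En_nonneg u1 s
    have q4 := En_nonneg u2 s
    set E1 := En (Sf u1) s
    set E2 := En (Sf u2) s
    set E3 := En u1 s
    set E4 := En u2 s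
    have e4 : (η / √(1 + s)) ^ 4 = ((η / √(1 + s)) ^ 2) ^ 2 := by ring
    rw [e4] at b1 b2 b3 b4
    set M := (η / √(1 + s)) ^ 2
    have hM : 0 < M := by positivity
    have c1 := mul_le_mul_of_nonneg_left b1 (inv_nonneg.2 hM.le)
    have c2 := mul_le_mul_of_nonneg_left b2 (inv_nonneg.2 hM.le)
    have c3 := mul_le_mul_of_nonneg_left b3 (inv_nonneg.2 hM.le)
    have c4 := mul_le_mul_of_nonneg_left b4 (inv_nonneg.2 hM.le)
    have e5 : ∀ X : ℝ, M⁻¹ * (100000 * M ^ 2 * X) = 100000 * M * X := by intro X; field_simp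
    have e6 : ∀ X : ℝ, M⁻¹ * (18 * M ^ 2 * X) = 18 * M * X := by intro X; field_simp
    rw [e5] at c3 c4
    rw [e6] at c1 c2
    have l1' := mul_le_mul_of_nonneg_left l1 hM.le
    have l2' := mul_le_mul_of_nonneg_left l2 hM.le
    have l3' := mul_le_mul_of_nonneg_left l3 hM.le
    have l4' := mul_le_mul_of_nonneg_left l4 hM.le
    have hKM : KE * M ≤ κ / (1 + s) := by
      rw [hm2, mul_div_assoc']; gcongr
    have hfin := mul_le_mul_of_nonneg_right hKM (add_nonneg (add_nonneg (add_nonneg q1 q2) q3) q4)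
    have r1 : 0 ≤ M * E1 := by positivity
    have r2 : 0 ≤ M * E2 := by positivity
    have r3 : 0 ≤ M * E3 := by positivity
    have r4 : 0 ≤ M * E4 := by positivity
    simp only [KE] at hfin
    linarith

/-- All the energies used below are bounded by `B` at time `t`. -/
structure EB (v : Fn) (t B : ℝ) : Prop where
  z1 : ∀ k ≤ 3, En ((Zf 1 0 0)^[k] v) t ≤ B
  z2 : ∀ k ≤ 3, En ((Zf 0 1 0)^[k] v) t ≤ B
  z3 : ∀ k ≤ 3, En ((Zf 0 0 1)^[k] v) t ≤ B
  s : En (Sf v) t ≤ B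

lemma EB.nonneg {v : Fn} {t B : ℝ} (h : EB v t B) : 0 ≤ B := (En_nonneg _ _).trans h.s
lemma EB.e0 {v : Fn} {t B : ℝ} (h : EB v t B) : En v t ≤ B := h.z1 0 (by norm_num)
lemma EB.mono {v : Fn} {t B B' : ℝ} (h : EB v t B) (hB : B ≤ B') : EB v t B' :=
  ⟨fun k hk => (h.z1 k hk).trans hB, fun k hk => (h.z2 k hk).trans hB,
    fun k hk => (h.z3 k hk).trans hB, h.s.trans hB⟩

/-- Propagation of the energies under the bootstrap assumption on `∂ₜu`. -/
theorem EB_propagate (h : Sol R u1 u2) {η κ T : ℝ} (hη : 0 < η)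
    (hκ : 0 < κ) (hηκ : KE * η ^ 2 ≤ κ)
    (hm : ∀ t, 0 ≤ t → t ≤ T → ∀ x y, |pt u1 t x y| ≤ η / √(1 + t) ∧ |pt u2 t x y| ≤ η / √(1 + t))
    {B : ℝ} (hb1 : EB u1 0 B) (hb2 : EB u2 0 B) {t : ℝ} (h0 : 0 ≤ t) (hT : t ≤ T) :
    EB u1 t (4 * B * (1 + t) ^ κ) ∧ EB u2 t (4 * B * (1 + t) ^ κ) := by
  have hB := hb1.nonneg
  have hX : 0 ≤ (1 + t) ^ κ := rpow_nonneg (by linarith) _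
  have key : ∀ a b c : ℝ, (∀ k ≤ 3, En ((Zf a b c)^[k] u1) 0 ≤ B) →
      (∀ k ≤ 3, En ((Zf a b c)^[k] u2) 0 ≤ B) → ∀ k ≤ 3,
      En ((Zf a b c)^[k] u1) t ≤ 4 * B * (1 + t) ^ κ ∧
      En ((Zf a b c)^[k] u2) t ≤ 4 * B * (1 + t) ^ κ := by
    intro a b c g1 g2 k hk
    have := Zk_energy h a b c hk hη hκ hηκ hm h0 hT
    have q1 := En_nonneg ((Zf a b c)^[k] u1) t
    have q2 := En_nonneg ((Zf a b c)^[k] u2) t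
    have : (En ((Zf a b c)^[k] u1) 0 + En ((Zf a b c)^[k] u2) 0) * (1 + t) ^ κ
        ≤ 4 * B * (1 + t) ^ κ := by
      have := g1 k hk
      have := g2 k hk
      gcongr; linarith
    constructor <;> linarith
  have hS := S_energy h hη hκ hηκ hm h0 hT
  have hS2 : (En (Sf u1) 0 + En (Sf u2) 0 + En u1 0 + En u2 0) * (1 + t) ^ κ
      ≤ 4 * B * (1 + t) ^ κ := by
    have := hb1.s
    have := hb2.s
    have := hb1.e0
    have := hb2.e0
    gcongr; linarith
  have q1 := En_nonneg (Sf u1) t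
  have q2 := En_nonneg (Sf u2) t
  have q3 := En_nonneg u1 t
  have q4 := En_nonneg u2 t
  exact ⟨⟨fun k hk => (key 1 0 0 hb1.z1 hb2.z1 k hk).1, fun k hk => (key 0 1 0 hb1.z2 hb2.z2 k hk).1,
      fun k hk => (key 0 0 1 hb1.z3 hb2.z3 k hk).1, by linarith⟩,
    ⟨fun k hk => (key 1 0 0 hb1.z1 hb2.z1 k hk).2, fun k hk => (key 0 1 0 hb1.z2 hb2.z2 k hk).2,
      fun k hk => (key 0 0 1 hb1.z3 hb2.z3 k hk).2, by linarith⟩⟩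
end sys

/-! ### Sobolev inequalities on time slices -/

/-- Cauchy–Schwarz for the integral of `|f g|`. -/
lemma cs_abs {X : Type*} [MeasurableSpace X] {μ : Measure X} {f g : X → ℝ}
    (hf : Integrable (fun x => f x * f x) μ) (hg : Integrable (fun x => g x * g x) μ)
    (hfg : Integrable (fun x => f x * g x) μ) :
    ∫ x, |f x * g x| ∂μ ≤ √(∫ x, f x * f x ∂μ) * √(∫ x, g x * g x ∂μ) := by
  have h0 : ∀ F : X → ℝ, 0 ≤ ∫ x, F x * F x ∂μ := fun F => integral_nonneg fun x => mul_self_nonneg _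
  have key : ∀ s : ℝ, 0 ≤ (∫ x, g x * g x ∂μ) * (s * s) + (-2 * ∫ x, |f x * g x| ∂μ) * s
      + ∫ x, f x * f x ∂μ := by
    intro s
    have e : (∫ x, g x * g x ∂μ) * (s * s) + (-2 * ∫ x, |f x * g x| ∂μ) * s
      + ∫ x, f x * f x ∂μ = ∫ x, (s * s) * (g x * g x) + (-2 * s) * |f x * g x| + f x * f x ∂μ := by
      have a1 : Integrable (fun x => (s * s) * (g x * g x) + (-2 * s) * |f x * g x|) μ :=
        (hg.const_mul _).add (hfg.abs.const_mul _)
      rw [integral_add a1 hf, integral_add (hg.const_mul _) (hfg.abs.const_mul _),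
        integral_const_mul, integral_const_mul]
      ring
    rw [e]
    refine integral_nonneg fun x => ?_
    have : s * s * (g x * g x) + -2 * s * |f x * g x| + f x * f x = (s * |g x| - |f x|) ^ 2 := by
      rw [abs_mul, ← abs_mul_abs_self (g x), ← abs_mul_abs_self (f x)]; ring
    simp only [Pi.zero_apply]
    rw [this]; positivity
  have hd := discrim_le_zero key
  rw [discrim] at hd
  rw [← Real.sqrt_mul (h0 f)]
  apply Real.le_sqrt_of_sq_le
  nlinarith

/-- One-dimensional Sobolev inequality. -/
lemma sob1 {φ : ℝ → ℝ} (h : ContDiff ℝ 1 φ) (hc : HasCompactSupport φ) (x : ℝ) :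
    φ x * φ x ≤ 2 * ∫ s, |φ s * deriv φ s| := by
  have h2 : ContDiff ℝ 1 (fun s => φ s * φ s) := h.mul h
  have hc2 : HasCompactSupport (fun s => φ s * φ s) := hc.mul_left
  have e := hc2.integral_Iic_deriv_eq h2 x
  have hd : ∀ s, deriv (fun s => φ s * φ s) s = 2 * (φ s * deriv φ s) := by
    intro s
    have := (h.differentiable (by norm_num)) s
    rw [deriv_fun_mul this this]; ring
  simp only [hd] at e
  rw [← e, integral_const_mul]
  have hi : Integrable (fun s => φ s * deriv φ s) :=
    (h.continuous.mul (h.continuous_deriv (by norm_num))).integrable_of_hasCompactSupport hc.mul_right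
  have h3 : ∫ s in Set.Iic x, φ s * deriv φ s ≤ ∫ s in Set.Iic x, |φ s * deriv φ s| :=
    setIntegral_mono hi.integrableOn hi.abs.integrableOn fun s => le_abs_self _
  have h4 : ∫ s in Set.Iic x, |φ s * deriv φ s| ≤ ∫ s, |φ s * deriv φ s| :=
    setIntegral_le_integral hi.abs (ae_of_all _ fun s => abs_nonneg _)
  linarith

section sob
variable {R : ℝ} {f g : Fn}

lemma Nice.slice1 (hf : Nice R f) (t y : ℝ) : ContDiff ℝ 1 (fun x => f t x y) ∧
    HasCompactSupport (fun x => f t x y) := by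
  constructor
  · have : ContDiff ℝ (⊤ : ℕ∞) (fun x : ℝ => unc f (t, x, y)) :=
      hf.smooth.comp (contDiff_const.prodMk (contDiff_id.prodMk contDiff_const))
    exact this.of_le (by exact_mod_cast le_top)
  · refine HasCompactSupport.of_support_subset_isCompact
      (isCompact_closedBall (0 : ℝ) (|(|t| + R)|)) ?_
    intro x hx
    by_contra hn
    apply hx
    apply hf.supp
    simp only [Metric.mem_closedBall, dist_zero_right, Real.norm_eq_abs, not_le] at hn
    have := sq_lt_sq.2 hn
    nlinarith [sq_nonneg y]

lemma Nice.slice2 (hf : Nice R f) (t x : ℝ) : ContDiff ℝ 1 (fun y => f t x y) ∧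
    HasCompactSupport (fun y => f t x y) := by
  constructor
  · have : ContDiff ℝ (⊤ : ℕ∞) (fun y : ℝ => unc f (t, x, y)) :=
      hf.smooth.comp (contDiff_const.prodMk (contDiff_const.prodMk contDiff_id))
    exact this.of_le (by exact_mod_cast le_top)
  · refine HasCompactSupport.of_support_subset_isCompact
      (isCompact_closedBall (0 : ℝ) (|(|t| + R)|)) ?_
    intro y hx
    by_contra hn
    apply hx
    apply hf.supp
    simp only [Metric.mem_closedBall, dist_zero_right, Real.norm_eq_abs, not_le] at hn
    have := sq_lt_sq.2 hn
    nlinarith [sq_nonneg x]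

lemma In_cs_abs (hf : Nice R f) (hg : Nice R g) (t : ℝ) :
    ∫ x : ℝ × ℝ, |f t x.1 x.2 * g t x.1 x.2| ≤ √(In (f * f) t) * √(In (g * g) t) :=
  cs_abs ((hf.mul hf).int t) ((hg.mul hg).int t) ((hf.mul hg).int t)

/-- The mass of `f²` on a horizontal line. -/
lemma row_sq (hf : Nice R f) (t y : ℝ) :
    ∫ x, f t x y * f t x y ≤ 2 * (√(In (f * f) t) * √(In (p2 f * p2 f) t)) := by
  refine le_trans ?_ (mul_le_mul_of_nonneg_left (In_cs_abs hf hf.d2 t) (by norm_num))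
  have hi : Integrable (fun x : ℝ × ℝ => |f t x.1 x.2 * p2 f t x.1 x.2|) :=
    ((hf.mul hf.d2).int t).abs
  have h1 : ∀ x, f t x y * f t x y ≤ 2 * ∫ s, |f t x s * p2 f t x s| := fun x =>
    sob1 (hf.slice2 t x).1 (hf.slice2 t x).2 y
  rw [Measure.volume_eq_prod] at hi ⊢
  rw [integral_prod _ hi, ← integral_const_mul]
  exact integral_mono ((hf.mul hf).int1 t y) (hi.integral_prod_left.const_mul 2) h1

/-- The `L⁴` form of the Sobolev inequality in the plane. -/
lemma sob_four (hf : Nice R f) (t x y : ℝ) :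
    (f t x y) ^ 4 ≤ 16 * (√(In (f * f) t) * √(In (p2 f * p2 f) t) *
      (√(In (p1 f * p1 f) t) * √(In (p2 (p1 f) * p2 (p1 f)) t))) := by
  have h1 : f t x y * f t x y ≤ 2 * ∫ s, |f t s y * p1 f t s y| :=
    sob1 (hf.slice1 t y).1 (hf.slice1 t y).2 x
  have h2 := cs_abs ((hf.mul hf).int1 t y) ((hf.d1.mul hf.d1).int1 t y) ((hf.mul hf.d1).int1 t y)
  have h3 := row_sq hf t y
  have h4 := row_sq hf.d1 t y
  set A := ∫ x, f t x y * f t x y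
  set B := ∫ x, p1 f t x y * p1 f t x y
  have hA : 0 ≤ A := integral_nonneg fun x => mul_self_nonneg _
  have hB : 0 ≤ B := integral_nonneg fun x => mul_self_nonneg _
  have h5 : f t x y * f t x y ≤ 2 * (√A * √B) := by linarith
  have h6 := mul_self_le_mul_self (mul_self_nonneg _) h5
  have e : 2 * (√A * √B) * (2 * (√A * √B)) = 4 * (A * B) := by
    have := Real.mul_self_sqrt hA
    have := Real.mul_self_sqrt hB
    calc _ = 4 * ((√A * √A) * (√B * √B)) := by ring
      _ = _ := by simp [*]
  have h7 := mul_le_mul h3 h4 hB (hA.trans h3)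
  nlinarith

/-- The mixed second derivative is controlled by the pure ones. -/
lemma mixed_le (hf : Nice R f) (t : ℝ) : In (p2 (p1 f) * p2 (p1 f)) t
    ≤ √(In (p1 (p1 f) * p1 (p1 f)) t) * √(In (p2 (p2 f) * p2 (p2 f)) t) := by
  have e : In (p2 (p1 f) * p2 (p1 f)) t = In (p1 (p1 f) * p2 (p2 f)) t := by
    have a1 := In_Zf_parts hf.d1 hf.d1.d2 0 1 0 t
    have a2 := In_Zf_parts hf.d1 hf.d2.d2 1 0 0 t
    rw [← p2_eq_Zf, ← p2_eq_Zf] at a1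
    rw [← p1_eq_Zf, ← p1_eq_Zf] at a2
    rw [a1, a2, p2_p1 hf.smooth, p2_p1 hf.smooth.d2]
  rw [e]
  exact (le_abs_self _).trans (In_cs_sqrt hf.d1.d1 hf.d2.d2 t)

lemma interp1 (hf : Nice R f) (t : ℝ) : In (p1 (p1 f) * p1 (p1 f)) t
    ≤ √(In (p1 f * p1 f) t) * √(In (p1 (p1 (p1 f)) * p1 (p1 (p1 f))) t) := by
  have a := In_Zf_parts hf.d1 hf.d1.d1 1 0 0 t
  rw [← p1_eq_Zf, ← p1_eq_Zf] at a
  rw [a]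
  exact (neg_le_abs _).trans (In_cs_sqrt hf.d1 hf.d1.d1.d1 t)

lemma interp2 (hf : Nice R f) (t : ℝ) : In (p2 (p2 f) * p2 (p2 f)) t
    ≤ √(In (p2 f * p2 f) t) * √(In (p2 (p2 (p2 f)) * p2 (p2 (p2 f))) t) := by
  have a := In_Zf_parts hf.d2 hf.d2.d2 0 1 0 t
  rw [← p2_eq_Zf, ← p2_eq_Zf] at a
  rw [a]
  exact (neg_le_abs _).trans (In_cs_sqrt hf.d2 hf.d2.d2.d2 t)

/-- The Sobolev inequality in the form used below: `f ∈ L²` with norm `α`, `∇f` with norm `β` and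
pure third derivatives with norm `γ` give the bound `|f|⁸ ≤ 256 α²β⁵γ`. -/
lemma sob_main (hf : Nice R f) {t α β γ : ℝ} (hα : 0 ≤ α) (hβ : 0 ≤ β) (hγ : 0 ≤ γ)
    (h0 : In (f * f) t ≤ α ^ 2) (h1 : In (p1 f * p1 f) t ≤ β ^ 2) (h2 : In (p2 f * p2 f) t ≤ β ^ 2)
    (h3 : In (p1 (p1 (p1 f)) * p1 (p1 (p1 f))) t ≤ γ ^ 2)
    (h4 : In (p2 (p2 (p2 f)) * p2 (p2 (p2 f))) t ≤ γ ^ 2) (x y : ℝ) :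
    (f t x y) ^ 8 ≤ 256 * (α ^ 2 * β ^ 5 * γ) := by
  have q0 : √(In (f * f) t) ≤ α := Real.sqrt_le_iff.2 ⟨hα, h0⟩
  have q1 : √(In (p1 f * p1 f) t) ≤ β := Real.sqrt_le_iff.2 ⟨hβ, h1⟩
  have q2 : √(In (p2 f * p2 f) t) ≤ β := Real.sqrt_le_iff.2 ⟨hβ, h2⟩
  have q3 : √(In (p1 (p1 (p1 f)) * p1 (p1 (p1 f))) t) ≤ γ := Real.sqrt_le_iff.2 ⟨hγ, h3⟩
  have q4 : √(In (p2 (p2 (p2 f)) * p2 (p2 (p2 f))) t) ≤ γ := Real.sqrt_le_iff.2 ⟨hγ, h4⟩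
  have i1 : In (p1 (p1 f) * p1 (p1 f)) t ≤ β * γ :=
    (interp1 hf t).trans (mul_le_mul q1 q3 (Real.sqrt_nonneg _) hβ)
  have i2 : In (p2 (p2 f) * p2 (p2 f)) t ≤ β * γ :=
    (interp2 hf t).trans (mul_le_mul q2 q4 (Real.sqrt_nonneg _) hβ)
  have i3 : In (p2 (p1 f) * p2 (p1 f)) t ≤ β * γ := by
    refine (mixed_le hf t).trans ?_
    have hbg : 0 ≤ β * γ := mul_nonneg hβ hγ
    calc _ ≤ √(β * γ) * √(β * γ) := mul_le_mul (Real.sqrt_le_sqrt i1) (Real.sqrt_le_sqrt i2)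
            (Real.sqrt_nonneg _) (Real.sqrt_nonneg _)
      _ = β * γ := Real.mul_self_sqrt hbg
  have i4 : √(In (p2 (p1 f) * p2 (p1 f)) t) ≤ √(β * γ) := Real.sqrt_le_sqrt i3
  have s := sob_four hf t x y
  have s2 : (f t x y) ^ 4 ≤ 16 * (α * β * (β * √(β * γ))) := by
    refine s.trans ?_
    gcongr
  have s3 := mul_self_le_mul_self (by positivity) s2
  have e : √(β * γ) * √(β * γ) = β * γ := Real.mul_self_sqrt (mul_nonneg hβ hγ)
  calc (f t x y) ^ 8 = (f t x y) ^ 4 * (f t x y) ^ 4 := by ring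
    _ ≤ _ := s3
    _ = 256 * (α ^ 2 * β ^ 4 * (√(β * γ) * √(β * γ))) := by ring
    _ = _ := by rw [e]; ring
end sob

/-! ### Weighted estimates away from the light cone -/

/-- The weight `t² − |x|²`. -/
def wt : Fn := cT * cT - c1 * c1 - c2 * c2

lemma smooth_wt : Smooth3 wt :=
  ((smooth_cT.mul smooth_cT).sub (smooth_c1.mul smooth_c1)).sub (smooth_c2.mul smooth_c2)

lemma wt_apply (t x y : ℝ) : wt t x y = t * t - x * x - y * y := rfl

lemma p1_wt : p1 wt = kc (-2) * c1 := by
  rw [wt, p1_sub ((smooth_cT.mul smooth_cT).sub (smooth_c1.mul smooth_c1))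
    (smooth_c2.mul smooth_c2), p1_sub (smooth_cT.mul smooth_cT) (smooth_c1.mul smooth_c1),
    p1_mul smooth_cT smooth_cT, p1_mul smooth_c1 smooth_c1, p1_mul smooth_c2 smooth_c2]
  funext t x y; simp; ring

lemma p2_wt : p2 wt = kc (-2) * c2 := by
  rw [wt, p2_sub ((smooth_cT.mul smooth_cT).sub (smooth_c1.mul smooth_c1))
    (smooth_c2.mul smooth_c2), p2_sub (smooth_cT.mul smooth_cT) (smooth_c1.mul smooth_c1),
    p2_mul smooth_cT smooth_cT, p2_mul smooth_c1 smooth_c1, p2_mul smooth_c2 smooth_c2]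
  funext t x y; simp; ring

section wt
variable {R : ℝ} {u v : Fn}

lemma Nice.cases (hu : Nice R u) {t : ℝ} (ht : 0 ≤ t) (x y : ℝ) :
    u t x y = 0 ∨ x ^ 2 + y ^ 2 ≤ (t + R) ^ 2 := by
  by_cases h : x ^ 2 + y ^ 2 ≤ (t + R) ^ 2
  · exact Or.inr h
  · left; apply hu.supp; rw [abs_of_nonneg ht]; exact not_le.1 h

lemma In_c1 (hu : Nice R u) {t : ℝ} (ht : 0 ≤ t) :
    In ((c1 * u) * (c1 * u)) t ≤ (t + R) ^ 2 * In (u * u) t := by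
  rw [← In_kmul]
  have n := Nice.mul_left smooth_c1 hu
  refine In_mono (n.mul n) ((hu.mul hu).kmul _) fun x y => ?_
  simp only [Pi.mul_apply, kc_apply, c1_apply]
  rcases hu.cases ht x y with h | h
  · simp [h]
  · nlinarith [mul_self_nonneg (u t x y), mul_nonneg (mul_self_nonneg (u t x y)) (sq_nonneg y),
      mul_le_mul_of_nonneg_left h (mul_self_nonneg (u t x y))]

lemma In_c2 (hu : Nice R u) {t : ℝ} (ht : 0 ≤ t) :
    In ((c2 * u) * (c2 * u)) t ≤ (t + R) ^ 2 * In (u * u) t := by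
  rw [← In_kmul]
  have n := Nice.mul_left smooth_c2 hu
  refine In_mono (n.mul n) ((hu.mul hu).kmul _) fun x y => ?_
  simp only [Pi.mul_apply, kc_apply, c2_apply]
  rcases hu.cases ht x y with h | h
  · simp [h]
  · nlinarith [mul_self_nonneg (u t x y), mul_nonneg (mul_self_nonneg (u t x y)) (sq_nonneg x),
      mul_le_mul_of_nonneg_left h (mul_self_nonneg (u t x y))]

lemma In_cT (u : Fn) (t : ℝ) : In ((cT * u) * (cT * u)) t = t ^ 2 * In (u * u) t := by
  rw [← In_kmul]
  apply In_congr; intro x y; simp; ring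

lemma In_wt (hR : 0 ≤ R) (hu : Nice R u) {t : ℝ} (ht : 0 ≤ t) :
    In ((wt * u) * (wt * u)) t ≤ (t + R) ^ 4 * In (u * u) t := by
  rw [← In_kmul]
  have n := Nice.mul_left smooth_wt hu
  refine In_mono (n.mul n) ((hu.mul hu).kmul _) fun x y => ?_
  simp only [Pi.mul_apply, kc_apply, wt_apply]
  rcases hu.cases ht x y with h | h
  · simp [h]
  · have h1 : (t * t - x * x - y * y) ^ 2 ≤ ((t + R) ^ 2) ^ 2 := by
      apply sq_le_sq'
      · nlinarith
      · nlinarith [mul_nonneg ht hR, sq_nonneg x, sq_nonneg y, sq_nonneg R]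
    have := mul_le_mul_of_nonneg_right h1 (mul_self_nonneg (u t x y))
    nlinarith

/-- Weighted control of the Hessian by the Laplacian. -/
lemma hess_wt (hv : Nice R v) {t : ℝ} (ht : 0 ≤ t) :
    In ((wt * p1 (p1 v)) * (wt * p1 (p1 v))) t + In ((wt * p2 (p1 v)) * (wt * p2 (p1 v))) t
      + In ((wt * p2 (p2 v)) * (wt * p2 (p2 v))) t
    ≤ 2 * In ((wt * (p1 (p1 v) + p2 (p2 v))) * (wt * (p1 (p1 v) + p2 (p2 v)))) t
      + 128 * (t + R) ^ 2 * In (p1 v * p1 v) t := by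
  have sv := hv.smooth
  have hW : Smooth3 (wt * wt) := smooth_wt.mul smooth_wt
  have n11 := Nice.mul_left smooth_wt hv.d1.d1
  have n12 := Nice.mul_left smooth_wt hv.d1.d2
  have n22 := Nice.mul_left smooth_wt hv.d2.d2
  have nL := Nice.mul_left smooth_wt (hv.d1.d1.add hv.d2.d2)
  have m1 := Nice.mul_left smooth_c1 hv.d1
  have m2 := Nice.mul_left smooth_c2 hv.d1
  have nA : Nice R (wt * wt * (p1 v * p2 (p2 v))) := Nice.mul_left hW (hv.d1.mul hv.d2.d2)
  have nB : Nice R (wt * wt * (p1 v * p2 (p1 v))) := Nice.mul_left hW (hv.d1.mul hv.d1.d2)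
  have eA : p1 (wt * wt * (p1 v * p2 (p2 v))) = kc (-4) * c1 * wt * (p1 v * p2 (p2 v))
      + wt * wt * (p1 (p1 v) * p2 (p2 v) + p1 v * p1 (p2 (p2 v))) := by
    rw [p1_mul hW (sv.d1.mul sv.d2.d2), p1_mul smooth_wt smooth_wt, p1_mul sv.d1 sv.d2.d2, p1_wt]
    funext t x y; simp; ring
  have eB : p2 (wt * wt * (p1 v * p2 (p1 v))) = kc (-4) * c2 * wt * (p1 v * p2 (p1 v))
      + wt * wt * (p2 (p1 v) * p2 (p1 v) + p1 v * p1 (p2 (p2 v))) := by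
    rw [p2_mul hW (sv.d1.mul sv.d1.d2), p2_mul smooth_wt smooth_wt, p2_mul sv.d1 sv.d1.d2, p2_wt,
      p2_p1 sv, p2_p1 sv.d2]
    funext t x y; simp; ring
  have hle : In ((wt * p1 (p1 v)) * (wt * p1 (p1 v)) + (wt * p2 (p1 v)) * (wt * p2 (p1 v))
      + (wt * p2 (p2 v)) * (wt * p2 (p2 v))) t
      ≤ In (kc 2 * ((wt * (p1 (p1 v) + p2 (p2 v))) * (wt * (p1 (p1 v) + p2 (p2 v))))
        + kc 64 * ((c1 * p1 v) * (c1 * p1 v)) + kc 64 * ((c2 * p1 v) * (c2 * p1 v))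
        + kc (-4) * p1 (wt * wt * (p1 v * p2 (p2 v)))
        + kc 4 * p2 (wt * wt * (p1 v * p2 (p1 v)))) t := by
    refine In_mono (((n11.mul n11).add (n12.mul n12)).add (n22.mul n22))
      ((((((nL.mul nL).kmul _).add ((m1.mul m1).kmul _)).add ((m2.mul m2).kmul _)).add
        (nA.d1.kmul _)).add (nB.d2.kmul _)) fun x y => ?_
    rw [eA, eB]
    simp only [Pi.mul_apply, Pi.add_apply, kc_apply, c1_apply, c2_apply]
    generalize wt t x y = w
    generalize p1 (p1 v) t x y = a
    generalize p2 (p1 v) t x y = b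
    generalize p2 (p2 v) t x y = c
    generalize p1 v t x y = d
    generalize p1 (p2 (p2 v)) t x y = e
    nlinarith [sq_nonneg (w * c + 8 * (x * d)), sq_nonneg (w * b - 8 * (y * d)),
      sq_nonneg (w * b), sq_nonneg (w * c), sq_nonneg (w * a)]
  rw [In_add ((n11.mul n11).add (n12.mul n12)) (n22.mul n22), In_add (n11.mul n11) (n12.mul n12),
    In_add (((((nL.mul nL).kmul _).add ((m1.mul m1).kmul _)).add ((m2.mul m2).kmul _)).add
        (nA.d1.kmul _)) (nB.d2.kmul _),
    In_add ((((nL.mul nL).kmul _).add ((m1.mul m1).kmul _)).add ((m2.mul m2).kmul _))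
        (nA.d1.kmul _),
    In_add (((nL.mul nL).kmul _).add ((m1.mul m1).kmul _)) ((m2.mul m2).kmul _),
    In_add ((nL.mul nL).kmul _) ((m1.mul m1).kmul _)] at hle
  simp only [In_kmul, In_p1 nA, In_p2 nB] at hle
  have := In_c1 hv.d1 ht
  have := In_c2 hv.d1 ht
  linarith

/-- The Laplacian, with weight `t² − |x|²`, in terms of `S`, `Ω` and `□`. -/
lemma lap_wt (hv : Smooth3 v) : wt * (p1 (p1 v) + p2 (p2 v)) = cT * pt (Sf v) - c1 * p1 (Sf v)
    - c2 * p2 (Sf v) - cT * pt v - rot (rot v) - cT * (cT * dAlembert v) := by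
  have e1 : rot (rot v) = c1 * c1 * p2 (p2 v) + c2 * c2 * p1 (p1 v) - kc 2 * c1 * c2 * p1 (p2 v)
      - c1 * p1 v - c2 * p2 v := by
    rw [rot_eq_Zf (rot v), rot_eq_Zf v, Zf, p1_Zf _ _ _ hv, p2_Zf _ _ _ hv, Zf, Zf, p2_p1 hv]
    funext t x y; simp; ring
  rw [e1, pt_Sf hv, p1_Sf hv, p2_Sf hv, Sf, Sf, Sf, p1_pt hv, p2_pt hv, p2_p1 hv]
  funext t x y; simp [wt_apply, dAlembert]; ring

lemma In_sq6 {a b c d e f : Fn} (ha : Nice R a) (hb : Nice R b) (hc : Nice R c) (hd : Nice R d)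
    (he : Nice R e) (hf : Nice R f) (t : ℝ) :
    In ((a - b - c - d - e - f) * (a - b - c - d - e - f)) t
      ≤ 16 * (In (a * a) t + In (b * b) t + In (c * c) t + In (d * d) t) + 4 * In (e * e) t
        + 2 * In (f * f) t := by
  have h1 := In_sub_sq_le ((((ha.sub hb).sub hc).sub hd).sub he) hf t
  have h2 := In_sub_sq_le (((ha.sub hb).sub hc).sub hd) he t
  have h3 : In ((a - b - c - d) * (a - b - c - d)) t
      ≤ 2 * In ((a - b) * (a - b)) t + 2 * In ((c + d) * (c + d)) t := by
    have := In_sub_sq_le (ha.sub hb) (hc.add hd) t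
    rwa [← sub_sub] at this
  have h4 := In_sub_sq_le ha hb t
  have h5 := In_add_sq_le hc hd t
  linarith

/-- Weighted control of the Hessian by the energies. -/
lemma hess_EB (hR : 0 ≤ R) (hv : Nice R v) {t B : ℝ} (ht : 0 ≤ t) (hB : EB v t B)
    (hbox : t ^ 2 * In (dAlembert v * dAlembert v) t ≤ B) :
    In ((wt * p1 (p1 v)) * (wt * p1 (p1 v))) t ≤ 212 * (t + R) ^ 2 * B ∧
    In ((wt * p2 (p1 v)) * (wt * p2 (p1 v))) t ≤ 212 * (t + R) ^ 2 * B ∧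
    In ((wt * p2 (p2 v)) * (wt * p2 (p2 v))) t ≤ 212 * (t + R) ^ 2 * B := by
  have hB0 := hB.nonneg
  have h := hess_wt hv ht
  rw [lap_wt hv.smooth] at h
  have nS := hv.dS
  have h6 := In_sq6 (Nice.mul_left smooth_cT nS.dt) (Nice.mul_left smooth_c1 nS.d1)
    (Nice.mul_left smooth_c2 nS.d2) (Nice.mul_left smooth_cT hv.dt) hv.dO.dO
    (Nice.mul_left smooth_cT (Nice.mul_left smooth_cT hv.dAl)) t
  have b1 := In_c1 nS.d1 ht
  have b2 := In_c2 nS.d2 ht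
  have tL : t ^ 2 ≤ (t + R) ^ 2 := by nlinarith
  have hS := hB.s
  rw [En_eq nS] at hS
  have b3 : In ((cT * pt (Sf v)) * (cT * pt (Sf v))) t
      ≤ (t + R) ^ 2 * In (pt (Sf v) * pt (Sf v)) t := by
    rw [In_cT]; exact mul_le_mul_of_nonneg_right tL (In_sq_nonneg t)
  have b4 : In ((cT * pt v) * (cT * pt v)) t ≤ (t + R) ^ 2 * B := by
    rw [In_cT]
    exact mul_le_mul tL ((pt_le_En hv t).trans hB.e0) (In_sq_nonneg t) (sq_nonneg _)
  have b5 : In (rot (rot v) * rot (rot v)) t ≤ 2 * (t + R) ^ 2 * B := by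
    have e : rot (rot v) = c1 * p2 (rot v) - c2 * p1 (rot v) := rfl
    have q := In_sub_sq_le (Nice.mul_left smooth_c1 hv.dO.d2) (Nice.mul_left smooth_c2 hv.dO.d1) t
    have q1 := In_c1 hv.dO.d2 ht
    have q2 := In_c2 hv.dO.d1 ht
    have q3 : En (rot v) t ≤ B := by rw [rot_eq_Zf]; exact hB.z3 1 (by norm_num)
    rw [En_eq hv.dO] at q3
    have q4 := In_sq_nonneg (u := pt (rot v)) t
    rw [e]
    have : (t + R) ^ 2 * (In (p1 (rot v) * p1 (rot v)) t + In (p2 (rot v) * p2 (rot v)) t)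
        ≤ (t + R) ^ 2 * B := mul_le_mul_of_nonneg_left (by linarith) (sq_nonneg _)
    linarith
  have b6 : In ((cT * (cT * dAlembert v)) * (cT * (cT * dAlembert v))) t ≤ (t + R) ^ 2 * B := by
    rw [In_cT, In_cT]
    exact mul_le_mul tL hbox (mul_nonneg (sq_nonneg _) (In_sq_nonneg t)) (sq_nonneg _)
  have b7 : (t + R) ^ 2 * (In (pt (Sf v) * pt (Sf v)) t + In (p1 (Sf v) * p1 (Sf v)) t
      + In (p2 (Sf v) * p2 (Sf v)) t) ≤ (t + R) ^ 2 * B :=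
    mul_le_mul_of_nonneg_left hS (sq_nonneg _)
  have b8 : (t + R) ^ 2 * In (p1 v * p1 v) t ≤ (t + R) ^ 2 * B :=
    mul_le_mul_of_nonneg_left ((p1_le_En hv t).trans hB.e0) (sq_nonneg _)
  have n1 := In_sq_nonneg (u := wt * p1 (p1 v)) t
  have n2 := In_sq_nonneg (u := wt * p2 (p1 v)) t
  have n3 := In_sq_nonneg (u := wt * p2 (p2 v)) t
  refine ⟨?_, ?_, ?_⟩ <;> linarith

lemma In_sq4 {a b c d : Fn} (ha : Nice R a) (hb : Nice R b) (hc : Nice R c) (hd : Nice R d)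
    (t : ℝ) : In ((a - b - c - d) * (a - b - c - d)) t
      ≤ 4 * (In (a * a) t + In (b * b) t + In (c * c) t + In (d * d) t) := by
  have h3 : In ((a - b - c - d) * (a - b - c - d)) t
      ≤ 2 * In ((a - b) * (a - b)) t + 2 * In ((c + d) * (c + d)) t := by
    have := In_sub_sq_le (ha.sub hb) (hc.add hd) t
    rwa [← sub_sub] at this
  have h4 := In_sub_sq_le ha hb t
  have h5 := In_add_sq_le hc hd t
  linarith

/-- Weighted control of `∂ᵢ∂ₜv`. -/
lemma mix_EB (hR : 0 ≤ R) (hv : Nice R v) {t B : ℝ} (ht : 1 ≤ t) (hB : EB v t B)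
    (hbox : t ^ 2 * In (dAlembert v * dAlembert v) t ≤ B) :
    In ((wt * pt (p1 v)) * (wt * pt (p1 v))) t ≤ 1704 * (1 + R) ^ 2 * (t + R) ^ 2 * B ∧
    In ((wt * pt (p2 v)) * (wt * pt (p2 v))) t ≤ 1704 * (1 + R) ^ 2 * (t + R) ^ 2 * B := by
  have hB0 := hB.nonneg
  have ht0 : 0 ≤ t := by linarith
  obtain ⟨g1, g2, g3⟩ := hess_EB hR hv ht0 hB hbox
  have sv := hv.smooth
  have nS := hv.dS
  have nw : ∀ {u : Fn}, Nice R u → Nice R (wt * u) := fun h => Nice.mul_left smooth_wt h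
  have e1 : cT * (wt * pt (p1 v)) = wt * p1 (Sf v) - wt * p1 v - c1 * (wt * p1 (p1 v))
      - c2 * (wt * p2 (p1 v)) := by
    rw [p1_Sf sv, Sf]; ring
  have e2 : cT * (wt * pt (p2 v)) = wt * p2 (Sf v) - wt * p2 v - c1 * (wt * p2 (p1 v))
      - c2 * (wt * p2 (p2 v)) := by
    rw [p2_Sf sv, Sf, p2_p1 sv]; ring
  have f1 := In_sq4 (nw nS.d1) (nw hv.d1) (Nice.mul_left smooth_c1 (nw hv.d1.d1))
    (Nice.mul_left smooth_c2 (nw hv.d1.d2)) t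
  have f2 := In_sq4 (nw nS.d2) (nw hv.d2) (Nice.mul_left smooth_c1 (nw hv.d1.d2))
    (Nice.mul_left smooth_c2 (nw hv.d2.d2)) t
  rw [← e1, In_cT] at f1
  rw [← e2, In_cT] at f2
  have L4 : 0 ≤ (t + R) ^ 4 := by positivity
  have L2 : 0 ≤ (t + R) ^ 2 := by positivity
  have fin : ∀ {X a b c d : ℝ}, t ^ 2 * X ≤ 4 * (a + b + c + d) → a ≤ (t + R) ^ 4 * B →
      b ≤ (t + R) ^ 4 * B → c ≤ 212 * (t + R) ^ 4 * B → d ≤ 212 * (t + R) ^ 4 * B →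
      X ≤ 1704 * (1 + R) ^ 2 * (t + R) ^ 2 * B := by
    intro X a b c d h ha hb hc hd
    have h1 : t ^ 2 * X ≤ 1704 * (t + R) ^ 4 * B := by linarith
    have h2 : (t + R) ^ 2 ≤ t ^ 2 * (1 + R) ^ 2 := by
      rw [← mul_pow]
      apply pow_le_pow_left₀ (by linarith)
      nlinarith
    have h3 : 1704 * (t + R) ^ 4 * B ≤ t ^ 2 * (1704 * (1 + R) ^ 2 * (t + R) ^ 2 * B) := by
      have := mul_le_mul_of_nonneg_right h2 (mul_nonneg L2 hB0)
      linarith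
    have h4 : 0 < t ^ 2 := by positivity
    exact le_of_mul_le_mul_left (h1.trans h3) h4
  have up : ∀ {X Y : ℝ}, X ≤ (t + R) ^ 2 * Y → Y ≤ 212 * (t + R) ^ 2 * B →
      X ≤ 212 * (t + R) ^ 4 * B := by
    intro X Y h1 h2
    have := mul_le_mul_of_nonneg_left h2 L2
    linarith
  constructor
  · refine fin f1 ((In_wt hR nS.d1 ht0).trans (mul_le_mul_of_nonneg_left
      ((p1_le_En nS t).trans hB.s) L4)) ((In_wt hR hv.d1 ht0).trans (mul_le_mul_of_nonneg_left
      ((p1_le_En hv t).trans hB.e0) L4)) (up (In_c1 (nw hv.d1.d1) ht0) g1)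
      (up (In_c2 (nw hv.d1.d2) ht0) g2)
  · refine fin f2 ((In_wt hR nS.d2 ht0).trans (mul_le_mul_of_nonneg_left
      ((p2_le_En nS t).trans hB.s) L4)) ((In_wt hR hv.d2 ht0).trans (mul_le_mul_of_nonneg_left
      ((p2_le_En hv t).trans hB.e0) L4)) (up (In_c1 (nw hv.d1.d2) ht0) g2)
      (up (In_c2 (nw hv.d2.d2) ht0) g3)

lemma In_sq3 {a b c : Fn} (ha : Nice R a) (hb : Nice R b) (hc : Nice R c)
    (t : ℝ) : In ((a + b + c) * (a + b + c)) t
      ≤ 4 * (In (a * a) t + In (b * b) t + In (c * c) t) := by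
  have h4 := In_add_sq_le (ha.add hb) hc t
  have h5 := In_add_sq_le ha hb t
  have := In_sq_nonneg (u := c) t
  linarith

lemma In_kk (k : ℝ) (u : Fn) (t : ℝ) : In ((kc k * u) * (kc k * u)) t = k ^ 2 * In (u * u) t := by
  rw [← In_kmul]
  apply In_congr; intro x y; simp; ring

/-- Decay of `∂ₜv` away from the light cone. -/
theorem decay_wt (hR : 0 ≤ R) (hv : Nice R v) {t B : ℝ} (ht : 1 ≤ t) (hB : EB v t B)
    (hbox : t ^ 2 * In (dAlembert v * dAlembert v) t ≤ B) (x y : ℝ) :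
    (wt t x y * pt v t x y) ^ 8 ≤ 256 * 60 ^ 6 * (1 + R) ^ 5 * (t + R) ^ 11 * B ^ 4 := by
  have hB0 := hB.nonneg
  have ht0 : 0 ≤ t := by linarith
  obtain ⟨m1, m2⟩ := mix_EB hR hv ht hB hbox
  have sv := hv.smooth
  have nf : Nice R (wt * pt v) := Nice.mul_left smooth_wt hv.dt
  have nw : ∀ {u : Fn}, Nice R u → Nice R (wt * u) := fun h => Nice.mul_left smooth_wt h
  have nc1 : ∀ {u : Fn}, Nice R u → Nice R (c1 * u) := fun h => Nice.mul_left smooth_c1 h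
  have nc2 : ∀ {u : Fn}, Nice R u → Nice R (c2 * u) := fun h => Nice.mul_left smooth_c2 h
  have d1 : p1 (wt * pt v) = wt * pt (p1 v) + kc (-2) * (c1 * pt v) := by
    rw [p1_mul smooth_wt sv.dt, p1_wt, p1_pt sv]; ring
  have d2 : p2 (wt * pt v) = wt * pt (p2 v) + kc (-2) * (c2 * pt v) := by
    rw [p2_mul smooth_wt sv.dt, p2_wt, p2_pt sv]; ring
  have t1 : p1 (p1 (p1 (wt * pt v))) = wt * pt (p1 (p1 (p1 v))) + kc (-6) * (c1 * pt (p1 (p1 v)))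
      + kc (-6) * pt (p1 v) := by
    have s1 := sv.d1.dt
    have s2 := sv.d1.d1.dt
    rw [d1, p1_add (smooth_wt.mul s1) ((smooth_kc _).mul (smooth_c1.mul sv.dt)),
      p1_mul smooth_wt s1, p1_kmul _ (smooth_c1.mul sv.dt), p1_mul smooth_c1 sv.dt, p1_wt,
      p1_pt sv.d1, p1_pt sv, p1_c1]
    have e : kc (-2) * c1 * pt (p1 v) + wt * pt (p1 (p1 v))
        + kc (-2) * (kc 1 * pt v + c1 * pt (p1 v))
        = wt * pt (p1 (p1 v)) + kc (-4) * (c1 * pt (p1 v)) + kc (-2) * pt v := by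
      funext t x y; simp; ring
    rw [e, p1_add ((smooth_wt.mul s2).add ((smooth_kc _).mul (smooth_c1.mul s1)))
      ((smooth_kc _).mul sv.dt), p1_add (smooth_wt.mul s2) ((smooth_kc _).mul (smooth_c1.mul s1)),
      p1_mul smooth_wt s2, p1_kmul _ (smooth_c1.mul s1), p1_mul smooth_c1 s1, p1_kmul _ sv.dt,
      p1_wt, p1_pt sv, p1_pt sv.d1, p1_pt sv.d1.d1, p1_c1]
    funext t x y; simp; ring
  have t2 : p2 (p2 (p2 (wt * pt v))) = wt * pt (p2 (p2 (p2 v))) + kc (-6) * (c2 * pt (p2 (p2 v)))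
      + kc (-6) * pt (p2 v) := by
    have s1 := sv.d2.dt
    have s2 := sv.d2.d2.dt
    rw [d2, p2_add (smooth_wt.mul s1) ((smooth_kc _).mul (smooth_c2.mul sv.dt)),
      p2_mul smooth_wt s1, p2_kmul _ (smooth_c2.mul sv.dt), p2_mul smooth_c2 sv.dt, p2_wt,
      p2_pt sv.d2, p2_pt sv, p2_c2]
    have e : kc (-2) * c2 * pt (p2 v) + wt * pt (p2 (p2 v))
        + kc (-2) * (kc 1 * pt v + c2 * pt (p2 v))
        = wt * pt (p2 (p2 v)) + kc (-4) * (c2 * pt (p2 v)) + kc (-2) * pt v := by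
      funext t x y; simp; ring
    rw [e, p2_add ((smooth_wt.mul s2).add ((smooth_kc _).mul (smooth_c2.mul s1)))
      ((smooth_kc _).mul sv.dt), p2_add (smooth_wt.mul s2) ((smooth_kc _).mul (smooth_c2.mul s1)),
      p2_mul smooth_wt s2, p2_kmul _ (smooth_c2.mul s1), p2_mul smooth_c2 s1, p2_kmul _ sv.dt,
      p2_wt, p2_pt sv, p2_pt sv.d2, p2_pt sv.d2.d2, p2_c2]
    funext t x y; simp; ring
  have L1 : 1 ≤ t + R := by linarith
  have L2 : 0 ≤ (t + R) ^ 2 := by positivity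
  have L4 : 0 ≤ (t + R) ^ 4 := by positivity
  have L01 : 1 ≤ (t + R) ^ 4 := one_le_pow₀ L1
  have L24 : (t + R) ^ 2 ≤ (t + R) ^ 4 := pow_le_pow_right₀ L1 (by norm_num)
  have K1 : 1 ≤ (1 + R) ^ 2 := one_le_pow₀ (by linarith)
  have rK0 : 0 ≤ (1 + R) ^ 2 * ((t + R) ^ 2 * B) := by positivity
  have hsB := Real.sq_sqrt hB0
  have z1 : ∀ k ≤ 3, En ((Zf 1 0 0)^[k] v) t ≤ B := hB.z1
  have z2 : ∀ k ≤ 3, En ((Zf 0 1 0)^[k] v) t ≤ B := hB.z2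
  have a0 : In (pt v * pt v) t ≤ B := (pt_le_En hv t).trans hB.e0
  have a1 : In (pt (p1 v) * pt (p1 v)) t ≤ B := (pt_le_En hv.d1 t).trans
    (by rw [p1_eq_Zf]; exact z1 1 (by norm_num))
  have a2 : In (pt (p2 v) * pt (p2 v)) t ≤ B := (pt_le_En hv.d2 t).trans
    (by rw [p2_eq_Zf]; exact z2 1 (by norm_num))
  have a11 : In (pt (p1 (p1 v)) * pt (p1 (p1 v))) t ≤ B := (pt_le_En hv.d1.d1 t).trans
    (by rw [p1_eq_Zf (p1 v), p1_eq_Zf]; exact z1 2 (by norm_num))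
  have a22 : In (pt (p2 (p2 v)) * pt (p2 (p2 v))) t ≤ B := (pt_le_En hv.d2.d2 t).trans
    (by rw [p2_eq_Zf (p2 v), p2_eq_Zf]; exact z2 2 (by norm_num))
  have a111 : In (pt (p1 (p1 (p1 v))) * pt (p1 (p1 (p1 v)))) t ≤ B :=
    (pt_le_En hv.d1.d1.d1 t).trans
    (by rw [p1_eq_Zf (p1 (p1 v)), p1_eq_Zf (p1 v), p1_eq_Zf]; exact z1 3 (by norm_num))
  have a222 : In (pt (p2 (p2 (p2 v))) * pt (p2 (p2 (p2 v)))) t ≤ B :=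
    (pt_le_En hv.d2.d2.d2 t).trans
    (by rw [p2_eq_Zf (p2 (p2 v)), p2_eq_Zf (p2 v), p2_eq_Zf]; exact z2 3 (by norm_num))
  have r2 : ∀ {X : ℝ}, X ≤ B → (t + R) ^ 2 * X ≤ (t + R) ^ 2 * B := fun h =>
    mul_le_mul_of_nonneg_left h L2
  have r4 : ∀ {X : ℝ}, X ≤ B → (t + R) ^ 4 * X ≤ (t + R) ^ 4 * B := fun h =>
    mul_le_mul_of_nonneg_left h L4
  have r24 := mul_le_mul_of_nonneg_right L24 hB0
  have r04 := mul_le_mul_of_nonneg_right L01 hB0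
  have rK := mul_le_mul_of_nonneg_right K1 (mul_nonneg L2 hB0)
  have key := sob_main nf (t := t) (α := (t + R) ^ 2 * √B) (β := 60 * (1 + R) * (t + R) * √B)
    (γ := 60 * (t + R) ^ 2 * √B) (by positivity) (by positivity) (by positivity) ?_ ?_ ?_ ?_ ?_ x y
  · have e : 256 * (((t + R) ^ 2 * √B) ^ 2 * (60 * (1 + R) * (t + R) * √B) ^ 5
        * (60 * (t + R) ^ 2 * √B)) = 256 * 60 ^ 6 * (1 + R) ^ 5 * (t + R) ^ 11 * (√B ^ 2) ^ 4 := by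
      ring
    rw [e, hsB] at key
    exact key
  · rw [mul_pow, hsB]
    have := (In_wt hR hv.dt ht0).trans (r4 a0)
    linarith
  · rw [mul_pow, hsB, d1]
    have := In_add_sq_le (nw hv.d1.dt) ((nc1 hv.dt).kmul (-2)) t
    rw [In_kk] at this
    have := (In_c1 hv.dt ht0).trans (r2 a0)
    have e : (60 * (1 + R) * (t + R)) ^ 2 * B = 3600 * ((1 + R) ^ 2 * ((t + R) ^ 2 * B)) := by ring
    rw [e]
    linarith
  · rw [mul_pow, hsB, d2]
    have := In_add_sq_le (nw hv.d2.dt) ((nc2 hv.dt).kmul (-2)) t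
    rw [In_kk] at this
    have := (In_c2 hv.dt ht0).trans (r2 a0)
    have e : (60 * (1 + R) * (t + R)) ^ 2 * B = 3600 * ((1 + R) ^ 2 * ((t + R) ^ 2 * B)) := by ring
    rw [e]
    linarith
  · rw [mul_pow, hsB, t1]
    have := In_sq3 (nw hv.d1.d1.d1.dt) ((nc1 hv.d1.d1.dt).kmul (-6)) (hv.d1.dt.kmul (-6)) t
    rw [In_kk, In_kk] at this
    have := (In_c1 hv.d1.d1.dt ht0).trans (r2 a11)
    have := (In_wt hR hv.d1.d1.d1.dt ht0).trans (r4 a111)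
    linarith
  · rw [mul_pow, hsB, t2]
    have := In_sq3 (nw hv.d2.d2.d2.dt) ((nc2 hv.d2.d2.dt).kmul (-6)) (hv.d2.dt.kmul (-6)) t
    rw [In_kk, In_kk] at this
    have := (In_c2 hv.d2.d2.dt ht0).trans (r2 a22)
    have := (In_wt hR hv.d2.d2.d2.dt ht0).trans (r4 a222)
    linarith
end wt

/-! ### Unweighted Sobolev bounds -/

section unweighted
variable {R : ℝ} {v : Fn}

lemma abs_le_of_pow8 {a b : ℝ} (hb : 0 ≤ b) (h : a ^ 8 ≤ b ^ 8) : |a| ≤ b := by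
  have : |a| ^ 8 ≤ b ^ 8 := by rwa [← abs_pow, abs_of_nonneg (by positivity)]
  exact le_of_pow_le_pow_left₀ (by norm_num) hb this

lemma sob_unw (hv : Nice R v) {t B : ℝ} (hB : 0 ≤ B) (h0 : In (v * v) t ≤ B)
    (h1 : In (p1 v * p1 v) t ≤ B) (h2 : In (p2 v * p2 v) t ≤ B)
    (h3 : In (p1 (p1 (p1 v)) * p1 (p1 (p1 v))) t ≤ B)
    (h4 : In (p2 (p2 (p2 v)) * p2 (p2 (p2 v))) t ≤ B) (x y : ℝ) : |v t x y| ≤ 2 * √B := by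
  have hs := Real.sq_sqrt hB
  have := sob_main hv (Real.sqrt_nonneg B) (Real.sqrt_nonneg B) (Real.sqrt_nonneg B)
    (by rwa [hs]) (by rwa [hs]) (by rwa [hs]) (by rwa [hs]) (by rwa [hs]) x y
  refine abs_le_of_pow8 (by positivity) (this.trans (le_of_eq ?_))
  ring

/-- The first derivatives are bounded by the square root of the energies. -/
lemma grad_sup (hv : Nice R v) {t B : ℝ} (z1 : ∀ k ≤ 3, En ((Zf 1 0 0)^[k] v) t ≤ B)
    (z2 : ∀ k ≤ 3, En ((Zf 0 1 0)^[k] v) t ≤ B) (x y : ℝ) :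
    |pt v t x y| ≤ 2 * √B ∧ |p1 v t x y| ≤ 2 * √B ∧ |p2 v t x y| ≤ 2 * √B := by
  have sv := hv.smooth
  have e0 : En v t ≤ B := z1 0 (by norm_num)
  have hB : 0 ≤ B := (En_nonneg v t).trans e0
  have e1 : En (p1 v) t ≤ B := by rw [p1_eq_Zf]; exact z1 1 (by norm_num)
  have e2 : En (p2 v) t ≤ B := by rw [p2_eq_Zf]; exact z2 1 (by norm_num)
  have e111 : En (p1 (p1 (p1 v))) t ≤ B := by
    rw [p1_eq_Zf (p1 (p1 v)), p1_eq_Zf (p1 v), p1_eq_Zf]; exact z1 3 (by norm_num)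
  have e222 : En (p2 (p2 (p2 v))) t ≤ B := by
    rw [p2_eq_Zf (p2 (p2 v)), p2_eq_Zf (p2 v), p2_eq_Zf]; exact z2 3 (by norm_num)
  refine ⟨sob_unw hv.dt hB ?_ ?_ ?_ ?_ ?_ x y, sob_unw hv.d1 hB ?_ ?_ ?_ ?_ ?_ x y,
    sob_unw hv.d2 hB ?_ ?_ ?_ ?_ ?_ x y⟩
  · exact (pt_le_En hv t).trans e0
  · rw [p1_pt sv]; exact (pt_le_En hv.d1 t).trans e1
  · rw [p2_pt sv]; exact (pt_le_En hv.d2 t).trans e2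
  · rw [p1_pt sv, p1_pt sv.d1, p1_pt sv.d1.d1]; exact (pt_le_En hv.d1.d1.d1 t).trans e111
  · rw [p2_pt sv, p2_pt sv.d2, p2_pt sv.d2.d2]; exact (pt_le_En hv.d2.d2.d2 t).trans e222
  · exact (p1_le_En hv t).trans e0
  · exact (p1_le_En hv.d1 t).trans e1
  · exact (p2_le_En hv.d1 t).trans e1
  · exact (p1_le_En hv.d1.d1.d1 t).trans e111
  · rw [p2_p1 sv, p2_p1 sv.d2, p2_p1 sv.d2.d2]; exact (p1_le_En hv.d2.d2.d2 t).trans e222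
  · exact (p2_le_En hv t).trans e0
  · rw [← p2_p1 sv]; exact (p2_le_En hv.d1 t).trans e1
  · exact (p2_le_En hv.d2 t).trans e2
  · rw [← p2_p1 sv, ← p2_p1 sv.d1, ← p2_p1 sv.d1.d1]; exact (p2_le_En hv.d1.d1.d1 t).trans e111
  · exact (p2_le_En hv.d2.d2.d2 t).trans e222

lemma EB.sup (hv : Nice R v) {t B : ℝ} (h : EB v t B) (x y : ℝ) :
    |pt v t x y| ≤ 2 * √B ∧ |p1 v t x y| ≤ 2 * √B ∧ |p2 v t x y| ≤ 2 * √B :=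
  grad_sup hv h.z1 h.z2 x y
end unweighted

/-! ### Decay of functions with finite energy, in polar coordinates -/

section polar
variable {R : ℝ} {g v : Fn}

lemma Nice.polar_zero (hg : Nice R g) (hR : 0 ≤ R) {t ρ : ℝ} (h : |t| + R < ρ) {a b : ℝ}
    (hab : a ^ 2 + b ^ 2 = 1) : g t (ρ * a) (ρ * b) = 0 := by
  apply hg.supp
  have e : (ρ * a) ^ 2 + (ρ * b) ^ 2 = ρ ^ 2 := by
    calc _ = ρ ^ 2 * (a ^ 2 + b ^ 2) := by ring
      _ = _ := by rw [hab, mul_one]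
  rw [e]
  have := abs_nonneg t
  exact pow_lt_pow_left₀ h (by positivity) (by norm_num)

lemma polar_le (hg : Nice R g) (hR : 0 ≤ R) {t r L : ℝ} (h0 : ∀ x y, 0 ≤ g t x y) (hr : 0 < r)
    (hrL : r ≤ L) (hL : |t| + R < L) :
    (∫ β in (-π)..π, ∫ ρ in r..L, ρ * g t (ρ * cos β) (ρ * sin β)) ≤ In g t := by
  set F : ℝ × ℝ → ℝ := fun p => p.1 * g t (p.1 * cos p.2) (p.1 * sin p.2) with hF
  have cF : Continuous F := continuous_fst.mul (hg.smooth.cont_comp continuous_const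
    (by fun_prop) (by fun_prop))
  have hpi : -π ≤ π := by linarith [pi_pos]
  have e1 : In g t = ∫ p in polarCoord.target, F p :=
    (integral_comp_polarCoord_symm (fun x : ℝ × ℝ => g t x.1 x.2)).symm
  have hT : polarCoord.target = Set.Ioi (0 : ℝ) ×ˢ Set.Ioo (-π) π := rfl
  have i1 : IntegrableOn F (Set.Icc 0 L ×ˢ Set.Icc (-π) π) :=
    cF.continuousOn.integrableOn_compact (isCompact_Icc.prod isCompact_Icc)
  have i2 : IntegrableOn F polarCoord.target := by
    refine i1.of_forall_sdiff_eq_zero polarCoord.open_target.measurableSet ?_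
    rintro ⟨ρ, β⟩ ⟨h1, h2⟩
    rw [hT] at h1
    have h3 : L < ρ := by
      by_contra hcon
      exact h2 ⟨⟨h1.1.le, not_lt.1 hcon⟩, ⟨h1.2.1.le, h1.2.2.le⟩⟩
    have : g t (ρ * cos β) (ρ * sin β) = 0 := hg.polar_zero hR (hL.trans h3) (cos_sq_add_sin_sq β)
    simp [hF, this]
  have hsub : Set.Ioc r L ×ˢ Set.Ioo (-π) π ⊆ polarCoord.target := by
    rw [hT]
    exact Set.prod_mono (fun x hx => hr.trans hx.1) le_rfl
  have e2 : (∫ p in Set.Ioc r L ×ˢ Set.Ioo (-π) π, F p) ≤ In g t := by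
    rw [e1]
    refine setIntegral_mono_set i2 ?_ hsub.eventuallyLE
    refine (ae_restrict_iff' polarCoord.open_target.measurableSet).2 (Eventually.of_forall ?_)
    rintro ⟨ρ, β⟩ h
    rw [hT] at h
    exact mul_nonneg (le_of_lt h.1) (h0 _ _)
  refine le_trans (le_of_eq ?_) e2
  rw [Measure.volume_eq_prod]
  rw [← setIntegral_prod_swap, setIntegral_prod, intervalIntegral.integral_of_le hpi,
    integral_Ioc_eq_integral_Ioo]
  · refine setIntegral_congr_fun measurableSet_Ioo fun β _ => ?_
    simp only [intervalIntegral.integral_of_le hrL]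
    rfl
  · rw [← Measure.volume_eq_prod]
    exact ((cF.comp continuous_swap).continuousOn.integrableOn_compact
      (isCompact_Icc.prod isCompact_Icc)).mono_set
      (Set.prod_mono Set.Ioo_subset_Icc_self Set.Ioc_subset_Icc_self)

/-- Cauchy–Schwarz for a function vanishing at the right end of an interval. -/
lemma end_sq_le {φ φ' : ℝ → ℝ} {r L : ℝ} (hrL : r < L) (hd : ∀ x, HasDerivAt φ (φ' x) x)
    (hc : Continuous φ') (hL : φ L = 0) : φ r ^ 2 ≤ (L - r) * ∫ x in r..L, φ' x ^ 2 := by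
  have h1 : ∫ x in r..L, φ' x = - φ r := by
    rw [intervalIntegral.integral_eq_sub_of_hasDerivAt (fun x _ => hd x)
      (hc.intervalIntegrable _ _), hL, zero_sub]
  set lam := -φ r / (L - r) with hlam
  have hp : 0 < L - r := by linarith
  have h2 : 0 ≤ ∫ x in r..L, (φ' x - lam) ^ 2 :=
    intervalIntegral.integral_nonneg hrL.le fun x _ => sq_nonneg _
  have h3 : ∫ x in r..L, (φ' x - lam) ^ 2
      = (∫ x in r..L, φ' x ^ 2) - (2 * lam) * (∫ x in r..L, φ' x) + lam ^ 2 * (L - r) := by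
    have e : ∀ x, (φ' x - lam) ^ 2 = (φ' x ^ 2 - (2 * lam) * φ' x) + lam ^ 2 := fun x => by ring
    simp only [e]
    rw [intervalIntegral.integral_add, intervalIntegral.integral_sub,
      intervalIntegral.integral_const_mul, intervalIntegral.integral_const, smul_eq_mul]
    · ring
    · exact (hc.pow 2).intervalIntegrable _ _
    · exact (continuous_const.mul hc).intervalIntegrable _ _
    · exact ((hc.pow 2).sub (continuous_const.mul hc)).intervalIntegrable _ _
    · exact continuous_const.intervalIntegrable _ _
  rw [h3, h1] at h2
  have e : (2 * lam) * (-φ r) = 2 * φ r ^ 2 / (L - r) := by rw [hlam]; field_simp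
  have e' : lam ^ 2 * (L - r) = φ r ^ 2 / (L - r) := by rw [hlam]; field_simp
  rw [e, e'] at h2
  have : φ r ^ 2 / (L - r) ≤ ∫ x in r..L, φ' x ^ 2 := by
    have : 2 * φ r ^ 2 / (L - r) = φ r ^ 2 / (L - r) + φ r ^ 2 / (L - r) := by ring
    linarith
  rwa [div_le_iff₀ hp, mul_comm] at this

/-- Integration of the radial derivative along a ray. -/
lemma radial_le (hv : Nice R v) (hR : 0 ≤ R) {t r L : ℝ} (hr : 0 < r) (hrL : r < L)
    (hL : |t| + R < L) {a b : ℝ} (hab : a ^ 2 + b ^ 2 = 1) :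
    (v t (r * a) (r * b)) ^ 2 ≤ L / r * ∫ ρ in r..L, ρ * ed v t (ρ * a) (ρ * b) := by
  have sv := hv.smooth
  have hd : ∀ ρ, HasDerivAt (fun ρ => v t (ρ * a) (ρ * b))
      (a * p1 v t (ρ * a) (ρ * b) + b * p2 v t (ρ * a) (ρ * b)) ρ := fun ρ => by
    have := sv.hcurve (hasDerivAt_const ρ t) ((hasDerivAt_id ρ).mul_const a)
      ((hasDerivAt_id ρ).mul_const b)
    exact this.congr_deriv (by simp)
  have c1' : Continuous (fun ρ => p1 v t (ρ * a) (ρ * b)) :=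
    sv.d1.cont_comp continuous_const (by fun_prop) (by fun_prop)
  have c2' : Continuous (fun ρ => p2 v t (ρ * a) (ρ * b)) :=
    sv.d2.cont_comp continuous_const (by fun_prop) (by fun_prop)
  have c3 : Continuous (fun ρ => ed v t (ρ * a) (ρ * b)) :=
    hv.ed.smooth.cont_comp continuous_const (by fun_prop) (by fun_prop)
  have hc : Continuous (fun ρ => a * p1 v t (ρ * a) (ρ * b) + b * p2 v t (ρ * a) (ρ * b)) := by
    fun_prop
  have h1 := end_sq_le hrL hd hc (hv.polar_zero hR hL hab)
  refine h1.trans ?_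
  have h2 : (∫ ρ in r..L, (a * p1 v t (ρ * a) (ρ * b) + b * p2 v t (ρ * a) (ρ * b)) ^ 2)
      ≤ ∫ ρ in r..L, r⁻¹ * (ρ * ed v t (ρ * a) (ρ * b)) := by
    refine intervalIntegral.integral_mono_on hrL.le ((hc.pow 2).intervalIntegrable _ _)
      ((by fun_prop : Continuous fun ρ => r⁻¹ * (ρ * ed v t (ρ * a) (ρ * b))).intervalIntegrable _ _)
      fun ρ hρ => ?_
    simp only [ed, Pi.add_apply, Pi.mul_apply]
    set P := p1 v t (ρ * a) (ρ * b)
    set Q := p2 v t (ρ * a) (ρ * b)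
    set S := pt v t (ρ * a) (ρ * b)
    have q1 : (a * P + b * Q) ^ 2 ≤ P * P + Q * Q := by
      have : P * P + Q * Q = (a ^ 2 + b ^ 2) * (P * P + Q * Q) := by rw [hab, one_mul]
      rw [this]
      nlinarith [sq_nonneg (a * Q - b * P)]
    have q2 : 1 ≤ r⁻¹ * ρ := by
      rw [inv_mul_eq_div, le_div_iff₀ hr, one_mul]; exact hρ.1
    have q3 : 0 ≤ S * S + P * P + Q * Q := by nlinarith [sq_nonneg S, sq_nonneg P, sq_nonneg Q]
    calc _ ≤ S * S + P * P + Q * Q := by nlinarith [sq_nonneg S]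
      _ ≤ (r⁻¹ * ρ) * (S * S + P * P + Q * Q) := le_mul_of_one_le_left q3 q2
      _ = _ := by ring
  rw [intervalIntegral.integral_const_mul] at h2
  have h3 : 0 ≤ ∫ ρ in r..L, (a * p1 v t (ρ * a) (ρ * b) + b * p2 v t (ρ * a) (ρ * b)) ^ 2 :=
    intervalIntegral.integral_nonneg hrL.le fun _ _ => sq_nonneg _
  calc _ ≤ L * ∫ ρ in r..L, (a * p1 v t (ρ * a) (ρ * b) + b * p2 v t (ρ * a) (ρ * b)) ^ 2 :=
        mul_le_mul_of_nonneg_right (by linarith) h3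
    _ ≤ L * (r⁻¹ * ∫ ρ in r..L, ρ * ed v t (ρ * a) (ρ * b)) :=
        mul_le_mul_of_nonneg_left h2 (by linarith)
    _ = _ := by ring

/-- The one-dimensional Sobolev inequality on a circle. -/
lemma circle_sob {h h' : ℝ → ℝ} (hd : ∀ x, HasDerivAt h (h' x) x) (hc : Continuous h')
    {α : ℝ} (hα : α ∈ Set.Icc (-π) π) :
    h α ^ 2 ≤ 2 * ∫ β in (-π)..π, (h β ^ 2 + h' β ^ 2) := by
  have ch : Continuous h := continuous_iff_continuousAt.2 fun x => (hd x).continuousAt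
  have hpi : -π ≤ π := by linarith [pi_pos]
  have cb : Continuous (fun β => h β ^ 2 + h' β ^ 2) := by fun_prop
  set N := ∫ β in (-π)..π, (h β ^ 2 + h' β ^ 2) with hN
  have key : ∀ β ∈ Set.Icc (-π) π, h α ^ 2 ≤ h β ^ 2 + N := by
    intro β hβ
    have d : ∀ x, HasDerivAt (fun x => h x ^ 2) (2 * h x * h' x) x := fun x =>
      ((hd x).pow 2).congr_deriv (by simp)
    have e : ∫ x in β..α, 2 * h x * h' x = h α ^ 2 - h β ^ 2 :=
      intervalIntegral.integral_eq_sub_of_hasDerivAt (fun x _ => d x)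
        ((by fun_prop : Continuous fun x => 2 * h x * h' x).intervalIntegrable _ _)
    have e2 : ‖∫ x in β..α, 2 * h x * h' x‖ ≤ ∫ x in Set.uIoc β α, ‖2 * h x * h' x‖ :=
      intervalIntegral.norm_integral_le_integral_norm_uIoc
    have e3 : (∫ x in Set.uIoc β α, ‖2 * h x * h' x‖) ≤ N := by
      rw [hN, intervalIntegral.integral_of_le hpi]
      have sub : Set.uIoc β α ⊆ Set.Ioc (-π) π := by
        intro x hx
        rcases Set.mem_uIoc.1 hx with hx | hx
        · exact ⟨lt_of_le_of_lt hβ.1 hx.1, hx.2.trans hα.2⟩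
        · exact ⟨lt_of_le_of_lt hα.1 hx.1, hx.2.trans hβ.2⟩
      have ib : IntegrableOn (fun β => h β ^ 2 + h' β ^ 2) (Set.Ioc (-π) π) :=
        (cb.intervalIntegrable (-π) π).1
      have ia : IntegrableOn (fun x => ‖2 * h x * h' x‖) (Set.Ioc (-π) π) :=
        ((by fun_prop : Continuous fun x => ‖2 * h x * h' x‖).intervalIntegrable (-π) π).1
      calc _ ≤ ∫ x in Set.uIoc β α, (h x ^ 2 + h' x ^ 2) := by
            refine setIntegral_mono_on (ia.mono_set sub) (ib.mono_set sub)
              measurableSet_uIoc fun x _ => ?_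
            rw [norm_eq_abs, abs_le]
            constructor <;> nlinarith [sq_nonneg (h x - h' x), sq_nonneg (h x + h' x)]
        _ ≤ _ := setIntegral_mono_set ib (Eventually.of_forall fun x => by positivity)
            sub.eventuallyLE
    rw [e] at e2
    have := (le_abs_self _).trans (e2.trans e3)
    linarith
  -- averaging the inequality over `β`
  have i1 : (∫ _β in (-π)..π, h α ^ 2) ≤ ∫ β in (-π)..π, (h β ^ 2 + h' β ^ 2 + N) :=
    intervalIntegral.integral_mono_on hpi (continuous_const.intervalIntegrable _ _)
      ((cb.add continuous_const).intervalIntegrable _ _) fun β hβ => by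
        have := key β hβ
        have := sq_nonneg (h' β)
        linarith
  rw [intervalIntegral.integral_add (cb.intervalIntegrable _ _)
    (continuous_const.intervalIntegrable _ _), intervalIntegral.integral_const,
    intervalIntegral.integral_const, smul_eq_mul, smul_eq_mul, ← hN] at i1
  have hN0 : 0 ≤ N := intervalIntegral.integral_nonneg hpi fun x _ => by positivity
  have := pi_gt_three
  have e : π - -π = 2 * π := by ring
  rw [e] at i1
  nlinarith

lemma exists_angle {a b : ℝ} (h : a ^ 2 + b ^ 2 = 1) : ∃ α ∈ Set.Icc (-π) π,
    cos α = a ∧ sin α = b := by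
  have hn : ‖(⟨a, b⟩ : ℂ)‖ = 1 := by
    rw [Complex.norm_eq_sqrt_sq_add_sq, h, Real.sqrt_one]
  refine ⟨Complex.arg ⟨a, b⟩, ⟨(Complex.neg_pi_lt_arg _).le, Complex.arg_le_pi _⟩, ?_, ?_⟩
  · have := Complex.norm_mul_cos_arg ⟨a, b⟩
    rwa [hn, one_mul] at this
  · have := Complex.norm_mul_sin_arg ⟨a, b⟩
    rwa [hn, one_mul] at this

/-- Decay of a function from its energy and that of its angular derivative. -/
theorem polar_decay (hv : Nice R v) (hR : 0 ≤ R) {t r : ℝ} (ht : 0 ≤ t) (hr : 0 < r) {a b : ℝ}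
    (hab : a ^ 2 + b ^ 2 = 1) :
    (v t (r * a) (r * b)) ^ 2 ≤ 2 * ((t + R + 1) / r) * (En v t + En (rot v) t) := by
  set L := t + R + 1 with hLdef
  have hL : |t| + R < L := by rw [abs_of_nonneg ht]; linarith
  have hpi : -π ≤ π := by linarith [pi_pos]
  have hE : 0 ≤ En v t + En (rot v) t := add_nonneg (En_nonneg _ _) (En_nonneg _ _)
  rcases lt_or_ge r L with hrL | hrL
  swap
  · rw [hv.polar_zero hR (hL.trans_le hrL) hab, zero_pow two_ne_zero]
    have : 0 ≤ L := by positivity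
    positivity
  obtain ⟨α, hα, rfl, rfl⟩ := exists_angle hab
  have sv := hv.smooth
  have hd : ∀ β, HasDerivAt (fun β => v t (r * cos β) (r * sin β))
      (rot v t (r * cos β) (r * sin β)) β := fun β => by
    have := sv.hcurve (hasDerivAt_const β t) ((hasDerivAt_cos β).const_mul r)
      ((hasDerivAt_sin β).const_mul r)
    exact this.congr_deriv (by simp only [rot]; ring)
  have cr : Continuous (fun β => rot v t (r * cos β) (r * sin β)) :=
    sv.dO.cont_comp continuous_const (by fun_prop) (by fun_prop)
  have cv : Continuous (fun β => v t (r * cos β) (r * sin β)) :=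
    sv.cont_comp continuous_const (by fun_prop) (by fun_prop)
  have h1 := circle_sob hd cr hα
  set W : Fn := ed v + ed (rot v) with hW
  have nW : Nice R W := hv.ed.add hv.dO.ed
  have eW : In W t = En v t + En (rot v) t := In_add hv.ed hv.dO.ed t
  have edn : ∀ u : Fn, ∀ x y, 0 ≤ ed u t x y := fun u x y => by
    simp only [ed, Pi.add_apply, Pi.mul_apply]
    nlinarith [sq_nonneg (pt u t x y), sq_nonneg (p1 u t x y), sq_nonneg (p2 u t x y)]
  have h2 := polar_le nW hR (t := t) (r := r) (L := L)
    (fun x y => add_nonneg (edn _ _ _) (edn _ _ _)) hr hrL.le hL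
  have ced : ∀ {u : Fn}, Nice R u → Continuous fun p : ℝ × ℝ =>
      p.2 * ed u t (p.2 * cos p.1) (p.2 * sin p.1) := fun hu =>
    continuous_snd.mul (hu.ed.smooth.cont_comp continuous_const (by fun_prop) (by fun_prop))
  have cW : Continuous fun β => ∫ ρ in r..L, ρ * W t (ρ * cos β) (ρ * sin β) :=
    intervalIntegral.continuous_parametric_intervalIntegral_of_continuous'
      (continuous_snd.mul (nW.smooth.cont_comp continuous_const (by fun_prop) (by fun_prop)) :
        Continuous fun p : ℝ × ℝ => p.2 * W t (p.2 * cos p.1) (p.2 * sin p.1)) r L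
  have h3 : (∫ β in (-π)..π, ((v t (r * cos β) (r * sin β)) ^ 2
        + (rot v t (r * cos β) (r * sin β)) ^ 2))
      ≤ ∫ β in (-π)..π, L / r * ∫ ρ in r..L, ρ * W t (ρ * cos β) (ρ * sin β) := by
    refine intervalIntegral.integral_mono_on hpi
      (((cv.pow 2).add (cr.pow 2)).intervalIntegrable _ _)
      ((continuous_const.mul cW).intervalIntegrable _ _) fun β _ => ?_
    have q1 := radial_le hv hR hr hrL hL (cos_sq_add_sin_sq β)
    have q2 := radial_le hv.dO hR hr hrL hL (cos_sq_add_sin_sq β)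
    have c1' : Continuous fun ρ => ρ * ed v t (ρ * cos β) (ρ * sin β) :=
      (ced hv).comp (Continuous.prodMk continuous_const continuous_id :
        Continuous fun ρ : ℝ => (β, ρ))
    have c2' : Continuous fun ρ => ρ * ed (rot v) t (ρ * cos β) (ρ * sin β) :=
      (ced hv.dO).comp (Continuous.prodMk continuous_const continuous_id :
        Continuous fun ρ : ℝ => (β, ρ))
    have e : (∫ ρ in r..L, ρ * W t (ρ * cos β) (ρ * sin β))
        = (∫ ρ in r..L, ρ * ed v t (ρ * cos β) (ρ * sin β))
          + ∫ ρ in r..L, ρ * ed (rot v) t (ρ * cos β) (ρ * sin β) := by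
      rw [← intervalIntegral.integral_add (c1'.intervalIntegrable _ _)
        (c2'.intervalIntegrable _ _)]
      refine intervalIntegral.integral_congr fun ρ _ => ?_
      simp only [hW, Pi.add_apply]; ring
    rw [e, mul_add]
    exact add_le_add q1 q2
  rw [intervalIntegral.integral_const_mul] at h3
  have hLr : 0 ≤ L / r := by positivity
  calc _ ≤ _ := h1
    _ ≤ 2 * (L / r * In W t) := by
      have := mul_le_mul_of_nonneg_left h2 hLr
      linarith
    _ = _ := by rw [eW]; ring

/-- Decay of `Ωᵏv`, `k ≤ 2`, from the energies. -/
lemma EB.decay (hv : Nice R v) (hR : 0 ≤ R) {t r B : ℝ} (ht : 0 ≤ t) (hr : 0 < r) {a b : ℝ}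
    (hab : a ^ 2 + b ^ 2 = 1) (h : EB v t B) :
    (v t (r * a) (r * b)) ^ 2 ≤ 4 * ((t + R + 1) / r) * B ∧
    (rot (rot v) t (r * a) (r * b)) ^ 2 ≤ 4 * ((t + R + 1) / r) * B := by
  have hq : 0 ≤ (t + R + 1) / r := by positivity
  have z : ∀ k ≤ 3, En ((Zf 0 0 1)^[k] v) t ≤ B := h.z3
  have e0 := h.e0
  have e1 : En (rot v) t ≤ B := by rw [rot_eq_Zf]; exact z 1 (by norm_num)
  have e2 : En (rot (rot v)) t ≤ B := by
    rw [rot_eq_Zf (rot v), rot_eq_Zf]; exact z 2 (by norm_num)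
  have e3 : En (rot (rot (rot v))) t ≤ B := by
    rw [rot_eq_Zf (rot (rot v)), rot_eq_Zf (rot v), rot_eq_Zf]; exact z 3 (by norm_num)
  have a0 := polar_decay hv hR ht hr hab
  have a2 := polar_decay hv.dO.dO hR ht hr hab
  constructor
  · refine a0.trans ?_
    calc _ ≤ 2 * ((t + R + 1) / r) * (B + B) := by gcongr
      _ = _ := by ring
  · refine a2.trans ?_
    calc _ ≤ 2 * ((t + R + 1) / r) * (B + B) := by gcongr
      _ = _ := by ring
end polar

/-! ### Propagation along rays -/

section rays
variable {R : ℝ} {u v : Fn}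

lemma rot_rot_apply (hu : Smooth3 u) (t x y : ℝ) : rot (rot u) t x y
    = x ^ 2 * p2 (p2 u) t x y - 2 * x * y * p1 (p2 u) t x y + y ^ 2 * p1 (p1 u) t x y
      - x * p1 u t x y - y * p2 u t x y := by
  have e : rot u = c1 * p2 u - c2 * p1 u := by funext t x y; simp [rot]
  have e1 : p1 (rot u) = p1 c1 * p2 u + c1 * p1 (p2 u) - (p1 c2 * p1 u + c2 * p1 (p1 u)) := by
    rw [e, p1_sub (smooth_c1.mul hu.d2) (smooth_c2.mul hu.d1), p1_mul smooth_c1 hu.d2,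
      p1_mul smooth_c2 hu.d1]
  have e2 : p2 (rot u) = p2 c1 * p2 u + c1 * p2 (p2 u) - (p2 c2 * p1 u + c2 * p1 (p2 u)) := by
    rw [e, p2_sub (smooth_c1.mul hu.d2) (smooth_c2.mul hu.d1), p2_mul smooth_c1 hu.d2,
      p2_mul smooth_c2 hu.d1, p2_p1 hu]
  have : rot (rot u) t x y = x * p2 (rot u) t x y - y * p1 (rot u) t x y := rfl
  rw [this, e1, e2]
  simp
  ring

/-- `½(∂ᵣ - η∂ₜ)(r^{1/2}u)` at the point with polar coordinates `r`, `(a, b)`; `η = 1` gives the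
function `U` and `η = -1` its incoming counterpart. -/
def Wr (η : ℝ) (u : Fn) (a b t r : ℝ) : ℝ :=
  1 / 2 * (√r * (a * p1 u t (r * a) (r * b) + b * p2 u t (r * a) (r * b)
    - η * pt u t (r * a) (r * b)) + u t (r * a) (r * b) / (2 * √r))

/-- The right-hand side of the transport equations: the source term and the angular term. -/
def Gr (u : Fn) (a b t r : ℝ) : ℝ :=
  √r / 2 * dAlembert u t (r * a) (r * b)
    + 1 / (2 * (√r) ^ 3) * (rot (rot u) t (r * a) (r * b) + u t (r * a) (r * b) / 4)

/-- The wave operator along the characteristics `r = ηt + σ`. -/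
lemma ray_deriv (hu : Smooth3 u) {η a b σ t : ℝ} (hη : η ^ 2 = 1) (hab : a ^ 2 + b ^ 2 = 1)
    (hr : 0 < η * t + σ) :
    HasDerivAt (fun s => Wr η u a b s (η * s + σ)) (-η * Gr u a b t (η * t + σ)) t := by
  set r := η * t + σ with hrdef
  have hq : 0 < √r := Real.sqrt_pos.2 hr
  have hqq : √r ^ 2 = r := Real.sq_sqrt hr.le
  have dr : HasDerivAt (fun s => η * s + σ) η t := by
    simpa using ((hasDerivAt_id t).const_mul η).add_const σ
  have dq : HasDerivAt (fun s => √(η * s + σ)) (η / (2 * √r)) t := dr.sqrt hr.ne'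
  have cv : ∀ {w : Fn}, Smooth3 w → HasDerivAt
      (fun s => w s ((η * s + σ) * a) ((η * s + σ) * b))
      (pt w t (r * a) (r * b) + η * (a * p1 w t (r * a) (r * b) + b * p2 w t (r * a) (r * b))) t :=
    fun hw => (hw.hcurve (hasDerivAt_id t) (dr.mul_const a) (dr.mul_const b)).congr_deriv
      (by simp only [id, one_mul, ← hrdef]; ring)
  have d0 := cv hu
  have dT := cv hu.dt
  have d1 := cv hu.d1
  have d2 := cv hu.d2
  have D := ((dq.mul (((d1.const_mul a).add (d2.const_mul b)).sub (dT.const_mul η))).add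
    (d0.div (dq.const_mul 2) (by positivity))).const_mul (1 / 2)
  refine D.congr_deriv ?_
  simp only [Pi.add_apply, Pi.sub_apply, ← hrdef, p1_pt hu, p2_pt hu, p2_p1 hu, Gr]
  rw [rot_rot_apply hu]
  simp only [dAlembert]
  set q := √r with hqdef
  have hrq : r = q ^ 2 := hqq.symm
  rw [hrq]
  generalize u t (q ^ 2 * a) (q ^ 2 * b) = A0
  generalize pt u t (q ^ 2 * a) (q ^ 2 * b) = A1
  generalize p1 u t (q ^ 2 * a) (q ^ 2 * b) = A2
  generalize p2 u t (q ^ 2 * a) (q ^ 2 * b) = A3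
  generalize pt (pt u) t (q ^ 2 * a) (q ^ 2 * b) = B1
  generalize pt (p1 u) t (q ^ 2 * a) (q ^ 2 * b) = B2
  generalize pt (p2 u) t (q ^ 2 * a) (q ^ 2 * b) = B3
  generalize p1 (p1 u) t (q ^ 2 * a) (q ^ 2 * b) = B4
  generalize p1 (p2 u) t (q ^ 2 * a) (q ^ 2 * b) = B5
  generalize p2 (p2 u) t (q ^ 2 * a) (q ^ 2 * b) = B6
  have hb : b ^ 2 = 1 - a ^ 2 := by linarith
  field_simp
  ring_nf
  simp only [hη, hb]
  ring_nf
end rays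

section raybounds
variable {R : ℝ} {u v : Fn}

lemma Wr_zero (hv : Nice R v) (hR : 0 ≤ R) (η : ℝ) {t r : ℝ} (h : |t| + R < r) {a b : ℝ}
    (hab : a ^ 2 + b ^ 2 = 1) : Wr η v a b t r = 0 := by
  simp [Wr, hv.polar_zero hR h hab, hv.d1.polar_zero hR h hab, hv.d2.polar_zero hR h hab,
    hv.dt.polar_zero hR h hab]

/-- The sum of the two characteristic derivatives is `r^{1/2}∂ₜ`. -/
lemma Wr_sub (v : Fn) (a b t r : ℝ) :
    Wr (-1) v a b t r - Wr 1 v a b t r = √r * pt v t (r * a) (r * b) := by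
  unfold Wr; ring

/-- The angular part of the source in the transport equation. -/
def Lr (u : Fn) (a b t r : ℝ) : ℝ :=
  1 / (2 * (√r) ^ 3) * (rot (rot u) t (r * a) (r * b) + u t (r * a) (r * b) / 4)

lemma Gr_eq (u : Fn) (a b t r : ℝ) :
    Gr u a b t r = √r / 2 * dAlembert u t (r * a) (r * b) + Lr u a b t r := rfl

lemma Lr_core (hv : Nice R v) (hR : 0 ≤ R) {a b : ℝ} (hab : a ^ 2 + b ^ 2 = 1) {s τ ρ B : ℝ}
    (hs : 2 * (R + 1) ≤ s) (hτ1 : 0 ≤ τ) (hτ2 : τ ≤ s) (hρ1 : s / 2 ≤ ρ) (hB : EB v τ B) :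
    |Lr v a b τ ρ| ≤ 7 * √B / (s * √s) := by
  have hs0 : 0 < s := by linarith
  have hρ0 : 0 < ρ := by linarith
  have hB0 : 0 ≤ B := hB.nonneg
  have q0 : 0 < √s := Real.sqrt_pos.2 hs0
  obtain ⟨d1, d2⟩ := hB.decay hv hR hτ1 hρ0 hab
  have hfrac : (τ + R + 1) / ρ ≤ 3 := by
    rw [div_le_iff₀ hρ0]; linarith
  have k : ∀ z : ℝ, z ^ 2 ≤ 4 * ((τ + R + 1) / ρ) * B → |z| ≤ 7 / 2 * √B := by
    intro z hz
    apply abs_le_of_sq_le_sq _ (by positivity)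
    rw [mul_pow, Real.sq_sqrt hB0]
    nlinarith
  have e1 := k _ d1
  have e2 := k _ d2
  have hq : √s ^ 3 / √2 ^ 3 ≤ √ρ ^ 3 := by
    rw [← div_pow, ← Real.sqrt_div' _ (by norm_num : (0:ℝ) ≤ 2)]
    exact pow_le_pow_left₀ (Real.sqrt_nonneg _) (Real.sqrt_le_sqrt hρ1) 3
  have h2 : √2 ^ 3 ≤ 3 := by
    have : √2 ^ 2 = 2 := Real.sq_sqrt (by norm_num)
    have h15 : √2 ≤ 3 / 2 := by
      rw [Real.sqrt_le_left (by norm_num)]; norm_num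
    nlinarith [Real.sqrt_nonneg 2]
  have hq3 : s * √s / 3 ≤ √ρ ^ 3 := by
    refine le_trans ?_ hq
    have : √s ^ 3 = s * √s := by
      rw [pow_succ, Real.sq_sqrt hs0.le]
    rw [this]
    gcongr
  have hρ3 : 0 < √ρ ^ 3 := by have := Real.sqrt_pos.2 hρ0; positivity
  unfold Lr
  rw [abs_mul, abs_of_nonneg (by positivity)]
  have e3 : |rot (rot v) τ (ρ * a) (ρ * b) + v τ (ρ * a) (ρ * b) / 4| ≤ 14 / 3 * √B := by
    refine (abs_add_le _ _).trans ?_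
    rw [abs_div, abs_of_pos (by norm_num : (0:ℝ) < 4)]
    have := Real.sqrt_nonneg B
    linarith
  have e4 : 1 / (2 * √ρ ^ 3) ≤ 3 / (2 * (s * √s)) := by
    rw [div_le_div_iff₀ (by positivity) (by positivity)]
    linarith
  calc _ ≤ 3 / (2 * (s * √s)) * (14 / 3 * √B) :=
        mul_le_mul e4 e3 (abs_nonneg _) (by positivity)
    _ = _ := by field_simp; ring

lemma Gr_le (hv : Nice R v) (hR : 0 ≤ R) {a b : ℝ} (hab : a ^ 2 + b ^ 2 = 1) {s τ ρ B N : ℝ}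
    (hs : 2 * (R + 1) ≤ s) (hτ1 : 0 ≤ τ) (hτ2 : τ ≤ s) (hρ1 : s / 2 ≤ ρ)
    (hρ2 : ρ ≤ 2 * s) (hB : EB v τ B) (hN : ∀ x y, |dAlembert v τ x y| ≤ N) :
    |Gr v a b τ ρ| ≤ √(2 * s) / 2 * N + 7 * √B / (s * √s) := by
  rw [Gr_eq]
  refine (abs_add_le _ _).trans (add_le_add ?_ (Lr_core hv hR hab hs hτ1 hτ2 hρ1 hB))
  rw [abs_mul, abs_of_nonneg (by positivity)]
  have : √ρ ≤ √(2 * s) := Real.sqrt_le_sqrt hρ2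
  exact mul_le_mul (by linarith) (hN _ _) (abs_nonneg _) (by positivity)

/-- The incoming derivative `½(∂ᵣ + ∂ₜ)(r^{1/2}v)` is small near the light cone: integrate along
the incoming ray, back to where `v` vanishes. -/
lemma inc_bound (hv : Nice R v) (hR : 0 ≤ R) {a b : ℝ} (hab : a ^ 2 + b ^ 2 = 1) {s r B N : ℝ}
    (hs : 2 * (R + 1) ≤ s) (hr : s / 2 ≤ r) (hr2 : r ≤ s + R)
    (hB : ∀ τ, s / 2 ≤ τ → τ ≤ s → EB v τ B)
    (hN : ∀ τ, s / 2 ≤ τ → τ ≤ s → ∀ x y, |dAlembert v τ x y| ≤ N) :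
    |Wr (-1) v a b s r| ≤
      (R + 1 + s - r) / 2 * (√(2 * s) / 2 * N + 7 * √B / (s * √s)) := by
  set τ₀ := s - (R + 1 + s - r) / 2 with hτ₀
  have h1 : s / 2 ≤ τ₀ := by rw [hτ₀]; linarith
  have h2 : τ₀ ≤ s := by rw [hτ₀]; linarith
  have hd : ∀ τ ∈ Set.Icc τ₀ s, HasDerivWithinAt
      (fun τ => Wr (-1) v a b τ (-1 * τ + (s + r))) (- -1 * Gr v a b τ (-1 * τ + (s + r)))
      (Set.Icc τ₀ s) τ := fun τ hτ =>
    (ray_deriv hv.smooth (by norm_num) hab (by linarith [hτ.2])).hasDerivWithinAt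
  have key := (convex_Icc τ₀ s).norm_image_sub_le_of_norm_hasDerivWithin_le
    (C := √(2 * s) / 2 * N + 7 * √B / (s * √s)) hd (fun τ hτ => by
      rw [Real.norm_eq_abs, neg_neg, one_mul]
      exact Gr_le hv hR hab hs (by linarith [hτ.1]) hτ.2 (by linarith [hτ.2])
        (by linarith [hτ.1]) (hB τ (by linarith [hτ.1]) hτ.2)
        (hN τ (by linarith [hτ.1]) hτ.2))
    (Set.left_mem_Icc.2 h2) (Set.right_mem_Icc.2 h2)
  have hz : Wr (-1) v a b τ₀ (-1 * τ₀ + (s + r)) = 0 :=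
    Wr_zero hv hR _ (by rw [abs_of_nonneg (by linarith)]; rw [hτ₀]; linarith) hab
  rw [hz, sub_zero, Real.norm_eq_abs, Real.norm_eq_abs, abs_of_nonneg (by linarith : 0 ≤ s - τ₀),
    show -1 * s + (s + r) = r by ring, show s - τ₀ = (R + 1 + s - r) / 2 by rw [hτ₀]; ring] at key
  linarith

/-- The Gronwall inequality along a ray, for coefficients integrable in time. -/
lemma ray_gron {y y' : ℝ → ℝ} {t0 t A D E : ℝ} (ht0 : 0 ≤ t0) (h : t0 ≤ t) (hA : 0 ≤ A)
    (hD : 0 ≤ D) (hy : ∀ s ∈ Set.Icc t0 t, HasDerivAt y (y' s) s)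
    (hyE : ∀ s ∈ Set.Icc t0 t, 0 ≤ y s + E)
    (hle : ∀ s ∈ Set.Icc t0 t,
      y' s ≤ (A * (1 + s) ^ (-(5 / 4) : ℝ) + D / (1 + s) ^ 3) * (y s + E)) :
    y t + E ≤ (y t0 + E) * exp (4 * A + D / (2 * (1 + t0) ^ 2)) := by
  have hd : ∀ s ∈ Set.Icc t0 t, HasDerivAt
      (fun s => (y s + E) * exp (4 * A * (1 + s) ^ (-(1 / 4) : ℝ) + D / 2 * ((1 + s) ^ 2)⁻¹))
      ((y' s - (A * (1 + s) ^ (-(5 / 4) : ℝ) + D / (1 + s) ^ 3) * (y s + E)) *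
        exp (4 * A * (1 + s) ^ (-(1 / 4) : ℝ) + D / 2 * ((1 + s) ^ 2)⁻¹)) s := by
    intro s hs
    have hs0 : 0 < 1 + s := by linarith [hs.1]
    have d1 : HasDerivAt (fun s : ℝ => 1 + s) 1 s := (hasDerivAt_id s).const_add 1
    have d2 := (d1.rpow_const (p := (-(1 / 4) : ℝ)) (Or.inl hs0.ne')).const_mul (4 * A)
    have d3 := ((d1.pow 2).inv (pow_ne_zero 2 hs0.ne')).const_mul (D / 2)
    refine (((hy s hs).add_const E).mul (d2.add d3).exp).congr_deriv ?_
    rw [show (-(1 / 4) - 1 : ℝ) = -(5 / 4) by norm_num]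
    simp only [Pi.add_apply, Pi.pow_apply, Pi.inv_apply]
    field_simp
    ring
  have hant := antitoneOn_of_deriv_nonpos (convex_Icc t0 t)
    (fun s hs => (hd s hs).continuousAt.continuousWithinAt)
    (fun s hs => (hd s (interior_subset hs)).differentiableAt.differentiableWithinAt)
    (fun s hs => by
      rw [(hd s (interior_subset hs)).deriv]
      exact mul_nonpos_of_nonpos_of_nonneg (by linarith [hle s (interior_subset hs)])
        (exp_pos _).le)
    (Set.left_mem_Icc.2 h) (Set.right_mem_Icc.2 h) h
  have ht : 0 < 1 + t := by linarith
  have l1 : 1 ≤ exp (4 * A * (1 + t) ^ (-(1 / 4) : ℝ) + D / 2 * ((1 + t) ^ 2)⁻¹) :=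
    Real.one_le_exp (by positivity)
  have l2 : exp (4 * A * (1 + t0) ^ (-(1 / 4) : ℝ) + D / 2 * ((1 + t0) ^ 2)⁻¹)
      ≤ exp (4 * A + D / (2 * (1 + t0) ^ 2)) := by
    apply Real.exp_le_exp.2
    have : (1 + t0) ^ (-(1 / 4) : ℝ) ≤ 1 :=
      Real.rpow_le_one_of_one_le_of_nonpos (by linarith) (by norm_num)
    have e : D / 2 * ((1 + t0) ^ 2)⁻¹ = D / (2 * (1 + t0) ^ 2) := by
      have : 0 < 1 + t0 := by linarith
      field_simp
    rw [e]
    nlinarith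
  have n1 := hyE t (Set.right_mem_Icc.2 h)
  have n2 := hyE t0 (Set.left_mem_Icc.2 h)
  calc y t + E ≤ (y t + E) * exp (4 * A * (1 + t) ^ (-(1 / 4) : ℝ) + D / 2 * ((1 + t) ^ 2)⁻¹) :=
        le_mul_of_one_le_right n1 l1
    _ ≤ _ := hant
    _ ≤ _ := mul_le_mul_of_nonneg_left l2 n2

end raybounds

/-! ### Pointwise decay -/

/-- The information on a single function at times `≤ T` from which its pointwise decay follows:
slowly growing energies of size `ε²`, and a small source term. -/
structure Ctl (R K ε κ T : ℝ) (v : Fn) : Prop where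
  nice : Nice R v
  R0 : 0 ≤ R
  RK : R + 1 ≤ K
  ε0 : 0 < ε
  κ0 : 0 < κ
  κ1 : κ ≤ 1 / 4
  eb : ∀ t, 0 ≤ t → t ≤ T → EB v t (K ^ 2 * ε ^ 2 * (1 + t) ^ κ)
  box : ∀ t, 0 < t → t ≤ T → ∀ x y, |dAlembert v t x y| ≤ ε / √(1 + t) ^ 3
  box2 : ∀ t, 0 < t → t ≤ T →
    t ^ 2 * In (dAlembert v * dAlembert v) t ≤ K ^ 2 * ε ^ 2 * (1 + t) ^ κ

section ctl
variable {R K ε κ T : ℝ} {u v u1 u2 : Fn}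

lemma Ctl.K1 (h : Ctl R K ε κ T v) : 1 ≤ K := by linarith [h.R0, h.RK]

lemma sqrt_grow {K ε κ t : ℝ} (hK : 0 ≤ K) (hε : 0 ≤ ε) (ht : 0 ≤ t) :
    √(K ^ 2 * ε ^ 2 * (1 + t) ^ κ) = K * ε * (1 + t) ^ (κ / 2) := by
  have h1 : 0 < 1 + t := by linarith
  have : (1 + t) ^ κ = ((1 + t) ^ (κ / 2)) ^ 2 := by
    rw [← Real.rpow_natCast, ← Real.rpow_mul h1.le]; congr 1; push_cast; ring
  rw [this, ← mul_pow, ← mul_pow, Real.sqrt_sq (by positivity)]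

lemma Ctl.sup (h : Ctl R K ε κ T v) {t : ℝ} (ht : 0 ≤ t) (htT : t ≤ T) (x y : ℝ) :
    |pt v t x y| ≤ 2 * (K * ε * (1 + t) ^ (κ / 2)) := by
  have := ((h.eb t ht htT).sup h.nice x y).1
  rwa [sqrt_grow (by linarith [h.K1]) h.ε0.le ht] at this

/-- Decay in the interior region `|x| ≤ t/2`. -/
lemma Ctl.near (h : Ctl R K ε κ T v) {t : ℝ} (ht : 1 ≤ t) (htT : t ≤ T) {x y : ℝ}
    (hxy : x ^ 2 + y ^ 2 ≤ t ^ 2 / 4) :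
    (√(1 + t) * pt v t x y) ^ 8 * (1 + t) ≤ (240 * K ^ 3 * ε) ^ 8 * ((1 + t) ^ κ) ^ 4 := by
  have hK := h.K1
  have hR := h.R0
  have hRK := h.RK
  have d := decay_wt h.R0 h.nice ht (h.eb t (by linarith) htT) (h.box2 t (by linarith) htT) x y
  set L := (1 + t) ^ κ with hL
  have hL0 : 0 < L := Real.rpow_pos_of_pos (by linarith) _
  set p := pt v t x y
  have hw : 3 / 16 * (1 + t) ^ 2 ≤ wt t x y := by
    have : wt t x y = t ^ 2 - x ^ 2 - y ^ 2 := by simp [wt]; ring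
    nlinarith
  have e1 : (3 / 16 * (1 + t) ^ 2 * p) ^ 8 ≤ (wt t x y * p) ^ 8 := by
    rw [mul_pow, mul_pow _ p]
    have : 0 ≤ p ^ 8 := by positivity
    gcongr
  have e2 : 256 * 60 ^ 6 * (1 + R) ^ 5 * (t + R) ^ 11 * (K ^ 2 * ε ^ 2 * L) ^ 4
      ≤ 256 * 60 ^ 6 * K ^ 5 * (K * (1 + t)) ^ 11 * (K ^ 2 * ε ^ 2 * L) ^ 4 := by
    have a1 : 1 + R ≤ K := by linarith
    have a2 : t + R ≤ K * (1 + t) := by nlinarith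
    gcongr
  have e3 := (e1.trans d).trans e2
  have hs : √(1 + t) ^ 8 = (1 + t) ^ 4 := by
    rw [show (8 : ℕ) = 2 * 4 by norm_num, pow_mul, Real.sq_sqrt (by linarith)]
  have hpos : (0 : ℝ) < (1 + t) ^ 11 := by positivity
  have e4 : (1 + t) ^ 11 * ((√(1 + t) * p) ^ 8 * (1 + t) * (3 / 16) ^ 8)
      ≤ (1 + t) ^ 11 * (256 * 60 ^ 6 * (K ^ 24 * ε ^ 8 * L ^ 4)) := by
    rw [mul_pow, hs]
    calc _ = (3 / 16 * (1 + t) ^ 2 * p) ^ 8 := by ring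
      _ ≤ _ := e3
      _ = _ := by ring
  have e5 := le_of_mul_le_mul_left e4 hpos
  have hZ : 0 ≤ K ^ 24 * ε ^ 8 * L ^ 4 := by positivity
  have : (240 * K ^ 3 * ε) ^ 8 * L ^ 4 = 240 ^ 8 * (K ^ 24 * ε ^ 8 * L ^ 4) := by ring
  rw [this]
  norm_num at e5 ⊢
  linarith

lemma rpow_quarter_le (hκ1 : κ ≤ 1 / 4) {t : ℝ} (ht : 0 ≤ t) : ((1 + t) ^ κ) ^ 4 ≤ 1 + t := by
  rw [← Real.rpow_natCast, ← Real.rpow_mul (by linarith)]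
  calc (1 + t) ^ (κ * ((4 : ℕ) : ℝ)) ≤ (1 + t) ^ (1 : ℝ) :=
        Real.rpow_le_rpow_of_exponent_le (by linarith) (by push_cast; linarith)
    _ = 1 + t := Real.rpow_one _

lemma Ctl.near' (h : Ctl R K ε κ T v) {t : ℝ} (ht : 1 ≤ t) (htT : t ≤ T) {x y : ℝ}
    (hxy : x ^ 2 + y ^ 2 ≤ t ^ 2 / 4) : √(1 + t) * |pt v t x y| ≤ 240 * K ^ 3 * ε := by
  have hK := h.K1
  have hε := h.ε0
  have h1 := h.near ht htT hxy
  have h2 := rpow_quarter_le h.κ1 (by linarith : 0 ≤ t)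
  have h3 : (√(1 + t) * pt v t x y) ^ 8 ≤ (240 * K ^ 3 * ε) ^ 8 := by
    have : (√(1 + t) * pt v t x y) ^ 8 * (1 + t) ≤ (240 * K ^ 3 * ε) ^ 8 * (1 + t) :=
      h1.trans (by gcongr)
    exact le_of_mul_le_mul_right this (by linarith)
  have := abs_le_of_pow8 (by positivity) h3
  rwa [abs_mul, abs_of_nonneg (Real.sqrt_nonneg _)] at this

lemma s_three_half {s : ℝ} (hs : 2 ≤ s) : (1 + s) ^ (3 / 2 : ℝ) ≤ 3 * (s * √s) := by
  have h0 : 0 < s := by linarith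
  have e : s * √s = s ^ (3 / 2 : ℝ) := by
    rw [Real.sqrt_eq_rpow, ← Real.rpow_one_add' h0.le (by norm_num)]; norm_num
  have e2 : (1 + s) ^ (3 / 2 : ℝ) ≤ (3 / 2 * s) ^ (3 / 2 : ℝ) :=
    Real.rpow_le_rpow (by linarith) (by linarith) (by norm_num)
  rw [Real.mul_rpow (by norm_num) h0.le] at e2
  have e3 : (3 / 2 : ℝ) ^ (3 / 2 : ℝ) ≤ (3 / 2 : ℝ) ^ (2 : ℝ) :=
    Real.rpow_le_rpow_of_exponent_le (by norm_num) (by norm_num)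
  rw [Real.rpow_two] at e3
  rw [e]
  have : 0 < s ^ (3 / 2 : ℝ) := Real.rpow_pos_of_pos h0 _
  nlinarith

lemma grow_div (h : Ctl R K ε κ T v) {s : ℝ} (hs : 2 ≤ s) :
    7 * √(K ^ 2 * ε ^ 2 * (1 + s) ^ κ) / (s * √s) ≤ 21 * K * ε * (1 + s) ^ (κ / 2 - 3 / 2) := by
  have hK := h.K1
  have hε := h.ε0
  have h0 : 0 < s := by linarith
  have q0 : 0 < √s := Real.sqrt_pos.2 h0
  rw [sqrt_grow (by linarith) hε.le h0.le, div_le_iff₀ (by positivity),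
    Real.rpow_sub (by linarith)]
  have h3 := s_three_half hs
  have hp : 0 < (1 + s) ^ (3 / 2 : ℝ) := Real.rpow_pos_of_pos (by linarith) _
  have hq : 0 < (1 + s) ^ (κ / 2) := Real.rpow_pos_of_pos (by linarith) _
  rw [mul_div_assoc', div_mul_eq_mul_div, le_div_iff₀ hp]
  calc 7 * (K * ε * (1 + s) ^ (κ / 2)) * (1 + s) ^ (3 / 2 : ℝ)
      ≤ 7 * (K * ε * (1 + s) ^ (κ / 2)) * (3 * (s * √s)) := by gcongr
    _ = _ := by ring

lemma Lr_le (h : Ctl R K ε κ T v) {a b s r : ℝ} (hab : a ^ 2 + b ^ 2 = 1)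
    (hs : 2 * K ≤ s) (hsT : s ≤ T) (hr1 : s / 2 ≤ r) :
    |Lr v a b s r| ≤ 21 * K * ε * (1 + s) ^ (κ / 2 - 3 / 2) := by
  have hK := h.K1
  have hε := h.ε0
  rcases le_or_gt r (s + R) with hr2 | hr2
  · have hs0 : 0 < s := by linarith
    exact (Lr_core h.nice h.R0 hab (by linarith [h.RK]) hs0.le le_rfl hr1
      (h.eb s hs0.le hsT)).trans (grow_div h (by linarith))
  · have hz : |s| + R < r := by rwa [abs_of_nonneg (by linarith)]
    have : Lr v a b s r = 0 := by
      simp [Lr, h.nice.polar_zero h.R0 hz hab, h.nice.dO.dO.polar_zero h.R0 hz hab]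
    rw [this, abs_zero]
    have : 0 < (1 + s) ^ (κ / 2 - 3 / 2) := Real.rpow_pos_of_pos (by linarith) _
    positivity

/-- The incoming derivative near the light cone. -/
lemma Ctl.inc (h : Ctl R K ε κ T v) {a b s r : ℝ} (hab : a ^ 2 + b ^ 2 = 1)
    (hs : 2 * K ≤ s) (hsT : s ≤ T) (hr1 : s / 2 ≤ r) :
    |Wr (-1) v a b s r| ≤ 12 * K ^ 2 * ε * (1 + |r - s|) / (1 + s) := by
  have hK := h.K1
  have hε := h.ε0
  have hs0 : 0 < s := by linarith
  rcases le_or_gt r (s + R) with hr2 | hr2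
  · have hN : ∀ τ, s / 2 ≤ τ → τ ≤ s → ∀ x y,
        |dAlembert v τ x y| ≤ ε / √(1 + s / 2) ^ 3 := by
      intro τ h1 h2 x y
      refine (h.box τ (by linarith) (h2.trans hsT) x y).trans ?_
      have : √(1 + s / 2) ≤ √(1 + τ) := Real.sqrt_le_sqrt (by linarith)
      have : 0 < √(1 + s / 2) := Real.sqrt_pos.2 (by linarith)
      gcongr
    have hB : ∀ τ, s / 2 ≤ τ → τ ≤ s → EB v τ (K ^ 2 * ε ^ 2 * (1 + s) ^ κ) := by
      intro τ h1 h2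
      refine (h.eb τ (by linarith) (h2.trans hsT)).mono ?_
      have : (1 + τ) ^ κ ≤ (1 + s) ^ κ :=
        Real.rpow_le_rpow (by linarith) (by linarith) h.κ0.le
      gcongr
    refine (inc_bound h.nice h.R0 hab (by linarith [h.RK]) hr1 hr2 hB hN).trans ?_
    have e1 := grow_div h (by linarith : 2 ≤ s)
    have e2 : (1 + s) ^ (κ / 2 - 3 / 2) ≤ (1 + s)⁻¹ := by
      rw [← Real.rpow_neg_one]
      exact Real.rpow_le_rpow_of_exponent_le (by linarith) (by linarith [h.κ1])
    have e3 : √(2 * s) / 2 * (ε / √(1 + s / 2) ^ 3) ≤ 2 * ε * (1 + s)⁻¹ := by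
      have a1 : √(2 * s) ≤ 2 * √(1 + s / 2) := by
        rw [show 2 * s = 2 ^ 2 * (s / 2) by ring, Real.sqrt_mul (by norm_num),
          Real.sqrt_sq (by norm_num)]
        have : √(s / 2) ≤ √(1 + s / 2) := Real.sqrt_le_sqrt (by linarith)
        linarith
      have q : 0 < √(1 + s / 2) := Real.sqrt_pos.2 (by linarith)
      have qq : √(1 + s / 2) ^ 2 = 1 + s / 2 := Real.sq_sqrt (by linarith)
      calc √(2 * s) / 2 * (ε / √(1 + s / 2) ^ 3)
          ≤ (2 * √(1 + s / 2)) / 2 * (ε / √(1 + s / 2) ^ 3) := by gcongr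
        _ = ε / (√(1 + s / 2)) ^ 2 := by field_simp
        _ ≤ 2 * ε * (1 + s)⁻¹ := by
          rw [qq, ← div_eq_mul_inv, div_le_div_iff₀ (by linarith) (by linarith)]
          nlinarith
    have e4 : √(2 * s) / 2 * (ε / √(1 + s / 2) ^ 3)
        + 7 * √(K ^ 2 * ε ^ 2 * (1 + s) ^ κ) / (s * √s) ≤ 23 * K * ε * (1 + s)⁻¹ := by
      have i0 : 0 < (1 + s)⁻¹ := by positivity
      have : 21 * K * ε * (1 + s) ^ (κ / 2 - 3 / 2) ≤ 21 * K * ε * (1 + s)⁻¹ := by gcongr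
      have : 2 * ε * (1 + s)⁻¹ ≤ 2 * K * ε * (1 + s)⁻¹ := by
        have : 0 < ε * (1 + s)⁻¹ := by positivity
        nlinarith
      linarith
    have e5 : (R + 1 + s - r) / 2 ≤ K * (1 + |r - s|) / 2 := by
      have := neg_abs_le (r - s)
      have := abs_nonneg (r - s)
      have := h.RK
      nlinarith
    have e6 : 0 ≤ (R + 1 + s - r) / 2 := by linarith
    calc _ ≤ (R + 1 + s - r) / 2 * (23 * K * ε * (1 + s)⁻¹) := by gcongr
      _ ≤ K * (1 + |r - s|) / 2 * (23 * K * ε * (1 + s)⁻¹) := by gcongr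
      _ = 23 / 2 * K ^ 2 * ε * (1 + |r - s|) / (1 + s) := by field_simp
      _ ≤ _ := by gcongr; norm_num
  · rw [Wr_zero h.nice h.R0 _ (by rwa [abs_of_nonneg hs0.le]) hab, abs_zero]
    positivity

end ctl

section pair
variable {R K ε κ T : ℝ} {u v u1 u2 : Fn}

/-- The size of the outgoing derivatives, in units of `ε`. -/
def CV (K : ℝ) : ℝ := 500 * K ^ 3 * exp (42 * K + 9 * K ^ 4)

lemma Sol.e1' (h : Sol R u1 u2) {t : ℝ} (ht : 0 < t) (x y : ℝ) :
    dAlembert u1 t x y = -(pt u2 t x y) ^ 2 * pt u1 t x y := by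
  have : dAlembert u1 t x y = -(pt u2 t x y * pt u2 t x y * pt u1 t x y) := by
    rw [h.e1 t ht]; rfl
  rw [this]; ring

/-- Outgoing derivative at the time at which a ray enters the region `r ≥ t/2`, `t ≥ 2K`. -/
lemma Ctl.enter (h : Ctl R K ε κ T v) {a b σ t0 : ℝ} (hab : a ^ 2 + b ^ 2 = 1)
    (ht0 : t0 = max (2 * K) (-2 * σ)) (hT : t0 ≤ T) (hσ : σ ≤ R) :
    |Wr 1 v a b t0 (t0 + σ)| ≤ 300 * K ^ 3 * ε := by
  have hK := h.K1
  have hε := h.ε0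
  have l1 : 2 * K ≤ t0 := ht0 ▸ le_max_left _ _
  have l2 : -2 * σ ≤ t0 := ht0 ▸ le_max_right _ _
  have hRK := h.RK
  have X := h.inc hab l1 hT (r := t0 + σ) (by linarith)
  have e1 : 12 * K ^ 2 * ε * (1 + |t0 + σ - t0|) / (1 + t0) ≤ 12 * K ^ 3 * ε := by
    rw [div_le_iff₀ (by linarith), add_sub_cancel_left]
    have : |σ| ≤ t0 := abs_le.2 ⟨by linarith, by linarith⟩
    have k : 12 * K ^ 2 * ε ≤ 12 * K ^ 3 * ε := by
      have : K ^ 2 ≤ K ^ 3 := pow_le_pow_right₀ hK (by norm_num)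
      gcongr
    exact mul_le_mul k (by linarith) (by positivity) (by positivity)
  have e2 : √(t0 + σ) * |pt v t0 ((t0 + σ) * a) ((t0 + σ) * b)| ≤ 240 * K ^ 3 * ε := by
    rcases le_total (-2 * σ) (2 * K) with hc | hc
    · have ht : t0 = 2 * K := by rw [ht0, max_eq_left hc]
      have p := h.sup (by linarith) hT ((t0 + σ) * a) ((t0 + σ) * b)
      have g : (1 + t0) ^ (κ / 2) ≤ 3 * K := by
        calc (1 + t0) ^ (κ / 2) ≤ (1 + t0) ^ (1 : ℝ) :=
              Real.rpow_le_rpow_of_exponent_le (by linarith) (by linarith [h.κ1])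
          _ ≤ 3 * K := by rw [Real.rpow_one, ht]; linarith
      have q : √(t0 + σ) ≤ 3 * K := by
        rw [Real.sqrt_le_left (by linarith)]; nlinarith
      have p' : |pt v t0 ((t0 + σ) * a) ((t0 + σ) * b)| ≤ 2 * (K * ε * (3 * K)) :=
        p.trans (by gcongr)
      calc _ ≤ 3 * K * (2 * (K * ε * (3 * K))) :=
            mul_le_mul q p' (abs_nonneg _) (by linarith)
        _ ≤ _ := by
          have : 0 < K ^ 3 * ε := by positivity
          nlinarith
    · have ht : t0 = -2 * σ := by rw [ht0, max_eq_right hc]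
      refine le_trans ?_ (h.near' (x := (t0 + σ) * a) (y := (t0 + σ) * b) (by linarith) hT ?_)
      · have : √(t0 + σ) ≤ √(1 + t0) := Real.sqrt_le_sqrt (by linarith)
        gcongr
      · have : ((t0 + σ) * a) ^ 2 + ((t0 + σ) * b) ^ 2 = (t0 + σ) ^ 2 := by
          rw [mul_pow, mul_pow, ← mul_add, hab, mul_one]
        rw [this, ht]
        apply le_of_eq; ring
  have hs := Wr_sub v a b t0 (t0 + σ)
  have : Wr 1 v a b t0 (t0 + σ) = Wr (-1) v a b t0 (t0 + σ)
    - √(t0 + σ) * pt v t0 ((t0 + σ) * a) ((t0 + σ) * b) := by linarith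
  rw [this]
  refine (abs_sub _ _).trans ?_
  rw [abs_mul, abs_of_nonneg (Real.sqrt_nonneg _)]
  have : 0 < K ^ 3 * ε := by positivity
  linarith

/-- One equation of the system along an outgoing ray: damping term, incoming part, angular part. -/
lemma out_ineq {P X V L η ε K S w : ℝ} (hε : 0 < ε) (hK : 1 ≤ K) (hη : 0 ≤ η)
    (hη1 : η ≤ 1) (hS : 0 < S) (hP : P ^ 2 ≤ η ^ 2 / S) (hX : X ^ 2 ≤ (12 * K ^ 2 * ε * w / S) ^ 2)
    (hL : |L| ≤ 21 * K * ε * S ^ (-(5 / 4) : ℝ)) :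
    2 * V * (1 / 2 * P ^ 2 * (X - V) - L) ≤
      36 * K ^ 4 * ε ^ 2 * w ^ 2 / S ^ 3 + 21 * K * S ^ (-(5 / 4) : ℝ) * (V ^ 2 + ε ^ 2) := by
  set Q := S ^ (-(5 / 4) : ℝ)
  have h1 : P ^ 2 * (X * V - V ^ 2) ≤ P ^ 2 * (X ^ 2 / 4) := by
    apply mul_le_mul_of_nonneg_left _ (sq_nonneg _)
    nlinarith [sq_nonneg (X / 2 - V)]
  have h2 : P ^ 2 * (X ^ 2 / 4) ≤ 1 / S * ((12 * K ^ 2 * ε * w / S) ^ 2 / 4) := by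
    apply mul_le_mul _ (by linarith) (by positivity) (by positivity)
    refine hP.trans ?_
    gcongr
    nlinarith
  have h3 : -(2 * V * L) ≤ 21 * K * Q * (V ^ 2 + ε ^ 2) := by
    have a1 : -(2 * V * L) ≤ 2 * |V| * |L| := by
      have := neg_abs_le (V * L)
      rw [abs_mul] at this
      linarith
    have a2 : 2 * |V| * |L| ≤ 2 * |V| * (21 * K * ε * Q) := by gcongr
    have a3 : 2 * |V| * ε ≤ V ^ 2 + ε ^ 2 := by
      rw [← sq_abs V]; nlinarith [sq_nonneg (|V| - ε)]
    have : 0 ≤ 21 * K * Q := by positivity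
    nlinarith
  have h4 : 1 / S * ((12 * K ^ 2 * ε * w / S) ^ 2 / 4) = 36 * K ^ 4 * ε ^ 2 * w ^ 2 / S ^ 3 := by
    field_simp; ring
  have : 2 * V * (1 / 2 * P ^ 2 * (X - V) - L) = P ^ 2 * (X * V - V ^ 2) + -(2 * V * L) := by ring
  rw [this]; linarith

/-- Along an outgoing ray the cubic terms are dissipative: with `X` the incoming derivative,
`∂ₜV_j = ½(∂ₜu_k)²(X_j - V_j) + …`.  Hence the bound for `V` does not depend on the constant in
the a priori decay of `∂ₜu`. -/
lemma V_bound (hS : Sol R u1 u2) (h1 : Ctl R K ε κ T u1) (h2 : Ctl R K ε κ T u2) {η : ℝ}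
    (hη : 0 ≤ η) (hη1 : η ≤ 1)
    (hm : ∀ t, 0 ≤ t → t ≤ T → ∀ x y, |pt u1 t x y| ≤ η / √(1 + t) ∧ |pt u2 t x y| ≤ η / √(1 + t))
    {a b t r : ℝ} (hab : a ^ 2 + b ^ 2 = 1) (ht : 2 * K ≤ t) (htT : t ≤ T) (hr : t / 2 ≤ r) :
    |Wr 1 u1 a b t r| ≤ CV K * ε ∧ |Wr 1 u2 a b t r| ≤ CV K * ε := by
  have hK := h1.K1
  have hε := h1.ε0
  have hRK := h1.RK
  have hR := h1.R0
  have hCV : 0 ≤ CV K * ε := by unfold CV; positivity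
  rcases lt_or_ge R (r - t) with hσ | hσ
  · have hz : |t| + R < r := by rw [abs_of_nonneg (by linarith)]; linarith
    rw [Wr_zero h1.nice hR _ hz hab, Wr_zero h2.nice hR _ hz hab, abs_zero]
    exact ⟨hCV, hCV⟩
  set σ := r - t with hσdef
  obtain ⟨t0, ht0⟩ : ∃ t0, t0 = max (2 * K) (-2 * σ) := ⟨_, rfl⟩
  have l1 : 2 * K ≤ t0 := ht0 ▸ le_max_left _ _
  have l2 : -2 * σ ≤ t0 := ht0 ▸ le_max_right _ _
  have l3 : t0 ≤ t := by rw [ht0]; exact max_le ht (by linarith)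
  have hσt : |σ| ≤ t0 := abs_le.2 ⟨by linarith, by linarith⟩
  have i1 := h1.enter hab ht0 (l3.trans htT) hσ
  have i2 := h2.enter hab ht0 (l3.trans htT) hσ
  set y : ℝ → ℝ := fun s => Wr 1 u1 a b s (1 * s + σ) ^ 2 + Wr 1 u2 a b s (1 * s + σ) ^ 2 with hy
  have hd : ∀ s ∈ Set.Icc t0 t, HasDerivAt y
      (2 * Wr 1 u1 a b s (1 * s + σ) * -(1 * Gr u1 a b s (1 * s + σ))
        + 2 * Wr 1 u2 a b s (1 * s + σ) * -(1 * Gr u2 a b s (1 * s + σ))) s := by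
    intro s hs
    have hr0 : 0 < 1 * s + σ := by linarith [hs.1]
    refine (((ray_deriv h1.nice.smooth (by norm_num) hab hr0).pow 2).add
      ((ray_deriv h2.nice.smooth (by norm_num) hab hr0).pow 2)).congr_deriv ?_
    push_cast; ring
  have key := ray_gron (A := 21 * K) (D := 36 * K ^ 4 * (1 + |σ|) ^ 2) (E := 2 * ε ^ 2)
    (by linarith) l3 (by positivity) (by positivity) hd (fun s _ => by simp only [hy]; positivity)
    (fun s hs => by
      have hs1 : 2 * K ≤ s := l1.trans hs.1
      have hs0 : 0 < s := by linarith
      have hsT : s ≤ T := hs.2.trans htT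
      have hr1 : s / 2 ≤ 1 * s + σ := by linarith [hs.1]
      have hS1 : (0 : ℝ) < 1 + s := by linarith
      obtain ⟨m1, m2⟩ := hm s hs0.le hsT ((1 * s + σ) * a) ((1 * s + σ) * b)
      have sqle : ∀ p : ℝ, |p| ≤ η / √(1 + s) → p ^ 2 ≤ η ^ 2 / (1 + s) := by
        intro p hp
        rw [← sq_abs]
        calc |p| ^ 2 ≤ (η / √(1 + s)) ^ 2 := by gcongr
          _ = _ := by rw [div_pow, Real.sq_sqrt hS1.le]
      have ang : ∀ {u : Fn}, Ctl R K ε κ T u →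
          |Lr u a b s (1 * s + σ)| ≤ 21 * K * ε * (1 + s) ^ (-(5 / 4) : ℝ) := by
        intro u hu
        refine (Lr_le hu hab hs1 hsT hr1).trans ?_
        have : (1 + s) ^ (κ / 2 - 3 / 2) ≤ (1 + s) ^ (-(5 / 4) : ℝ) :=
          Real.rpow_le_rpow_of_exponent_le (by linarith) (by linarith [hu.κ1])
        gcongr
      have inc : ∀ {u : Fn}, Ctl R K ε κ T u → Wr (-1) u a b s (1 * s + σ) ^ 2
          ≤ (12 * K ^ 2 * ε * (1 + |σ|) / (1 + s)) ^ 2 := by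
        intro u hu
        have := hu.inc hab hs1 hsT hr1
        rw [show 1 * s + σ - s = σ by ring] at this
        rw [← sq_abs]
        gcongr
      have o1 := out_ineq (V := Wr 1 u1 a b s (1 * s + σ)) hε hK hη hη1 hS1 (sqle _ m2)
        (inc h1) (ang h1)
      have o2 := out_ineq (V := Wr 1 u2 a b s (1 * s + σ)) hε hK hη hη1 hS1 (sqle _ m1)
        (inc h2) (ang h2)
      have g1 : -(1 * Gr u1 a b s (1 * s + σ)) = 1 / 2 *
          pt u2 s ((1 * s + σ) * a) ((1 * s + σ) * b) ^ 2 *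
          (Wr (-1) u1 a b s (1 * s + σ) - Wr 1 u1 a b s (1 * s + σ)) - Lr u1 a b s (1 * s + σ) := by
        rw [Gr_eq, hS.e1' hs0, Wr_sub]; ring
      have g2 : -(1 * Gr u2 a b s (1 * s + σ)) = 1 / 2 *
          pt u1 s ((1 * s + σ) * a) ((1 * s + σ) * b) ^ 2 *
          (Wr (-1) u2 a b s (1 * s + σ) - Wr 1 u2 a b s (1 * s + σ)) - Lr u2 a b s (1 * s + σ) := by
        rw [Gr_eq, hS.symm.e1' hs0, Wr_sub]; ring
      rw [g1, g2]
      refine (add_le_add o1 o2).trans ?_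
      have hy0 : 0 ≤ y s := by simp only [hy]; positivity
      have e : (36 * K ^ 4 * (1 + |σ|) ^ 2 / (1 + s) ^ 3) * (2 * ε ^ 2)
          ≤ (36 * K ^ 4 * (1 + |σ|) ^ 2 / (1 + s) ^ 3) * (y s + 2 * ε ^ 2) := by
        gcongr; linarith
      have e' : (36 * K ^ 4 * (1 + |σ|) ^ 2 / (1 + s) ^ 3) * (2 * ε ^ 2)
        = 2 * (36 * K ^ 4 * ε ^ 2 * (1 + |σ|) ^ 2 / (1 + s) ^ 3) := by ring
      have e'' : y s = Wr 1 u1 a b s (1 * s + σ) ^ 2 + Wr 1 u2 a b s (1 * s + σ) ^ 2 := rfl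
      rw [add_mul]
      rw [e'] at e
      refine le_trans (le_of_eq ?_) (add_le_add le_rfl e)
      rw [e'']
      ring)
  have hexp : 4 * (21 * K) + 36 * K ^ 4 * (1 + |σ|) ^ 2 / (2 * (1 + t0) ^ 2)
      ≤ 2 * (42 * K + 9 * K ^ 4) := by
    have : (1 + |σ|) ^ 2 / (2 * (1 + t0) ^ 2) ≤ 1 / 2 := by
      have p0 : 0 < 1 + t0 := by linarith
      rw [div_le_div_iff₀ (by positivity) (by norm_num)]
      have : (1 + |σ|) ^ 2 ≤ (1 + t0) ^ 2 := by gcongr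
      linarith
    have h4 : 0 < 36 * K ^ 4 := by positivity
    rw [mul_div_assoc]
    nlinarith
  have hi : y t0 + 2 * ε ^ 2 ≤ 250000 * K ^ 6 * ε ^ 2 := by
    have s1 : Wr 1 u1 a b t0 (t0 + σ) ^ 2 ≤ (300 * K ^ 3 * ε) ^ 2 := by
      rw [← sq_abs]; gcongr
    have s2 : Wr 1 u2 a b t0 (t0 + σ) ^ 2 ≤ (300 * K ^ 3 * ε) ^ 2 := by
      rw [← sq_abs]; gcongr
    have s3 : ε ^ 2 ≤ K ^ 6 * ε ^ 2 := le_mul_of_one_le_left (by positivity) (one_le_pow₀ hK)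
    simp only [hy, one_mul]
    have : (300 * K ^ 3 * ε) ^ 2 = 90000 * (K ^ 6 * ε ^ 2) := by ring
    nlinarith
  have fin : y t ≤ (CV K * ε) ^ 2 := by
    have : (CV K * ε) ^ 2 = 250000 * K ^ 6 * ε ^ 2 * exp (2 * (42 * K + 9 * K ^ 4)) := by
      unfold CV
      rw [two_mul (42 * K + 9 * K ^ 4), Real.exp_add (42 * K + 9 * K ^ 4)]
      generalize exp (42 * K + 9 * K ^ 4) = e
      ring
    rw [this]
    have h0 : 0 ≤ y t0 + 2 * ε ^ 2 := by simp only [hy]; positivity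
    calc y t ≤ y t + 2 * ε ^ 2 := by nlinarith
      _ ≤ _ := key
      _ ≤ _ := mul_le_mul hi (Real.exp_le_exp.2 hexp) (exp_pos _).le (by positivity)
  have hrt : 1 * t + σ = r := by rw [hσdef]; ring
  have fin' : Wr 1 u1 a b t r ^ 2 + Wr 1 u2 a b t r ^ 2 ≤ (CV K * ε) ^ 2 := by
    simpa only [hy, hrt] using fin
  exact ⟨abs_le_of_sq_le_sq (by nlinarith [sq_nonneg (Wr 1 u2 a b t r)]) hCV,
    abs_le_of_sq_le_sq (by nlinarith [sq_nonneg (Wr 1 u1 a b t r)]) hCV⟩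

/-- The improved decay constant. -/
def CM (K : ℝ) : ℝ := 2 * (12 * K ^ 2 + CV K) + 240 * K ^ 3 + 6 * K ^ 2

lemma improved (hS : Sol R u1 u2) (h1 : Ctl R K ε κ T u1) (h2 : Ctl R K ε κ T u2) {η : ℝ}
    (hη : 0 ≤ η) (hη1 : η ≤ 1)
    (hm : ∀ t, 0 ≤ t → t ≤ T → ∀ x y, |pt u1 t x y| ≤ η / √(1 + t) ∧ |pt u2 t x y| ≤ η / √(1 + t))
    {t : ℝ} (ht : 0 ≤ t) (htT : t ≤ T) (x y : ℝ) :
    |pt u1 t x y| ≤ CM K * ε / √(1 + t) := by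
  have hK := h1.K1
  have hε := h1.ε0
  have hCV : 0 < CV K := by unfold CV; positivity
  have hq : 0 < √(1 + t) := Real.sqrt_pos.2 (by linarith)
  have hqq : √(1 + t) ^ 2 = 1 + t := Real.sq_sqrt (by linarith)
  rw [le_div_iff₀ hq]
  rcases le_total t (2 * K) with hc | hc
  · have p := h1.sup ht htT x y
    have g : (1 + t) ^ (κ / 2) * √(1 + t) ≤ 3 * K := by
      rw [Real.sqrt_eq_rpow, ← Real.rpow_add (by linarith)]
      calc _ ≤ (1 + t) ^ (1 : ℝ) :=
            Real.rpow_le_rpow_of_exponent_le (by linarith) (by linarith [h1.κ1])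
        _ ≤ 3 * K := by rw [Real.rpow_one]; linarith
    calc |pt u1 t x y| * √(1 + t) ≤ 2 * (K * ε * (1 + t) ^ (κ / 2)) * √(1 + t) := by gcongr
      _ = 2 * K * ε * ((1 + t) ^ (κ / 2) * √(1 + t)) := by ring
      _ ≤ 2 * K * ε * (3 * K) := by gcongr
      _ = 6 * K ^ 2 * ε := by ring
      _ ≤ CM K * ε := by
        gcongr; unfold CM
        have : 0 < K ^ 3 := by positivity
        have : 0 < K ^ 2 := by positivity
        linarith
  rcases le_or_gt (x ^ 2 + y ^ 2) (t ^ 2 / 4) with hn | hf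
  · have := h1.near' (by linarith) htT hn
    calc |pt u1 t x y| * √(1 + t) = √(1 + t) * |pt u1 t x y| := by ring
      _ ≤ 240 * K ^ 3 * ε := this
      _ ≤ CM K * ε := by
        gcongr; unfold CM
        have : 0 < K ^ 2 := by positivity
        linarith
  · set r := √(x ^ 2 + y ^ 2) with hr
    have hr2 : t / 2 ≤ r := by
      apply Real.le_sqrt_of_sq_le; nlinarith
    have hr0 : 0 < r := by linarith
    have hrr : r ^ 2 = x ^ 2 + y ^ 2 := Real.sq_sqrt (by positivity)
    have hab : (x / r) ^ 2 + (y / r) ^ 2 = 1 := by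
      rw [div_pow, div_pow, ← add_div, ← hrr]; field_simp
    have ex : r * (x / r) = x := by field_simp
    have ey : r * (y / r) = y := by field_simp
    have hV := (V_bound hS h1 h2 hη hη1 hm hab hc htT hr2).1
    have hX := h1.inc hab hc htT hr2
    have hW := Wr_sub u1 (x / r) (y / r) t r
    rw [ex, ey] at hW
    rcases le_or_gt r (t + R) with hin | hout
    · have e1 : 12 * K ^ 2 * ε * (1 + |r - t|) / (1 + t) ≤ 12 * K ^ 2 * ε := by
        rw [div_le_iff₀ (by linarith)]
        have : |r - t| ≤ t := abs_le.2 ⟨by linarith, by linarith [h1.RK]⟩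
        gcongr
      have e2 : √r * |pt u1 t x y| ≤ (12 * K ^ 2 + CV K) * ε := by
        rw [← abs_of_nonneg (Real.sqrt_nonneg r), ← abs_mul, ← hW]
        refine (abs_sub _ _).trans ?_
        linarith
      have e3 : √(1 + t) ≤ 2 * √r := by
        rw [Real.sqrt_le_left (by positivity), mul_pow, Real.sq_sqrt hr0.le]
        linarith
      calc |pt u1 t x y| * √(1 + t) ≤ |pt u1 t x y| * (2 * √r) := by gcongr
        _ = 2 * (√r * |pt u1 t x y|) := by ring
        _ ≤ 2 * ((12 * K ^ 2 + CV K) * ε) := by gcongr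
        _ ≤ CM K * ε := by
          have : 0 < (240 * K ^ 3 + 6 * K ^ 2) * ε := by positivity
          unfold CM; linarith
    · have hz : |t| + R < r := by rwa [abs_of_nonneg ht]
      have : pt u1 t x y = 0 := by
        rw [← ex, ← ey]; exact h1.nice.dt.polar_zero h1.R0 hz hab
      rw [this, abs_zero, zero_mul]
      unfold CM; positivity

end pair

/-! ### The bootstrap argument -/

section boot
variable {R K ε κ T : ℝ} {u v u1 u2 : Fn}

lemma ctl_of (hS : Sol R u1 u2) (hR : 0 ≤ R) (hRK : R + 1 ≤ K) (hε : 0 < ε) (hκ : 0 < κ)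
    (hκ1 : κ ≤ 1 / 4) {B0 : ℝ} (hB : 4 * B0 ≤ K ^ 2) {η : ℝ} (hη : 0 < η) (hη1 : η ≤ 1)
    (hη3 : η ^ 3 ≤ ε) (hηκ : KE * η ^ 2 ≤ κ) (hb1 : EB u1 0 (ε ^ 2 * B0))
    (hb2 : EB u2 0 (ε ^ 2 * B0))
    (hm : ∀ t, 0 ≤ t → t ≤ T → ∀ x y,
      |pt u1 t x y| ≤ η / √(1 + t) ∧ |pt u2 t x y| ≤ η / √(1 + t)) :
    Ctl R K ε κ T u1 := by
  have eb : ∀ t, 0 ≤ t → t ≤ T → EB u1 t (K ^ 2 * ε ^ 2 * (1 + t) ^ κ) := by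
    intro t h0 hT
    refine (EB_propagate hS hη hκ hηκ hm hb1 hb2 h0 hT).1.mono ?_
    have : 0 < (1 + t) ^ κ := Real.rpow_pos_of_pos (by linarith) _
    calc 4 * (ε ^ 2 * B0) * (1 + t) ^ κ = 4 * B0 * (ε ^ 2 * (1 + t) ^ κ) := by ring
      _ ≤ K ^ 2 * (ε ^ 2 * (1 + t) ^ κ) := by gcongr
      _ = _ := by ring
  have hP2 : ∀ t, 0 ≤ t → t ≤ T → ∀ x y, |(pt u2 * pt u2) t x y| ≤ η ^ 2 / (1 + t) := by
    intro t h0 hT x y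
    have h1 := (hm t h0 hT x y).2
    have : |(pt u2 * pt u2) t x y| = |pt u2 t x y| ^ 2 := by
      simp [abs_mul, sq]
    rw [this]
    calc |pt u2 t x y| ^ 2 ≤ (η / √(1 + t)) ^ 2 := by gcongr
      _ = _ := by rw [div_pow, Real.sq_sqrt (by linarith)]
  refine ⟨hS.n1, hR, hRK, hε, hκ, hκ1, eb, ?_, ?_⟩
  · intro t h0 hT x y
    have hq : 0 < √(1 + t) := Real.sqrt_pos.2 (by linarith)
    have e : dAlembert u1 t x y = -((pt u2 * pt u2) t x y * pt u1 t x y) := by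
      rw [hS.e1 t h0]; rfl
    rw [e, abs_neg, abs_mul]
    calc _ ≤ η ^ 2 / (1 + t) * (η / √(1 + t)) :=
          mul_le_mul (hP2 t h0.le hT x y) (hm t h0.le hT x y).1 (abs_nonneg _)
            (by have : 0 < 1 + t := by linarith
                positivity)
      _ = η ^ 3 / √(1 + t) ^ 3 := by
          have : √(1 + t) ^ 2 = 1 + t := Real.sq_sqrt (by linarith)
          rw [show η ^ 2 / (1 + t) = η ^ 2 / √(1 + t) ^ 2 by rw [this]]
          field_simp
      _ ≤ _ := by gcongr
  · intro t h0 hT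
    have e : In (dAlembert u1 * dAlembert u1) t
        = In ((pt u2 * pt u2) * pt u1 * ((pt u2 * pt u2) * pt u1)) t :=
      In_congr fun x y => by
        have e : dAlembert u1 t x y = -((pt u2 * pt u2) t x y * pt u1 t x y) := by
          rw [hS.e1 t h0]; rfl
        simp only [Pi.mul_apply] at e ⊢
        rw [e]; ring
    rw [e]
    have b := In_bdd (hS.n2.dt.mul hS.n2.dt) hS.n1.dt (hP2 t h0.le hT)
    have p := (pt_le_En hS.n1 t).trans (eb t h0.le hT).e0
    have p0 := In_sq_nonneg (u := pt u1) t
    set B := K ^ 2 * ε ^ 2 * (1 + t) ^ κ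
    have f : t ^ 2 * (η ^ 2 / (1 + t)) ^ 2 ≤ 1 := by
      rw [div_pow, mul_div_assoc', div_le_one (by positivity)]
      have : (η ^ 2) ^ 2 ≤ 1 := by rw [← pow_mul]; exact pow_le_one₀ hη.le hη1
      have : 0 ≤ t ^ 2 := by positivity
      nlinarith
    calc _ ≤ t ^ 2 * ((η ^ 2 / (1 + t)) ^ 2 * In (pt u1 * pt u1) t) := by gcongr
      _ = t ^ 2 * (η ^ 2 / (1 + t)) ^ 2 * In (pt u1 * pt u1) t := by ring
      _ ≤ 1 * In (pt u1 * pt u1) t := by gcongr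
      _ ≤ B := by rw [one_mul]; exact p

/-- A strict bound for the size of `∂ₜv` at time `T` persists for a short time. -/
lemma open_step (hv : Nice R v) {η : ℝ} (hη : 0 < η) (hT : 0 ≤ T)
    (h : ∀ x y, √(1 + T) * |pt v T x y| < η) :
    ∀ᶠ t in 𝓝 T, ∀ x y, √(1 + t) * |pt v t x y| ≤ η := by
  have hcpt : IsCompact (Set.Icc (-(T + 1 + |R|)) (T + 1 + |R|) ×ˢ
      Set.Icc (-(T + 1 + |R|)) (T + 1 + |R|)) := isCompact_Icc.prod isCompact_Icc
  have hcont : Continuous fun z : ℝ × ℝ × ℝ => √(1 + z.1) * |pt v z.1 z.2.1 z.2.2| :=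
    (Real.continuous_sqrt.comp (by fun_prop)).mul hv.dt.smooth.cont.abs
  have key := hcpt.eventually_forall_of_forall_eventually (x₀ := T)
    (P := fun t z => √(1 + t) * |pt v t z.1 z.2| < η) (fun z _ =>
      hcont.continuousAt.eventually_lt continuousAt_const (h z.1 z.2))
  have hI : Set.Ioo (T - 1) (T + 1) ∈ 𝓝 T := Ioo_mem_nhds (by linarith) (by linarith)
  filter_upwards [key, hI] with t ht htI x y
  by_cases hz : (x, y) ∈ Set.Icc (-(T + 1 + |R|)) (T + 1 + |R|) ×ˢ
      Set.Icc (-(T + 1 + |R|)) (T + 1 + |R|)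
  · exact (ht (x, y) hz).le
  · have : (|t| + R) ^ 2 < x ^ 2 + y ^ 2 := by
      have h1 : |t| + |R| < T + 1 + |R| := by
        have : |t| < T + 1 := abs_lt.2 ⟨by linarith [htI.1], htI.2⟩
        linarith
      have h0 : 0 ≤ |t| + |R| := by positivity
      have h2 : (|t| + R) ^ 2 ≤ (|t| + |R|) ^ 2 := by
        apply sq_le_sq.2
        rw [abs_of_nonneg h0]
        exact (abs_add_le _ _).trans (by rw [abs_abs])
      have h3 : (|t| + |R|) ^ 2 < (T + 1 + |R|) ^ 2 := by gcongr
      have h4 : (T + 1 + |R|) ^ 2 ≤ x ^ 2 + y ^ 2 := by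
        rw [Set.mem_prod, not_and_or, Set.mem_Icc, Set.mem_Icc, ← abs_le, ← abs_le, not_le,
          not_le] at hz
        rcases hz with hz | hz
        · have : (T + 1 + |R|) ^ 2 ≤ |x| ^ 2 := by
            have := abs_nonneg R
            gcongr
          rw [sq_abs] at this
          nlinarith
        · have : (T + 1 + |R|) ^ 2 ≤ |y| ^ 2 := by
            have := abs_nonneg R
            gcongr
          rw [sq_abs] at this
          nlinarith
      linarith
    rw [hv.dt.supp _ _ _ this, abs_zero, mul_zero]
    exact hη.le

/-- Small data lead to `|∂ₜu| ≲ ε(1+t)^{-1/2}` for all times. -/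
theorem global_bound (hR : 0 ≤ R) (hRK : R + 1 ≤ K) (hκ : 0 < κ) (hκ1 : κ ≤ 1 / 4) {B0 : ℝ}
    (hB : 4 * B0 ≤ K ^ 2) : ∃ ε₀ : ℝ, 0 < ε₀ ∧ ∀ ε, 0 < ε → ε < ε₀ → ∀ u1 u2, Sol R u1 u2 →
      EB u1 0 (ε ^ 2 * B0) → EB u2 0 (ε ^ 2 * B0) → 2 * CM K * ε ≤ 1 ∧
      (∀ T, Ctl R K ε κ T u1 ∧ Ctl R K ε κ T u2) ∧
      ∀ t, 0 ≤ t → ∀ x y, |pt u1 t x y| ≤ 2 * CM K * ε / √(1 + t) ∧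
        |pt u2 t x y| ≤ 2 * CM K * ε / √(1 + t) := by
  have hK : 1 ≤ K := by linarith
  set M := 2 * CM K with hM
  have hCM : K ≤ CM K := by
    have : 0 < CV K := by unfold CV; positivity
    have : K ≤ K ^ 3 := le_self_pow₀ hK (by norm_num)
    have : 0 < K ^ 2 := by positivity
    unfold CM; nlinarith
  have hM1 : 1 ≤ M := by linarith
  have hKE : (1 : ℝ) ≤ KE := by norm_num [KE]
  refine ⟨κ / (KE * M ^ 3), by positivity, fun ε hε hε0 u1 u2 hS hb1 hb2 => ?_⟩
  rw [lt_div_iff₀ (by positivity)] at hε0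
  have hM3 : 1 ≤ M ^ 3 := one_le_pow₀ hM1
  have hMM3 : M ≤ M ^ 3 := le_self_pow₀ hM1 (by norm_num)
  have hM23 : M ^ 2 ≤ M ^ 3 := pow_le_pow_right₀ hM1 (by norm_num)
  have c1 : M ^ 3 * ε ≤ κ := by
    have : M ^ 3 * ε ≤ KE * (M ^ 3 * ε) := le_mul_of_one_le_left (by positivity) hKE
    linarith
  have c2 : ε ≤ 1 := by
    have : ε ≤ M ^ 3 * ε := le_mul_of_one_le_left hε.le hM3
    linarith
  have c3 : M * ε ≤ 1 := by
    have : M * ε ≤ M ^ 3 * ε := by gcongr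
    linarith
  have c4 : (M * ε) ^ 3 ≤ ε := by
    calc (M * ε) ^ 3 = M ^ 3 * ε * (ε * ε) := by ring
      _ ≤ 1 * (1 * ε) := by
        apply mul_le_mul (by linarith) _ (by positivity) (by norm_num)
        gcongr
      _ = ε := by ring
  have c5 : KE * (M * ε) ^ 2 ≤ κ := by
    calc KE * (M * ε) ^ 2 = KE * (M ^ 2 * (ε * ε)) := by ring
      _ ≤ KE * (M ^ 3 * (ε * 1)) := by gcongr
      _ ≤ κ := by linarith
  have hη : 0 < M * ε := by positivity
  have ctl : ∀ T, (∀ t, 0 ≤ t → t ≤ T → ∀ x y,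
      |pt u1 t x y| ≤ M * ε / √(1 + t) ∧ |pt u2 t x y| ≤ M * ε / √(1 + t)) →
      Ctl R K ε κ T u1 ∧ Ctl R K ε κ T u2 := fun T hm =>
    ⟨ctl_of hS hR hRK hε hκ hκ1 hB hη c3 c4 c5 hb1 hb2 hm,
      ctl_of hS.symm hR hRK hε hκ hκ1 hB hη c3 c4 c5 hb2 hb1
        fun t h0 hT x y => (hm t h0 hT x y).symm⟩
  -- the set of times up to which the bound holds, written so that it is visibly closed
  set s : Set ℝ := {T | ∀ l ∈ Set.Icc (0:ℝ) 1, ∀ x y : ℝ,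
    √(1 + l * T) * |pt u1 (l * T) x y| ≤ M * ε ∧ √(1 + l * T) * |pt u2 (l * T) x y| ≤ M * ε}
    with hs
  have hsmem : ∀ T, 0 ≤ T → (T ∈ s ↔ ∀ t, 0 ≤ t → t ≤ T → ∀ x y,
      √(1 + t) * |pt u1 t x y| ≤ M * ε ∧ √(1 + t) * |pt u2 t x y| ≤ M * ε) := by
    intro T hT
    constructor
    · intro h t h0 h1 x y
      rcases hT.eq_or_lt with h' | h'
      · have ht : t = 0 := by linarith
        have := h 0 ⟨le_rfl, zero_le_one⟩ x y
        rwa [zero_mul, ← ht] at this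
      · have := h (t / T) ⟨by positivity, (div_le_one h').2 h1⟩ x y
        rwa [div_mul_cancel₀ _ h'.ne'] at this
    · intro h l hl x y
      exact h _ (mul_nonneg hl.1 hT) (by nlinarith [hl.2]) x y
  have conv : ∀ {t : ℝ} {p : ℝ}, 0 ≤ t → (√(1 + t) * |p| ≤ M * ε ↔ |p| ≤ M * ε / √(1 + t)) := by
    intro t p h0
    rw [le_div_iff₀ (Real.sqrt_pos.2 (by linarith)), mul_comm]
  have hclosed : IsClosed s := by
    have cc : ∀ {v : Fn}, Nice R v → ∀ l x y : ℝ,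
        Continuous fun T => √(1 + l * T) * |pt v (l * T) x y| := fun hv l x y =>
      (Real.continuous_sqrt.comp (by fun_prop)).mul
        ((hv.dt.smooth.cont.comp (by fun_prop : Continuous fun T : ℝ => (l * T, x, y))).abs)
    simp only [hs, Set.ofPred_forall, Set.ofPred_and]
    exact isClosed_biInter fun l _ => isClosed_iInter fun x => isClosed_iInter fun y =>
      (isClosed_le (cc hS.n1 l x y) continuous_const).inter
        (isClosed_le (cc hS.n2 l x y) continuous_const)
  have start : ∀ {v : Fn}, Nice R v → EB v 0 (ε ^ 2 * B0) → ∀ x y, |pt v 0 x y| ≤ M * ε := by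
    intro v hv hb x y
    refine ((hb.sup hv x y).1).trans ?_
    have : √(ε ^ 2 * B0) ≤ K * ε / 2 := by
      rw [Real.sqrt_le_left (by positivity)]
      have : 0 < ε ^ 2 := by positivity
      nlinarith
    have : K * ε ≤ M * ε := by gcongr; linarith
    linarith
  have all : ∀ T, 0 ≤ T → T ∈ s := by
    intro T hT
    refine IsClosed.Icc_subset_of_forall_exists_gt (a := 0) (b := T)
      (hclosed.inter isClosed_Icc) ?_ ?_ (Set.right_mem_Icc.2 hT)
    · refine (hsmem 0 le_rfl).2 fun t h0 h1 x y => ?_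
      have : t = 0 := le_antisymm h1 h0
      rw [this, add_zero, Real.sqrt_one, one_mul, one_mul]
      exact ⟨start hS.n1 hb1 x y, start hS.n2 hb2 x y⟩
    · rintro T' ⟨hT's, hT'0, -⟩ y hy
      have hm0 := (hsmem T' hT'0).1 hT's
      have hm : ∀ t, 0 ≤ t → t ≤ T' → ∀ x y,
          |pt u1 t x y| ≤ M * ε / √(1 + t) ∧ |pt u2 t x y| ≤ M * ε / √(1 + t) :=
        fun t h0 h1 x y => ⟨(conv h0).1 (hm0 t h0 h1 x y).1, (conv h0).1 (hm0 t h0 h1 x y).2⟩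
      obtain ⟨C1, C2⟩ := ctl T' hm
      have lt : ∀ {p : ℝ}, |p| ≤ CM K * ε / √(1 + T') → √(1 + T') * |p| < M * ε := by
        intro p hp
        rw [le_div_iff₀ (Real.sqrt_pos.2 (by linarith))] at hp
        have : 0 < CM K * ε := mul_pos (by linarith) hε
        rw [hM]; linarith
      have o1 := open_step hS.n1 hη hT'0
        fun x y => lt (improved hS C1 C2 hη.le c3 hm hT'0 le_rfl x y)
      have o2 := open_step hS.n2 hη hT'0
        fun x y => lt (improved hS.symm C2 C1 hη.le c3 (fun t h0 h1 x y => (hm t h0 h1 x y).symm)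
          hT'0 le_rfl x y)
      obtain ⟨l, u, ⟨hl, hu⟩, hlu⟩ := mem_nhds_iff_exists_Ioo_subset.1 (o1.and o2)
      set T'' := min y ((T' + u) / 2) with hT''
      have a1 : T' < T'' := lt_min hy (by linarith)
      have a2 : T'' < u := (min_le_right _ _).trans_lt (by linarith)
      refine ⟨T'', (hsmem T'' (by linarith)).2 fun t h0 h1 x y => ?_, a1, min_le_left _ _⟩
      rcases le_total t T' with h | h
      · exact hm0 t h0 h x y
      · have := hlu (show t ∈ Set.Ioo l u from ⟨by linarith, by linarith⟩)
        exact ⟨this.1 x y, this.2 x y⟩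
  have hfin : ∀ t, 0 ≤ t → ∀ x y, |pt u1 t x y| ≤ M * ε / √(1 + t) ∧
      |pt u2 t x y| ≤ M * ε / √(1 + t) := fun t h0 x y =>
    have := (hsmem t h0).1 (all t h0) t h0 le_rfl x y
    ⟨(conv h0).1 this.1, (conv h0).1 this.2⟩
  exact ⟨c3, fun T => ctl T fun t h0 _ => hfin t h0, hfin⟩

end boot

/-! ### Finite speed of propagation -/

/-- A smooth weight that is positive exactly inside the (rounded) backward light cone
`√(κ² + |x - (a,b)|²) < ρ - t`. -/
def coneW (ρ κ a b : ℝ) : Fn :=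
  fun t x y => expNegInvGlue (ρ - t - √(κ ^ 2 + (x - a) ^ 2 + (y - b) ^ 2))

section cone
variable {ρ κ a b R : ℝ}

lemma coneW_smooth (hκ : 0 < κ) : Smooth3 (coneW ρ κ a b) := by
  have h : ContDiff ℝ (⊤ : ℕ∞) fun p : ℝ × ℝ × ℝ =>
      ρ - p.1 - √(κ ^ 2 + (p.2.1 - a) ^ 2 + (p.2.2 - b) ^ 2) := by
    refine ContDiff.sub (by fun_prop) (ContDiff.sqrt (by fun_prop) fun p => ?_)
    positivity
  exact expNegInvGlue.contDiff.comp h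

lemma coneW_nice (hκ : 0 < κ) : Nice (ρ + (|a| + |b|)) (coneW ρ κ a b) := by
  refine ⟨coneW_smooth hκ, fun t x y h => expNegInvGlue.zero_of_nonpos ?_⟩
  by_contra hn
  rw [not_le] at hn
  set s := √(κ ^ 2 + (x - a) ^ 2 + (y - b) ^ 2) with hs
  have hs0 : 0 ≤ s := Real.sqrt_nonneg _
  have hs2 : s ^ 2 = κ ^ 2 + (x - a) ^ 2 + (y - b) ^ 2 := Real.sq_sqrt (by positivity)
  have ht : -t ≤ |t| := neg_le_abs t
  have hle : s ≤ |t| + ρ := by linarith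
  -- `|x| ≤ |x - (a,b)| + |(a,b)|`
  have h1 : x * a + y * b - a ^ 2 - b ^ 2 ≤ s * (|a| + |b|) := by
    have h2 : (x - a) * a ≤ s * |a| := by
      refine (le_abs_self _).trans ?_
      rw [abs_mul]
      refine mul_le_mul_of_nonneg_right (abs_le_of_sq_le_sq ?_ hs0) (abs_nonneg _)
      rw [hs2]; nlinarith [sq_nonneg (y - b), sq_nonneg κ]
    have h3 : (y - b) * b ≤ s * |b| := by
      refine (le_abs_self _).trans ?_
      rw [abs_mul]
      refine mul_le_mul_of_nonneg_right (abs_le_of_sq_le_sq ?_ hs0) (abs_nonneg _)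
      rw [hs2]; nlinarith [sq_nonneg (x - a), sq_nonneg κ]
    nlinarith
  have h4 : a ^ 2 + b ^ 2 ≤ (|a| + |b|) ^ 2 := by
    have := mul_nonneg (abs_nonneg a) (abs_nonneg b)
    nlinarith [sq_abs a, sq_abs b]
  have h5 : x ^ 2 + y ^ 2 ≤ (s + (|a| + |b|)) ^ 2 := by nlinarith [sq_nonneg κ]
  have h6 : (s + (|a| + |b|)) ^ 2 ≤ (|t| + (ρ + (|a| + |b|))) ^ 2 := by
    have := abs_nonneg a
    have := abs_nonneg b
    apply pow_le_pow_left₀ (by positivity)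
    linarith
  linarith

lemma coneW_deriv (hκ : 0 < κ) (t x y : ℝ) : ∃ d α β : ℝ, 0 ≤ d ∧ α ^ 2 + β ^ 2 ≤ 1 ∧
    pt (coneW ρ κ a b) t x y = -d ∧ p1 (coneW ρ κ a b) t x y = -(d * α) ∧
    p2 (coneW ρ κ a b) t x y = -(d * β) := by
  set s := √(κ ^ 2 + (x - a) ^ 2 + (y - b) ^ 2) with hs
  have hpos : 0 < κ ^ 2 + (x - a) ^ 2 + (y - b) ^ 2 := by positivity
  have hs0 : 0 < s := Real.sqrt_pos.2 hpos
  have hs2 : s ^ 2 = κ ^ 2 + (x - a) ^ 2 + (y - b) ^ 2 := Real.sq_sqrt hpos.le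
  have hd : HasDerivAt expNegInvGlue (deriv expNegInvGlue (ρ - t - s)) (ρ - t - s) :=
    ((expNegInvGlue.contDiff (n := 1)).differentiable one_ne_zero _).hasDerivAt
  refine ⟨deriv expNegInvGlue (ρ - t - s), (x - a) / s, (y - b) / s,
    expNegInvGlue.monotone.deriv_nonneg, ?_, ?_, ?_, ?_⟩
  · rw [div_pow, div_pow, ← add_div, div_le_one (by positivity), hs2]
    nlinarith [sq_nonneg κ]
  · have : HasDerivAt (fun r => ρ - r - s) (-1) t := by
      simpa using ((hasDerivAt_id t).const_sub ρ).sub_const s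
    exact ((hd.comp t this).congr_deriv (by ring)).deriv
  · have h1 : HasDerivAt (fun r => κ ^ 2 + (r - a) ^ 2 + (y - b) ^ 2) (2 * (x - a)) x := by
      simpa using ((((hasDerivAt_id x).sub_const a).pow 2).const_add (κ ^ 2)).add_const ((y - b) ^ 2)
    have h2 := (h1.sqrt hpos.ne').const_sub (ρ - t)
    exact ((hd.comp x h2).congr_deriv (by rw [← hs]; field_simp)).deriv
  · have h1 : HasDerivAt (fun r => κ ^ 2 + (x - a) ^ 2 + (r - b) ^ 2) (2 * (y - b)) y := by
      simpa using (((hasDerivAt_id y).sub_const b).pow 2).const_add (κ ^ 2 + (x - a) ^ 2)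
    have h2 := (h1.sqrt hpos.ne').const_sub (ρ - t)
    exact ((hd.comp y h2).congr_deriv (by rw [← hs]; field_simp)).deriv

/-- The energy in a shrinking backward cone does not increase if `∂ₜu □u ≤ 0`. -/
lemma cone_energy {u : Fn} (hu : Smooth3 u) (hκ : 0 < κ)
    (hd : ∀ t, 0 < t → ∀ x y, pt u t x y * dAlembert u t x y ≤ 0) {T : ℝ} (hT : 0 ≤ T) :
    In (coneW ρ κ a b * ed u) T ≤ In (coneW ρ κ a b * ed u) 0 := by
  set φ := coneW ρ κ a b with hφ
  have hn : Nice (ρ + (|a| + |b|)) φ := coneW_nice hκ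
  have he : Smooth3 (ed u) :=
    ((hu.dt.mul hu.dt).add (hu.d1.mul hu.d1)).add (hu.d2.mul hu.d2)
  have hI := (hn.mul_right he).cont_In
  have hneg : ∀ t, 0 < t → In (pt (φ * ed u)) t ≤ 0 := by
    intro t ht
    have n1 := hn.mul_right (hu.dt.mul hu.d1)
    have n2 := hn.mul_right (hu.dt.mul hu.d2)
    -- subtracting a divergence does not change the integral
    have e : In (pt (φ * ed u)) t = In (pt (φ * ed u) - kc 2 * p1 (φ * (pt u * p1 u))
        - kc 2 * p2 (φ * (pt u * p2 u))) t := by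
      rw [In_sub ((hn.mul_right he).dt.sub (n1.d1.kmul 2)) (n2.d2.kmul 2),
        In_sub (hn.mul_right he).dt (n1.d1.kmul 2), In_kmul, In_kmul, In_p1 n1, In_p2 n2]
      ring
    rw [e, ← neg_nonneg, ← In_neg]
    refine In_nonneg fun x y => ?_
    obtain ⟨d, α, β, hd0, hαβ, ht1, ht2, ht3⟩ := coneW_deriv (ρ := ρ) (a := a) (b := b) hκ t x y
    have hφ0 : 0 ≤ φ t x y := expNegInvGlue.nonneg _
    have hdd := hd t ht x y
    rw [pt_mul hn.smooth he, p1_mul hn.smooth (hu.dt.mul hu.d1),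
      p2_mul hn.smooth (hu.dt.mul hu.d2), p1_mul hu.dt hu.d1, p2_mul hu.dt hu.d2, ed,
      pt_add ((hu.dt.mul hu.dt).add (hu.d1.mul hu.d1)) (hu.d2.mul hu.d2),
      pt_add (hu.dt.mul hu.dt) (hu.d1.mul hu.d1), pt_mul hu.dt hu.dt, pt_mul hu.d1 hu.d1,
      pt_mul hu.d2 hu.d2, p1_pt hu, p2_pt hu]
    simp only [dAlembert] at hdd
    simp only [Pi.neg_apply, Pi.sub_apply, Pi.add_apply, Pi.mul_apply, kc]
    rw [ht1, ht2, ht3]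
    set A := pt u t x y
    set B := p1 u t x y
    set C := p2 u t x y
    -- `|2 A (αB + βC)| ≤ A² + (α² + β²)(B² + C²)`
    have key : 0 ≤ A ^ 2 + B ^ 2 + C ^ 2 - 2 * A * (α * B + β * C) := by
      nlinarith [sq_nonneg (A - (α * B + β * C)), sq_nonneg (α * C - β * B),
        mul_nonneg (sub_nonneg.2 hαβ) (add_nonneg (sq_nonneg B) (sq_nonneg C))]
    have h1 := mul_nonneg hd0 key
    have h2 := mul_nonneg hφ0 (neg_nonneg.2 hdd)
    refine (add_nonneg h1 (mul_nonneg zero_le_two h2)).trans_eq ?_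
    ring
  have := antitoneOn_of_deriv_nonpos (convex_Ici 0)
    (f := In (φ * ed u)) (fun t _ => (hI t).continuousAt.continuousWithinAt)
    (fun t _ => (hI t).differentiableAt.differentiableWithinAt) (fun t ht => by
      rw [interior_Ici] at ht
      rw [(hI t).deriv]
      exact hneg t ht)
  exact this (Set.mem_Ici.2 le_rfl) (Set.mem_Ici.2 hT) hT

/-- A dissipative solution with data supported in `|x| ≤ R` vanishes for `|x| > R + t`. -/
lemma finite_speed {u : Fn} (hu : Smooth3 u) (hR : 0 ≤ R)
    (hd : ∀ t, 0 < t → ∀ x y, pt u t x y * dAlembert u t x y ≤ 0)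
    (h0 : ∀ x y, R ^ 2 < x ^ 2 + y ^ 2 → u 0 x y = 0)
    (h0' : ∀ x y, R ^ 2 < x ^ 2 + y ^ 2 → pt u 0 x y = 0) {t a b : ℝ} (ht : 0 ≤ t)
    (hab : (t + R) ^ 2 < a ^ 2 + b ^ 2) : u t a b = 0 := by
  set ra := √(a ^ 2 + b ^ 2) with hra
  have hra2 : ra ^ 2 = a ^ 2 + b ^ 2 := Real.sq_sqrt (by positivity)
  have hlt : t + R < ra := Real.lt_sqrt_of_sq_lt hab
  have hd1 : ∀ x y, R ^ 2 < x ^ 2 + y ^ 2 → p1 u 0 x y = 0 := by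
    intro x y h
    have : (fun r => u 0 r y) =ᶠ[𝓝 x] fun _ => 0 := by
      have : ∀ᶠ r in 𝓝 x, R ^ 2 < r ^ 2 + y ^ 2 :=
        (continuousAt_const).eventually_lt (by fun_prop) h
      filter_upwards [this] with r hr using h0 r y hr
    rw [p1, this.deriv_eq, deriv_const]
  have hd2 : ∀ x y, R ^ 2 < x ^ 2 + y ^ 2 → p2 u 0 x y = 0 := by
    intro x y h
    have : (fun r => u 0 x r) =ᶠ[𝓝 y] fun _ => 0 := by
      have : ∀ᶠ r in 𝓝 y, R ^ 2 < x ^ 2 + r ^ 2 :=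
        (continuousAt_const).eventually_lt (by fun_prop) h
      filter_upwards [this] with r hr using h0 x r hr
    rw [p2, this.deriv_eq, deriv_const]
  -- the cone reaches `|x| = R` at time `0` at most
  set κ := (ra - R - t) / 2 with hκ
  have hκ0 : 0 < κ := by rw [hκ]; linarith
  set ρ := ra - R with hρ
  have hI0 : In (coneW ρ κ a b * ed u) 0 = 0 := by
    have : In (coneW ρ κ a b * ed u) 0 = In 0 0 := by
      refine In_congr fun x y => ?_
      rw [Pi.mul_apply, Pi.mul_apply, Pi.mul_apply]
      by_cases h : R ^ 2 < x ^ 2 + y ^ 2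
      · simp [ed, h0' x y h, hd1 x y h, hd2 x y h]
      · have : coneW ρ κ a b 0 x y = 0 := by
          refine expNegInvGlue.zero_of_nonpos ?_
          rw [sub_zero, sub_nonpos]
          refine Real.le_sqrt_of_sq_le ?_
          rw [not_lt] at h
          have hq : √(x ^ 2 + y ^ 2) ≤ R := (Real.sqrt_le_left hR).2 h
          have hq2 : √(x ^ 2 + y ^ 2) ^ 2 = x ^ 2 + y ^ 2 := Real.sq_sqrt (by positivity)
          have hc' : x * a + y * b ≤ √(x ^ 2 + y ^ 2) * ra := by
            refine abs_le_of_sq_le_sq' ?_ (by positivity) |>.2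
            rw [mul_pow, hra2, hq2]
            nlinarith [sq_nonneg (x * b - y * a)]
          have hq0 := Real.sqrt_nonneg (x ^ 2 + y ^ 2)
          have : (ra - R) ^ 2 ≤ (ra - √(x ^ 2 + y ^ 2)) ^ 2 :=
            pow_le_pow_left₀ (by linarith) (by linarith) 2
          nlinarith [sq_nonneg κ]
        rw [this]; simp
    rw [this]; simp [In]
  have hz : ∀ s, 0 ≤ s → s ≤ t → pt u s a b = 0 := by
    intro s hs hst
    have hle := (cone_energy (a := a) (b := b) (ρ := ρ) hu hκ0 hd hs).trans_eq hI0
    have he : Smooth3 (ed u) :=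
      ((hu.dt.mul hu.dt).add (hu.d1.mul hu.d1)).add (hu.d2.mul hu.d2)
    have hnice := (coneW_nice (a := a) (b := b) (ρ := ρ) hκ0).mul_right he
    have hnn : ∀ x y, 0 ≤ (coneW ρ κ a b * ed u) s x y := fun x y => by
      refine mul_nonneg (expNegInvGlue.nonneg _) ?_
      simp only [ed, Pi.add_apply, Pi.mul_apply]
      nlinarith [mul_self_nonneg (pt u s x y), mul_self_nonneg (p1 u s x y),
        mul_self_nonneg (p2 u s x y)]
    have hzero : In (coneW ρ κ a b * ed u) s = 0 := le_antisymm hle (In_nonneg hnn)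
    have hae := (integral_eq_zero_iff_of_nonneg (μ := (volume : Measure (ℝ × ℝ)))
      (f := fun x : ℝ × ℝ => (coneW ρ κ a b * ed u) s x.1 x.2)
      (fun x => hnn x.1 x.2) (hnice.int s)).1 hzero
    rw [(hnice.smooth.cont_slice s).ae_eq_iff_eq _ continuous_zero] at hae
    have h1 : coneW ρ κ a b s a b * ed u s a b = 0 := congrFun hae (a, b)
    have h2 : 0 < coneW ρ κ a b s a b := by
      refine expNegInvGlue.pos_of_pos ?_
      have : √(κ ^ 2 + (a - a) ^ 2 + (b - b) ^ 2) = κ := by simp [Real.sqrt_sq hκ0.le]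
      rw [this, hρ, hκ]; linarith
    have h3 := (mul_eq_zero.1 h1).resolve_left h2.ne'
    simp only [ed, Pi.add_apply, Pi.mul_apply] at h3
    nlinarith [mul_self_nonneg (pt u s a b), mul_self_nonneg (p1 u s a b),
        mul_self_nonneg (p2 u s a b)]
  have hconst := constant_of_has_deriv_right_zero (f := fun s => u s a b) (a := 0) (b := t)
    (fun s _ => (hu.hpt s a b).continuousAt.continuousWithinAt) (fun s hs => by
      have := hu.hpt s a b
      rw [hz s hs.1 hs.2.le] at this
      exact this.hasDerivWithinAt)
  have := hconst t ⟨ht, le_rfl⟩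
  refine this.trans (h0 a b ?_)
  nlinarith
end cone

/-! ### Reduction to compactly supported slices -/

lemma support_radius {f : ℝ → ℝ → ℝ} (hf : SmoothCompact2 f) :
    ∃ R : ℝ, 0 ≤ R ∧ ∀ x y, R ^ 2 < x ^ 2 + y ^ 2 → f x y = 0 := by
  obtain ⟨M, hM⟩ := hf.2.isCompact.isBounded.exists_norm_le
  refine ⟨2 * |M|, by positivity, fun x y h => ?_⟩
  by_contra hn
  have hmem : (x, y) ∈ tsupport fun p : ℝ × ℝ => f p.1 p.2 := subset_tsupport _ hn
  have h1 := hM _ hmem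
  rw [Prod.norm_def, max_le_iff, Real.norm_eq_abs, Real.norm_eq_abs] at h1
  have h2 : x ^ 2 ≤ M ^ 2 := sq_le_sq.2 (h1.1.trans (le_abs_self M))
  have h3 : y ^ 2 ≤ M ^ 2 := sq_le_sq.2 (h1.2.trans (le_abs_self M))
  rw [mul_pow, sq_abs] at h
  nlinarith [sq_nonneg M]

/-- Cutoff equal to one on a neighbourhood of the light cone over `|x| ≤ R` (for `t ≥ 0`). -/
def lcut (R : ℝ) : Fn :=
  fun t x y => Real.smoothTransition (R + 3 + √(1 + t ^ 2) - √(1 + x ^ 2 + y ^ 2))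

lemma lcut_smooth (R : ℝ) : Smooth3 (lcut R) := by
  have h : ContDiff ℝ (⊤ : ℕ∞) fun p : ℝ × ℝ × ℝ =>
      R + 3 + √(1 + p.1 ^ 2) - √(1 + p.2.1 ^ 2 + p.2.2 ^ 2) := by
    refine ContDiff.sub (ContDiff.add (by fun_prop) (ContDiff.sqrt (by fun_prop) fun p => ?_))
      (ContDiff.sqrt (by fun_prop) fun p => ?_) <;> positivity
  exact Real.smoothTransition.contDiff.comp h

lemma lcut_nice (R : ℝ) : Nice (R + 4) (lcut R) := by
  refine ⟨lcut_smooth R, fun t x y h => Real.smoothTransition.zero_of_nonpos ?_⟩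
  have h1 : √(1 + t ^ 2) ≤ 1 + |t| := by
    refine (Real.sqrt_le_left (by positivity)).2 ?_
    nlinarith [abs_nonneg t, sq_abs t]
  have h2 : |t| + (R + 4) ≤ √(1 + x ^ 2 + y ^ 2) := by
    refine Real.le_sqrt_of_sq_le ?_
    linarith
  linarith

lemma lcut_one {R t x y : ℝ} (hR : 0 ≤ R) (ht : 0 ≤ t) (h : x ^ 2 + y ^ 2 ≤ (t + R) ^ 2) :
    lcut R t x y = 1 := by
  refine Real.smoothTransition.one_of_one_le ?_
  have h1 : t ≤ √(1 + t ^ 2) := Real.le_sqrt_of_sq_le (by linarith)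
  have h2 : √(1 + x ^ 2 + y ^ 2) ≤ 1 + (t + R) := by
    refine (Real.sqrt_le_left (by positivity)).2 ?_
    nlinarith
  linarith

lemma cut_eq {R : ℝ} {u : Fn} (hu : Smooth3 u) (hR : 0 ≤ R)
    (hd : ∀ t, 0 < t → ∀ x y, pt u t x y * dAlembert u t x y ≤ 0)
    (h0 : ∀ x y, R ^ 2 < x ^ 2 + y ^ 2 → u 0 x y = 0)
    (h0' : ∀ x y, R ^ 2 < x ^ 2 + y ^ 2 → pt u 0 x y = 0) {t : ℝ} (ht : 0 ≤ t) :
    (u * lcut R) t = u t := by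
  funext x y
  rw [Pi.mul_apply, Pi.mul_apply, Pi.mul_apply]
  by_cases h : x ^ 2 + y ^ 2 ≤ (t + R) ^ 2
  · rw [lcut_one hR ht h, mul_one]
  · rw [finite_speed hu hR hd h0 h0' ht (not_le.1 h), zero_mul]

/-- Time derivatives at `t = 0` of two smooth functions agreeing for `t ≥ 0`. -/
lemma pt_zero_eq {u v : Fn} (hu : Smooth3 u) (hv : Smooth3 v) (h : ∀ t, 0 ≤ t → u t = v t) :
    pt u 0 = pt v 0 := by
  funext x y
  have cu : Tendsto (fun t => pt u t x y) (𝓝[>] 0) (𝓝 (pt u 0 x y)) :=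
    ((hu.dt.cont_comp continuous_id continuous_const continuous_const).tendsto 0).mono_left
      nhdsWithin_le_nhds
  have cv : Tendsto (fun t => pt v t x y) (𝓝[>] 0) (𝓝 (pt v 0 x y)) :=
    ((hv.dt.cont_comp continuous_id continuous_const continuous_const).tendsto 0).mono_left
      nhdsWithin_le_nhds
  refine tendsto_nhds_unique cu (cv.congr' ?_)
  filter_upwards [self_mem_nhdsWithin] with t ht
  rw [pt_pos (fun s hs => h s hs.le) ht]

lemma dAl_pos {u v : Fn} (h : ∀ t, 0 < t → u t = v t) {t : ℝ} (ht : 0 < t) :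
    dAlembert u t = dAlembert v t := by
  have h2 := pt_pos (fun s hs => pt_pos h hs) ht
  funext x y
  have e := h t ht
  simp [dAlembert, p1, p2, h2, e]

/-- A global solution agrees for `t ≥ 0` with functions whose time slices have compact support. -/
lemma exists_nice {R ε : ℝ} (hR : 0 ≤ R) {f1 f2 g1 g2 : ℝ → ℝ → ℝ} {u1 u2 : Fn}
    (hf1 : ∀ x y, R ^ 2 < x ^ 2 + y ^ 2 → f1 x y = 0)
    (hf2 : ∀ x y, R ^ 2 < x ^ 2 + y ^ 2 → f2 x y = 0)
    (hg1 : ∀ x y, R ^ 2 < x ^ 2 + y ^ 2 → g1 x y = 0)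
    (hg2 : ∀ x y, R ^ 2 < x ^ 2 + y ^ 2 → g2 x y = 0)
    (hS : IsSolution ε f1 f2 g1 g2 u1 u2) :
    ∃ v1 v2, Sol (R + 4) v1 v2 ∧ (∀ t, 0 ≤ t → v1 t = u1 t) ∧ (∀ t, 0 ≤ t → v2 t = u2 t) ∧
      pt v1 0 = pt u1 0 ∧ pt v2 0 = pt u2 0 := by
  have e1 : ∀ t, 0 ≤ t → (u1 * lcut R) t = u1 t := fun t ht =>
    cut_eq hS.smooth1 hR (fun t ht x y => by
      rw [hS.pde1 t x y ht]
      nlinarith [mul_nonneg (sq_nonneg (pt u2 t x y)) (sq_nonneg (pt u1 t x y))])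
      (fun x y h => by rw [hS.init1, hf1 x y h, mul_zero])
      (fun x y h => by rw [hS.initd1, hg1 x y h, mul_zero]) ht
  have e2 : ∀ t, 0 ≤ t → (u2 * lcut R) t = u2 t := fun t ht =>
    cut_eq hS.smooth2 hR (fun t ht x y => by
      rw [hS.pde2 t x y ht]
      nlinarith [mul_nonneg (sq_nonneg (pt u2 t x y)) (sq_nonneg (pt u1 t x y))])
      (fun x y h => by rw [hS.init2, hf2 x y h, mul_zero])
      (fun x y h => by rw [hS.initd2, hg2 x y h, mul_zero]) ht
  have s1 : Smooth3 (u1 * lcut R) := hS.smooth1.mul (lcut_smooth R)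
  have s2 : Smooth3 (u2 * lcut R) := hS.smooth2.mul (lcut_smooth R)
  refine ⟨u1 * lcut R, u2 * lcut R, ⟨Nice.mul_left hS.smooth1 (lcut_nice R),
    Nice.mul_left hS.smooth2 (lcut_nice R), fun t ht => ?_, fun t ht => ?_⟩, e1, e2,
    pt_zero_eq s1 hS.smooth1 e1, pt_zero_eq s2 hS.smooth2 e2⟩
  · have d1 := pt_pos (fun s hs => e1 s (le_of_lt hs)) ht
    have d2 := pt_pos (fun s hs => e2 s (le_of_lt hs)) ht
    rw [dAl_pos (fun s hs => e1 s hs.le) ht]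
    funext x y
    simp only [Pi.neg_apply, Pi.mul_apply, d1, d2, hS.pde1 t x y ht]
    ring
  · have d1 := pt_pos (fun s hs => e1 s (le_of_lt hs)) ht
    have d2 := pt_pos (fun s hs => e2 s (le_of_lt hs)) ht
    rw [dAl_pos (fun s hs => e2 s hs.le) ht]
    funext x y
    simp only [Pi.neg_apply, Pi.mul_apply, d1, d2, hS.pde2 t x y ht]
    ring

/-! ### The size of the data -/

/-- The reference function `f + t g` carrying the Cauchy data `(f, g)`. -/
def kdat (f g : ℝ → ℝ → ℝ) : Fn := fun t x y => f x y + t * g x y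

lemma kdat_nice {R : ℝ} {f g : ℝ → ℝ → ℝ} (hR : 0 ≤ R) (hf : SmoothCompact2 f)
    (hg : SmoothCompact2 g) (hf1 : ∀ x y, R ^ 2 < x ^ 2 + y ^ 2 → f x y = 0)
    (hg1 : ∀ x y, R ^ 2 < x ^ 2 + y ^ 2 → g x y = 0) : Nice R (kdat f g) := by
  refine ⟨?_, fun t x y h => ?_⟩
  · exact (hf.1.comp contDiff_snd).add (contDiff_fst.mul (hg.1.comp contDiff_snd))
  · have : R ^ 2 < x ^ 2 + y ^ 2 := by
      nlinarith [abs_nonneg t, mul_nonneg (abs_nonneg t) hR]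
    simp [kdat, hf1 x y this, hg1 x y this]

lemma kdat_zero (f g : ℝ → ℝ → ℝ) : kdat f g 0 = f := by funext x y; simp [kdat]

lemma pt_kdat (f g : ℝ → ℝ → ℝ) (t : ℝ) : pt (kdat f g) t = g := by
  funext x y
  have : HasDerivAt (fun s => f x y + s * g x y) (g x y) t := by
    simpa using ((hasDerivAt_id t).mul_const (g x y)).const_add (f x y)
  exact this.deriv

lemma En_slice {u v : Fn} {t : ℝ} (h : u t = v t) (h' : pt u t = pt v t) : En u t = En v t := by
  refine In_congr fun x y => ?_
  simp [ed, p1, p2, h, h']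

lemma En_kmul (k : ℝ) {u : Fn} (hu : Smooth3 u) (t : ℝ) : En (kc k * u) t = k ^ 2 * En u t := by
  rw [En, En, ← In_kmul]
  refine In_congr fun x y => ?_
  simp [ed, pt_kmul k hu, p1_kmul k hu, p2_kmul k hu]
  ring

lemma Sf_kmul (k : ℝ) {u : Fn} (hu : Smooth3 u) : Sf (kc k * u) = kc k * Sf u := by
  simp only [Sf, pt_kmul k hu, p1_kmul k hu, p2_kmul k hu]
  ring

lemma EB.kmul {k t B : ℝ} {u : Fn} (h : EB u t B) (hu : Smooth3 u) :
    EB (kc k * u) t (k ^ 2 * B) := by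
  have k2 := sq_nonneg k
  refine ⟨fun j hj => ?_, fun j hj => ?_, fun j hj => ?_, ?_⟩
  · rw [Zfk_kmul _ _ _ _ hu, En_kmul k (Zfk_pt _ _ _ hu j).1]
    exact mul_le_mul_of_nonneg_left (h.z1 j hj) k2
  · rw [Zfk_kmul _ _ _ _ hu, En_kmul k (Zfk_pt _ _ _ hu j).1]
    exact mul_le_mul_of_nonneg_left (h.z2 j hj) k2
  · rw [Zfk_kmul _ _ _ _ hu, En_kmul k (Zfk_pt _ _ _ hu j).1]
    exact mul_le_mul_of_nonneg_left (h.z3 j hj) k2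
  · rw [Sf_kmul k hu, En_kmul k hu.dS]
    exact mul_le_mul_of_nonneg_left h.s k2

/-- The energies at time `0` depend only on the Cauchy data. -/
lemma EB.slice {u v : Fn} {B : ℝ} (h : EB u 0 B) (hu : Smooth3 u) (hv : Smooth3 v)
    (h0 : v 0 = u 0) (h1 : pt v 0 = pt u 0) : EB v 0 B := by
  have key : ∀ a b c j, En ((Zf a b c)^[j] v) 0 = En ((Zf a b c)^[j] u) 0 := fun a b c j => by
    refine En_slice (Zfk_slice a b c h0 j) ?_
    rw [← (Zfk_pt a b c hv j).2.1, ← (Zfk_pt a b c hu j).2.1]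
    exact Zfk_slice a b c h1 j
  refine ⟨fun j hj => ?_, fun j hj => ?_, fun j hj => ?_, ?_⟩
  · rw [key]; exact h.z1 j hj
  · rw [key]; exact h.z2 j hj
  · rw [key]; exact h.z3 j hj
  · rw [En_slice (v := Sf u)]
    · exact h.s
    · funext x y; simp [Sf, p1, p2, h0, cT]
    · rw [pt_Sf hv, pt_Sf hu]
      funext x y; simp [Sf, p1, p2, h1, cT]

lemma exists_EB (v : Fn) (t : ℝ) : ∃ B, EB v t B := by
  refine ⟨∑ j ∈ Finset.range 4, (En ((Zf 1 0 0)^[j] v) t + En ((Zf 0 1 0)^[j] v) t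
    + En ((Zf 0 0 1)^[j] v) t) + En (Sf v) t, ?_⟩
  have hs : ∀ j ≤ 3, En ((Zf 1 0 0)^[j] v) t + En ((Zf 0 1 0)^[j] v) t
      + En ((Zf 0 0 1)^[j] v) t ≤ ∑ j ∈ Finset.range 4, (En ((Zf 1 0 0)^[j] v) t
      + En ((Zf 0 1 0)^[j] v) t + En ((Zf 0 0 1)^[j] v) t) := fun j hj =>
    Finset.single_le_sum (f := fun j => En ((Zf 1 0 0)^[j] v) t + En ((Zf 0 1 0)^[j] v) t
      + En ((Zf 0 0 1)^[j] v) t) (fun i _ => add_nonneg (add_nonneg (En_nonneg _ _)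
      (En_nonneg _ _)) (En_nonneg _ _)) (Finset.mem_range.2 (by omega))
  have hS := En_nonneg (Sf v) t
  have n1 := fun j => En_nonneg ((Zf 1 0 0)^[j] v) t
  have n2 := fun j => En_nonneg ((Zf 0 1 0)^[j] v) t
  have n3 := fun j => En_nonneg ((Zf 0 0 1)^[j] v) t
  refine ⟨fun j hj => ?_, fun j hj => ?_, fun j hj => ?_, ?_⟩
  · linarith [hs j hj, n2 j, n3 j]
  · linarith [hs j hj, n1 j, n3 j]
  · linarith [hs j hj, n1 j, n2 j]
  · linarith [hs 0 (by norm_num), n1 0, n2 0, n3 0]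

/-! ### Smoothness of parametric integrals -/

section param
variable {H E : Type} [NormedAddCommGroup H] [NormedSpace ℝ H] [FiniteDimensional ℝ H]
  [NormedAddCommGroup E] [NormedSpace ℝ E]

lemma hasFDerivAt_pint {F : H × ℝ → E} {n : WithTop ℕ∞} (hn : n ≠ 0) (hF : ContDiff ℝ n F)
    (a b : ℝ) (x : H) : HasFDerivAt (fun x => ∫ s in a..b, F (x, s))
      (∫ s in a..b, (fderiv ℝ F (x, s)).comp (ContinuousLinearMap.inl ℝ H ℝ)) x := by
  have hF' : Continuous fun p : H × ℝ => (fderiv ℝ F p).comp (ContinuousLinearMap.inl ℝ H ℝ) :=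
    (hF.continuous_fderiv hn).clm_comp continuous_const
  have : ProperSpace H := FiniteDimensional.proper ℝ H
  obtain ⟨C, hC⟩ := ((isCompact_closedBall x 1).prod (isCompact_uIcc (a := a) (b := b))
    ).exists_bound_of_continuousOn hF'.continuousOn
  refine intervalIntegral.hasFDerivAt_integral_of_dominated_of_fderiv_le (bound := fun _ => C)
    (F' := fun x s => (fderiv ℝ F (x, s)).comp (ContinuousLinearMap.inl ℝ H ℝ))
    (Metric.ball_mem_nhds x one_pos) ?_ ?_ ?_ ?_ (by simp) ?_
  · exact Eventually.of_forall fun y =>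
      (hF.continuous.comp (by fun_prop : Continuous fun s : ℝ => (y, s))).aestronglyMeasurable
  · exact (hF.continuous.comp (by fun_prop : Continuous fun s : ℝ => (x, s))).intervalIntegrable _ _
  · exact (hF'.comp (by fun_prop : Continuous fun s : ℝ => (x, s))).aestronglyMeasurable
  · refine Eventually.of_forall fun s hs y hy => ?_
    exact hC (y, s) ⟨Metric.ball_subset_closedBall hy, Set.uIoc_subset_uIcc hs⟩
  · refine Eventually.of_forall fun s _ y _ => ?_
    exact ((hF.differentiable hn (y, s)).hasFDerivAt).comp y (hasFDerivAt_prodMk_left y s)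

end param

lemma contDiff_pint_nat {H : Type} [NormedAddCommGroup H] [NormedSpace ℝ H]
    [FiniteDimensional ℝ H] (a b : ℝ) (n : ℕ) : ∀ {E : Type} [NormedAddCommGroup E]
    [NormedSpace ℝ E] [CompleteSpace E] {F : H × ℝ → E}, ContDiff ℝ (⊤ : ℕ∞) F →
    ContDiff ℝ n (fun x => ∫ s in a..b, F (x, s)) := by
  induction n with
  | zero =>
    intro E _ _ _ F hF
    refine contDiff_zero.2 ?_
    exact intervalIntegral.continuous_parametric_intervalIntegral_of_continuous'
      (f := fun x s => F (x, s)) hF.continuous a b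
  | succ n ih =>
    intro E _ _ _ F hF
    rw [Nat.cast_succ, contDiff_succ_iff_hasFDerivAt]
    refine ⟨_, ih (F := fun p => (fderiv ℝ F p).comp (ContinuousLinearMap.inl ℝ H ℝ)) ?_,
      fun x => hasFDerivAt_pint (by simp) hF a b x⟩
    exact (hF.fderiv_right (by simp)).clm_comp contDiff_const

lemma contDiff_pint {H E : Type} [NormedAddCommGroup H] [NormedSpace ℝ H]
    [FiniteDimensional ℝ H] [NormedAddCommGroup E] [NormedSpace ℝ E] [CompleteSpace E]
    {F : H × ℝ → E} (hF : ContDiff ℝ (⊤ : ℕ∞) F) (a b : ℝ) :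
    ContDiff ℝ (⊤ : ℕ∞) (fun x => ∫ s in a..b, F (x, s)) :=
  contDiff_infty.2 fun n => contDiff_pint_nat a b n hF

lemma fderiv_pint {H : Type} [NormedAddCommGroup H] [NormedSpace ℝ H]
    [FiniteDimensional ℝ H] {F : H × ℝ → ℝ} (hF : ContDiff ℝ (⊤ : ℕ∞) F) (a b : ℝ) (x v : H) :
    fderiv ℝ (fun x => ∫ s in a..b, F (x, s)) x v = ∫ s in a..b, fderiv ℝ F (x, s) (v, 0) := by
  rw [(hasFDerivAt_pint (by simp) hF a b x).fderiv, ContinuousLinearMap.intervalIntegral_apply]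
  · simp
  · refine Continuous.intervalIntegrable ?_ _ _
    refine Continuous.clm_comp ?_ continuous_const
    exact (hF.continuous_fderiv (by simp)).comp (by fun_prop)

/-- The average of a two-parameter family over the angles `0 ≤ α ≤ 2π`, `0 ≤ φ ≤ π/2`. -/
def PI2 (G : ℝ → ℝ → Fn) : Fn :=
  fun t x y => ∫ α in (0 : ℝ)..(2 * π), ∫ φ in (0 : ℝ)..(π / 2), G α φ t x y

/-- The family depends smoothly on all five variables. -/
def SmFam (G : ℝ → ℝ → Fn) : Prop :=
  ContDiff ℝ (⊤ : ℕ∞) fun q : ((ℝ × ℝ × ℝ) × ℝ) × ℝ => unc (G q.1.2 q.2) q.1.1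

section PI2
variable {G : ℝ → ℝ → Fn}

lemma SmFam.slice (hG : SmFam G) (α φ : ℝ) : Smooth3 (G α φ) :=
  ContDiff.comp hG (g := fun q : ((ℝ × ℝ × ℝ) × ℝ) × ℝ => unc (G q.1.2 q.2) q.1.1)
    (f := fun p : ℝ × ℝ × ℝ => ((p, α), φ)) (by fun_prop)

lemma SmFam.cont (hG : SmFam G) (t x y : ℝ) : Continuous fun p : ℝ × ℝ => G p.1 p.2 t x y :=
  hG.continuous.comp (by fun_prop : Continuous fun p : ℝ × ℝ =>
    ((((t, x, y), p.1), p.2) : ((ℝ × ℝ × ℝ) × ℝ) × ℝ))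

lemma SmFam.fd (hG : SmFam G) (α φ : ℝ) (p v : ℝ × ℝ × ℝ) :
    fderiv ℝ (fun q : ((ℝ × ℝ × ℝ) × ℝ) × ℝ => unc (G q.1.2 q.2) q.1.1) ((p, α), φ) ((v, 0), 0)
      = fderiv ℝ (unc (G α φ)) p v := by
  have h1 : HasFDerivAt (fun p : ℝ × ℝ × ℝ => ((p, α), φ))
      ((ContinuousLinearMap.inl ℝ ((ℝ × ℝ × ℝ) × ℝ) ℝ).comp
        (ContinuousLinearMap.inl ℝ (ℝ × ℝ × ℝ) ℝ)) p :=
    HasFDerivAt.comp (g := fun q : (ℝ × ℝ × ℝ) × ℝ => (q, φ)) p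
      (hasFDerivAt_prodMk_left (𝕜 := ℝ) (p, α) φ) (hasFDerivAt_prodMk_left p α)
  have h2 := ((hG.differentiable (by simp) ((p, α), φ)).hasFDerivAt).comp p h1
  have h3 : HasFDerivAt (unc (G α φ)) _ p := h2
  rw [h3.fderiv]
  simp

lemma SmFam.smooth_PI2 (hG : SmFam G) : Smooth3 (PI2 G) := by
  exact contDiff_pint (H := ℝ × ℝ × ℝ) (F := fun q : (ℝ × ℝ × ℝ) × ℝ =>
    ∫ φ in (0 : ℝ)..(π / 2), unc (G q.2 φ) q.1) (contDiff_pint hG 0 (π / 2)) 0 (2 * π)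

lemma SmFam.fd_PI2 (hG : SmFam G) (p v : ℝ × ℝ × ℝ) : fderiv ℝ (unc (PI2 G)) p v
    = ∫ α in (0 : ℝ)..(2 * π), ∫ φ in (0 : ℝ)..(π / 2), fderiv ℝ (unc (G α φ)) p v := by
  have h := fderiv_pint (H := ℝ × ℝ × ℝ) (F := fun q : (ℝ × ℝ × ℝ) × ℝ =>
    ∫ φ in (0 : ℝ)..(π / 2), unc (G q.2 φ) q.1) (contDiff_pint hG 0 (π / 2)) 0 (2 * π) p v
  refine h.trans ?_
  refine intervalIntegral.integral_congr fun α _ => ?_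
  refine (fderiv_pint hG 0 (π / 2) (p, α) (v, 0)).trans ?_
  exact intervalIntegral.integral_congr fun φ _ => hG.fd α φ p v

lemma SmFam.dir (hG : SmFam G) (v : ℝ × ℝ × ℝ) :
    SmFam fun α φ t x y => fderiv ℝ (unc (G α φ)) (t, x, y) v := by
  have h : ContDiff ℝ (⊤ : ℕ∞) fun q => fderiv ℝ
      (fun q : ((ℝ × ℝ × ℝ) × ℝ) × ℝ => unc (G q.1.2 q.2) q.1.1) q ((v, 0), 0) :=
    (ContDiff.fderiv_right hG (by simp)).clm_apply contDiff_const
  have e : (fun q : ((ℝ × ℝ × ℝ) × ℝ) × ℝ => unc ((fun α φ t x y =>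
      fderiv ℝ (unc (G α φ)) (t, x, y) v) q.1.2 q.2) q.1.1) = fun q => fderiv ℝ
      (fun q : ((ℝ × ℝ × ℝ) × ℝ) × ℝ => unc (G q.1.2 q.2) q.1.1) q ((v, 0), 0) :=
    funext fun q => (hG.fd _ _ _ _).symm
  unfold SmFam
  rw [e]
  exact h

lemma SmFam.dt (hG : SmFam G) : SmFam fun α φ => pt (G α φ) := by
  have e : (fun α φ => pt (G α φ)) = fun α φ t x y => fderiv ℝ (unc (G α φ)) (t, x, y) (1, 0, 0) := by
    funext α φ t x y
    exact pt_eq (hG.slice _ _) _ _ _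
  rw [e]
  exact hG.dir _

lemma SmFam.d1 (hG : SmFam G) : SmFam fun α φ => p1 (G α φ) := by
  have e : (fun α φ => p1 (G α φ)) = fun α φ t x y => fderiv ℝ (unc (G α φ)) (t, x, y) (0, 1, 0) := by
    funext α φ t x y
    exact p1_eq (hG.slice _ _) _ _ _
  rw [e]
  exact hG.dir _

lemma SmFam.d2 (hG : SmFam G) : SmFam fun α φ => p2 (G α φ) := by
  have e : (fun α φ => p2 (G α φ)) = fun α φ t x y => fderiv ℝ (unc (G α φ)) (t, x, y) (0, 0, 1) := by
    funext α φ t x y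
    exact p2_eq (hG.slice _ _) _ _ _
  rw [e]
  exact hG.dir _

lemma SmFam.pt_PI2 (hG : SmFam G) : pt (PI2 G) = PI2 fun α φ => pt (G α φ) := by
  funext t x y
  rw [pt_eq hG.smooth_PI2, hG.fd_PI2]
  simp only [PI2, pt_eq (hG.slice _ _)]

lemma SmFam.p1_PI2 (hG : SmFam G) : p1 (PI2 G) = PI2 fun α φ => p1 (G α φ) := by
  funext t x y
  rw [p1_eq hG.smooth_PI2, hG.fd_PI2]
  simp only [PI2, p1_eq (hG.slice _ _)]

lemma SmFam.p2_PI2 (hG : SmFam G) : p2 (PI2 G) = PI2 fun α φ => p2 (G α φ) := by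
  funext t x y
  rw [p2_eq hG.smooth_PI2, hG.fd_PI2]
  simp only [PI2, p2_eq (hG.slice _ _)]

lemma SmFam.sub {G' : ℝ → ℝ → Fn} (hG : SmFam G) (hG' : SmFam G') :
    SmFam fun α φ => G α φ - G' α φ := ContDiff.sub hG hG'

lemma PI2_sub {G' : ℝ → ℝ → Fn} (hG : SmFam G) (hG' : SmFam G') :
    (PI2 fun α φ => G α φ - G' α φ) = PI2 G - PI2 G' := by
  funext t x y
  simp only [PI2, Pi.sub_apply]
  have c1 : ∀ α, Continuous fun φ => G α φ t x y := fun α =>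
    (hG.cont t x y).comp (by fun_prop : Continuous fun φ : ℝ => (α, φ))
  have c2 : ∀ α, Continuous fun φ => G' α φ t x y := fun α =>
    (hG'.cont t x y).comp (by fun_prop : Continuous fun φ : ℝ => (α, φ))
  rw [← intervalIntegral.integral_sub]
  · refine intervalIntegral.integral_congr fun α _ => ?_
    exact intervalIntegral.integral_sub ((c1 α).intervalIntegrable _ _)
      ((c2 α).intervalIntegrable _ _)
  · exact (intervalIntegral.continuous_parametric_intervalIntegral_of_continuous'
      (f := fun α φ => G α φ t x y) (hG.cont t x y) _ _).intervalIntegrable _ _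
  · exact (intervalIntegral.continuous_parametric_intervalIntegral_of_continuous'
      (f := fun α φ => G' α φ t x y) (hG'.cont t x y) _ _).intervalIntegrable _ _

lemma SmFam.dAl_PI2 (hG : SmFam G) : dAlembert (PI2 G) = PI2 fun α φ => dAlembert (G α φ) := by
  rw [dAl_eq, hG.pt_PI2, hG.dt.pt_PI2, hG.p1_PI2, hG.d1.p1_PI2, hG.p2_PI2, hG.d2.p2_PI2,
    ← PI2_sub hG.dt.dt hG.d1.d1, ← PI2_sub (hG.dt.dt.sub hG.d1.d1) hG.d2.d2]
  rfl
end PI2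

/-! ### The free solution -/

/-- A function on the plane as a time-independent function. -/
def lift (g : ℝ → ℝ → ℝ) : Fn := fun _ x y => g x y

/-- Translation of a time-independent function with velocity `-(l, m)`. -/
def Sh (h : Fn) (l m : ℝ) : Fn := fun t x y => h 0 (x + t * l) (y + t * m)

section shift
variable {h : Fn}

lemma smooth_lift {g : ℝ → ℝ → ℝ} (hg : SmoothCompact2 g) : Smooth3 (lift g) :=
  hg.1.comp contDiff_snd

lemma Sh_smooth (hh : Smooth3 h) (l m : ℝ) : Smooth3 (Sh h l m) :=
  ContDiff.comp (unc_contDiff hh) (f := fun p : ℝ × ℝ × ℝ =>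
    ((0, p.2.1 + p.1 * l, p.2.2 + p.1 * m) : ℝ × ℝ × ℝ)) (by fun_prop)

lemma pt_Sh (hh : Smooth3 h) (l m : ℝ) :
    pt (Sh h l m) = kc l * Sh (p1 h) l m + kc m * Sh (p2 h) l m := by
  funext t x y
  have h1 : HasDerivAt (fun s : ℝ => x + s * l) l t := by
    simpa using ((hasDerivAt_id t).mul_const l).const_add x
  have h2 : HasDerivAt (fun s : ℝ => y + s * m) m t := by
    simpa using ((hasDerivAt_id t).mul_const m).const_add y
  refine (hh.hcurve (hasDerivAt_const t 0) h1 h2).deriv.trans ?_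
  simp [Sh]

lemma p1_Sh (hh : Smooth3 h) (l m : ℝ) : p1 (Sh h l m) = Sh (p1 h) l m := by
  funext t x y
  have h1 : HasDerivAt (fun s : ℝ => s + t * l) 1 x := (hasDerivAt_id x).add_const _
  refine (hh.hcurve (hasDerivAt_const x 0) h1 (hasDerivAt_const x (y + t * m))).deriv.trans ?_
  simp [Sh]

lemma p2_Sh (hh : Smooth3 h) (l m : ℝ) : p2 (Sh h l m) = Sh (p2 h) l m := by
  funext t x y
  have h1 : HasDerivAt (fun s : ℝ => s + t * m) 1 y := (hasDerivAt_id y).add_const _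
  refine (hh.hcurve (hasDerivAt_const y 0) (hasDerivAt_const y (x + t * l)) h1).deriv.trans ?_
  simp [Sh]

/-- The integrand of Poisson's formula in angular coordinates on the disc of radius `t`. -/
def PG (h : Fn) (α φ : ℝ) : Fn := kc (sin φ) * (cT * Sh h (sin φ * cos α) (sin φ * sin α))

lemma PG_smFam (hh : Smooth3 h) : SmFam (PG h) := by
  have h1 : ContDiff ℝ (⊤ : ℕ∞) fun q : ((ℝ × ℝ × ℝ) × ℝ) × ℝ => unc h
      (0, q.1.1.2.1 + q.1.1.1 * (sin q.2 * cos q.1.2),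
        q.1.1.2.2 + q.1.1.1 * (sin q.2 * sin q.1.2)) :=
    ContDiff.comp (unc_contDiff hh) (f := fun q : ((ℝ × ℝ × ℝ) × ℝ) × ℝ =>
      ((0, q.1.1.2.1 + q.1.1.1 * (sin q.2 * cos q.1.2),
        q.1.1.2.2 + q.1.1.1 * (sin q.2 * sin q.1.2)) : ℝ × ℝ × ℝ)) (by fun_prop)
  have h2 : ContDiff ℝ (⊤ : ℕ∞) fun q : ((ℝ × ℝ × ℝ) × ℝ) × ℝ => sin q.2 := by fun_prop
  have h3 : ContDiff ℝ (⊤ : ℕ∞) fun q : ((ℝ × ℝ × ℝ) × ℝ) × ℝ => q.1.1.1 := by fun_prop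
  exact h2.mul (h3.mul h1)

lemma dAl_PG (hh : Smooth3 h) (α φ t x y : ℝ) : dAlembert (PG h α φ) t x y
    = sin φ * (2 * (sin φ * cos α * Sh (p1 h) (sin φ * cos α) (sin φ * sin α) t x y
        + sin φ * sin α * Sh (p2 h) (sin φ * cos α) (sin φ * sin α) t x y)
      + t * (((sin φ * cos α) ^ 2 - 1) * Sh (p1 (p1 h)) (sin φ * cos α) (sin φ * sin α) t x y
        + 2 * (sin φ * cos α) * (sin φ * sin α)
          * Sh (p1 (p2 h)) (sin φ * cos α) (sin φ * sin α) t x y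
        + ((sin φ * sin α) ^ 2 - 1)
          * Sh (p2 (p2 h)) (sin φ * cos α) (sin φ * sin α) t x y)) := by
  unfold PG
  generalize sin φ * cos α = l
  generalize sin φ * sin α = m
  have hS := Sh_smooth hh l m
  have hS1 := Sh_smooth hh.d1 l m
  have hS2 := Sh_smooth hh.d2 l m
  rw [dAl_kmul _ (smooth_cT.mul hS), dAl_eq, pt_mul smooth_cT hS, p1_mul smooth_cT hS,
    p2_mul smooth_cT hS, pt_Sh hh, p1_Sh hh, p2_Sh hh]
  simp only [pt_cT, p1_cT, p2_cT, kc_zero, kc_one, zero_mul, zero_add, one_mul]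
  have hq : Smooth3 (kc l * Sh (p1 h) l m + kc m * Sh (p2 h) l m) :=
    ((smooth_kc l).mul hS1).add ((smooth_kc m).mul hS2)
  rw [pt_add hS (smooth_cT.mul hq), pt_mul smooth_cT hq, pt_Sh hh, pt_cT,
    pt_add ((smooth_kc l).mul hS1) ((smooth_kc m).mul hS2), pt_kmul _ hS1, pt_kmul _ hS2,
    pt_Sh hh.d1, pt_Sh hh.d2, p1_mul smooth_cT hS1, p2_mul smooth_cT hS2, p1_Sh hh.d1,
    p2_Sh hh.d2, p2_p1 hh]
  simp only [Pi.mul_apply, Pi.add_apply, Pi.sub_apply, kc_apply, cT_apply, p1_cT, p2_cT]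
  ring

/-- The two primitives exhibiting `□` of the Poisson integrand as a divergence in the angles. -/
lemma dAl_PG_div (hh : Smooth3 h) (t x y : ℝ) : ∃ A' B' : ℝ → ℝ → ℝ,
    Continuous (fun p : ℝ × ℝ => A' p.1 p.2) ∧ Continuous (fun p : ℝ × ℝ => B' p.1 p.2) ∧
    (∀ α φ, dAlembert (PG h α φ) t x y = A' α φ - B' α φ) ∧
    (∀ α, ∫ φ in (0 : ℝ)..(π / 2), A' α φ = 0) ∧ ∀ φ, ∫ α in (0 : ℝ)..(2 * π), B' α φ = 0 := by
  let X : Fn → ℝ → ℝ → ℝ := fun k α φ =>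
    k 0 (x + t * (sin φ * cos α)) (y + t * (sin φ * sin α))
  have hX : ∀ k, Smooth3 k → Continuous fun p : ℝ × ℝ => X k p.1 p.2 := fun k hk =>
    hk.cont_comp continuous_const (by fun_prop) (by fun_prop)
  have hXφ : ∀ k, Smooth3 k → ∀ α φ, HasDerivAt (fun φ => X k α φ)
      (t * (cos φ * cos α) * X (p1 k) α φ + t * (cos φ * sin α) * X (p2 k) α φ) φ := by
    intro k hk α φ
    have h1 : HasDerivAt (fun φ : ℝ => x + t * (sin φ * cos α)) (t * (cos φ * cos α)) φ :=
      (((hasDerivAt_sin φ).mul_const _).const_mul t).const_add x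
    have h2 : HasDerivAt (fun φ : ℝ => y + t * (sin φ * sin α)) (t * (cos φ * sin α)) φ :=
      (((hasDerivAt_sin φ).mul_const _).const_mul t).const_add y
    refine (hk.hcurve (hasDerivAt_const φ 0) h1 h2).congr_deriv ?_
    simp [X]
  have hXα : ∀ k, Smooth3 k → ∀ α φ, HasDerivAt (fun α => X k α φ)
      (t * (sin φ * -sin α) * X (p1 k) α φ + t * (sin φ * cos α) * X (p2 k) α φ) α := by
    intro k hk α φ
    have h1 : HasDerivAt (fun α : ℝ => x + t * (sin φ * cos α)) (t * (sin φ * -sin α)) α :=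
      (((hasDerivAt_cos α).const_mul _).const_mul t).const_add x
    have h2 : HasDerivAt (fun α : ℝ => y + t * (sin φ * sin α)) (t * (sin φ * cos α)) α :=
      (((hasDerivAt_sin α).const_mul _).const_mul t).const_add y
    refine (hk.hcurve (hasDerivAt_const α 0) h1 h2).congr_deriv ?_
    simp [X]
  have c1 := hX _ hh.d1
  have c2 := hX _ hh.d2
  have c11 := hX _ hh.d1.d1
  have c12 := hX _ hh.d2.d1
  have c22 := hX _ hh.d2.d2
  refine ⟨fun α φ => (sin φ ^ 2 - cos φ ^ 2) * (cos α * X (p1 h) α φ + sin α * X (p2 h) α φ)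
      - cos φ * sin φ * (t * cos φ) * (cos α ^ 2 * X (p1 (p1 h)) α φ
        + 2 * cos α * sin α * X (p1 (p2 h)) α φ + sin α ^ 2 * X (p2 (p2 h)) α φ),
    fun α φ => -(cos α * X (p1 h) α φ + sin α * X (p2 h) α φ)
      + t * sin φ * (sin α ^ 2 * X (p1 (p1 h)) α φ
        - 2 * cos α * sin α * X (p1 (p2 h)) α φ + cos α ^ 2 * X (p2 (p2 h)) α φ),
    by fun_prop, by fun_prop, fun α φ => ?_, fun α => ?_, fun φ => ?_⟩
  · rw [dAl_PG hh]
    simp only [Sh, X]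
    generalize p1 h 0 _ _ = a1
    generalize p2 h 0 _ _ = a2
    generalize p1 (p1 h) 0 _ _ = a11
    generalize p1 (p2 h) 0 _ _ = a12
    generalize p2 (p2 h) 0 _ _ = a22
    have e1 := sin_sq_add_cos_sq φ
    have e2 := sin_sq_add_cos_sq α
    linear_combination ((cos α * a1 + sin α * a2) + t * sin φ * (cos α ^ 2 * a11
      + 2 * cos α * sin α * a12 + sin α ^ 2 * a22)) * e1
      + t * sin φ * (a11 + a22) * e2
  · rw [intervalIntegral.integral_eq_sub_of_hasDerivAt (f := fun φ =>
      -(cos φ * sin φ) * (cos α * X (p1 h) α φ + sin α * X (p2 h) α φ))]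
    · simp
    · intro φ _
      refine (((hasDerivAt_cos φ).mul (hasDerivAt_sin φ)).neg.mul
        (((hXφ _ hh.d1 α φ).const_mul (cos α)).add
          ((hXφ _ hh.d2 α φ).const_mul (sin α)))).congr_deriv ?_
      rw [p2_p1 hh]
      simp only [Pi.neg_apply, Pi.mul_apply, Pi.add_apply]
      ring
    · refine Continuous.intervalIntegrable ?_ _ _
      have d : Continuous fun φ : ℝ => (α, φ) := by fun_prop
      have d1 := c1.comp d
      have d2 := c2.comp d
      have d11 := c11.comp d
      have d12 := c12.comp d
      have d22 := c22.comp d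
      simp only [Function.comp_def] at d1 d2 d11 d12 d22
      fun_prop
  · rw [intervalIntegral.integral_eq_sub_of_hasDerivAt (f := fun α =>
      -sin α * X (p1 h) α φ + cos α * X (p2 h) α φ)]
    · simp [X]
    · intro α _
      refine (((hasDerivAt_sin α).neg.mul (hXα _ hh.d1 α φ)).add
          ((hasDerivAt_cos α).mul (hXα _ hh.d2 α φ))).congr_deriv ?_
      rw [p2_p1 hh]
      simp only [Pi.neg_apply]
      ring
    · refine Continuous.intervalIntegrable ?_ _ _
      have d : Continuous fun α : ℝ => (α, φ) := by fun_prop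
      have d1 := c1.comp d
      have d2 := c2.comp d
      have d11 := c11.comp d
      have d12 := c12.comp d
      have d22 := c22.comp d
      simp only [Function.comp_def] at d1 d2 d11 d12 d22
      fun_prop

lemma dAl_PI2_PG (hh : Smooth3 h) : dAlembert (PI2 (PG h)) = 0 := by
  rw [(PG_smFam hh).dAl_PI2]
  funext t x y
  obtain ⟨A, B, hA, hB, e, eA, eB⟩ := dAl_PG_div hh t x y
  simp only [PI2, e]
  have cA : ∀ α, Continuous fun φ => A α φ := fun α =>
    hA.comp (by fun_prop : Continuous fun φ : ℝ => (α, φ))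
  have cB : ∀ α, Continuous fun φ => B α φ := fun α =>
    hB.comp (by fun_prop : Continuous fun φ : ℝ => (α, φ))
  have e1 : ∀ α, ∫ φ in (0 : ℝ)..(π / 2), (A α φ - B α φ) = -∫ φ in (0 : ℝ)..(π / 2), B α φ := by
    intro α
    rw [intervalIntegral.integral_sub ((cA α).intervalIntegrable _ _)
      ((cB α).intervalIntegrable _ _), eA, zero_sub]
  simp only [e1]
  rw [intervalIntegral.integral_neg, intervalIntegral_intervalIntegral_swap]
  · simp [eB]
  · refine IntegrableOn.mono_set (t := Set.uIcc 0 (2 * π) ×ˢ Set.uIcc 0 (π / 2)) ?_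
      (Set.prod_mono Set.uIoc_subset_uIcc Set.uIoc_subset_uIcc)
    exact hB.continuousOn.integrableOn_compact (isCompact_uIcc.prod isCompact_uIcc)

end shift

/-- The solution of the wave equation with data `(0, g)`, by Poisson's formula. -/
def poi (g : ℝ → ℝ → ℝ) : Fn := kc (1 / (2 * π)) * PI2 (PG (lift g))

section poi
variable {f g : ℝ → ℝ → ℝ} {R : ℝ}

lemma poi_smooth (hg : SmoothCompact2 g) : Smooth3 (poi g) :=
  (smooth_kc _).mul (PG_smFam (smooth_lift hg)).smooth_PI2

lemma dAl_poi (hg : SmoothCompact2 g) : dAlembert (poi g) = 0 := by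
  rw [poi, dAl_kmul _ (PG_smFam (smooth_lift hg)).smooth_PI2, dAl_PI2_PG (smooth_lift hg), mul_zero]

lemma poi_zero (g : ℝ → ℝ → ℝ) : poi g 0 = 0 := by
  funext x y
  simp [poi, PI2, PG]

lemma pt_poi_zero (hg : SmoothCompact2 g) : pt (poi g) 0 = g := by
  have hl := smooth_lift hg
  rw [poi, pt_kmul _ (PG_smFam hl).smooth_PI2, (PG_smFam hl).pt_PI2]
  funext x y
  have e : ∀ α φ, pt (PG (lift g) α φ) 0 x y = sin φ * g x y := by
    intro α φ
    have hS := Sh_smooth hl (sin φ * cos α) (sin φ * sin α)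
    rw [PG, pt_kmul _ (smooth_cT.mul hS), pt_mul smooth_cT hS, pt_cT]
    simp [Sh, lift]
  simp only [Pi.mul_apply, kc_apply, PI2, e, intervalIntegral.integral_mul_const]
  simp
  field_simp

lemma poi_nice (hg : SmoothCompact2 g) (hR : 0 ≤ R)
    (hg1 : ∀ x y, R ^ 2 < x ^ 2 + y ^ 2 → g x y = 0) : Nice R (poi g) := by
  refine ⟨poi_smooth hg, fun t x y h => ?_⟩
  have key : ∀ α φ : ℝ, g (x + t * (sin φ * cos α)) (y + t * (sin φ * sin α)) = 0 := by
    intro α φ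
    refine hg1 _ _ ?_
    have hN0 : 0 ≤ x ^ 2 + y ^ 2 := by positivity
    set N := √(x ^ 2 + y ^ 2) with hN
    have hNN : N ^ 2 = x ^ 2 + y ^ 2 := sq_sqrt hN0
    have hN1 : |t| + R < N := by
      rw [← hNN] at h
      exact lt_of_pow_lt_pow_left₀ 2 (sqrt_nonneg _) h
    have e1 := sin_sq_add_cos_sq α
    have e2 : |sin φ| ≤ 1 := abs_sin_le_one φ
    have e3 : |x * cos α + y * sin α| ≤ N := by
      refine abs_le_of_sq_le_sq ?_ (sqrt_nonneg _)
      rw [hNN]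
      nlinarith [sq_nonneg (x * sin α - y * cos α)]
    set z := t * sin φ with hz
    have hz1 : |z| ≤ |t| := by
      rw [hz, abs_mul]
      exact mul_le_of_le_one_right (abs_nonneg _) e2
    have e4 : -(|z| * N) ≤ z * (x * cos α + y * sin α) := by
      have := neg_abs_le (z * (x * cos α + y * sin α))
      rw [abs_mul] at this
      nlinarith [mul_le_mul_of_nonneg_left e3 (abs_nonneg z)]
    have e5 : (x + t * (sin φ * cos α)) ^ 2 + (y + t * (sin φ * sin α)) ^ 2
        = N ^ 2 + 2 * (z * (x * cos α + y * sin α)) + z ^ 2 := by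
      rw [hNN, hz]
      linear_combination (t * sin φ) ^ 2 * e1
    rw [e5, ← sq_abs z]
    have : R < N - |z| := by linarith
    nlinarith
  simp [poi, PI2, PG, Sh, lift, key]

/-- The free solution with data `(f, g)`. -/
def free (f g : ℝ → ℝ → ℝ) : Fn := pt (poi f) + poi g

lemma free_nice (hf : SmoothCompact2 f) (hg : SmoothCompact2 g) (hR : 0 ≤ R)
    (hf1 : ∀ x y, R ^ 2 < x ^ 2 + y ^ 2 → f x y = 0)
    (hg1 : ∀ x y, R ^ 2 < x ^ 2 + y ^ 2 → g x y = 0) : Nice R (free f g) :=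
  (poi_nice hf hR hf1).dt.add (poi_nice hg hR hg1)

lemma dAl_free (hf : SmoothCompact2 f) (hg : SmoothCompact2 g) : dAlembert (free f g) = 0 := by
  have h := poi_smooth hf
  have e : dAlembert (pt (poi f)) = pt (dAlembert (poi f)) := by
    rw [dAl_eq, dAl_eq, pt_sub (h.dt.dt.sub h.d1.d1) h.d2.d2, pt_sub h.dt.dt h.d1.d1,
      p1_pt h, p1_pt h.d1, p2_pt h, p2_pt h.d2]
  rw [free, dAl_add h.dt (poi_smooth hg), e, dAl_poi hf, dAl_poi hg, ← kc_zero, pt_kc, kc_zero,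
    zero_add]

lemma free_zero (hf : SmoothCompact2 f) : free f g 0 = f := by
  funext x y
  simp [free, pt_poi_zero hf, poi_zero]

lemma pt_free_zero (hf : SmoothCompact2 f) (hg : SmoothCompact2 g) : pt (free f g) 0 = g := by
  have h := poi_smooth hf
  rw [free, pt_add h.dt (poi_smooth hg)]
  funext x y
  have e0 : dAlembert (poi f) 0 x y = 0 := by rw [dAl_poi hf]; rfl
  have e1 : p1 (p1 (poi f)) 0 x y = 0 := by
    have : ∀ y', p1 (poi f) 0 y' y = 0 := fun y' => by simp [p1, poi_zero]
    simp only [p1] at this ⊢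
    simp [this]
  have e2 : p2 (p2 (poi f)) 0 x y = 0 := by
    have : ∀ y', p2 (poi f) 0 x y' = 0 := fun y' => by simp [p2, poi_zero]
    simp only [p2] at this ⊢
    simp [this]
  have e3 : dAlembert (poi f) 0 x y = pt (pt (poi f)) 0 x y - p1 (p1 (poi f)) 0 x y
    - p2 (p2 (poi f)) 0 x y := rfl
  have e4 : pt (pt (poi f)) 0 x y = 0 := by linarith
  simp [e4, pt_poi_zero hg]
end poi

/-! ### Asymptotics of the free solution along outgoing rays -/

/-- A solution of the free wave equation with uniformly bounded energies. -/
structure FreeB (R B : ℝ) (v : Fn) : Prop where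
  nice : Nice R v
  R0 : 0 ≤ R
  box : dAlembert v = 0
  eb : ∀ t, EB v t B

section freeb
variable {R B : ℝ} {v : Fn}

lemma En_const (hv : Nice R v) (h : dAlembert v = 0) (s t : ℝ) : En v s = En v t := by
  have hd : ∀ t, HasDerivAt (En v) 0 t := fun t =>
    (En_deriv hv t).congr_deriv (by simp [h, In])
  exact is_const_of_deriv_eq_zero (fun t => (hd t).differentiableAt) (fun t => (hd t).deriv) s t

lemma Zk_free (a b c : ℝ) (hv : Smooth3 v) (h : dAlembert v = 0) (k : ℕ) :
    Smooth3 ((Zf a b c)^[k] v) ∧ dAlembert ((Zf a b c)^[k] v) = 0 := by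
  induction k with
  | zero => exact ⟨hv, h⟩
  | succ k ih =>
    rw [Function.iterate_succ_apply']
    refine ⟨ih.1.dZ a b c, ?_⟩
    rw [dAl_Zf a b c ih.1, ih.2, ← kc_zero, Zf_kc, kc_zero]

lemma FreeB.mk' (hv : Nice R v) (hR : 0 ≤ R) (h : dAlembert v = 0) (hB : EB v 0 B) :
    FreeB R B v := by
  refine ⟨hv, hR, h, fun t => ⟨fun k hk => ?_, fun k hk => ?_, fun k hk => ?_, ?_⟩⟩
  · rw [En_const (hv.dZk 1 0 0 k) (Zk_free 1 0 0 hv.smooth h k).2 t 0]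
    exact hB.z1 k hk
  · rw [En_const (hv.dZk 0 1 0 k) (Zk_free 0 1 0 hv.smooth h k).2 t 0]
    exact hB.z2 k hk
  · rw [En_const (hv.dZk 0 0 1 k) (Zk_free 0 0 1 hv.smooth h k).2 t 0]
    exact hB.z3 k hk
  · have e : dAlembert (Sf v) = 0 := by
      rw [dAl_Sf hv.smooth, h]
      funext t x y
      have z1 : pt (0 : Fn) = 0 := by rw [← kc_zero]; simp
      have z2 : p1 (0 : Fn) = 0 := by rw [← kc_zero]; simp
      have z3 : p2 (0 : Fn) = 0 := by rw [← kc_zero]; simp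
      simp [Sf, z1, z2, z3]
    rw [En_const hv.dS e t 0]
    exact hB.s

/-- A function with derivative `O(t^{-3/2})` converges at rate `t^{-1/2}`. -/
lemma tail_conv {f f' : ℝ → ℝ} {t0 C : ℝ} (h0 : 0 < t0) (hC : 0 ≤ C)
    (hd : ∀ t, t0 ≤ t → HasDerivAt f (f' t) t) (hb : ∀ t, t0 ≤ t → |f' t| ≤ C / (t * √t)) :
    ∃ L, Tendsto f atTop (𝓝 L) ∧ ∀ t, t0 ≤ t → |f t - L| ≤ 2 * C / √t := by
  have hg : ∀ t, t0 ≤ t → HasDerivAt (fun t => 2 * C / √t) (-(C / (t * √t))) t := by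
    intro t ht
    have ht' : 0 < t := h0.trans_le ht
    have hq : 0 < √t := sqrt_pos.2 ht'
    refine ((hasDerivAt_const t (2 * C)).div (hasDerivAt_sqrt ht'.ne') hq.ne').congr_deriv ?_
    rw [sq_sqrt ht'.le]
    field_simp
    ring
  have hm : MonotoneOn (fun t => f t - 2 * C / √t) (Set.Ici t0) := by
    refine monotoneOn_of_deriv_nonneg (convex_Ici _) ?_ ?_ ?_
    · exact fun t ht => ((hd t ht).sub (hg t ht)).continuousAt.continuousWithinAt
    · rw [interior_Ici]
      exact fun t ht => ((hd t (le_of_lt ht)).sub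
        (hg t (le_of_lt ht))).differentiableAt.differentiableWithinAt
    · rw [interior_Ici]
      intro t ht
      refine le_of_le_of_eq ?_ ((hd t (le_of_lt ht)).sub (hg t (le_of_lt ht))).deriv.symm
      have := neg_le_of_abs_le (hb t (le_of_lt ht))
      linarith
  have ha : AntitoneOn (fun t => f t + 2 * C / √t) (Set.Ici t0) := by
    refine antitoneOn_of_deriv_nonpos (convex_Ici _) ?_ ?_ ?_
    · exact fun t ht => ((hd t ht).add (hg t ht)).continuousAt.continuousWithinAt
    · rw [interior_Ici]
      exact fun t ht => ((hd t (le_of_lt ht)).add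
        (hg t (le_of_lt ht))).differentiableAt.differentiableWithinAt
    · rw [interior_Ici]
      intro t ht
      refine le_of_eq_of_le ((hd t (le_of_lt ht)).add (hg t (le_of_lt ht))).deriv ?_
      have := le_of_abs_le (hb t (le_of_lt ht))
      linarith
  have key : ∀ s t, t0 ≤ s → s ≤ t → |f t - f s| ≤ 2 * C / √s := by
    intro s t hs hst
    have h1 := hm hs (hs.trans hst) hst
    have h2 := ha hs (hs.trans hst) hst
    simp only at h1 h2
    have : 0 ≤ 2 * C / √t := by positivity
    rw [abs_le]
    constructor <;> linarith
  have hlim : Tendsto (fun N : ℝ => 2 * (2 * C / √(max t0 N))) atTop (𝓝 0) := by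
    have : Tendsto (fun N : ℝ => √(max t0 N)) atTop atTop :=
      tendsto_sqrt_atTop.comp (tendsto_atTop_mono (fun N => le_max_right t0 N) tendsto_id)
    simpa using (this.const_div_atTop (2 * C)).const_mul 2
  have hc : CauchySeq fun t => f (max t0 t) := by
    refine cauchySeq_of_le_tendsto_0 _ (fun n m N hn hm => ?_) hlim
    have k1 := key (max t0 N) (max t0 n) (le_max_left _ _) (max_le_max le_rfl hn)
    have k2 := key (max t0 N) (max t0 m) (le_max_left _ _) (max_le_max le_rfl hm)
    rw [dist_eq]
    rw [abs_le] at *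
    constructor <;> linarith
  obtain ⟨L, hL⟩ := cauchySeq_tendsto_of_complete hc
  have hL' : Tendsto f atTop (𝓝 L) := by
    refine hL.congr' ?_
    filter_upwards [eventually_ge_atTop t0] with t ht
    rw [max_eq_right ht]
  refine ⟨L, hL', fun t ht => ?_⟩
  have : Tendsto (fun s => |f s - f t|) atTop (𝓝 |L - f t|) := (hL'.sub_const _).abs
  rw [abs_sub_comm]
  refine le_of_tendsto this ?_
  filter_upwards [eventually_ge_atTop t] with s hs
  exact key t s ht hs

/-- The time after which the estimates along the ray with parameter `σ` apply. -/
def tray (R σ : ℝ) : ℝ := max (2 * (R + 1)) (-2 * σ)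

lemma tray_half {R σ t : ℝ} (h : tray R σ ≤ t) : 2 * (R + 1) ≤ t ∧ t / 2 ≤ t + σ := by
  have h1 := (le_max_left _ _).trans h
  have h2 := (le_max_right _ _).trans h
  exact ⟨h1, by linarith⟩

lemma FreeB.V_lim (h : FreeB R B v) {a b : ℝ} (hab : a ^ 2 + b ^ 2 = 1) (σ : ℝ) :
    ∃ L, Tendsto (fun t => Wr 1 v a b t (t + σ)) atTop (𝓝 L) ∧
      ∀ t, tray R σ ≤ t → |Wr 1 v a b t (t + σ) - L| ≤ 14 * √B / √t := by
  have hR := h.R0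
  have h0 : 0 < tray R σ := lt_of_lt_of_le (by linarith) (le_max_left _ _)
  have hd : ∀ t, tray R σ ≤ t → HasDerivAt (fun s => Wr 1 v a b s (s + σ))
      (-Lr v a b t (t + σ)) t := by
    intro t ht
    obtain ⟨h1, h2⟩ := tray_half ht
    have := ray_deriv h.nice.smooth (η := 1) (by norm_num) hab (by linarith : 0 < 1 * t + σ)
    simp only [one_mul] at this
    refine this.congr_deriv ?_
    rw [Gr_eq, h.box]
    simp
  obtain ⟨L, hL, hL'⟩ := tail_conv (C := 7 * √B) h0 (by positivity) hd (fun t ht => by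
    obtain ⟨h1, h2⟩ := tray_half ht
    rw [abs_neg]
    exact Lr_core h.nice hR hab h1 (by linarith) le_rfl h2 (h.eb t))
  refine ⟨L, hL, fun t ht => (hL' t ht).trans_eq (by ring)⟩

/-- The rescaled solution `r^{1/2}v`. -/
def Psi (v : Fn) (a b t r : ℝ) : ℝ := √r * v t (r * a) (r * b)

lemma Psi_dt (hv : Smooth3 v) {a b t σ : ℝ} (hr : 0 < t + σ) :
    HasDerivAt (fun s => Psi v a b s (s + σ)) (2 * Wr (-1) v a b t (t + σ)) t := by
  have h1 : HasDerivAt (fun s : ℝ => s + σ) 1 t := (hasDerivAt_id t).add_const σ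
  have h2 := (h1.sqrt hr.ne').mul (hv.hcurve (hasDerivAt_id t) (h1.mul_const a) (h1.mul_const b))
  refine h2.congr_deriv ?_
  simp only [Wr, id]
  ring

lemma Psi_dr (hv : Smooth3 v) {a b t σ : ℝ} (hr : 0 < t + σ) :
    HasDerivAt (fun s => Psi v a b t (t + s))
      (Wr 1 v a b t (t + σ) + Wr (-1) v a b t (t + σ)) σ := by
  have h1 : HasDerivAt (fun s : ℝ => t + s) 1 σ := (hasDerivAt_id σ).const_add t
  have h2 := (h1.sqrt hr.ne').mul
    (hv.hcurve (hasDerivAt_const σ t) (h1.mul_const a) (h1.mul_const b))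
  refine h2.congr_deriv ?_
  simp only [Wr]
  ring

lemma FreeB.inc (h : FreeB R B v) {a b : ℝ} (hab : a ^ 2 + b ^ 2 = 1) {σ t : ℝ}
    (ht : tray R σ ≤ t) :
    |Wr (-1) v a b t (t + σ)| ≤ (R + 1 + |σ|) * (7 * √B) / (t * √t) := by
  have hR := h.R0
  obtain ⟨h1, h2⟩ := tray_half ht
  have h0 : 0 < t := by linarith
  rcases le_or_gt (t + σ) (t + R) with h3 | h3
  · refine (inc_bound h.nice hR hab h1 h2 h3 (N := 0) (fun τ _ _ => h.eb τ)
      (fun τ _ _ x y => by simp [h.box])).trans ?_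
    have := neg_abs_le σ
    have := abs_nonneg σ
    rw [mul_zero, zero_add, mul_div_assoc (R + 1 + |σ|)]
    have hz : 0 ≤ 7 * √B / (t * √t) := by positivity
    exact mul_le_mul_of_nonneg_right (by linarith) hz
  · rw [Wr_zero h.nice hR _ (by rwa [abs_of_nonneg h0.le]) hab, abs_zero]
    positivity

lemma FreeB.Psi_lim (h : FreeB R B v) {a b : ℝ} (hab : a ^ 2 + b ^ 2 = 1) (σ : ℝ) :
    ∃ L, Tendsto (fun t => Psi v a b t (t + σ)) atTop (𝓝 L) ∧
      ∀ t, tray R σ ≤ t → |Psi v a b t (t + σ) - L| ≤ 28 * (R + 1 + |σ|) * √B / √t := by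
  have hR := h.R0
  have h0 : 0 < tray R σ := lt_of_lt_of_le (by linarith) (le_max_left _ _)
  obtain ⟨L, hL, hL'⟩ := tail_conv (f := fun t => Psi v a b t (t + σ))
    (f' := fun t => 2 * Wr (-1) v a b t (t + σ)) (C := (R + 1 + |σ|) * (14 * √B)) h0
    (by positivity) (fun t ht => Psi_dt h.nice.smooth (by
      obtain ⟨h1, h2⟩ := tray_half ht
      linarith)) (fun t ht => by
      rw [abs_mul, abs_two]
      have := h.inc hab ht
      calc _ ≤ 2 * ((R + 1 + |σ|) * (7 * √B) / (t * √t)) := by gcongr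
        _ = _ := by ring)
  exact ⟨L, hL, fun t ht => (hL' t ht).trans_eq (by ring)⟩

/-- The radiation field `Φ = lim r^{1/2}v` and its derivative `lim V`. -/
lemma FreeB.rad (h : FreeB R B v) {a b : ℝ} (hab : a ^ 2 + b ^ 2 = 1) : ∃ Φ V : ℝ → ℝ,
    (∀ σ t, tray R σ ≤ t → |Wr 1 v a b t (t + σ) - V σ| ≤ 14 * √B / √t) ∧
    (∀ σ t, tray R σ ≤ t → |Psi v a b t (t + σ) - Φ σ| ≤ 28 * (R + 1 + |σ|) * √B / √t) ∧
    (∀ σ, HasDerivAt Φ (V σ) σ) ∧ ∀ σ, R < σ → Φ σ = 0 := by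
  choose V hV hV' using fun σ => h.V_lim hab σ
  choose Φ hΦ hΦ' using fun σ => h.Psi_lim hab σ
  have hR := h.R0
  refine ⟨Φ, V, hV', hΦ', fun σ => ?_, fun σ hσ => ?_⟩
  · have hb : ∀ t x, 2 * (R + 1) + 2 * (|σ| + 1) ≤ t → x ∈ Metric.ball σ 1 → tray R x ≤ t ∧
        |x| ≤ |σ| + 1 := by
      intro t x ht hx
      have h1 : |x - σ| < 1 := by simpa [dist_eq] using hx
      have h2 : |x| ≤ |σ| + 1 := by
        have := abs_add_le (x - σ) σ
        rw [sub_add_cancel] at this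
        linarith
      have := neg_abs_le x
      have := abs_nonneg σ
      exact ⟨max_le (by linarith) (by linarith), h2⟩
    refine hasDerivAt_of_tendstoUniformlyOn (l := atTop) (s := Metric.ball σ 1)
      (f := fun t x => Psi v a b t (t + x))
      (f' := fun t x => Wr 1 v a b t (t + x) + Wr (-1) v a b t (t + x)) Metric.isOpen_ball
      ?_ ?_ (fun x _ => hΦ x) (Metric.mem_ball_self one_pos)
    · rw [Metric.tendstoUniformlyOn_iff]
      intro e he
      have hz : Tendsto (fun t : ℝ => 14 * √B / √t + (R + 1 + (|σ| + 1)) * (7 * √B) / √t)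
          atTop (𝓝 0) := by
        simpa using (tendsto_sqrt_atTop.const_div_atTop (14 * √B)).add
          (tendsto_sqrt_atTop.const_div_atTop ((R + 1 + (|σ| + 1)) * (7 * √B)))
      filter_upwards [hz.eventually_lt_const he,
        eventually_ge_atTop (2 * (R + 1) + 2 * (|σ| + 1))] with t h1 h2 x hx
      obtain ⟨k1, k2⟩ := hb t x h2 hx
      have k3 := hV' x t k1
      have k4 := h.inc hab k1
      have ht : 1 ≤ t := by linarith [abs_nonneg σ]
      have hq : 0 < √t := sqrt_pos.2 (by linarith)
      have k5 : (R + 1 + |x|) * (7 * √B) / (t * √t) ≤ (R + 1 + (|σ| + 1)) * (7 * √B) / √t := by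
        gcongr
        exact le_mul_of_one_le_left hq.le ht
      rw [dist_comm, dist_eq]
      have : |Wr 1 v a b t (t + x) + Wr (-1) v a b t (t + x) - V x| ≤
          |Wr 1 v a b t (t + x) - V x| + |Wr (-1) v a b t (t + x)| := by
        rw [add_sub_right_comm]
        exact abs_add_le _ _
      linarith
    · filter_upwards [eventually_ge_atTop (2 * (R + 1) + 2 * (|σ| + 1))] with t ht x hx
      obtain ⟨k1, k2⟩ := tray_half (hb t x ht hx).1
      exact Psi_dr h.nice.smooth (by linarith)
  · refine tendsto_nhds_unique (hΦ σ) (tendsto_const_nhds.congr' ?_)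
    filter_upwards [eventually_ge_atTop 0] with t ht
    rw [Psi, h.nice.polar_zero hR (by rw [abs_of_nonneg ht]; linarith) hab, mul_zero]
end freeb

/-! ### The half-order integral and its inversion -/

/-- Differentiation under the integral sign for integrands supported in a fixed interval. -/
lemma pint_deriv {F F' : ℝ → ℝ → ℝ} {s0 M : ℝ} (hc : Continuous (Function.uncurry F'))
    (hF : ∀ s, Continuous (F s)) (hd : ∀ s τ, HasDerivAt (fun s => F s τ) (F' s τ) s)
    (h0 : ∀ s τ, |s - s0| < 1 → M < |τ| → F s τ = 0) :
    HasDerivAt (fun s => ∫ τ, F s τ) (∫ τ, F' s0 τ) s0 := by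
  have hz : ∀ s ∈ Metric.ball s0 1, ∀ τ, M < |τ| → F' s τ = 0 := by
    intro s hs τ hτ
    have e : (fun s => F s τ) =ᶠ[𝓝 s] fun _ => 0 := by
      filter_upwards [Metric.isOpen_ball.mem_nhds hs] with s' hs'
      exact h0 s' τ (by simpa [dist_eq] using hs') hτ
    exact (hd s τ).unique ((hasDerivAt_const s (0 : ℝ)).congr_of_eventuallyEq e)
  obtain ⟨C, hC⟩ := ((isCompact_closedBall s0 1).prod (isCompact_Icc (a := -M)
    (b := M))).exists_bound_of_continuousOn hc.continuousOn
  refine (hasDerivAt_integral_of_dominated_loc_of_deriv_le (s := Metric.ball s0 1)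
    (bound := (Set.Icc (-M) M).indicator fun _ => C) (Metric.ball_mem_nhds s0 one_pos)
    (Eventually.of_forall fun s => (hF s).aestronglyMeasurable) ?_ ?_ ?_ ?_ ?_).2
  · refine (hF s0).integrable_of_hasCompactSupport
      (HasCompactSupport.intro (isCompact_Icc (a := -M) (b := M)) fun τ hτ => ?_)
    refine h0 s0 τ (by simp) (lt_of_not_ge fun h => hτ (abs_le.1 h))
  · have : Continuous fun τ => F' s0 τ := hc.comp (by fun_prop : Continuous fun τ => (s0, τ))
    exact this.aestronglyMeasurable
  · refine Eventually.of_forall fun τ s hs => ?_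
    by_cases h : τ ∈ Set.Icc (-M) M
    · rw [Set.indicator_of_mem h]
      exact hC (s, τ) ⟨Metric.ball_subset_closedBall hs, h⟩
    · rw [Set.indicator_of_notMem h, hz s hs τ (lt_of_not_ge fun h' => h (abs_le.1 h')), norm_zero]
  · exact (integrable_indicator_iff measurableSet_Icc).2 (by simp)
  · exact Eventually.of_forall fun τ s _ => hd s τ

/-- The half-order integral `∫ h(s + w²/2) dw`. -/
def JJ (h : ℝ → ℝ) (s : ℝ) : ℝ := ∫ w : ℝ, h (s + w ^ 2 / 2)

lemma JJ_far {R s w : ℝ} (hw : |R| + |s| + 4 < |w|) : R < s + w ^ 2 / 2 := by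
  have h1 := neg_abs_le s
  have h2 := le_abs_self R
  have h3 := abs_nonneg s
  have h4 := abs_nonneg R
  have h5 : 4 * (|R| + |s| + 4) ≤ w ^ 2 := by
    rw [← sq_abs]
    nlinarith
  linarith

lemma JJ_deriv {h h' : ℝ → ℝ} {R : ℝ} (hd : ∀ s, HasDerivAt h (h' s) s) (hc : Continuous h')
    (h0 : ∀ s, R < s → h s = 0) (s : ℝ) : HasDerivAt (JJ h) (JJ h' s) s := by
  have hcont : Continuous h := continuous_iff_continuousAt.2 fun s => (hd s).continuousAt
  refine pint_deriv (F := fun s w => h (s + w ^ 2 / 2)) (F' := fun s w => h' (s + w ^ 2 / 2))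
    (M := |R| + (|s| + 1) + 4) ?_ ?_ ?_ ?_
  · exact hc.comp (by fun_prop : Continuous fun p : ℝ × ℝ => p.1 + p.2 ^ 2 / 2)
  · exact fun s => hcont.comp (by fun_prop)
  · intro s w
    exact ((hd _).comp s ((hasDerivAt_id s).add_const (w ^ 2 / 2))).congr_deriv (by simp)
  · intro s' w hs hw
    refine h0 _ (JJ_far ?_)
    have := abs_add_le (s' - s) s
    rw [sub_add_cancel] at this
    linarith

lemma JJ_zero {h : ℝ → ℝ} {R : ℝ} (h0 : ∀ s, R < s → h s = 0) (s : ℝ) (hs : R < s) :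
    JJ h s = 0 := by
  unfold JJ
  rw [← integral_zero ℝ ℝ (μ := volume)]
  refine integral_congr_ae (Eventually.of_forall fun w => h0 _ ?_)
  have := sq_nonneg w
  linarith

lemma half_image (s : ℝ) : (fun w : ℝ => s + w ^ 2 / 2) '' Set.Ioi 0 = Set.Ioi s := by
  ext x
  constructor
  · rintro ⟨w, hw, rfl⟩
    have : 0 < w := hw
    have : 0 < w ^ 2 := by positivity
    show s < s + w ^ 2 / 2
    linarith
  · intro hx
    have hx' : 0 < x - s := sub_pos.2 hx
    refine ⟨√(2 * (x - s)), sqrt_pos.2 (by linarith), ?_⟩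
    simp only
    rw [sq_sqrt (by linarith)]
    ring

lemma half_subst (g : ℝ → ℝ) (s : ℝ) :
    ∫ x in Set.Ioi s, g x = ∫ w in Set.Ioi 0, w * g (s + w ^ 2 / 2) := by
  rw [← half_image s, integral_image_eq_integral_abs_deriv_smul (f' := fun w => w)
    measurableSet_Ioi]
  · refine setIntegral_congr_fun measurableSet_Ioi fun w hw => ?_
    simp only [smul_eq_mul]
    rw [abs_of_pos hw]
  · intro w _
    refine HasDerivAt.hasDerivWithinAt ?_
    refine (((hasDerivAt_id w).pow 2).div_const 2).const_add s |>.congr_deriv ?_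
    simp
  · intro x hx y hy h
    have hx' : (0 : ℝ) < x := hx
    have hy' : (0 : ℝ) < y := hy
    simp only at h
    exact (sq_eq_sq₀ hx'.le hy'.le).1 (by linarith)

/-- Two half-order integrals make one primitive: polar coordinates in the plane. -/
lemma JJ_JJ {Φ : ℝ → ℝ} {R : ℝ} (hΦ : Continuous Φ) (h0 : ∀ s, R < s → Φ s = 0) (s : ℝ) :
    JJ (JJ Φ) s = 2 * π * ∫ x in Set.Ioi s, Φ x := by
  have hcs : HasCompactSupport fun p : ℝ × ℝ => Φ (s + p.1 ^ 2 / 2 + p.2 ^ 2 / 2) := by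
    refine HasCompactSupport.intro ((isCompact_Icc (a := -(|R| + |s| + 4))
      (b := |R| + |s| + 4)).prod (isCompact_Icc (a := -(|R| + |s| + 4))
      (b := |R| + |s| + 4))) fun p hp => h0 _ ?_
    have h1 := sq_nonneg p.1
    have h2 := sq_nonneg p.2
    by_cases h : p.1 ∈ Set.Icc (-(|R| + |s| + 4)) (|R| + |s| + 4)
    · have h' : ¬ |p.2| ≤ |R| + |s| + 4 := fun h' => hp ⟨h, abs_le.1 h'⟩
      have := JJ_far (R := R) (s := s) (lt_of_not_ge h')
      linarith
    · have h' : ¬ |p.1| ≤ |R| + |s| + 4 := fun h' => h (abs_le.1 h')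
      have := JJ_far (R := R) (s := s) (lt_of_not_ge h')
      linarith
  have hcont : Continuous fun p : ℝ × ℝ => Φ (s + p.1 ^ 2 / 2 + p.2 ^ 2 / 2) :=
    hΦ.comp (by fun_prop)
  have hitg := hcont.integrable_of_hasCompactSupport (μ := volume) hcs
  have e1 : JJ (JJ Φ) s = ∫ p : ℝ × ℝ, Φ (s + p.1 ^ 2 / 2 + p.2 ^ 2 / 2) := by
    rw [Measure.volume_eq_prod] at hitg ⊢
    rw [integral_prod _ hitg]
    rfl
  rw [e1, ← integral_comp_polarCoord_symm, half_subst]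
  have e2 : ∀ p : ℝ × ℝ, p.1 • Φ (s + (polarCoord.symm p).1 ^ 2 / 2 +
      (polarCoord.symm p).2 ^ 2 / 2) = (p.1 * Φ (s + p.1 ^ 2 / 2)) * (fun _ => 1) p.2 := by
    intro p
    have : s + (polarCoord.symm p).1 ^ 2 / 2 + (polarCoord.symm p).2 ^ 2 / 2 =
        s + p.1 ^ 2 / 2 := by
      rw [polarCoord_symm_apply]
      linear_combination p.1 ^ 2 / 2 * sin_sq_add_cos_sq p.2
    rw [this]
    simp
  simp_rw [e2]
  rw [polarCoord_target, Measure.volume_eq_prod,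
    setIntegral_prod_mul (fun w => w * Φ (s + w ^ 2 / 2)) (fun _ => (1 : ℝ))]
  have : ∫ _ in Set.Ioo (-π) π, (1 : ℝ) = 2 * π := by
    simp [pi_pos.le]
    ring
  rw [this]
  ring

/-- Inversion of the half-order integral. -/
lemma abel_inv {Φ a : ℝ → ℝ} {R : ℝ} (hΦ : Continuous Φ) (h0 : ∀ s, R < s → Φ s = 0)
    (ha : Continuous a) (hd : ∀ s, HasDerivAt (JJ Φ) (a s) s) (s : ℝ) :
    JJ a s = -(2 * π) * Φ s := by
  have h1 := JJ_deriv hd ha (JJ_zero h0) s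
  have e : JJ (JJ Φ) = fun s => 2 * π * ∫ x in s..R, Φ x := by
    funext s
    rw [JJ_JJ hΦ h0]
    congr 1
    have hR : ∫ x in Set.Ioi R, Φ x = 0 := by
      rw [setIntegral_congr_fun measurableSet_Ioi fun x hx => h0 x hx]
      simp
    have hi : IntegrableOn Φ (Set.Ioi R) :=
      IntegrableOn.congr_fun (f := fun _ => (0 : ℝ)) (by simp)
        (fun x hx => (h0 x hx).symm) measurableSet_Ioi
    have hs : IntegrableOn Φ (Set.Ioi s) := by
      refine (hi.union (hΦ.integrableOn_Icc (a := s) (b := R))).mono_set fun x hx => ?_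
      rcases le_or_gt x R with h | h
      · exact Or.inr ⟨le_of_lt hx, h⟩
      · exact Or.inl h
    have := intervalIntegral.integral_interval_add_Ioi hs hi
    rw [← this, hR, add_zero]
  rw [e] at h1
  have h2 : HasDerivAt (fun s => 2 * π * ∫ x in s..R, Φ x) (2 * π * -Φ s) s :=
    (intervalIntegral.integral_hasDerivAt_left (hΦ.intervalIntegrable _ _)
      (hΦ.stronglyMeasurableAtFilter _ _) hΦ.continuousAt).const_mul _
  rw [h1.unique h2]
  ring

/-- The operator `R₂` is the half-order integral of the Radon transform. -/
lemma R2_eq (φ : ℝ → ℝ → ℝ) (σ a b : ℝ) :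
    R2 φ σ a b = 1 / (4 * π) * JJ (fun s => Rline φ s a b) σ := by
  have h1 : JJ (fun s => Rline φ s a b) σ =
      2 * ∫ w in Set.Ioi 0, Rline φ (σ + w ^ 2 / 2) a b := by
    rw [← integral_comp_abs (f := fun w : ℝ => Rline φ (σ + w ^ 2 / 2) a b)]
    unfold JJ
    congr 1
    funext w
    rw [sq_abs]
  have h2 : ∫ w in Set.Ioi (0 : ℝ), w * (Rline φ (σ + w ^ 2 / 2) a b / √(σ + w ^ 2 / 2 - σ)) =
      ∫ w in Set.Ioi (0 : ℝ), √2 * Rline φ (σ + w ^ 2 / 2) a b := by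
    refine setIntegral_congr_fun measurableSet_Ioi fun w hw => ?_
    have hw' : (0 : ℝ) < w := hw
    have e : √(σ + w ^ 2 / 2 - σ) = w / √2 := by
      rw [add_sub_cancel_left, sqrt_div (sq_nonneg w), sqrt_sq hw'.le]
    rw [e]
    field_simp
  rw [R2, half_subst, h2, h1, integral_const_mul]
  field_simp
  ring

/-! ### Plane-wave averages of free solutions -/

/-- The integral over a line orthogonal to the first axis. -/
def Qi (v : Fn) (t p : ℝ) : ℝ := ∫ τ : ℝ, v t p τ

section qi
variable {R B : ℝ} {v : Fn}

lemma Nice.line_zero (hv : Nice R v) (hR : 0 ≤ R) {t p τ : ℝ} (h : |t| + R < |τ|) :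
    v t p τ = 0 := by
  refine hv.supp t p τ ?_
  have := abs_nonneg t
  have h1 : (|t| + R) ^ 2 < |τ| ^ 2 := pow_lt_pow_left₀ h (by linarith) two_ne_zero
  rw [sq_abs] at h1
  linarith [sq_nonneg p]

lemma Qi_line (hv : Nice R v) (hR : 0 ≤ R) (t0 p0 c d s : ℝ) :
    HasDerivAt (fun s => Qi v (t0 + c * s) (p0 + d * s))
      (c * Qi (pt v) (t0 + c * s) (p0 + d * s) + d * Qi (p1 v) (t0 + c * s) (p0 + d * s)) s := by
  have e : c * Qi (pt v) (t0 + c * s) (p0 + d * s) + d * Qi (p1 v) (t0 + c * s) (p0 + d * s) =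
      ∫ τ, (c * pt v (t0 + c * s) (p0 + d * s) τ + d * p1 v (t0 + c * s) (p0 + d * s) τ) := by
    rw [integral_add ((hv.dt.int2 _ _).const_mul c) ((hv.d1.int2 _ _).const_mul d),
      integral_const_mul, integral_const_mul]
    rfl
  rw [e]
  refine pint_deriv (F := fun s τ => v (t0 + c * s) (p0 + d * s) τ)
    (F' := fun s τ => c * pt v (t0 + c * s) (p0 + d * s) τ + d * p1 v (t0 + c * s) (p0 + d * s) τ)
    (M := |t0| + |c| * (|s| + 1) + R) ?_ ?_ ?_ ?_
  · exact ((hv.dt.smooth.cont_comp (by fun_prop) (by fun_prop) (by fun_prop)).const_mul c).add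
      ((hv.d1.smooth.cont_comp (by fun_prop) (by fun_prop) (by fun_prop)).const_mul d)
  · exact fun s => hv.smooth.cont_comp (by fun_prop) (by fun_prop) (by fun_prop)
  · intro s τ
    refine (hv.smooth.hcurve (((hasDerivAt_id s).const_mul c).const_add t0)
      (((hasDerivAt_id s).const_mul d).const_add p0) (hasDerivAt_const s τ)).congr_deriv ?_
    simp
  · intro s' τ hs hτ
    refine hv.line_zero hR (lt_of_le_of_lt ?_ hτ)
    have h1 : |s'| ≤ |s| + 1 := by
      have := abs_add_le (s' - s) s
      rw [sub_add_cancel] at this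
      linarith
    have h2 := abs_add_le t0 (c * s')
    rw [abs_mul] at h2
    have h3 : |c| * |s'| ≤ |c| * (|s| + 1) := by gcongr
    linarith

lemma Qi_p2 (hv : Nice R v) (t p : ℝ) : Qi (p2 v) t p = 0 :=
  integral_eq_zero_of_hasDerivAt_of_integrable (fun τ => hv.smooth.hp2 t p τ)
    (hv.d2.int2 t p) (hv.int2 t p)

lemma Qi_zero (hv : Nice R v) {t p : ℝ} (h : |t| + R < |p|) (hR : 0 ≤ R) : Qi v t p = 0 := by
  unfold Qi
  rw [← integral_zero ℝ ℝ (μ := volume)]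
  refine integral_congr_ae (Eventually.of_forall fun τ => hv.supp t p τ ?_)
  have := abs_nonneg t
  have h1 : (|t| + R) ^ 2 < |p| ^ 2 := pow_lt_pow_left₀ h (by linarith) two_ne_zero
  rw [sq_abs] at h1
  linarith [sq_nonneg τ]

lemma Qi_tt (hv : Nice R v) (hb : dAlembert v = 0) (t p : ℝ) :
    Qi (pt (pt v)) t p = Qi (p1 (p1 v)) t p := by
  have e : Qi (pt (pt v)) t p = Qi (p1 (p1 v)) t p + Qi (p2 (p2 v)) t p := by
    unfold Qi
    rw [← integral_add (hv.d1.d1.int2 t p) (hv.d2.d2.int2 t p)]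
    refine integral_congr_ae (Eventually.of_forall fun τ => ?_)
    have := congrFun (congrFun (congrFun hb t) p) τ
    simp only [dAlembert, Pi.zero_apply] at this
    simp only
    linarith
  rw [e, Qi_p2 hv.d2, add_zero]

/-- The one-dimensional wave equation for line averages: the incoming and outgoing parts are
transported. -/
lemma Qi_transport (hv : Nice R v) (hR : 0 ≤ R) (hb : dAlembert v = 0) (t s : ℝ) :
    Qi (pt v) t (t + s) - Qi (p1 v) t (t + s) = Qi (pt v) 0 s - Qi (p1 v) 0 s ∧
    Qi (pt v) t (t + s) + Qi (p1 v) t (t + s) =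
      Qi (pt v) 0 (2 * t + s) + Qi (p1 v) 0 (2 * t + s) := by
  constructor
  · have hd : ∀ x, HasDerivAt (fun x => Qi (pt v) (0 + 1 * x) (s + 1 * x)
        - Qi (p1 v) (0 + 1 * x) (s + 1 * x)) 0 x := fun x => by
      refine ((Qi_line hv.dt hR 0 s 1 1 x).sub (Qi_line hv.d1 hR 0 s 1 1 x)).congr_deriv ?_
      rw [Qi_tt hv hb, p1_pt hv.smooth]
      ring
    have := is_const_of_deriv_eq_zero (fun x => (hd x).differentiableAt)
      (fun x => (hd x).deriv) t 0
    simpa [add_comm s t] using this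
  · have hd : ∀ x, HasDerivAt (fun x => Qi (pt v) (0 + 1 * x) (2 * t + s + -1 * x)
        + Qi (p1 v) (0 + 1 * x) (2 * t + s + -1 * x)) 0 x := fun x => by
      refine ((Qi_line hv.dt hR 0 (2 * t + s) 1 (-1) x).add
        (Qi_line hv.d1 hR 0 (2 * t + s) 1 (-1) x)).congr_deriv ?_
      rw [Qi_tt hv hb, p1_pt hv.smooth]
      ring
    have := is_const_of_deriv_eq_zero (fun x => (hd x).differentiableAt)
      (fun x => (hd x).deriv) t 0
    have e : 2 * t + s + -1 * t = t + s := by ring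
    simp only [e] at this
    simpa using this

lemma Qi_out (hv : Nice R v) (hR : 0 ≤ R) (hb : dAlembert v = 0) {t s : ℝ} (h : R < 2 * t + s) :
    Qi (pt v) t (t + s) + Qi (p1 v) t (t + s) = 0 ∧
    Qi (p1 v) t (t + s) = -1 / 2 * (Qi (pt v) 0 s - Qi (p1 v) 0 s) := by
  obtain ⟨h1, h2⟩ := Qi_transport hv hR hb t s
  have h3 : |(0 : ℝ)| + R < |2 * t + s| := by
    rw [abs_zero, zero_add]
    exact h.trans_le (le_abs_self _)
  rw [Qi_zero hv.dt h3 hR, Qi_zero hv.d1 h3 hR, add_zero] at h2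
  exact ⟨h2, by linarith⟩

/-- The line average is stationary along outgoing lines. -/
lemma Qi_const (hv : Nice R v) (hR : 0 ≤ R) (hb : dAlembert v = 0) {T t s : ℝ}
    (h : R < 2 * T + s) (ht : T ≤ t) : Qi v t (t + s) = Qi v T (T + s) := by
  have hd : ∀ x, HasDerivAt (fun x => Qi v x (x + s))
      (Qi (pt v) x (x + s) + Qi (p1 v) x (x + s)) x := fun x => by
    have := Qi_line hv hR 0 s 1 1 x
    simpa [add_comm s] using this
  refine constant_of_has_deriv_right_zero (f := fun x => Qi v x (x + s)) (a := T) (b := t)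
    (fun x _ => (hd x).continuousAt.continuousWithinAt) (fun x hx => ?_) t ⟨ht, le_rfl⟩
  have := (hd x).hasDerivWithinAt (s := Set.Ici x)
  rwa [(Qi_out hv hR hb (by linarith [hx.1])).1] at this

lemma Qi_ds (hv : Nice R v) (hR : 0 ≤ R) (hb : dAlembert v = 0) {T s : ℝ} (h : R < 2 * T + s) :
    HasDerivAt (fun s => Qi v T (T + s)) (-1 / 2 * (Qi (pt v) 0 s - Qi (p1 v) 0 s)) s := by
  have := Qi_line hv hR T T 0 1 s
  simp only [zero_mul, add_zero, one_mul, zero_add] at this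
  rwa [(Qi_out hv hR hb h).2] at this

lemma Qi_cont (hv : Nice R v) (hR : 0 ≤ R) : Continuous (Qi v 0) := by
  refine continuous_iff_continuousAt.2 fun s => ?_
  have := (Qi_line hv hR 0 0 0 1 s).continuousAt
  simpa using this

/-- Uniform boundedness of the rescaled solution near the light cone. -/
lemma FreeB.Psi_bdd (h : FreeB R B v) (S : ℝ) : ∃ C, 0 ≤ C ∧
    ∀ t σ a b : ℝ, 2 * (R + 1) + 2 * |S| ≤ t → |σ| ≤ |S| → a ^ 2 + b ^ 2 = 1 →
      |Psi v a b t (t + σ)| ≤ C := by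
  have hR := h.R0
  have hS := abs_nonneg S
  set T := 2 * (R + 1) + 2 * |S| with hT
  have hT0 : 0 < T := by linarith
  set K := 28 * (R + 1 + |S|) * √B / √T with hK
  have hK0 : 0 ≤ K := by positivity
  refine ⟨2 * K + √(2 * T) * √(16 * B), by positivity, fun t σ a b ht hσ hab => ?_⟩
  have h1 := neg_abs_le σ
  have h2 := le_abs_self σ
  have htr : ∀ τ, T ≤ τ → tray R σ ≤ τ := fun τ hτ => max_le (by linarith) (by linarith)
  obtain ⟨L, -, hL⟩ := h.Psi_lim hab σ
  have hk : ∀ τ, T ≤ τ → |Psi v a b τ (τ + σ) - L| ≤ K := fun τ hτ =>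
    (hL τ (htr τ hτ)).trans (by rw [hK]; gcongr)
  have k1 := hk t ht
  have k2 := hk T le_rfl
  have hr : 0 < T + σ := by linarith
  have k3 : |Psi v a b T (T + σ)| ≤ √(2 * T) * √(16 * B) := by
    rw [Psi, abs_mul, abs_of_nonneg (sqrt_nonneg _)]
    have d := (EB.decay h.nice hR hT0.le hr hab (h.eb T)).1
    have hB := (h.eb T).nonneg
    have hq : (T + R + 1) / (T + σ) ≤ 4 := by
      rw [div_le_iff₀ hr]
      linarith
    have d' : (v T ((T + σ) * a) ((T + σ) * b)) ^ 2 ≤ 16 * B := by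
      refine d.trans ?_
      nlinarith
    gcongr
    · linarith
    · exact abs_le_sqrt d'
  rw [abs_le] at *
  constructor <;> linarith

lemma FreeB.rot (h : FreeB R B v) : ∃ B', FreeB R B' (rot v) := by
  obtain ⟨B', hB'⟩ := exists_EB (_root_.rot v) 0
  refine ⟨B', FreeB.mk' h.nice.dO h.R0 ?_ hB'⟩
  rw [rot_eq_Zf]
  exact (Zk_free 0 0 1 h.nice.smooth h.box 1).2

lemma abs_arctan_le (x : ℝ) : |arctan x| ≤ |x| := by
  have := Convex.norm_image_sub_le_of_norm_hasDerivWithin_le (f := arctan)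
    (f' := fun x => 1 / (1 + x ^ 2)) (C := 1) (s := Set.univ) (x := 0) (y := x)
    (fun x _ => (hasDerivAt_arctan x).hasDerivWithinAt) (fun x _ => by
      rw [norm_eq_abs, abs_of_nonneg (by positivity), div_le_one (by positivity)]
      nlinarith [sq_nonneg x]) convex_univ trivial trivial
  simpa using this

/-- The rescaled solution is Lipschitz in the direction. -/
lemma Psi_dir (hv : Smooth3 v) {t r C θ : ℝ}
    (hC : ∀ a b, a ^ 2 + b ^ 2 = 1 → |Psi (rot v) a b t r| ≤ C) :
    |Psi v (cos θ) (sin θ) t r - Psi v 1 0 t r| ≤ C * |θ| := by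
  have hd : ∀ x, HasDerivAt (fun x => Psi v (cos x) (sin x) t r)
      (Psi (rot v) (cos x) (sin x) t r) x := fun x => by
    refine ((hv.hcurve (hasDerivAt_const x t) ((hasDerivAt_cos x).const_mul r)
      ((hasDerivAt_sin x).const_mul r)).const_mul (√r)).congr_deriv ?_
    simp only [Psi, rot]
    ring
  have := Convex.norm_image_sub_le_of_norm_hasDerivWithin_le (C := C) (s := Set.univ)
    (x := 0) (y := θ) (fun x _ => (hd x).hasDerivWithinAt) (fun x _ => by
      rw [norm_eq_abs]
      exact hC _ _ (by rw [add_comm]; exact sin_sq_add_cos_sq x)) convex_univ trivial trivial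
  simpa using this
end qi

/-! ### The radiation field of a free solution -/

section radfield
variable {R B : ℝ} {v : Fn}

/-- The tangent of the angle between `(t+s, √t z)` and the first axis. -/
def slp (s z t : ℝ) : ℝ := √t * z / (t + s)

/-- The distance of `(t+s, √t z)` from the origin. -/
def dist0 (s z t : ℝ) : ℝ := (t + s) * √(1 + slp s z t ^ 2)

lemma dist0_ge {s z t : ℝ} (h : 0 < t + s) : t + s ≤ dist0 s z t := by
  refine le_mul_of_one_le_right h.le ?_
  rw [one_le_sqrt]
  nlinarith [sq_nonneg (slp s z t)]

lemma dist0_sq {s z t : ℝ} (ht : 0 ≤ t) (h : 0 < t + s) :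
    dist0 s z t ^ 2 = (t + s) ^ 2 + t * z ^ 2 := by
  rw [dist0, mul_pow, sq_sqrt (by positivity), slp, div_pow, mul_pow, sq_sqrt ht]
  field_simp

lemma dist0_pt {s z t : ℝ} (h : 0 < t + s) :
    dist0 s z t * cos (arctan (slp s z t)) = t + s ∧
    dist0 s z t * sin (arctan (slp s z t)) = √t * z := by
  have hk : 0 < √(1 + slp s z t ^ 2) := sqrt_pos.2 (by positivity)
  rw [cos_arctan, sin_arctan, dist0]
  constructor
  · field_simp
  · generalize √(1 + slp s z t ^ 2) = k at *
    rw [slp]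
    field_simp

/-- The rescaled integrand of the line average. -/
lemma G_eq (v : Fn) {s z t : ℝ} (h : 0 < t + s) :
    √t * v t (t + s) (√t * z) = √t / √(dist0 s z t) *
      Psi v (cos (arctan (slp s z t))) (sin (arctan (slp s z t))) t (dist0 s z t) := by
  have hr : 0 < √(dist0 s z t) := sqrt_pos.2 (h.trans_le (dist0_ge h))
  obtain ⟨h1, h2⟩ := dist0_pt (z := z) h
  rw [Psi, h1, h2]
  field_simp

lemma slp_lim (s z : ℝ) : Tendsto (slp s z) atTop (𝓝 0) ∧
    Tendsto (fun t => t * slp s z t ^ 2) atTop (𝓝 (z ^ 2)) := by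
  have hi : Tendsto (fun t : ℝ => 1 + s * t⁻¹) atTop (𝓝 1) := by
    simpa using (tendsto_inv_atTop_zero.const_mul s).const_add 1
  have hq : Tendsto (fun t : ℝ => (√t)⁻¹) atTop (𝓝 0) :=
    tendsto_inv_atTop_zero.comp tendsto_sqrt_atTop
  have e : ∀ᶠ t : ℝ in atTop, slp s z t = z * (√t)⁻¹ / (1 + s * t⁻¹) := by
    filter_upwards [eventually_gt_atTop (|s| + 1)] with t ht
    have := neg_abs_le s
    have := abs_nonneg s
    have h0 : 0 < t := by linarith
    have h1 : t + s ≠ 0 := by linarith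
    have h2 : √t ≠ 0 := (sqrt_pos.2 h0).ne'
    have h3 : 1 + s * t⁻¹ = (t + s) / t := by field_simp
    rw [slp, h3]
    field_simp
    rw [sq_sqrt h0.le]
    ring
  constructor
  · refine Tendsto.congr' (e.mono fun t h => h.symm) ?_
    simpa [Pi.div_def] using (hq.const_mul z).div hi one_ne_zero
  · have h2 : Tendsto (fun t : ℝ => z ^ 2 / (1 + s * t⁻¹) ^ 2) atTop (𝓝 (z ^ 2)) := by
      simpa [Pi.div_def] using (tendsto_const_nhds (x := z ^ 2)).div (hi.pow 2) (by norm_num)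
    refine h2.congr' ?_
    filter_upwards [e, eventually_gt_atTop 0] with t h ht
    rw [h, div_pow, mul_pow, inv_pow, sq_sqrt ht.le]
    field_simp

lemma dist0_lim (s z : ℝ) : Tendsto (fun t => dist0 s z t / t) atTop (𝓝 1) ∧
    Tendsto (fun t => dist0 s z t - t) atTop (𝓝 (s + z ^ 2 / 2)) := by
  obtain ⟨h1, h2⟩ := slp_lim s z
  have hk : Tendsto (fun t => √(1 + slp s z t ^ 2)) atTop (𝓝 1) := by
    simpa using ((h1.pow 2).const_add 1).sqrt
  have hi : Tendsto (fun t : ℝ => 1 + s * t⁻¹) atTop (𝓝 1) := by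
    simpa using (tendsto_inv_atTop_zero.const_mul s).const_add 1
  constructor
  · have := hi.mul hk
    rw [one_mul] at this
    refine this.congr' ?_
    filter_upwards [eventually_gt_atTop 0] with t ht
    rw [dist0]
    field_simp
  · have h3 := (hk.const_mul s).add (h2.div (hk.add_const 1) (by norm_num))
    have e : s * 1 + z ^ 2 / (1 + 1) = s + z ^ 2 / 2 := by ring
    rw [e] at h3
    refine h3.congr fun t => ?_
    have hp : 0 < √(1 + slp s z t ^ 2) := sqrt_pos.2 (by positivity)
    have hs : √(1 + slp s z t ^ 2) ^ 2 = 1 + slp s z t ^ 2 := sq_sqrt (by positivity)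
    simp only [Pi.div_apply]
    rw [dist0]
    generalize √(1 + slp s z t ^ 2) = k at *
    have : slp s z t ^ 2 = (k - 1) * (k + 1) := by linarith
    rw [this]
    field_simp
    ring

/-- The line average along an outgoing line converges to the half-order integral of the radiation
field. -/
lemma Qi_lim (h : FreeB R B v) {Φ : ℝ → ℝ} (hc : Continuous Φ)
    (hΦ : ∀ σ t, tray R σ ≤ t → |Psi v 1 0 t (t + σ) - Φ σ| ≤ 28 * (R + 1 + |σ|) * √B / √t)
    (s : ℝ) : Tendsto (fun t => Qi v t (t + s)) atTop (𝓝 (JJ Φ s)) := by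
  have hR := h.R0
  have hsl := neg_abs_le s
  have hs0 := abs_nonneg s
  have e : ∀ᶠ t : ℝ in atTop, ∫ z, √t * v t (t + s) (√t * z) = Qi v t (t + s) := by
    filter_upwards [eventually_gt_atTop 0] with t ht
    have hq : 0 < √t := sqrt_pos.2 ht
    rw [integral_const_mul, Measure.integral_comp_mul_left (fun x => v t (t + s) x), abs_inv,
      abs_of_pos hq, smul_eq_mul, mul_inv_cancel_left₀ hq.ne']
    rfl
  refine Tendsto.congr' e ?_
  obtain ⟨C, hC0, hC⟩ := h.Psi_bdd (|s| + R)
  have hSR : |(|s| + R)| = |s| + R := abs_of_nonneg (by linarith)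
  rw [hSR] at hC
  refine tendsto_integral_filter_of_dominated_convergence
    ((Set.Icc (-(3 * (R + |s|) + 1)) (3 * (R + |s|) + 1)).indicator fun _ => 2 * C) ?_ ?_ ?_ ?_
  · refine Eventually.of_forall fun t => Continuous.aestronglyMeasurable ?_
    exact (h.nice.smooth.cont_comp (by fun_prop) (by fun_prop) (by fun_prop)).const_mul _
  · filter_upwards [eventually_ge_atTop (2 * (R + 1) + 2 * (|s| + R))] with t ht
    refine Eventually.of_forall fun z => ?_
    have ht0 : 0 < t := by linarith
    have hp : 0 < t + s := by linarith
    have hg := dist0_ge (z := z) hp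
    have hsq := dist0_sq (z := z) ht0.le hp
    obtain ⟨k1, k2⟩ := dist0_pt (z := z) hp
    have hcs : cos (arctan (slp s z t)) ^ 2 + sin (arctan (slp s z t)) ^ 2 = 1 := by
      rw [add_comm]
      exact sin_sq_add_cos_sq _
    have hbn : 0 ≤ (Set.Icc (-(3 * (R + |s|) + 1)) (3 * (R + |s|) + 1)).indicator
        (fun _ => 2 * C) z := Set.indicator_nonneg (fun _ _ => by positivity) _
    rcases lt_or_ge (t + R) (dist0 s z t) with h1 | h1
    · have := h.nice.polar_zero hR (t := t) (by rwa [abs_of_pos ht0]) hcs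
      rw [k1, k2] at this
      rw [this, mul_zero, norm_zero]
      exact hbn
    · have hz : z ^ 2 ≤ 3 * (R + |s|) := by
        have m1 : dist0 s z t ^ 2 ≤ (t + R) ^ 2 := by gcongr; linarith
        have m2 : t * z ^ 2 ≤ t * (3 * (R + |s|)) := by
          have : (R - s) * (2 * t + R + s) ≤ (R + |s|) * (3 * t) := by
            rcases le_or_gt (R - s) 0 with hh | hh
            · have := le_abs_self s
              nlinarith
            · have := le_abs_self s
              exact mul_le_mul (by linarith) (by linarith) (by linarith) (by linarith)
          linarith
        exact le_of_mul_le_mul_left m2 ht0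
      have hzm : z ∈ Set.Icc (-(3 * (R + |s|) + 1)) (3 * (R + |s|) + 1) :=
        abs_le.1 (abs_le_of_sq_le_sq (by nlinarith) (by linarith))
      rw [Set.indicator_of_mem hzm, G_eq v hp, norm_eq_abs, abs_mul]
      have hr : 0 < dist0 s z t := hp.trans_le hg
      have q1 : |√t / √(dist0 s z t)| ≤ 2 := by
        rw [abs_of_nonneg (by positivity), div_le_iff₀ (sqrt_pos.2 hr)]
        refine sqrt_le_iff.2 ⟨by positivity, ?_⟩
        rw [mul_pow, sq_sqrt hr.le]
        linarith
      have q2 := hC t (dist0 s z t - t) _ _ ht (abs_le.2 ⟨by linarith, by linarith⟩) hcs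
      rw [add_sub_cancel] at q2
      gcongr
  · exact (integrable_indicator_iff measurableSet_Icc).2
      (continuous_const.integrableOn_Icc (a := -(3 * (R + |s|) + 1)))
  · refine Eventually.of_forall fun z => ?_
    obtain ⟨l1, l2⟩ := slp_lim s z
    obtain ⟨d1, d2⟩ := dist0_lim s z
    obtain ⟨B', hB'⟩ := h.rot
    obtain ⟨C', hC0', hC'⟩ := hB'.Psi_bdd (|s| + z ^ 2 / 2 + 1)
    have hSz : |(|s| + z ^ 2 / 2 + 1)| = |s| + z ^ 2 / 2 + 1 := abs_of_nonneg (by positivity)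
    rw [hSz] at hC'
    have a1 : Tendsto (fun t => √t / √(dist0 s z t)) atTop (𝓝 1) := by
      have : Tendsto (fun t => (√(dist0 s z t / t))⁻¹) atTop (𝓝 1) := by
        simpa using d1.sqrt.inv₀ (by simp)
      refine this.congr' ?_
      filter_upwards [eventually_gt_atTop 0] with t ht
      rw [sqrt_div' _ ht.le, inv_div]
    have a2 : Tendsto (fun t => Φ (dist0 s z t - t)) atTop (𝓝 (Φ (s + z ^ 2 / 2))) :=
      (hc.tendsto _).comp d2
    have a3 : Tendsto (fun t => Psi v 1 0 t (t + (dist0 s z t - t)) - Φ (dist0 s z t - t)) atTop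
        (𝓝 0) := by
      have hz : Tendsto (fun t => 28 * (R + 1 + |dist0 s z t - t|) * √B / √t) atTop (𝓝 0) :=
        (((d2.abs.const_add (R + 1)).const_mul 28).mul_const √B).div_atTop tendsto_sqrt_atTop
      refine squeeze_zero_norm' ?_ hz
      filter_upwards [eventually_ge_atTop (2 * (R + 1) + 2 * |s|)] with t ht
      refine hΦ _ _ (max_le (by linarith) ?_)
      have := dist0_ge (z := z) (by linarith : 0 < t + s)
      linarith
    have a4 : Tendsto (fun t => Psi v (cos (arctan (slp s z t))) (sin (arctan (slp s z t))) t
        (dist0 s z t) - Psi v 1 0 t (dist0 s z t)) atTop (𝓝 0) := by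
      have hz : Tendsto (fun t => C' * |slp s z t|) atTop (𝓝 0) := by
        simpa using l1.abs.const_mul C'
      refine squeeze_zero_norm' ?_ hz
      filter_upwards [eventually_ge_atTop (2 * (R + 1) + 2 * (|s| + z ^ 2 / 2 + 1)),
        Metric.tendsto_nhds.1 d2 1 one_pos] with t ht hd
      rw [dist_eq] at hd
      have hσ : |dist0 s z t - t| ≤ |s| + z ^ 2 / 2 + 1 := by
        have h1 := abs_add_le (dist0 s z t - t - (s + z ^ 2 / 2)) (s + z ^ 2 / 2)
        have h2 := abs_add_le s (z ^ 2 / 2)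
        rw [abs_of_nonneg (by positivity : 0 ≤ z ^ 2 / 2)] at h2
        rw [sub_add_cancel] at h1
        linarith
      refine (Psi_dir h.nice.smooth (C := C') fun a b hab => ?_).trans ?_
      · have := hC' t (dist0 s z t - t) a b ht hσ hab
        rwa [add_sub_cancel] at this
      · have := abs_arctan_le (slp s z t)
        gcongr
    have a5 := a1.mul ((a4.add a3).add a2)
    simp only [zero_add, one_mul] at a5
    refine a5.congr' ?_
    filter_upwards [eventually_gt_atTop |s|] with t ht
    rw [G_eq v (by linarith : 0 < t + s), add_sub_cancel]
    ring

/-- The radiation field along the first axis in terms of line averages of the data. -/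
lemma rad_id (h : FreeB R B v) {Φ : ℝ → ℝ} (hc : Continuous Φ)
    (hΦ : ∀ σ t, tray R σ ≤ t → |Psi v 1 0 t (t + σ) - Φ σ| ≤ 28 * (R + 1 + |σ|) * √B / √t)
    (h0 : ∀ σ, R < σ → Φ σ = 0) (s : ℝ) :
    1 / (4 * π) * JJ (fun s => Qi (pt v) 0 s - Qi (p1 v) 0 s) s = Φ s := by
  have hR := h.R0
  have key : ∀ s T, R < 2 * T + s → JJ Φ s = Qi v T (T + s) := by
    intro s T hT
    refine tendsto_nhds_unique (Qi_lim h hc hΦ s) (tendsto_const_nhds.congr' ?_)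
    filter_upwards [eventually_ge_atTop T] with t ht
    exact (Qi_const h.nice hR h.box hT ht).symm
  have hd : ∀ s, HasDerivAt (JJ Φ) (-1 / 2 * (Qi (pt v) 0 s - Qi (p1 v) 0 s)) s := by
    intro s
    have hT : R < 2 * (R + |s| + 1) + s := by
      have := neg_abs_le s
      have := abs_nonneg s
      linarith
    refine (Qi_ds h.nice hR h.box hT).congr_of_eventuallyEq ?_
    have : ∀ᶠ s' in 𝓝 s, R < 2 * (R + |s| + 1) + s' :=
      (continuous_const.add continuous_id).continuousAt.eventually_const_lt hT
    filter_upwards [this] with s' hs'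
    exact key s' _ hs'
  have hcont : Continuous fun s => -1 / 2 * (Qi (pt v) 0 s - Qi (p1 v) 0 s) :=
    continuous_const.mul ((Qi_cont h.nice.dt hR).sub (Qi_cont h.nice.d1 hR))
  have := abel_inv hc h0 hcont hd s
  have e : JJ (fun s => -1 / 2 * (Qi (pt v) 0 s - Qi (p1 v) 0 s)) s =
      -1 / 2 * JJ (fun s => Qi (pt v) 0 s - Qi (p1 v) 0 s) s := integral_const_mul _ _
  rw [e] at this
  have hp := pi_pos
  field_simp
  linarith
end radfield

/-! ### Identification with the Friedlander radiation field -/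

/-- The function in coordinates rotated by the direction `(a,b)`. -/
def Ro (a b : ℝ) (h : Fn) : Fn := fun t x y => h t (x * a - y * b) (x * b + y * a)

section rotation
variable {R B a b : ℝ} {h : Fn}

lemma Ro_smooth (hh : Smooth3 h) : Smooth3 (Ro a b h) := by
  have : ContDiff ℝ (⊤ : ℕ∞) fun p : ℝ × ℝ × ℝ =>
      (p.1, p.2.1 * a - p.2.2 * b, p.2.1 * b + p.2.2 * a) := by fun_prop
  exact ContDiff.comp (g := unc h) hh this

lemma pt_Ro (h : Fn) : pt (Ro a b h) = Ro a b (pt h) := rfl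

lemma p1_Ro (hh : Smooth3 h) : p1 (Ro a b h) = kc a * Ro a b (p1 h) + kc b * Ro a b (p2 h) := by
  funext t x y
  have h1 : HasDerivAt (fun s : ℝ => s * a - y * b) a x := by
    simpa using ((hasDerivAt_id x).mul_const a).sub_const (y * b)
  have h2 : HasDerivAt (fun s : ℝ => s * b + y * a) b x := by
    simpa using ((hasDerivAt_id x).mul_const b).add_const (y * a)
  refine (hh.hcurve (hasDerivAt_const x t) h1 h2).deriv.trans ?_
  simp [Ro]

lemma p2_Ro (hh : Smooth3 h) :
    p2 (Ro a b h) = kc (-b) * Ro a b (p1 h) + kc a * Ro a b (p2 h) := by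
  funext t x y
  have h1 : HasDerivAt (fun s : ℝ => x * a - s * b) (-b) y := by
    simpa using ((hasDerivAt_id y).mul_const b).const_sub (x * a)
  have h2 : HasDerivAt (fun s : ℝ => x * b + s * a) a y := by
    simpa using ((hasDerivAt_id y).mul_const a).const_add (x * b)
  refine (hh.hcurve (hasDerivAt_const y t) h1 h2).deriv.trans ?_
  simp [Ro]

lemma Ro_nice (hh : Nice R h) (hab : a ^ 2 + b ^ 2 = 1) : Nice R (Ro a b h) := by
  refine ⟨Ro_smooth hh.smooth, fun t x y hx => hh.supp _ _ _ ?_⟩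
  have : (x * a - y * b) ^ 2 + (x * b + y * a) ^ 2 = x ^ 2 + y ^ 2 := by
    linear_combination (x ^ 2 + y ^ 2) * hab
  rwa [this]

lemma dAl_Ro (hh : Smooth3 h) (hab : a ^ 2 + b ^ 2 = 1) :
    dAlembert (Ro a b h) = Ro a b (dAlembert h) := by
  have s1 : Smooth3 (Ro a b (p1 h)) := Ro_smooth hh.d1
  have s2 : Smooth3 (Ro a b (p2 h)) := Ro_smooth hh.d2
  have e1 : p1 (p1 (Ro a b h)) = kc a * (kc a * Ro a b (p1 (p1 h)) + kc b * Ro a b (p2 (p1 h))) +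
      kc b * (kc a * Ro a b (p1 (p2 h)) + kc b * Ro a b (p2 (p2 h))) := by
    rw [p1_Ro hh, p1_add ((smooth_kc a).mul s1) ((smooth_kc b).mul s2), p1_kmul _ s1,
      p1_kmul _ s2, p1_Ro hh.d1, p1_Ro hh.d2]
  have e2 : p2 (p2 (Ro a b h)) =
      kc (-b) * (kc (-b) * Ro a b (p1 (p1 h)) + kc a * Ro a b (p2 (p1 h))) +
      kc a * (kc (-b) * Ro a b (p1 (p2 h)) + kc a * Ro a b (p2 (p2 h))) := by
    rw [p2_Ro hh, p2_add ((smooth_kc _).mul s1) ((smooth_kc a).mul s2), p2_kmul _ s1,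
      p2_kmul _ s2, p2_Ro hh.d1, p2_Ro hh.d2]
  funext t x y
  have f1 := congrFun (congrFun (congrFun e1 t) x) y
  have f2 := congrFun (congrFun (congrFun e2 t) x) y
  simp only [dAlembert] at *
  rw [f1, f2, pt_Ro, pt_Ro]
  simp only [Pi.add_apply, Pi.mul_apply, kc_apply, Ro, dAlembert]
  linear_combination (-(p1 (p1 h) t (x * a - y * b) (x * b + y * a))
    - p2 (p2 h) t (x * a - y * b) (x * b + y * a)) * hab

lemma Wr_Ro (hh : Smooth3 h) (η t r : ℝ) : Wr η (Ro a b h) 1 0 t r = Wr η h a b t r := by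
  simp only [Wr, p1_Ro hh, p2_Ro hh, pt_Ro]
  simp only [Pi.add_apply, Pi.mul_apply, kc_apply, Ro]
  simp only [mul_one, mul_zero, zero_mul, sub_zero, add_zero, one_mul]
end rotation

/-- Along outgoing rays the free solution approaches the Friedlander radiation field of its
data. -/
theorem free_rad {R B : ℝ} {f g : ℝ → ℝ → ℝ} (hf : SmoothCompact2 f) (hg : SmoothCompact2 g)
    (h : FreeB R B (free f g)) {a b : ℝ} (hab : a ^ 2 + b ^ 2 = 1) {σ t : ℝ}
    (ht : tray R σ ≤ t) :
    |Wr 1 (free f g) a b t (t + σ) - dF0 f g σ a b| ≤ 14 * √B / √t := by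
  have hR := h.R0
  set w := Ro a b (free f g) with hw
  have nw : Nice R w := Ro_nice h.nice hab
  obtain ⟨B', hB'⟩ := exists_EB w 0
  have hwf : FreeB R B' w := FreeB.mk' nw hR (by
    rw [hw, dAl_Ro h.nice.smooth hab, h.box]
    rfl) hB'
  obtain ⟨Φ, V, h1, h2, h3, h4⟩ := hwf.rad (a := 1) (b := 0) (by norm_num)
  have hc : Continuous Φ := continuous_iff_continuousAt.2 fun s => (h3 s).continuousAt
  have hid := rad_id hwf hc h2 h4
  have ef : (fun s => Rline f s a b) = Qi w 0 := by
    funext s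
    simp only [Rline, Qi, hw, Ro, free_zero hf]
  have eg : (fun s => Rline g s a b) = Qi (pt w) 0 := by
    funext s
    simp only [Rline, Qi, hw, pt_Ro, Ro, pt_free_zero hf hg]
  have hd : ∀ s, HasDerivAt (Qi w 0) (Qi (p1 w) 0 s) s := fun s => by
    have := Qi_line nw hR 0 0 0 1 s
    simpa using this
  have hz : ∀ s, R < s → Qi w 0 s = 0 := fun s hs =>
    Qi_zero nw (by rw [abs_zero, zero_add]; exact hs.trans_le (le_abs_self s)) hR
  have hF : (fun σ => F0 f g σ a b) = Φ := by
    funext s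
    rw [← hid s, F0, R2_eq, eg]
    have e1 : (fun σ => R2 f σ a b) = fun σ => 1 / (4 * π) * JJ (Qi w 0) σ := by
      funext σ
      rw [R2_eq, ef]
    rw [e1, ((JJ_deriv hd (Qi_cont nw.d1 hR) hz s).const_mul _).deriv]
    have hi : ∀ {v : Fn}, Nice R v → Integrable fun w : ℝ => Qi v 0 (s + w ^ 2 / 2) :=
      fun hv => by
      refine Continuous.integrable_of_hasCompactSupport
        ((Qi_cont hv hR).comp (by fun_prop)) (HasCompactSupport.intro
        (isCompact_Icc (a := -(|R| + |s| + 4)) (b := |R| + |s| + 4)) fun z hz => ?_)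
      refine Qi_zero hv ?_ hR
      rw [abs_zero, zero_add]
      exact (JJ_far (lt_of_not_ge fun h => hz (abs_le.1 h))).trans_le (le_abs_self _)
    have e2 : JJ (fun s => Qi (pt w) 0 s - Qi (p1 w) 0 s) s =
        JJ (Qi (pt w) 0) s - JJ (Qi (p1 w) 0) s := integral_sub (hi nw.dt) (hi nw.d1)
    rw [e2]
    ring
  have hV : dF0 f g σ a b = V σ := by
    rw [dF0, hF, (h3 σ).deriv]
  rw [hV]
  obtain ⟨L, hL, hL'⟩ := h.V_lim hab σ
  have : V σ = L := by
    have hlim : Tendsto (fun t => Wr 1 w 1 0 t (t + σ) - V σ) atTop (𝓝 0) := by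
      refine squeeze_zero_norm' ?_ (tendsto_sqrt_atTop.const_div_atTop (14 * √B'))
      filter_upwards [eventually_ge_atTop (tray R σ)] with t ht
      exact h1 σ t ht
    have h5 := hlim.add_const (V σ)
    simp only [sub_add_cancel, zero_add] at h5
    refine tendsto_nhds_unique h5 (hL.congr fun t => ?_)
    rw [hw, Wr_Ro h.nice.smooth]
  rw [this]
  exact hL' t ht

/-! ### Comparison with the free solution -/

/-- A solution with the uniform control provided by `global_bound`; the decay constant of `∂ₜu` is
`Mε`. -/
structure Good (R K ε κ M : ℝ) (u1 u2 : Fn) : Prop where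
  sol : Sol R u1 u2
  M0 : 0 < M
  Mε : M * ε ≤ 1
  c1 : ∀ T, Ctl R K ε κ T u1
  c2 : ∀ T, Ctl R K ε κ T u2
  bd : ∀ t, 0 ≤ t → ∀ x y, |pt u1 t x y| ≤ M * ε / √(1 + t) ∧ |pt u2 t x y| ≤ M * ε / √(1 + t)

section comparison
variable {R K ε κ M : ℝ} {u v w u1 u2 : Fn}

lemma Good.symm (h : Good R K ε κ M u1 u2) : Good R K ε κ M u2 u1 :=
  ⟨h.sol.symm, h.M0, h.Mε, h.c2, h.c1, fun t ht x y => (h.bd t ht x y).symm⟩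

/-- The constant in the estimate of the difference between the solution and the free solution. -/
def CN (K κ M : ℝ) : ℝ := 500 * M ^ 2 * K / κ

/-- The source is cubic, so a function with vanishing data and source `□u₁` has energies of size
`ε⁶`. -/
lemma diff_energy (h : Good R K ε κ M u1 u2) (a b c : ℝ)
    (he1 : ∀ t, 0 ≤ t → ∀ k ≤ 3, En ((Zf a b c)^[k] u1) t ≤ K ^ 2 * ε ^ 2 * (1 + t) ^ κ)
    (he2 : ∀ t, 0 ≤ t → ∀ k ≤ 3, En ((Zf a b c)^[k] u2) t ≤ K ^ 2 * ε ^ 2 * (1 + t) ^ κ)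
    (hw : Nice R w) (hbox : ∀ t, 0 < t → dAlembert w t = dAlembert u1 t)
    {k : ℕ} (hk : k ≤ 3) (h0 : En ((Zf a b c)^[k] w) 0 ≤ 0) {t : ℝ} (ht : 0 ≤ t) :
    En ((Zf a b c)^[k] w) t ≤ (CN K κ M * ε ^ 3 * (1 + t) ^ κ) ^ 2 := by
  have n := hw.dZk a b c k
  have hκ := (h.c1 0).κ0
  have hκ1 := (h.c1 0).κ1
  have hε := (h.c1 0).ε0
  have hM := h.M0
  set Q := 200000 * M ^ 4 * K ^ 2 * ε ^ 6 / κ with hQ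
  have g := gron (b := Q) hκ (En_deriv n) (T := t) ?_ ht le_rfl (by positivity)
  · refine g.trans ?_
    have l : 0 ≤ (1 + t) ^ κ := Real.rpow_nonneg (by linarith) _
    have e : En ((Zf a b c)^[k] w) 0 + Q / κ * (1 + t) ^ κ ≤ Q / κ * (1 + t) ^ κ := by linarith
    refine (mul_le_mul_of_nonneg_right e l).trans ?_
    have e2 : Q / κ ≤ (CN K κ M * ε ^ 3) ^ 2 := by
      rw [hQ, CN, show (500 * M ^ 2 * K / κ * ε ^ 3) ^ 2
        = 250000 * M ^ 4 * K ^ 2 * ε ^ 6 / κ / κ by field_simp; ring]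
      gcongr; norm_num
    calc Q / κ * (1 + t) ^ κ * (1 + t) ^ κ = Q / κ * ((1 + t) ^ κ) ^ 2 := by ring
      _ ≤ (CN K κ M * ε ^ 3) ^ 2 * ((1 + t) ^ κ) ^ 2 := by gcongr
      _ = _ := by ring
  · intro s hs hst
    have hs1 : 0 < 1 + s := by linarith
    have hsq : 0 < √(1 + s) := sqrt_pos.2 hs1
    have hm0 : 0 < M * ε / √(1 + s) := by positivity
    have hm2 : (M * ε / √(1 + s)) ^ 4 = (M * ε) ^ 4 / (1 + s) ^ 2 := by
      rw [div_pow, show √(1 + s) ^ 4 = (√(1 + s) ^ 2) ^ 2 by ring, sq_sqrt hs1.le]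
    have b1 := Zk_half h.sol a b c hk hs hm0 (fun x y => (h.bd s hs.le x y).1)
      (fun x y => (h.bd s hs.le x y).2)
    rw [(Zfk_pt a b c hw.smooth k).2.2]
    have sl := Zfk_slice a b c (hbox s hs) k
    have y1 := In_young n.dt (hw.dAl.dZk a b c k) (m := κ / (1 + s)) (by positivity) s
    have e1 : In ((Zf a b c)^[k] (dAlembert w) * (Zf a b c)^[k] (dAlembert w)) s
        = In ((Zf a b c)^[k] (dAlembert u1) * (Zf a b c)^[k] (dAlembert u1)) s :=
      In_slice (by funext x y; simp only [Pi.mul_apply, sl])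
    rw [e1] at y1
    refine y1.trans (add_le_add ?_ ?_)
    · have := pt_le_En n s
      gcongr
    · rw [hm2] at b1
      have e2 := add_le_add (he1 s hs.le k hk) (he2 s hs.le k hk)
      have l : 0 < (1 + s) ^ κ := Real.rpow_pos_of_pos (by linarith) _
      have e3 : (1 + s) ^ (κ - 1) ≤ (1 + s) ^ (2 * κ - 1) :=
        Real.rpow_le_rpow_of_exponent_le (by linarith) (by linarith)
      rw [Real.rpow_sub hs1, Real.rpow_one] at e3
      calc _ ≤ (κ / (1 + s))⁻¹ * (100000 * ((M * ε) ^ 4 / (1 + s) ^ 2)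
            * (K ^ 2 * ε ^ 2 * (1 + s) ^ κ + K ^ 2 * ε ^ 2 * (1 + s) ^ κ)) := by
            gcongr
            exact b1.trans (by gcongr)
        _ = Q * ((1 + s) ^ κ / (1 + s)) := by rw [hQ]; field_simp; ring
        _ ≤ _ := by gcongr

/-- A function with vanishing data and the source `□u₁` has outgoing derivative of size `ε³`, up to
powers of `t`. It is applied to the difference of `u₁` and a free solution. -/
lemma Good.diff (h : Good R K ε κ M u1 u2) (hw : Nice R w)
    (hbox : ∀ t, 0 < t → dAlembert w t = dAlembert u1 t) (h0 : EB w 0 0)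
    {a b t r : ℝ} (hab : a ^ 2 + b ^ 2 = 1) (ht : 2 * K ≤ t) (hr : t / 2 ≤ r) :
    |Wr 1 w a b t r| ≤ 6 * √t * (CN K κ M * ε ^ 3 * (1 + t) ^ κ) := by
  have hK := (h.c1 0).K1
  have hR := (h.c1 0).R0
  have hRK := (h.c1 0).RK
  have hκ := (h.c1 0).κ0
  have hε := (h.c1 0).ε0
  have ht0 : 0 < t := by linarith
  have hM := h.M0
  set Q := CN K κ M * ε ^ 3 * (1 + t) ^ κ with hQ
  have hQ0 : 0 ≤ Q := by
    have : 0 ≤ (1 + t) ^ κ := Real.rpow_nonneg (by linarith) _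
    rw [hQ, CN]; positivity
  rcases lt_or_ge (t + R) r with hr2 | hr2
  · rw [Wr_zero hw hR _ (by rwa [abs_of_nonneg ht0.le]) hab, abs_zero]
    positivity
  have z1 : ∀ k ≤ 3, En ((Zf 1 0 0)^[k] w) t ≤ Q ^ 2 := fun k hk =>
    diff_energy h 1 0 0 (fun s hs => ((h.c1 s).eb s hs le_rfl).z1)
      (fun s hs => ((h.c2 s).eb s hs le_rfl).z1) hw hbox hk (h0.z1 k hk) ht0.le
  have z2 : ∀ k ≤ 3, En ((Zf 0 1 0)^[k] w) t ≤ Q ^ 2 := fun k hk =>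
    diff_energy h 0 1 0 (fun s hs => ((h.c1 s).eb s hs le_rfl).z2)
      (fun s hs => ((h.c2 s).eb s hs le_rfl).z2) hw hbox hk (h0.z2 k hk) ht0.le
  have z3 : ∀ k ≤ 3, En ((Zf 0 0 1)^[k] w) t ≤ Q ^ 2 := fun k hk =>
    diff_energy h 0 0 1 (fun s hs => ((h.c1 s).eb s hs le_rfl).z3)
      (fun s hs => ((h.c2 s).eb s hs le_rfl).z3) hw hbox hk (h0.z3 k hk) ht0.le
  have hr0 : 0 < r := by linarith
  obtain ⟨g0, g1, g2⟩ := grad_sup hw z1 z2 (r * a) (r * b)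
  rw [Real.sqrt_sq hQ0] at g0 g1 g2
  have d := polar_decay hw hR ht0.le hr0 hab
  have d1 : En w t ≤ Q ^ 2 := z1 0 (by norm_num)
  have d2 : En (rot w) t ≤ Q ^ 2 := by rw [rot_eq_Zf]; exact z3 1 (by norm_num)
  have d3 : (t + R + 1) / r ≤ 4 := by
    rw [div_le_iff₀ hr0]; linarith
  have d4 : |w t (r * a) (r * b)| ≤ 4 * Q := by
    apply abs_le_of_sq_le_sq _ (by positivity)
    calc _ ≤ 2 * ((t + R + 1) / r) * (En w t + En (rot w) t) := d
      _ ≤ 2 * 4 * (Q ^ 2 + Q ^ 2) := by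
        have := En_nonneg w t
        have := En_nonneg (rot w) t
        gcongr
      _ = (4 * Q) ^ 2 := by ring
  have ha : |a| ≤ 1 := abs_le_of_sq_le_sq (by nlinarith [sq_nonneg b]) (by norm_num)
  have hb : |b| ≤ 1 := abs_le_of_sq_le_sq (by nlinarith [sq_nonneg a]) (by norm_num)
  have q1 : 1 ≤ √r := Real.one_le_sqrt.2 (by linarith)
  have q2 : √r ≤ 3 / 2 * √t := by
    rw [Real.sqrt_le_left (by positivity), mul_pow, Real.sq_sqrt ht0.le]; linarith
  have f1 : |a * p1 w t (r * a) (r * b)| ≤ 2 * Q := by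
    rw [abs_mul]
    calc _ ≤ 1 * (2 * Q) := by gcongr
      _ = _ := one_mul _
  have f2 : |b * p2 w t (r * a) (r * b)| ≤ 2 * Q := by
    rw [abs_mul]
    calc _ ≤ 1 * (2 * Q) := by gcongr
      _ = _ := one_mul _
  have f3 : |a * p1 w t (r * a) (r * b) + b * p2 w t (r * a) (r * b)
      - 1 * pt w t (r * a) (r * b)| ≤ 6 * Q := by
    rw [one_mul]
    refine (abs_sub _ _).trans ?_
    have := abs_add_le (a * p1 w t (r * a) (r * b)) (b * p2 w t (r * a) (r * b))
    linarith
  have f4 : |w t (r * a) (r * b) / (2 * √r)| ≤ 2 * Q * √r := by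
    rw [abs_div, abs_of_nonneg (by positivity : 0 ≤ 2 * √r), div_le_iff₀ (by positivity)]
    have : 1 ≤ √r * √r := by nlinarith
    nlinarith
  unfold Wr
  rw [abs_mul, abs_of_nonneg (by norm_num : (0 : ℝ) ≤ 1 / 2)]
  have f5 := abs_add_le (√r * (a * p1 w t (r * a) (r * b) + b * p2 w t (r * a) (r * b)
      - 1 * pt w t (r * a) (r * b))) (w t (r * a) (r * b) / (2 * √r))
  rw [abs_mul, abs_of_nonneg (Real.sqrt_nonneg r)] at f5
  have f6 := mul_le_mul_of_nonneg_left f3 (Real.sqrt_nonneg r)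
  have f7 := mul_le_mul_of_nonneg_right q2 hQ0
  linarith

end comparison

/-! ### The density along outgoing rays -/

/-- `K_a` at the point with polar coordinates `r`, `(a, b)`. -/
def Kr (va vb : Fn) (a b t r : ℝ) : ℝ :=
  1 / 2 * (√r * pt vb t (r * a) (r * b) ^ 2 * pt va t (r * a) (r * b)
    + 1 / t * Wr 1 vb a b t r ^ 2 * Wr 1 va a b t r) - Lr va a b t r

/-- `ρ` at the point with polar coordinates `r`, `(a, b)`. -/
def rr (v1 v2 : Fn) (a b t r : ℝ) : ℝ :=
  Wr 1 v1 a b t r * Kr v1 v2 a b t r - Wr 1 v2 a b t r * Kr v2 v1 a b t r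

section density
variable {R K ε κ M : ℝ} {u v w u1 u2 : Fn}

/-- `V₁² - V₂²` is a primitive of `2ρ`: the terms with the factor `1/t` cancel. -/
lemma rr_deriv (h : Sol R u1 u2) {a b σ t : ℝ} (hab : a ^ 2 + b ^ 2 = 1) (ht : 0 < t)
    (hr : 0 < t + σ) :
    HasDerivAt (fun s => Wr 1 u1 a b s (s + σ) ^ 2 - Wr 1 u2 a b s (s + σ) ^ 2)
      (2 * rr u1 u2 a b t (t + σ)) t := by
  have d1 := ray_deriv h.n1.smooth (η := 1) (by norm_num) hab (by rwa [one_mul])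
  have d2 := ray_deriv h.n2.smooth (η := 1) (by norm_num) hab (by rwa [one_mul])
  simp only [one_mul] at d1 d2
  refine ((d1.pow 2).sub (d2.pow 2)).congr_deriv ?_
  simp only [Gr_eq, h.e1' ht, h.symm.e1' ht, rr, Kr]
  push_cast
  ring

lemma Wr_cont (hv : Smooth3 v) (a b σ : ℝ) :
    ContinuousOn (fun t => Wr 1 v a b t (t + σ)) (Set.Ioi (-σ)) := by
  have c : ∀ {w : Fn}, Smooth3 w → Continuous fun t => w t ((t + σ) * a) ((t + σ) * b) :=
    fun hw => hw.cont_comp continuous_id (by fun_prop) (by fun_prop)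
  have hq : Continuous fun t : ℝ => √(t + σ) := by fun_prop
  unfold Wr
  refine continuousOn_const.mul (ContinuousOn.add ?_ ?_)
  · exact (hq.mul (((continuous_const.mul (c hv.d1)).add (continuous_const.mul (c hv.d2))).sub
      (continuous_const.mul (c hv.dt)))).continuousOn
  · refine (c hv).continuousOn.div (continuous_const.mul hq).continuousOn fun t ht => ?_
    have : 0 < √(t + σ) := sqrt_pos.2 (by linarith [Set.mem_Ioi.1 ht])
    positivity

lemma Kr_cont (hu : Smooth3 u) (hv : Smooth3 v) (a b σ : ℝ) :
    ContinuousOn (fun t => Kr u v a b t (t + σ)) (Set.Ioi (-σ) ∩ Set.Ioi 0) := by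
  have c : ∀ {w : Fn}, Smooth3 w → Continuous fun t => w t ((t + σ) * a) ((t + σ) * b) :=
    fun hw => hw.cont_comp continuous_id (by fun_prop) (by fun_prop)
  have hq : Continuous fun t : ℝ => √(t + σ) := by fun_prop
  unfold Kr Lr
  refine (continuousOn_const.mul (ContinuousOn.add ?_ ?_)).sub (ContinuousOn.mul ?_ ?_)
  · exact ((hq.mul ((c hv.dt).pow 2)).mul (c hu.dt)).continuousOn
  · refine (ContinuousOn.mul ?_ (((Wr_cont hv a b σ).mono Set.inter_subset_left).pow 2)).mul
      ((Wr_cont hu a b σ).mono Set.inter_subset_left)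
    exact continuousOn_const.div continuousOn_id fun t ht => ne_of_gt ht.2
  · refine continuousOn_const.div (continuous_const.mul (hq.pow 3)).continuousOn fun t ht => ?_
    have : 0 < √(t + σ) := sqrt_pos.2 (by linarith [Set.mem_Ioi.1 ht.1])
    positivity
  · exact ((c hu.dO.dO).add ((c hu).div_const 4)).continuousOn

lemma rr_cont (hu : Smooth3 u) (hv : Smooth3 v) (a b σ : ℝ) :
    ContinuousOn (fun t => rr u v a b t (t + σ)) (Set.Ioi (-σ) ∩ Set.Ioi 0) := by
  unfold rr
  exact (((Wr_cont hu a b σ).mono Set.inter_subset_left).mul (Kr_cont hu hv a b σ)).sub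
    (((Wr_cont hv a b σ).mono Set.inter_subset_left).mul (Kr_cont hv hu a b σ))

lemma rr_zero (h : Sol R u1 u2) (hR : 0 ≤ R) {a b t r : ℝ} (hab : a ^ 2 + b ^ 2 = 1)
    (hr : |t| + R < r) : rr u1 u2 a b t r = 0 := by
  simp [rr, Wr_zero h.n1 hR _ hr hab, Wr_zero h.n2 hR _ hr hab]

/-- The constant in front of `ε⁴` in the estimate of `ρ`. -/
def C4 (K M : ℝ) : ℝ := 12 * K ^ 2 * M ^ 2 * CV K

/-- In `ρ` the quartic terms combine to `½∂ₜu₁∂ₜu₂(V₁X₂ - V₂X₁)` with the rapidly decaying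
incoming derivatives `X_j`. -/
lemma rr_le (h : Good R K ε κ M u1 u2) {a b t σ : ℝ} (hab : a ^ 2 + b ^ 2 = 1) (ht : 2 * K ≤ t)
    (hσ : -2 * σ ≤ t) :
    |rr u1 u2 a b t (t + σ)| ≤ C4 K M * ε ^ 4 * ((1 + |σ|) / (1 + t) ^ 2)
      + 42 * K * CV K * ε ^ 2 * (1 + t) ^ (κ / 2 - 3 / 2) := by
  have hK := (h.c1 0).K1
  have hε := (h.c1 0).ε0
  have hM := h.M0
  have hr : t / 2 ≤ t + σ := by linarith
  have hM0 : 0 ≤ M * ε := by positivity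
  have hCV : 0 < CV K := by unfold CV; positivity
  obtain ⟨v1, v2⟩ := V_bound h.sol (h.c1 t) (h.c2 t) hM0 h.Mε (fun s hs _ => h.bd s hs)
    hab ht le_rfl hr
  have x1 := (h.c1 t).inc hab ht le_rfl hr
  have x2 := (h.c2 t).inc hab ht le_rfl hr
  have l1 := Lr_le (h.c1 t) hab ht le_rfl hr
  have l2 := Lr_le (h.c2 t) hab ht le_rfl hr
  obtain ⟨q1, q2⟩ := h.bd t (by linarith) ((t + σ) * a) ((t + σ) * b)
  have s1 := Wr_sub u1 a b t (t + σ)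
  have s2 := Wr_sub u2 a b t (t + σ)
  rw [add_sub_cancel_left] at x1 x2
  set V1 := Wr 1 u1 a b t (t + σ)
  set V2 := Wr 1 u2 a b t (t + σ)
  set X1 := Wr (-1) u1 a b t (t + σ)
  set X2 := Wr (-1) u2 a b t (t + σ)
  set L1 := Lr u1 a b t (t + σ)
  set L2 := Lr u2 a b t (t + σ)
  set p := pt u1 t ((t + σ) * a) ((t + σ) * b) with hp
  set q := pt u2 t ((t + σ) * a) ((t + σ) * b) with hq
  have e : rr u1 u2 a b t (t + σ) = 1 / 2 * (p * q) * (V1 * X2 - V2 * X1) - V1 * L1 + V2 * L2 := by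
    have : rr u1 u2 a b t (t + σ) = 1 / 2 * (p * q) * (V1 * (√(t + σ) * q) - V2 * (√(t + σ) * p))
        - V1 * L1 + V2 * L2 := by
      simp only [rr, Kr]; ring
    rw [this, ← s1, ← s2]; ring
  rw [e]
  have ht1 : 0 < 1 + t := by linarith
  have hs : 0 < √(1 + t) := sqrt_pos.2 ht1
  set S := (1 + t) ^ (κ / 2 - 3 / 2)
  have hS : 0 < S := Real.rpow_pos_of_pos ht1 _
  have hσ0 := abs_nonneg σ
  have a1 : |p * q| ≤ M ^ 2 * ε ^ 2 / (1 + t) := by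
    rw [abs_mul]
    calc |p| * |q| ≤ M * ε / √(1 + t) * (M * ε / √(1 + t)) := by gcongr
      _ = M ^ 2 * ε ^ 2 / √(1 + t) ^ 2 := by field_simp
      _ = _ := by rw [sq_sqrt ht1.le]
  have a2 : ∀ {V X : ℝ}, |V| ≤ CV K * ε → |X| ≤ 12 * K ^ 2 * ε * (1 + |σ|) / (1 + t) →
      |V * X| ≤ CV K * ε * (12 * K ^ 2 * ε * (1 + |σ|) / (1 + t)) := by
    intro V X hV hX
    rw [abs_mul]; gcongr
  have a3 : ∀ {V L : ℝ}, |V| ≤ CV K * ε → |L| ≤ 21 * K * ε * S →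
      |V * L| ≤ CV K * ε * (21 * K * ε * S) := by
    intro V X hV hX
    rw [abs_mul]; gcongr
  have b1 : |1 / 2 * (p * q) * (V1 * X2 - V2 * X1)| ≤ 1 / 2 * (M ^ 2 * ε ^ 2 / (1 + t))
      * (2 * (CV K * ε * (12 * K ^ 2 * ε * (1 + |σ|) / (1 + t)))) := by
    rw [abs_mul, abs_mul, abs_of_pos (by norm_num : (0 : ℝ) < 1 / 2)]
    have : |V1 * X2 - V2 * X1| ≤ 2 * (CV K * ε * (12 * K ^ 2 * ε * (1 + |σ|) / (1 + t))) := by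
      have := abs_sub (V1 * X2) (V2 * X1)
      have := a2 v1 x2
      have := a2 v2 x1
      linarith
    gcongr
  have b2 : 1 / 2 * (M ^ 2 * ε ^ 2 / (1 + t))
      * (2 * (CV K * ε * (12 * K ^ 2 * ε * (1 + |σ|) / (1 + t))))
      = C4 K M * ε ^ 4 * ((1 + |σ|) / (1 + t) ^ 2) := by
    unfold C4; field_simp
  have b3 := a3 v1 l1
  have b4 := a3 v2 l2
  have b5 := abs_add_le (1 / 2 * (p * q) * (V1 * X2 - V2 * X1) - V1 * L1) (V2 * L2)
  have b6 := abs_sub (1 / 2 * (p * q) * (V1 * X2 - V2 * X1)) (V1 * L1)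
  linarith

/-- Far out on each ray, `ρ` is integrable, with a small integral. -/
lemma rr_tail (h : Good R K ε κ M u1 u2) {a b T σ : ℝ} (hab : a ^ 2 + b ^ 2 = 1) (hT : 2 * K ≤ T)
    (hσ : -2 * σ ≤ T) :
    IntegrableOn (fun t => rr u1 u2 a b t (t + σ)) (Set.Ioi T) ∧
    |∫ t in Set.Ioi T, rr u1 u2 a b t (t + σ)| ≤ C4 K M * ε ^ 4
      + 168 * K * CV K * ε ^ 2 * (1 + T) ^ (κ / 2 - 1 / 2) := by
  have hK := (h.c1 0).K1
  have hε := (h.c1 0).ε0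
  have hR := (h.c1 0).R0
  have hRK := (h.c1 0).RK
  have hκ := (h.c1 0).κ0
  have hκ1 := (h.c1 0).κ1
  have hM := h.M0
  have hCV : 0 < CV K := by unfold CV; positivity
  have hC4 : 0 < C4 K M := by unfold C4; positivity
  have hT1 : 0 < 1 + T := by linarith
  have hp : 0 < (1 + T) ^ (κ / 2 - 1 / 2) := Real.rpow_pos_of_pos hT1 _
  rcases lt_or_ge R σ with hσ2 | hσ2
  · have hz : Set.EqOn (fun t => rr u1 u2 a b t (t + σ)) (fun _ => 0) (Set.Ioi T) := by
      intro t ht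
      have ht := Set.mem_Ioi.1 ht
      exact rr_zero h.sol hR hab (by rw [abs_of_nonneg (by linarith)]; linarith)
    refine ⟨integrableOn_zero.congr_fun hz.symm measurableSet_Ioi, ?_⟩
    rw [setIntegral_congr_fun measurableSet_Ioi hz]
    simp only [integral_zero, abs_zero]
    positivity
  have hσT : |σ| ≤ T := abs_le.2 ⟨by linarith, by linarith⟩
  -- explicit primitives of the two terms in the bound for `ρ`
  have i1 : IntegrableOn (fun t : ℝ => (1 + t) ^ (-2 : ℝ)) (Set.Ioi T) ∧
      ∫ t in Set.Ioi T, (1 + t) ^ (-2 : ℝ) = (1 + T)⁻¹ := by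
    have A := integrableOn_Ioi_rpow_of_lt (by norm_num : (-2 : ℝ) < -1) hT1
    have B := integral_Ioi_rpow_of_lt (by norm_num : (-2 : ℝ) < -1) hT1
    have hm : MeasurePreserving (fun t : ℝ => 1 + t) volume volume :=
      measurePreserving_add_left volume 1
    have hme : MeasurableEmbedding (fun t : ℝ => 1 + t) := measurableEmbedding_addLeft 1
    have pre : (fun t : ℝ => 1 + t) ⁻¹' Set.Ioi (1 + T) = Set.Ioi T := by ext x; simp
    constructor
    · have := (hm.integrableOn_comp_preimage hme).2 A
      rwa [pre] at this
    · have := hm.setIntegral_preimage_emb hme (fun x => x ^ (-2 : ℝ)) (Set.Ioi (1 + T))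
      rw [pre] at this
      rw [this, B]
      norm_num [Real.rpow_neg_one]
  have i2 : IntegrableOn (fun t : ℝ => (1 + t) ^ (κ / 2 - 3 / 2)) (Set.Ioi T) ∧
      ∫ t in Set.Ioi T, (1 + t) ^ (κ / 2 - 3 / 2) ≤ 4 * (1 + T) ^ (κ / 2 - 1 / 2) := by
    have A := integrableOn_Ioi_rpow_of_lt (by linarith : κ / 2 - 3 / 2 < -1) hT1
    have B := integral_Ioi_rpow_of_lt (by linarith : κ / 2 - 3 / 2 < -1) hT1
    have hm : MeasurePreserving (fun t : ℝ => 1 + t) volume volume :=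
      measurePreserving_add_left volume 1
    have hme : MeasurableEmbedding (fun t : ℝ => 1 + t) := measurableEmbedding_addLeft 1
    have pre : (fun t : ℝ => 1 + t) ⁻¹' Set.Ioi (1 + T) = Set.Ioi T := by ext x; simp
    constructor
    · have := (hm.integrableOn_comp_preimage hme).2 A
      rwa [pre] at this
    · have := hm.setIntegral_preimage_emb hme (fun x => x ^ (κ / 2 - 3 / 2)) (Set.Ioi (1 + T))
      rw [pre] at this
      rw [this, B, show κ / 2 - 3 / 2 + 1 = -(1 / 2 - κ / 2) by ring,
        show κ / 2 - 1 / 2 = -(1 / 2 - κ / 2) by ring, div_neg, neg_div, neg_neg,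
        div_le_iff₀ (by linarith)]
      rw [show κ / 2 - 1 / 2 = -(1 / 2 - κ / 2) by ring] at hp
      nlinarith
  set G : ℝ → ℝ := fun t => C4 K M * ε ^ 4 * (1 + |σ|) * (1 + t) ^ (-2 : ℝ)
    + 42 * K * CV K * ε ^ 2 * (1 + t) ^ (κ / 2 - 3 / 2) with hG
  have j1 := i1.1.const_mul (C4 K M * ε ^ 4 * (1 + |σ|))
  have j2 := i2.1.const_mul (42 * K * CV K * ε ^ 2)
  have hGi : IntegrableOn G (Set.Ioi T) := j1.add j2
  have hb : ∀ t ∈ Set.Ioi T, ‖rr u1 u2 a b t (t + σ)‖ ≤ G t := by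
    intro t ht
    have ht := Set.mem_Ioi.1 ht
    have := rr_le h hab (by linarith : 2 * K ≤ t) (by linarith : -2 * σ ≤ t)
    rw [Real.norm_eq_abs]
    refine this.trans (le_of_eq ?_)
    simp only [hG]
    rw [Real.rpow_neg (by linarith), Real.rpow_two]
    ring
  have hae : ∀ᵐ t ∂(volume.restrict (Set.Ioi T)), ‖rr u1 u2 a b t (t + σ)‖ ≤ G t :=
    (ae_restrict_mem measurableSet_Ioi).mono hb
  have hmeas : AEStronglyMeasurable (fun t => rr u1 u2 a b t (t + σ))
      (volume.restrict (Set.Ioi T)) := by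
    refine ((rr_cont h.sol.n1.smooth h.sol.n2.smooth a b σ).mono ?_).aestronglyMeasurable
      measurableSet_Ioi
    intro t ht
    have ht := Set.mem_Ioi.1 ht
    exact ⟨Set.mem_Ioi.2 (by linarith), Set.mem_Ioi.2 (by linarith)⟩
  refine ⟨Integrable.mono' hGi hmeas hae, ?_⟩
  have k1 := norm_integral_le_of_norm_le hGi hae
  rw [Real.norm_eq_abs] at k1
  refine k1.trans ?_
  have k2 : ∫ t in Set.Ioi T, G t = C4 K M * ε ^ 4 * (1 + |σ|) * (1 + T)⁻¹
      + 42 * K * CV K * ε ^ 2 * ∫ t in Set.Ioi T, (1 + t) ^ (κ / 2 - 3 / 2) := by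
    rw [hG, integral_add j1 j2, integral_const_mul, integral_const_mul, i1.2]
  rw [k2]
  have k3 : C4 K M * ε ^ 4 * (1 + |σ|) * (1 + T)⁻¹ ≤ C4 K M * ε ^ 4 := by
    rw [← div_eq_mul_inv, div_le_iff₀ hT1]
    gcongr
  have k4 := mul_le_mul_of_nonneg_left i2.2 (by positivity : 0 ≤ 42 * K * CV K * ε ^ 2)
  linarith

/-- The quantity `m(σ,ω)` can be computed from any later starting time. -/
lemma m_shift (h : Good R K ε κ M u1 u2) {a b T t0 σ : ℝ} (hab : a ^ 2 + b ^ 2 = 1)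
    (ht0 : 0 < t0) (hσ : -2 * σ ≤ t0) (hT0 : t0 ≤ T) (hT : 2 * K ≤ T) :
    IntegrableOn (fun t => rr u1 u2 a b t (t + σ)) (Set.Ioi t0) ∧
    Wr 1 u1 a b t0 (t0 + σ) ^ 2 - Wr 1 u2 a b t0 (t0 + σ) ^ 2
        + 2 * ∫ t in Set.Ioi t0, rr u1 u2 a b t (t + σ)
      = Wr 1 u1 a b T (T + σ) ^ 2 - Wr 1 u2 a b T (T + σ) ^ 2
        + 2 * ∫ t in Set.Ioi T, rr u1 u2 a b t (t + σ) := by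
  have tl := (rr_tail h hab hT (by linarith : -2 * σ ≤ T)).1
  have hc : ContinuousOn (fun t => rr u1 u2 a b t (t + σ)) (Set.Icc t0 T) :=
    (rr_cont h.sol.n1.smooth h.sol.n2.smooth a b σ).mono fun t ht =>
      ⟨Set.mem_Ioi.2 (by linarith [ht.1]), Set.mem_Ioi.2 (by linarith [ht.1])⟩
  have hI : IntegrableOn (fun t => rr u1 u2 a b t (t + σ)) (Set.Ioi t0) := by
    rw [← Set.Ioc_union_Ioi_eq_Ioi hT0]
    exact (hc.integrableOn_Icc.mono_set Set.Ioc_subset_Icc_self).union tl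
  refine ⟨hI, ?_⟩
  have hii : IntervalIntegrable (fun t => rr u1 u2 a b t (t + σ)) volume t0 T :=
    (hc.mono (by rw [Set.uIcc_of_le hT0])).intervalIntegrable
  have e1 := intervalIntegral.integral_interval_add_Ioi hI tl
  have e2 := intervalIntegral.integral_eq_sub_of_hasDerivAt (a := t0) (b := T)
    (f := fun s => Wr 1 u1 a b s (s + σ) ^ 2 - Wr 1 u2 a b s (s + σ) ^ 2)
    (f' := fun t => 2 * rr u1 u2 a b t (t + σ)) (fun t ht => by
      rw [Set.uIcc_of_le hT0] at ht
      exact rr_deriv h.sol hab (by linarith [ht.1]) (by linarith [ht.1])) (hii.const_mul 2)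
  rw [intervalIntegral.integral_const_mul] at e2
  rw [← e1]
  linarith

/-- On the boundary `r = t/2` of the exterior region the outgoing derivative decays, up to a
contribution of the source. -/
lemma far_le (h : ∀ T, Ctl R K ε κ T v) {N : ℝ} (hN0 : 0 ≤ N)
    (hN : ∀ t, 0 < t → ∀ x y, |dAlembert v t x y| ≤ N / √(1 + t) ^ 3)
    {a b t : ℝ} (hab : a ^ 2 + b ^ 2 = 1) (ht : 2 * K ≤ t) :
    |Wr 1 v a b t (t / 2)| ≤ 300 * K ^ 3 * (N + ε * (1 + t) ^ ((4 * κ - 1) / 8)) := by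
  have hK := (h t).K1
  have hε := (h t).ε0
  have hR := (h t).R0
  have hRK := (h t).RK
  have hκ := (h t).κ0
  have hκ1 := (h t).κ1
  have ht0 : 0 < t := by linarith
  have ht1 : 0 < 1 + t := by linarith
  set D := (1 + t) ^ ((4 * κ - 1) / 8) with hD
  have hD0 : 0 < D := Real.rpow_pos_of_pos ht1 _
  -- the time derivative
  have A : √(t / 2) * |pt v t (t / 2 * a) (t / 2 * b)| ≤ 240 * K ^ 3 * ε * D := by
    have n := (h t).near (by linarith : 1 ≤ t) le_rfl
      (x := t / 2 * a) (y := t / 2 * b) (le_of_eq (by linear_combination t ^ 2 / 4 * hab))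
    have e : ((1 + t) ^ κ) ^ 4 = D ^ 8 * (1 + t) := by
      rw [hD, ← Real.rpow_natCast, ← Real.rpow_natCast, ← Real.rpow_mul ht1.le,
        ← Real.rpow_mul ht1.le, ← Real.rpow_add_one ht1.ne']
      congr 1; push_cast; ring
    rw [e, ← mul_assoc, ← mul_pow] at n
    have n2 := abs_le_of_pow8 (by positivity) (le_of_mul_le_mul_right n ht1)
    rw [abs_mul, abs_of_nonneg (Real.sqrt_nonneg _)] at n2
    refine le_trans ?_ n2
    gcongr
    linarith
  -- the incoming derivative
  have B : |Wr (-1) v a b t (t / 2)| ≤ 32 * K * (N + ε * D) := by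
    have hN' : ∀ τ, t / 2 ≤ τ → τ ≤ t → ∀ x y,
        |dAlembert v τ x y| ≤ N / √(1 + t / 2) ^ 3 := by
      intro τ h1 h2 x y
      refine (hN τ (by linarith) x y).trans ?_
      have : √(1 + t / 2) ≤ √(1 + τ) := Real.sqrt_le_sqrt (by linarith)
      have : 0 < √(1 + t / 2) := Real.sqrt_pos.2 (by linarith)
      gcongr
    have hB : ∀ τ, t / 2 ≤ τ → τ ≤ t → EB v τ (K ^ 2 * ε ^ 2 * (1 + t) ^ κ) := by
      intro τ h1 h2
      refine ((h t).eb τ (by linarith) h2).mono ?_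
      have : (1 + τ) ^ κ ≤ (1 + t) ^ κ :=
        Real.rpow_le_rpow (by linarith) (by linarith) hκ.le
      gcongr
    refine (inc_bound (h t).nice hR hab (by linarith) le_rfl (by linarith) hB hN').trans ?_
    have e1 := grow_div (h t) (by linarith : 2 ≤ t)
    have e2 : (1 + t) ^ (κ / 2 - 3 / 2) ≤ D / (1 + t) := by
      rw [hD, ← Real.rpow_sub_one ht1.ne']
      exact Real.rpow_le_rpow_of_exponent_le (by linarith) (by linarith)
    have e3 : √(2 * t) / 2 * (N / √(1 + t / 2) ^ 3) ≤ 2 * N / (1 + t) := by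
      have a1 : √(2 * t) ≤ 2 * √(1 + t / 2) := by
        rw [show 2 * t = 2 ^ 2 * (t / 2) by ring, Real.sqrt_mul (by norm_num),
          Real.sqrt_sq (by norm_num)]
        have : √(t / 2) ≤ √(1 + t / 2) := Real.sqrt_le_sqrt (by linarith)
        linarith
      have q : 0 < √(1 + t / 2) := Real.sqrt_pos.2 (by linarith)
      have qq : √(1 + t / 2) ^ 2 = 1 + t / 2 := Real.sq_sqrt (by linarith)
      calc √(2 * t) / 2 * (N / √(1 + t / 2) ^ 3)
          ≤ (2 * √(1 + t / 2)) / 2 * (N / √(1 + t / 2) ^ 3) := by gcongr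
        _ = N / (√(1 + t / 2)) ^ 2 := by field_simp
        _ ≤ 2 * N / (1 + t) := by
          rw [qq, div_le_div_iff₀ (by linarith) (by linarith)]
          nlinarith
    have e4 : √(2 * t) / 2 * (N / √(1 + t / 2) ^ 3)
        + 7 * √(K ^ 2 * ε ^ 2 * (1 + t) ^ κ) / (t * √t) ≤ 21 * K * (N + ε * D) / (1 + t) := by
      have : 21 * K * ε * (1 + t) ^ (κ / 2 - 3 / 2) ≤ 21 * K * ε * (D / (1 + t)) := by gcongr
      have : 2 * N / (1 + t) ≤ 21 * K * N / (1 + t) := by gcongr; linarith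
      have : 21 * K * (N + ε * D) / (1 + t)
          = 21 * K * N / (1 + t) + 21 * K * ε * (D / (1 + t)) := by ring
      linarith
    have e5 : (R + 1 + t - t / 2) / 2 ≤ 1 + t := by linarith
    have e6 : 0 ≤ (R + 1 + t - t / 2) / 2 := by linarith
    calc _ ≤ (R + 1 + t - t / 2) / 2 * (21 * K * (N + ε * D) / (1 + t)) := by gcongr
      _ ≤ (1 + t) * (21 * K * (N + ε * D) / (1 + t)) := by gcongr
      _ = 21 * K * (N + ε * D) := by field_simp
      _ ≤ _ := by gcongr; norm_num
  have s := Wr_sub v a b t (t / 2)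
  have e : Wr 1 v a b t (t / 2) = Wr (-1) v a b t (t / 2)
      - √(t / 2) * pt v t (t / 2 * a) (t / 2 * b) := by rw [← s]; ring
  rw [e]
  refine (abs_sub _ _).trans ?_
  rw [abs_mul, abs_of_nonneg (Real.sqrt_nonneg _)]
  have k3 : K ≤ K ^ 3 := le_self_pow₀ hK (by norm_num)
  have k4 : 32 * K * (N + ε * D) ≤ 32 * K ^ 3 * (N + ε * D) := by gcongr
  have k5 : 0 ≤ K ^ 3 * N := by positivity
  have k6 : 0 ≤ K ^ 3 * (ε * D) := by positivity
  linarith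

end density

/-! ### The size of `m` -/

section size
variable {R B K ε κ M : ℝ} {f g f1 f2 g1 g2 : ℝ → ℝ → ℝ} {u v w u1 u2 v1 v2 : Fn}

lemma FreeB.ctl (h : FreeB R B v) (hRK : R + 1 ≤ K) (hB : 4 * B ≤ K ^ 2) (hκ : 0 < κ)
    (hκ1 : κ ≤ 1 / 4) (T : ℝ) : Ctl R K 1 κ T v := by
  refine ⟨h.nice, h.R0, hRK, one_pos, hκ, hκ1, fun t ht _ => (h.eb t).mono ?_,
    fun t ht _ x y => ?_, fun t ht _ => ?_⟩
  · have : 1 ≤ (1 + t) ^ κ := Real.one_le_rpow (by linarith) hκ.le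
    have := (h.eb t).nonneg
    nlinarith [sq_nonneg K]
  · rw [h.box]
    simp only [Pi.zero_apply, abs_zero]
    positivity
  · have : In (dAlembert v * dAlembert v) t = 0 := by simp [In, h.box]
    rw [this, mul_zero]
    have : 0 < (1 + t) ^ κ := Real.rpow_pos_of_pos (by linarith) _
    positivity

lemma Wr_sub_kmul (hv : Smooth3 v) (hu : Smooth3 u) (k η a b t r : ℝ) :
    Wr η (v - kc k * u) a b t r = Wr η v a b t r - k * Wr η u a b t r := by
  have hku : Smooth3 (kc k * u) := (smooth_kc k).mul hu
  simp only [Wr, p1_sub hv hku, p2_sub hv hku, pt_sub hv hku, p1_kmul k hu, p2_kmul k hu,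
    pt_kmul k hu, Pi.sub_apply, Pi.mul_apply, kc_apply]
  ring

/-- The constant in the comparison of `V` with `ε` times the derivative of the radiation field. -/
def C1 (K κ M B : ℝ) : ℝ := 36 * CN K κ M + 14 * √B

/-- At time `2ε⁻²` the solution has not yet departed from the free solution, which in turn is
already close to its radiation field. -/
lemma Good.mid (h : Good R K ε κ M v1 v2) (hε1 : ε < 1) (hf : SmoothCompact2 f)
    (hg : SmoothCompact2 g) (hF : FreeB R B (free f g)) (h0 : EB (v1 - kc ε * free f g) 0 0)
    {a b σ : ℝ} (hab : a ^ 2 + b ^ 2 = 1) (hT : 2 * K ≤ 2 / ε ^ 2) (hσ : -2 * σ ≤ 2 / ε ^ 2) :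
    |Wr 1 v1 a b (2 / ε ^ 2) (2 / ε ^ 2 + σ) - ε * dF0 f g σ a b|
      ≤ C1 K κ M B * ε ^ 2 * ε ^ (-(2 * κ)) := by
  have hK := (h.c1 0).K1
  have hε := (h.c1 0).ε0
  have hR := (h.c1 0).R0
  have hRK := (h.c1 0).RK
  have hκ := (h.c1 0).κ0
  have hκ1 := (h.c1 0).κ1
  have hM := h.M0
  set φ := free f g with hφ
  have hk : Nice R (kc ε * φ) := hF.nice.kmul ε
  have hbox : ∀ t, 0 < t → dAlembert (v1 - kc ε * φ) t = dAlembert v1 t := by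
    intro t _
    rw [dAl_sub h.sol.n1.smooth hk.smooth, dAl_kmul ε hF.nice.smooth, hF.box]
    simp
  have e1 := h.diff (h.sol.n1.sub hk) hbox h0 hab hT (r := 2 / ε ^ 2 + σ) (by linarith)
  rw [Wr_sub_kmul h.sol.n1.smooth hF.nice.smooth] at e1
  have e2 := free_rad hf hg hF hab (σ := σ) (t := 2 / ε ^ 2)
    (max_le (by linarith) hσ)
  have hε2 : ε ^ 2 < 1 := by nlinarith
  set Z := ε ^ (-(2 * κ)) with hZ
  have hZ1 : 1 ≤ Z := Real.one_le_rpow_of_pos_of_le_one_of_nonpos hε hε1.le (by linarith)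
  have s1 : √(2 / ε ^ 2) ≤ 2 / ε := by
    rw [Real.sqrt_le_left (by positivity), div_pow]
    gcongr
    norm_num
  have s2 : 1 / ε ≤ √(2 / ε ^ 2) := by
    apply Real.le_sqrt_of_sq_le
    rw [div_pow]
    gcongr
    norm_num
  have s3 : (1 + 2 / ε ^ 2) ^ κ ≤ 3 * Z := by
    have l : 1 + 2 / ε ^ 2 ≤ 3 * ε ^ (-2 : ℝ) := by
      rw [Real.rpow_neg hε.le, Real.rpow_two, ← div_eq_mul_inv]
      have : 1 ≤ 1 / ε ^ 2 := by rw [le_div_iff₀ (by positivity)]; linarith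
      have e : 3 / ε ^ 2 = 1 / ε ^ 2 + 2 / ε ^ 2 := by ring
      linarith
    calc (1 + 2 / ε ^ 2) ^ κ ≤ (3 * ε ^ (-2 : ℝ)) ^ κ :=
          Real.rpow_le_rpow (by positivity) l hκ.le
      _ = 3 ^ κ * Z := by
          rw [Real.mul_rpow (by norm_num) (Real.rpow_nonneg hε.le _), ← Real.rpow_mul hε.le, hZ]
          congr 2; ring
      _ ≤ 3 ^ (1 : ℝ) * Z := by
          have : (3 : ℝ) ^ κ ≤ 3 ^ (1 : ℝ) :=
            Real.rpow_le_rpow_of_exponent_le (by norm_num) (by linarith)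
          gcongr
      _ = _ := by rw [Real.rpow_one]
  have hN : 0 < CN K κ M := by unfold CN; positivity
  have e3 : |Wr 1 v1 a b (2 / ε ^ 2) (2 / ε ^ 2 + σ)
      - ε * Wr 1 φ a b (2 / ε ^ 2) (2 / ε ^ 2 + σ)| ≤ 36 * CN K κ M * ε ^ 2 * Z := by
    refine e1.trans ?_
    calc _ ≤ 6 * (2 / ε) * (CN K κ M * ε ^ 3 * (3 * Z)) := by gcongr
      _ = _ := by field_simp; ring
  have e4 : ε * |Wr 1 φ a b (2 / ε ^ 2) (2 / ε ^ 2 + σ) - dF0 f g σ a b|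
      ≤ 14 * √B * ε ^ 2 * Z := by
    have : 14 * √B / √(2 / ε ^ 2) ≤ 14 * √B * ε := by
      rw [div_le_iff₀ (lt_of_lt_of_le (by positivity) s2)]
      have : 1 ≤ ε * √(2 / ε ^ 2) := by
        rw [div_le_iff₀ hε] at s2; linarith
      have := mul_le_mul_of_nonneg_left this (by positivity : 0 ≤ 14 * √B)
      linarith
    calc _ ≤ ε * (14 * √B * ε) := by gcongr; exact e2.trans this
      _ = 14 * √B * ε ^ 2 * 1 := by ring
      _ ≤ _ := by gcongr
  have e5 : Wr 1 v1 a b (2 / ε ^ 2) (2 / ε ^ 2 + σ) - ε * dF0 f g σ a b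
      = (Wr 1 v1 a b (2 / ε ^ 2) (2 / ε ^ 2 + σ) - ε * Wr 1 φ a b (2 / ε ^ 2) (2 / ε ^ 2 + σ))
        + ε * (Wr 1 φ a b (2 / ε ^ 2) (2 / ε ^ 2 + σ) - dF0 f g σ a b) := by ring
  rw [e5]
  refine (abs_add_le _ _).trans ?_
  rw [abs_mul, abs_of_pos hε, C1]
  linarith

lemma sq_close {V d ε c C z : ℝ} (hε : 0 < ε) (hC : 0 ≤ C) (hz0 : 0 ≤ z) (hz : ε * z ≤ 1)
    (hV : |V| ≤ c * ε) (h : |V - ε * d| ≤ C * ε ^ 2 * z) :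
    |V ^ 2 - ε ^ 2 * d ^ 2| ≤ C * (2 * c + C) * (ε ^ 3 * z) := by
  have e : V ^ 2 - ε ^ 2 * d ^ 2 = (V - ε * d) * (2 * V - (V - ε * d)) := by ring
  have h1 : |2 * V - (V - ε * d)| ≤ (2 * c + C) * ε := by
    refine (abs_sub _ _).trans ?_
    rw [abs_mul, abs_of_pos (by norm_num : (0 : ℝ) < 2)]
    have : C * ε ^ 2 * z ≤ C * ε := by
      have := mul_le_mul_of_nonneg_left hz (by positivity : 0 ≤ C * ε)
      linarith
    linarith
  rw [e, abs_mul]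
  calc _ ≤ C * ε ^ 2 * z * ((2 * c + C) * ε) := by gcongr
    _ = _ := by ring

lemma tail_small (h : Good R K ε κ M u1 u2) (hε1 : ε < 1) {μ : ℝ} (hμ : κ ≤ μ) {a b T σ : ℝ}
    (hab : a ^ 2 + b ^ 2 = 1) (hT : 2 * K ≤ T) (hσ : -2 * σ ≤ T) (hTε : 2 / ε ^ 2 ≤ T) :
    |∫ t in Set.Ioi T, rr u1 u2 a b t (t + σ)|
      ≤ (C4 K M + 168 * K * CV K) * ε ^ ((5 : ℝ) / 2 - 2 * μ) := by
  have hK := (h.c1 0).K1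
  have hε := (h.c1 0).ε0
  have hκ := (h.c1 0).κ0
  have hκ1 := (h.c1 0).κ1
  have hM := h.M0
  have hCV : 0 < CV K := by unfold CV; positivity
  have hC4 : 0 < C4 K M := by unfold C4; positivity
  refine (rr_tail h hab hT hσ).2.trans ?_
  have a1 : ε ^ 4 ≤ ε ^ ((5 : ℝ) / 2 - 2 * μ) := by
    rw [← Real.rpow_natCast]
    exact Real.rpow_le_rpow_of_exponent_ge hε hε1.le (by push_cast; linarith)
  have a2 : ε ^ 2 * (1 + T) ^ (κ / 2 - 1 / 2) ≤ ε ^ ((5 : ℝ) / 2 - 2 * μ) := by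
    have l : ε ^ (-2 : ℝ) ≤ 1 + T := by
      rw [Real.rpow_neg hε.le, Real.rpow_two, ← one_div]
      have : 1 / ε ^ 2 ≤ 2 / ε ^ 2 := by gcongr; norm_num
      linarith
    have l2 : (1 + T) ^ (κ / 2 - 1 / 2) ≤ (ε ^ (-2 : ℝ)) ^ (κ / 2 - 1 / 2) :=
      Real.rpow_le_rpow_of_nonpos (Real.rpow_pos_of_pos hε _) l (by linarith)
    rw [← Real.rpow_mul hε.le] at l2
    calc _ ≤ ε ^ 2 * ε ^ (-2 * (κ / 2 - 1 / 2)) := by gcongr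
      _ = ε ^ (2 + -2 * (κ / 2 - 1 / 2)) := by rw [Real.rpow_add hε, Real.rpow_two]
      _ ≤ _ := Real.rpow_le_rpow_of_exponent_ge hε hε1.le (by linarith)
  have a3 := mul_le_mul_of_nonneg_left a1 hC4.le
  have a4 := mul_le_mul_of_nonneg_left a2 (by positivity : 0 ≤ 168 * K * CV K)
  linarith

/-- Time at least `2ε⁻²`, in the form in which it enters the decay rate of `far_le`. -/
lemma far_rate (hε : 0 < ε) (hκ1 : κ ≤ 1 / 4) {t : ℝ} (ht : 2 / ε ^ 2 ≤ t) :
    (1 + t) ^ ((4 * κ - 1) / 8) ≤ ε ^ (1 / 4 - κ) := by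
  have l : ε ^ (-2 : ℝ) ≤ 1 + t := by
    rw [Real.rpow_neg hε.le, Real.rpow_two, ← one_div]
    have : 1 / ε ^ 2 ≤ 2 / ε ^ 2 := by gcongr; norm_num
    linarith
  have l2 := Real.rpow_le_rpow_of_nonpos (Real.rpow_pos_of_pos hε _) l
    (by linarith : (4 * κ - 1) / 8 ≤ 0)
  rw [← Real.rpow_mul hε.le, show -2 * ((4 * κ - 1) / 8) = 1 / 4 - κ by ring] at l2
  exact l2

lemma Good.far (h : Good R K ε κ M v1 v2) (hε1 : ε < 1) {a b t : ℝ} (hab : a ^ 2 + b ^ 2 = 1)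
    (ht : 2 * K ≤ t) (htε : 2 / ε ^ 2 ≤ t) :
    |Wr 1 v1 a b t (t / 2)| ≤ 300 * K ^ 3 * (M ^ 3 + 1) * (ε * ε ^ (1 / 4 - κ)) := by
  have hK := (h.c1 0).K1
  have hε := (h.c1 0).ε0
  have hκ := (h.c1 0).κ0
  have hκ1 := (h.c1 0).κ1
  have hM := h.M0
  have e := far_le h.c1 (N := (M * ε) ^ 3) (by positivity) (fun s hs x y => by
    rw [h.sol.e1' hs, abs_mul, abs_neg, abs_pow]
    obtain ⟨q1, q2⟩ := h.bd s hs.le x y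
    calc _ ≤ (M * ε / √(1 + s)) ^ 2 * (M * ε / √(1 + s)) := by gcongr
      _ = _ := by rw [← pow_succ, div_pow]) hab ht
  refine e.trans ?_
  have r := far_rate hε hκ1 htε
  set Y := ε ^ (1 / 4 - κ) with hY
  have y1 : ε ^ 2 ≤ Y := by
    rw [hY, ← Real.rpow_two]
    exact Real.rpow_le_rpow_of_exponent_ge hε hε1.le (by linarith)
  calc _ ≤ 300 * K ^ 3 * (M ^ 3 * (ε * Y) + ε * Y) := by
        have : (M * ε) ^ 3 ≤ M ^ 3 * (ε * Y) := by
          rw [mul_pow, show ε ^ 3 = ε * ε ^ 2 by ring]; gcongr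
        gcongr
    _ = _ := by ring

lemma rad_far (hε : 0 < ε) (hε1 : ε < 1) (hf : SmoothCompact2 f)
    (hg : SmoothCompact2 g) (hF : FreeB R B (free f g)) (hRK : R + 1 ≤ K) (hB : 4 * B ≤ K ^ 2)
    (hκ : 0 < κ) (hκ1 : κ ≤ 1 / 4) {a b t : ℝ} (hab : a ^ 2 + b ^ 2 = 1)
    (ht : 2 * K ≤ t) (htε : 2 / ε ^ 2 ≤ t) :
    |dF0 f g (-(t / 2)) a b| ≤ (300 * K ^ 3 + 14 * √B) * ε ^ (1 / 4 - κ) := by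
  have hK := (hF.ctl hRK hB hκ hκ1 0).K1
  have e := far_le (hF.ctl hRK hB hκ hκ1) (N := 0) le_rfl (fun s hs x y => by
    rw [hF.box]; simp) hab ht
  rw [zero_add, one_mul] at e
  have e2 := free_rad hf hg hF hab (σ := -(t / 2)) (t := t) (max_le (by linarith) (by linarith))
  rw [show t + -(t / 2) = t / 2 by ring] at e2
  have r := far_rate hε hκ1 htε
  set Y := ε ^ (1 / 4 - κ) with hY
  have s2 : 1 / ε ≤ √t := by
    apply Real.le_sqrt_of_sq_le
    refine le_trans ?_ htε
    rw [div_pow]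
    gcongr
    norm_num
  have y1 : ε ≤ Y := by
    conv_lhs => rw [← Real.rpow_one ε]
    exact Real.rpow_le_rpow_of_exponent_ge hε hε1.le (by linarith)
  have s3 : 14 * √B / √t ≤ 14 * √B * Y := by
    have h1 : 0 < √t := lt_of_lt_of_le (by positivity) s2
    rw [div_le_iff₀ h1]
    have : 1 ≤ Y * √t := by
      rw [div_le_iff₀ hε] at s2
      nlinarith
    have := mul_le_mul_of_nonneg_left this (by positivity : 0 ≤ 14 * √B)
    linarith
  have e3 : |Wr 1 (free f g) a b t (t / 2)| ≤ 300 * K ^ 3 * Y := e.trans (by gcongr)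
  have e4 := abs_sub_abs_le_abs_sub (dF0 f g (-(t / 2)) a b) (Wr 1 (free f g) a b t (t / 2))
  rw [abs_sub_comm] at e2
  linarith

/-- The constant in the final estimate. -/
def CE (K κ M B : ℝ) : ℝ := 2 * (C1 K κ M B * (2 * CV K + C1 K κ M B))
  + 2 * (C4 K M + 168 * K * CV K) + 2 * (300 * K ^ 3 * (M ^ 3 + 1)) ^ 2
  + 2 * (300 * K ^ 3 + 14 * √B) ^ 2

/-- The main estimate, in polar coordinates.  For `σ ≥ -ε⁻²` the comparison with the radiation
field is made at time `2ε⁻²`; for other `σ` all terms are small. -/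
lemma m_est (h : Good R K ε κ M v1 v2) (hε1 : ε < 1) (hf1 : SmoothCompact2 f1)
    (hf2 : SmoothCompact2 f2) (hg1 : SmoothCompact2 g1) (hg2 : SmoothCompact2 g2)
    (hF1 : FreeB R B (free f1 g1)) (hF2 : FreeB R B (free f2 g2)) (hB : 4 * B ≤ K ^ 2)
    (h1 : EB (v1 - kc ε * free f1 g1) 0 0) (h2 : EB (v2 - kc ε * free f2 g2) 0 0)
    (hKε : 2 * K ≤ 2 / ε ^ 2) {a b σ t0 : ℝ} (hab : a ^ 2 + b ^ 2 = 1)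
    (ht0 : t0 = max 2 (-2 * σ)) :
    |Wr 1 v1 a b t0 (t0 + σ) ^ 2 - Wr 1 v2 a b t0 (t0 + σ) ^ 2
        + 2 * (∫ t in Set.Ioi t0, rr v1 v2 a b t (t + σ))
        - ε ^ 2 * (dF0 f1 g1 σ a b ^ 2 - dF0 f2 g2 σ a b ^ 2)|
      ≤ CE K κ M B * ε ^ ((5 : ℝ) / 2 - 2 * κ) := by
  have hK := (h.c1 0).K1
  have hε := (h.c1 0).ε0
  have hR := (h.c1 0).R0
  have hRK := (h.c1 0).RK
  have hκ := (h.c1 0).κ0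
  have hκ1 := (h.c1 0).κ1
  have hM := h.M0
  have hCV : 0 < CV K := by unfold CV; positivity
  have hC4 : 0 < C4 K M := by unfold C4; positivity
  have hC1 : 0 < C1 K κ M B := by unfold C1 CN; positivity
  have l1 : 2 ≤ t0 := ht0 ▸ le_max_left _ _
  have l2 : -2 * σ ≤ t0 := ht0 ▸ le_max_right _ _
  set Z := ε ^ ((5 : ℝ) / 2 - 2 * κ) with hZ
  have hZ0 : 0 < Z := Real.rpow_pos_of_pos hε _
  rcases le_or_gt (-2 * σ) (2 / ε ^ 2) with hσ | hσ
  · have hT0 : t0 ≤ 2 / ε ^ 2 := by rw [ht0]; exact max_le (by linarith) hσ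
    rw [(m_shift h hab (by linarith) l2 hT0 hKε).2]
    have tl := tail_small h hε1 le_rfl hab hKε hσ le_rfl
    have m1 := h.mid hε1 hf1 hg1 hF1 h1 hab hKε hσ
    have m2 := h.symm.mid hε1 hf2 hg2 hF2 h2 hab hKε hσ
    obtain ⟨w1, w2⟩ := V_bound h.sol (h.c1 (2 / ε ^ 2)) (h.c2 (2 / ε ^ 2))
      (by positivity : 0 ≤ M * ε) h.Mε (fun s hs _ => h.bd s hs) hab hKε le_rfl
      (r := 2 / ε ^ 2 + σ) (by linarith)
    set z := ε ^ (-(2 * κ)) with hz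
    have z0 : 0 < z := Real.rpow_pos_of_pos hε _
    have z1 : ε * z ≤ 1 := by
      rw [hz]
      conv_lhs => rw [← Real.rpow_one_add' hε.le (by linarith : 1 + -(2 * κ) ≠ 0)]
      exact Real.rpow_le_one hε.le hε1.le (by linarith)
    have z2 : ε ^ 3 * z ≤ Z := by
      have : ε ^ 3 * z = ε ^ (3 + -(2 * κ)) := by
        rw [Real.rpow_add hε, hz]; congr 1; norm_cast
      rw [this]
      exact Real.rpow_le_rpow_of_exponent_ge hε hε1.le (by linarith)
    have s1 := sq_close hε hC1.le z0.le z1 w1 m1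
    have s2 := sq_close hε hC1.le z0.le z1 w2 m2
    set P1 := Wr 1 v1 a b (2 / ε ^ 2) (2 / ε ^ 2 + σ)
    set P2 := Wr 1 v2 a b (2 / ε ^ 2) (2 / ε ^ 2 + σ)
    set I := ∫ t in Set.Ioi (2 / ε ^ 2), rr v1 v2 a b t (t + σ)
    have z3 := mul_le_mul_of_nonneg_left z2
      (by positivity : 0 ≤ C1 K κ M B * (2 * CV K + C1 K κ M B))
    have z4 : 0 ≤ (300 * K ^ 3 * (M ^ 3 + 1)) ^ 2 * Z := by positivity
    have z5 : 0 ≤ (300 * K ^ 3 + 14 * √B) ^ 2 * Z := by positivity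
    rw [abs_le] at s1 s2 tl ⊢
    unfold CE
    constructor <;> linarith [s1.1, s1.2, s2.1, s2.2, tl.1, tl.2]
  · have et0 : t0 = -2 * σ := by rw [ht0]; exact max_eq_right (by linarith)
    have tl := tail_small h hε1 le_rfl hab (by linarith : 2 * K ≤ t0) l2 (by linarith)
    have m1 := h.far hε1 hab (by linarith : 2 * K ≤ t0) (by linarith)
    have m2 := h.symm.far hε1 hab (by linarith : 2 * K ≤ t0) (by linarith)
    have r1 := rad_far hε hε1 hf1 hg1 hF1 hRK hB hκ hκ1 hab (by linarith : 2 * K ≤ t0)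
      (by linarith)
    have r2 := rad_far hε hε1 hf2 hg2 hF2 hRK hB hκ hκ1 hab (by linarith : 2 * K ≤ t0)
      (by linarith)
    have er : t0 + σ = t0 / 2 := by linarith
    have eσ : -(t0 / 2) = σ := by linarith
    rw [eσ] at r1 r2
    rw [er]
    set Y := ε ^ (1 / 4 - κ) with hY
    have hY0 : 0 < Y := Real.rpow_pos_of_pos hε _
    have hYZ : (ε * Y) ^ 2 = Z := by
      rw [mul_pow, hY, hZ, ← Real.rpow_natCast (ε ^ (1 / 4 - κ)), ← Real.rpow_mul hε.le,
        ← Real.rpow_two, ← Real.rpow_add hε]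
      congr 1; push_cast; ring
    have key : ∀ {x c : ℝ}, |x| ≤ c → x ^ 2 ≤ c ^ 2 := fun hx => by
      rw [← sq_abs]; gcongr
    have q1 := key m1
    have q2 := key m2
    have q3 := mul_le_mul_of_nonneg_left (key r1) (sq_nonneg ε)
    have q4 := mul_le_mul_of_nonneg_left (key r2) (sq_nonneg ε)
    rw [mul_pow _ (ε * Y), hYZ] at q1 q2
    rw [mul_pow _ Y, show ∀ c : ℝ, ε ^ 2 * (c * Y ^ 2) = c * (ε * Y) ^ 2 by intro c; ring, hYZ]
      at q3 q4
    set P1 := Wr 1 v1 a b t0 (t0 / 2)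
    set P2 := Wr 1 v2 a b t0 (t0 / 2)
    set I := ∫ t in Set.Ioi t0, rr v1 v2 a b t (t + σ)
    have z3 : 0 ≤ C1 K κ M B * (2 * CV K + C1 K κ M B) * Z := by positivity
    have z4 : 0 ≤ (300 * K ^ 3 * (M ^ 3 + 1)) ^ 2 * Z := by positivity
    have z5 : 0 ≤ (300 * K ^ 3 + 14 * √B) ^ 2 * Z := by positivity
    have n1 := sq_nonneg P1
    have n2 := sq_nonneg P2
    have n3 : 0 ≤ ε ^ 2 * dF0 f1 g1 σ a b ^ 2 := by positivity
    have n4 : 0 ≤ ε ^ 2 * dF0 f2 g2 σ a b ^ 2 := by positivity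
    rw [abs_le] at tl ⊢
    unfold CE
    constructor <;> linarith [tl.1, tl.2]

end size

/-! ### Translation to polar coordinates and conclusion -/

section polar
variable {u ua ub v va vb : Fn} {a b t r σ : ℝ}

lemma radius_polar (hab : a ^ 2 + b ^ 2 = 1) (hr : 0 < r) : radius (r * a) (r * b) = r := by
  rw [radius, show (r * a) ^ 2 + (r * b) ^ 2 = r ^ 2 * (a ^ 2 + b ^ 2) by ring, hab, mul_one,
    Real.sqrt_sq hr.le]

lemma hasDerivAt_radius1 {x y : ℝ} (h : 0 < radius x y) :
    HasDerivAt (fun z => √(radius z y)) (x / radius x y / (2 * √(radius x y))) x := by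
  have h0 : x ^ 2 + y ^ 2 ≠ 0 := fun hh => by simp [radius, hh] at h
  have h1 : HasDerivAt (fun z : ℝ => z ^ 2 + y ^ 2) (2 * x) x := by
    simpa using (hasDerivAt_pow 2 x).add_const (y ^ 2)
  have h2 : HasDerivAt (fun z => radius z y) (x / radius x y) x :=
    (h1.sqrt h0).congr_deriv (by rw [radius]; field_simp)
  exact h2.sqrt h.ne'

lemma radius_comm (x y : ℝ) : radius x y = radius y x := by rw [radius, radius, add_comm]

lemma hasDerivAt_radius2 {x y : ℝ} (h : 0 < radius x y) :
    HasDerivAt (fun z => √(radius x z)) (y / radius x y / (2 * √(radius x y))) y := by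
  rw [radius_comm] at h ⊢
  simp only [radius_comm x]
  exact hasDerivAt_radius1 h

lemma Uop_polar (hu : Smooth3 u) (hab : a ^ 2 + b ^ 2 = 1) (hr : 0 < r) :
    Uop u t (r * a) (r * b) = Wr 1 u a b t r := by
  have e := radius_polar hab hr
  have hp : 0 < radius (r * a) (r * b) := by rw [e]; exact hr
  have h1 := ((hasDerivAt_radius1 hp).mul (hu.hp1 t (r * a) (r * b))).deriv
  have h2 := ((hasDerivAt_radius2 hp).mul (hu.hp2 t (r * a) (r * b))).deriv
  have h3 := ((hu.hpt t (r * a) (r * b)).const_mul √(radius (r * a) (r * b))).deriv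
  simp only [Uop, ← Real.sqrt_eq_rpow]
  have k1 : p1 (fun s y1 y2 => √(radius y1 y2) * u s y1 y2) t (r * a) (r * b) = _ := h1
  have k2 : p2 (fun s y1 y2 => √(radius y1 y2) * u s y1 y2) t (r * a) (r * b) = _ := h2
  have k3 : pt (fun s y1 y2 => √(radius y1 y2) * u s y1 y2) t (r * a) (r * b) = _ := h3
  rw [k1, k2, k3, e, Wr]
  have hs : √r ≠ 0 := (Real.sqrt_pos.2 hr).ne'
  have ea : r * a / r = a := by field_simp
  have eb : r * b / r = b := by field_simp
  rw [ea, eb]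
  linear_combination (u t (r * a) (r * b) / (2 * √r) / 2) * hab

lemma Vop_polar (hu : Smooth3 u) (hab : a ^ 2 + b ^ 2 = 1) (hr : 0 < t + σ) :
    Vop u t σ a b = Wr 1 u a b t (t + σ) := Uop_polar hu hab hr

lemma Kfun_polar (hua : Smooth3 ua) (hub : Smooth3 ub) (hab : a ^ 2 + b ^ 2 = 1)
    (hr : 0 < t + σ) : Kfun ua ub t σ a b = Kr ua ub a b t (t + σ) := by
  have e3 : (t + σ) ^ ((3 : ℝ) / 2) = √(t + σ) ^ 3 := by
    rw [Real.sqrt_eq_rpow, ← Real.rpow_natCast, ← Real.rpow_mul hr.le]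
    norm_num
  rw [Kfun, Hfun, Uop_polar hua hab hr, Uop_polar hub hab hr, radius_polar hab hr, e3,
    ← Real.sqrt_eq_rpow, Kr, Lr]
  have hs : √(t + σ) ≠ 0 := (Real.sqrt_pos.2 hr).ne'
  field_simp
  ring

lemma rhoFun_polar (hua : Smooth3 ua) (hub : Smooth3 ub) (hab : a ^ 2 + b ^ 2 = 1)
    (hr : 0 < t + σ) : rhoFun ua ub t σ a b = rr ua ub a b t (t + σ) := by
  rw [rhoFun, Vop_polar hua hab hr, Vop_polar hub hab hr, Kfun_polar hua hub hab hr,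
    Kfun_polar hub hua hab hr, rr]

lemma Wr_slice (η : ℝ) (h : u t = v t) (h' : pt u t = pt v t) : Wr η u a b t r = Wr η v a b t r := by
  simp only [Wr, p1, p2, h, h']

lemma Kr_slice (ha : ua t = va t) (ha' : pt ua t = pt va t) (hb : ub t = vb t)
    (hb' : pt ub t = pt vb t) : Kr ua ub a b t r = Kr va vb a b t r := by
  simp only [Kr, Wr_slice 1 ha ha', Wr_slice 1 hb hb', Lr, rot, p1, p2, ha, ha', hb']

lemma rr_slice (ha : ua t = va t) (ha' : pt ua t = pt va t) (hb : ub t = vb t)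
    (hb' : pt ub t = pt vb t) : rr ua ub a b t r = rr va vb a b t r := by
  simp only [rr, Wr_slice 1 ha ha', Wr_slice 1 hb hb', Kr_slice ha ha' hb hb',
    Kr_slice hb hb' ha ha']

end polar

/-- A function with the data `(εf, εg)` has energies of size `ε²`, and its difference to `ε` times
the free solution has vanishing energies, initially. -/
lemma EB_data {f g : ℝ → ℝ → ℝ} {v u : Fn} {R B ε : ℝ} (hv : Smooth3 v) (hf : SmoothCompact2 f)
    (hg : SmoothCompact2 g) (hF : FreeB R B (free f g)) (h0 : v 0 = u 0) (h1 : pt v 0 = pt u 0)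
    (hi : ∀ x y, u 0 x y = ε * f x y) (hi' : ∀ x y, pt u 0 x y = ε * g x y) :
    EB v 0 (ε ^ 2 * B) ∧ EB (v - kc ε * free f g) 0 0 := by
  have hs := hF.nice.smooth
  have hk : Smooth3 (kc ε * free f g) := (hF.nice.kmul ε).smooth
  have e0 : v 0 = (kc ε * free f g) 0 := by
    funext x y
    simp [h0, hi, kc_apply, free_zero hf]
  have e1 : pt v 0 = pt (kc ε * free f g) 0 := by
    funext x y
    rw [pt_kmul ε hs]
    simp [h1, hi', kc_apply, pt_free_zero hf hg]
  refine ⟨((hF.eb 0).kmul hs).slice hk hv e0 e1, ?_⟩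
  have h := ((hF.eb 0).kmul (k := 0) hs).slice (v := v - kc ε * free f g)
    (hF.nice.kmul 0).smooth (hv.sub hk) ?_ ?_
  · simpa using h
  · funext x y
    simp [e0, kc_apply]
  · funext x y
    rw [pt_sub hv hk, pt_kmul 0 hs]
    simp [e1, kc_apply]

/-- Main theorem: asymptotic expansion of `m(σ,ω)` as `ε → +0`:
`m = ε²((∂_σF₁)² − (∂_σF₂)²) + O(ε^{5/2−2μ})` uniformly in `(σ,ω)`. -/
theorem m_asymptotics (f1 f2 g1 g2 : ℝ → ℝ → ℝ)
    (hf1 : SmoothCompact2 f1) (hf2 : SmoothCompact2 f2)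
    (hg1 : SmoothCompact2 g1) (hg2 : SmoothCompact2 g2)
    (μ : ℝ) (hμ0 : 0 < μ) (hμ1 : μ < 1 / 10) :
    ∃ ε₀ C : ℝ, 0 < ε₀ ∧ 0 < C ∧ ∀ ε : ℝ, 0 < ε → ε < ε₀ →
      ∀ u1 u2 : ℝ → ℝ → ℝ → ℝ, IsSolution ε f1 f2 g1 g2 u1 u2 →
        ∀ σ ω1 ω2 : ℝ, ω1 ^ 2 + ω2 ^ 2 = 1 →
          IntegrableOn (fun τ => rhoFun u1 u2 τ σ ω1 ω2)
            (Set.Ioi (max 2 (-2 * σ))) volume ∧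
          |((Vop u1 (max 2 (-2 * σ)) σ ω1 ω2) ^ 2
              - (Vop u2 (max 2 (-2 * σ)) σ ω1 ω2) ^ 2
              + 2 * ∫ τ in Set.Ioi (max 2 (-2 * σ)), rhoFun u1 u2 τ σ ω1 ω2)
            - ε ^ 2 * ((dF0 f1 g1 σ ω1 ω2) ^ 2 - (dF0 f2 g2 σ ω1 ω2) ^ 2)|
            ≤ C * ε ^ ((5 : ℝ) / 2 - 2 * μ) := by
  obtain ⟨r1, hr1, s1⟩ := support_radius hf1
  obtain ⟨r2, hr2, s2⟩ := support_radius hf2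
  obtain ⟨r3, hr3, s3⟩ := support_radius hg1
  obtain ⟨r4, hr4, s4⟩ := support_radius hg2
  obtain ⟨R0, hR0, q1, q2, q3, q4⟩ : ∃ R0 : ℝ, 0 ≤ R0 ∧
      (∀ x y, R0 ^ 2 < x ^ 2 + y ^ 2 → f1 x y = 0) ∧
      (∀ x y, R0 ^ 2 < x ^ 2 + y ^ 2 → f2 x y = 0) ∧
      (∀ x y, R0 ^ 2 < x ^ 2 + y ^ 2 → g1 x y = 0) ∧
      (∀ x y, R0 ^ 2 < x ^ 2 + y ^ 2 → g2 x y = 0) := by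
    refine ⟨r1 + r2 + r3 + r4, by positivity, fun x y h => s1 x y ?_, fun x y h => s2 x y ?_,
      fun x y h => s3 x y ?_, fun x y h => s4 x y ?_⟩ <;> refine lt_of_le_of_lt ?_ h <;>
      gcongr <;> linarith
  have hR : 0 ≤ R0 + 4 := by linarith
  obtain ⟨B1, hB1⟩ := exists_EB (free f1 g1) 0
  obtain ⟨B2, hB2⟩ := exists_EB (free f2 g2) 0
  set B := max B1 B2
  have hB0 : 0 ≤ B := hB1.nonneg.trans (le_max_left _ _)
  have hF1 : FreeB (R0 + 4) B (free f1 g1) :=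
    FreeB.mk' ((free_nice hf1 hg1 hR0 q1 q3).mono hR0 (by linarith)) hR (dAl_free hf1 hg1)
      (hB1.mono (le_max_left _ _))
  have hF2 : FreeB (R0 + 4) B (free f2 g2) :=
    FreeB.mk' ((free_nice hf2 hg2 hR0 q2 q4).mono hR0 (by linarith)) hR (dAl_free hf2 hg2)
      (hB2.mono (le_max_right _ _))
  obtain ⟨K, hRK, hBK⟩ : ∃ K, R0 + 4 + 1 ≤ K ∧ 4 * B ≤ K ^ 2 :=
    ⟨R0 + 4 + 1 + 4 * B, by linarith, by nlinarith⟩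
  have hK : 1 ≤ K := by linarith
  obtain ⟨ε₁, hε₁, hglob⟩ := global_bound hR hRK hμ0 (by linarith : μ ≤ 1 / 4) hBK
  refine ⟨min ε₁ (1 / K), max (CE K μ (2 * CM K) B) 1, lt_min hε₁ (by positivity),
    lt_of_lt_of_le one_pos (le_max_right _ _), fun ε hε hεε u1 u2 hS σ a b hab => ?_⟩
  have hεK : ε < 1 / K := hεε.trans_le (min_le_right _ _)
  have hε1 : ε < 1 := hεK.trans_le (by rw [div_le_one (by linarith)]; exact hK)
  have hKε : 2 * K ≤ 2 / ε ^ 2 := by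
    rw [lt_div_iff₀ (by linarith)] at hεK
    rw [le_div_iff₀ (by positivity)]
    nlinarith
  -- The solution is replaced by one that is smooth with controlled support also for `t < 0`.
  obtain ⟨v1, v2, hv, e1, e2, d1, d2⟩ := exists_nice hR0 q1 q2 q3 q4 hS
  obtain ⟨x1, y1⟩ := EB_data hv.n1.smooth hf1 hg1 hF1 (e1 0 le_rfl) d1 hS.init1 hS.initd1
  obtain ⟨x2, y2⟩ := EB_data hv.n2.smooth hf2 hg2 hF2 (e2 0 le_rfl) d2 hS.init2 hS.initd2
  obtain ⟨hM, hctl, hbd⟩ := hglob ε hε (hεε.trans_le (min_le_left _ _)) v1 v2 hv x1 x2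
  have hM0 : 0 < 2 * CM K := by unfold CM CV; positivity
  have hG : Good (R0 + 4) K ε μ (2 * CM K) v1 v2 :=
    ⟨hv, hM0, hM, fun T => (hctl T).1, fun T => (hctl T).2, hbd⟩
  have hest := m_est hG hε1 hf1 hf2 hg1 hg2 hF1 hF2 hBK y1 y2 hKε (σ := σ) hab rfl
  set t0 : ℝ := max 2 (-2 * σ) with ht0
  have ht2 : 2 ≤ t0 := le_max_left _ _
  have htσ : -2 * σ ≤ t0 := le_max_right _ _
  have hitg := (m_shift hG hab (by linarith : 0 < t0) htσ (le_max_left t0 (2 * K))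
    (le_max_right _ _)).1
  have p1 : ∀ t, 0 < t → pt v1 t = pt u1 t := fun t ht => pt_pos (fun s hs => e1 s hs.le) ht
  have p2 : ∀ t, 0 < t → pt v2 t = pt u2 t := fun t ht => pt_pos (fun s hs => e2 s hs.le) ht
  have hV1 : Vop u1 t0 σ a b = Wr 1 v1 a b t0 (t0 + σ) := by
    rw [Vop_polar hS.smooth1 hab (by linarith),
      Wr_slice 1 (e1 t0 (by linarith)) (p1 t0 (by linarith))]
  have hV2 : Vop u2 t0 σ a b = Wr 1 v2 a b t0 (t0 + σ) := by
    rw [Vop_polar hS.smooth2 hab (by linarith),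
      Wr_slice 1 (e2 t0 (by linarith)) (p2 t0 (by linarith))]
  have hρ : Set.EqOn (fun t => rr v1 v2 a b t (t + σ)) (fun t => rhoFun u1 u2 t σ a b)
      (Set.Ioi t0) := fun t ht => by
    have ht : t0 < t := ht
    have h0 : 0 < t := by linarith
    simp only
    rw [rhoFun_polar hS.smooth1 hS.smooth2 hab (by linarith),
      rr_slice (e1 t h0.le) (p1 t h0) (e2 t h0.le) (p2 t h0)]
  refine ⟨hitg.congr_fun hρ measurableSet_Ioi, ?_⟩
  rw [hV1, hV2, ← setIntegral_congr_fun measurableSet_Ioi hρ]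
  exact hest.trans (by gcongr; exact le_max_left _ _)

end
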